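/- Let V be a polynomial of degree 2m with positive leading coefficient satisfying conditions C1–C2. Define the partition functions Q_{n,1} = ∫_{ℝ^n} ∏_{i=1}^n e^{-nV(λ_i)/2} ∏_{i<j}|λ_i−λ_j| dλ, Q_{n,2} = ∫_{ℝ^n} ∏_{i=1}^n e^{-nV(λ_i)} ∏_{i<j}|λ_i−λ_j|² dλ, and Q_{n/2,4} = ∫_{ℝ^{n/2}} ∏_{i=1}^{n/2} e^{-nV(λ_i)} ∏_{i<j}|λ_i−λ_j|⁴ dλ. Then there exist constants 0 < c ≤ C < ∞ such that for all even n ≥ 2m: c ≤ Q_{n,1}·Q_{n/2,4} / ( Q_{n,2}·(n/2)!·2^n ) ≤ C. (Equivalently, |log det T_n| is bounded uniformly in even n, where det T_n = (Q_{n,1}Q_{n/2,4}/(Q_{n,2}(n/2)!2^n))² is the Stojanovic determinant.) -/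

import Mathlib

/-!
Write `Z_β(n, V)` for the partition functions and `Φ(V) = log Z_1(2k) + log Z_4(k) - log Z_2(2k)`.
The claim is that `Φ(V) - log (k! 4^k)` stays bounded. It follows from two facts.

*The Gaussian potential.* For `V = x² / 2` one has the exact identity
`Z_1(2k) Z_4(k) = Z_2(2k) k! 4^k` (`gauss_identity`). With Hermite polynomials, `Z_2` is a product of
norms, while `Z_4` (through a confluent Vandermonde determinant) and `Z_1` (through de Bruijn's
identity for `|Δ|`) are Pfaffian sums `Pf` of matrices that become superdiagonal up to a symmetric
part, so that all three can be computed.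

*Interpolation.* Along `V_t = (1 - t) x² / 2 + t V` the derivative of `Φ` is bounded uniformly in `k`
and `t` (`diff_moment`, `compare_gauss`). The conditions on `V` imply that the equilibrium density is
`P √(4 - x²) / 2π` with a polynomial `P`, that `V' = B P` for an explicit operator `B` with
`B S_{k-1} = C_k` on Chebyshev polynomials, and, by linearity, that all `V_t` satisfy the same
conditions with uniform constants; this is the structure `Adm`, produced by `exists_adm`.

For an admissible potential the particles are confined to a small neighbourhood `[-a, a]` of
`[-2, 2]`, up to a factor in the partition function. Confinement rests on an energy inequality, in
which the logarithmic kernel is regularised by its Chebyshev expansion so that the quadratic form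
controls all centred Chebyshev statistics `c_k = ∑ C_k(x_i) - n ∫ C_k ρ`, and on a lower bound for
the partition function by resampling one particle at a time (Jensen's inequality). The energy
inequality also yields the a priori bound `|c_k| ≤ δ n p^{2k}`, for every `δ > 0` and large `n`,
off an event of negligible weight.

The loop equation (integration by parts with the vector field `h`) expresses `n β E[X c_k]`, for
`h = S_{k-1} q` with `q` an approximate polynomial inverse of `P`, by a quadratic term in the
statistics, a small error and bounded terms. Inserting the a priori bound, a single contraction in a
weighted supremum over `k` gives uniformly bounded second moments (`second_moment`). Then
`n β E[c_k]` is, up to bounded terms and a remainder removed by the same contraction, `n (2 - β) m_k`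
with `m_k` not depending on `β`; with `n = 2K, 2K, K` for `β = 1, 2, 4`, these terms of order `n`
cancel in the combination that is the derivative of `Φ`, because `(2 - 1) 2K + (2 - 4) K = 0`.
-/

open MeasureTheory

/-- Unnormalized joint eigenvalue density of the β-ensemble with potential `V`
(note: `Q_{n,1}`, `Q_{n,2}`, `Q_{n/2,4}` of the statement are obtained with
`β = 1, n`, `β = 2, n` and `β = 4, n/2` respectively). -/
noncomputable def betaWeight (β : ℝ) (V : ℝ → ℝ) (n : ℕ) (Λ : Fin n → ℝ) : ℝ :=
  (∏ i, Real.exp (-((n : ℝ) * β * V (Λ i)) / 2)) *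
    ∏ i, ∏ j ∈ Finset.Ioi i, |Λ i - Λ j| ^ β

/-- The partition function `Q_{n,β}`. -/
noncomputable def partitionFn (β : ℝ) (V : ℝ → ℝ) (n : ℕ) : ℝ :=
  ∫ Λ : Fin n → ℝ, betaWeight β V n Λ

/-- Conditions C1–C2. -/
structure EquilC12 (V : ℝ → ℝ) (ρ : ℝ → ℝ) (P : ℝ → ℝ) : Prop where
  ρ_nonneg : ∀ x, 0 ≤ ρ x
  ρ_int : ∫ x, ρ x = 1
  ρ_supp : ∀ x, x ∉ Set.Icc (-2:ℝ) 2 → ρ x = 0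
  P_cont : ContinuousOn P (Set.Icc (-2:ℝ) 2)
  P_pos : ∀ x ∈ Set.Icc (-2:ℝ) 2, 0 < P x
  ρ_eq : ∀ x ∈ Set.Icc (-2:ℝ) 2,
    ρ x = (1 / (2 * Real.pi)) * P x * Real.sqrt (4 - x ^ 2)
  equil : ∃ c : ℝ, (∀ x ∈ Set.Icc (-2:ℝ) 2,
      2 * (∫ μ, Real.log |x - μ| * ρ μ) - V x = c) ∧
    ∀ x, x ∉ Set.Icc (-2:ℝ) 2 → 2 * (∫ μ, Real.log |x - μ| * ρ μ) - V x < c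

namespace Stoj
open Polynomial Real

/-! ### Chebyshev polynomials on `[-2, 2]` -/

/-- The rescaled Chebyshev polynomial of the first kind, `2 cos θ ↦ 2 cos kθ`. -/
noncomputable abbrev cC (k : ℤ) : ℝ[X] := Chebyshev.C ℝ k

/-- The rescaled Chebyshev polynomial of the second kind, `2 cos θ ↦ sin (k+1)θ / sin θ`. -/
noncomputable abbrev cS (k : ℤ) : ℝ[X] := Chebyshev.S ℝ k

lemma cS_sub (k : ℤ) : cS (k + 1) - cS (k - 1) = cC (k + 1) := by
  have h1 := Chebyshev.S_eq_X_mul_S_add_C ℝ k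
  have h2 := Chebyshev.S_add_one ℝ k
  simp only [cC, cS]
  linear_combination h1 - h2

lemma cS_add_two (k : ℤ) : cS (k + 2) = cS k + cC (k + 2) := by
  have h := cS_sub (k + 1)
  rw [show k + 1 + 1 = k + 2 by ring, show k + 1 - 1 = k by ring] at h
  rw [← h]; ring

lemma cS_mul_cC_nat (k : ℤ) (j : ℕ) : cS k * cC j = cS (k + j) + cS (k - j) := by
  induction j using Nat.twoStepInduction with
  | zero => simp [cC, cS]; ring
  | one =>
    have := Chebyshev.S_add_one ℝ k
    simp only [cC, cS, Nat.cast_one, Chebyshev.C_one]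
    rw [this]; ring
  | more j h1 h2 =>
    have e1 := Chebyshev.C_add_two ℝ (j : ℤ)
    have e2 := Chebyshev.S_add_one ℝ (k + (j + 1))
    have e3 := Chebyshev.S_sub_one ℝ (k - (j + 1))
    simp only [cC, cS, Nat.cast_add, Nat.cast_one, Nat.cast_ofNat] at *
    rw [show k + ((j : ℤ) + 1) + 1 = k + (j + 2) by ring,
      show k + ((j : ℤ) + 1) - 1 = k + j by ring] at e2
    rw [show k - ((j : ℤ) + 1) - 1 = k - (j + 2) by ring,
      show k - ((j : ℤ) + 1) + 1 = k - j by ring] at e3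
    rw [e1]
    linear_combination X * h2 - h1 - e2 - e3

lemma derivative_cC (k : ℕ) : derivative (cC k) = (k : ℝ[X]) * cS (k - 1) := by
  induction k using Nat.twoStepInduction with
  | zero => simp [cC]
  | one => simp [cC, cS]
  | more k h1 h2 =>
    have e1 := Chebyshev.C_add_two ℝ (k : ℤ)
    have e2 := Chebyshev.S_add_one ℝ (k : ℤ)
    have e3 := cS_sub (k : ℤ)
    simp only [cC, cS, Nat.cast_add, Nat.cast_one, Nat.cast_ofNat] at *
    rw [e1, derivative_sub, derivative_mul, derivative_X, h1, h2]
    rw [show (k : ℤ) + 1 - 1 = k by ring, show (k : ℤ) + 2 - 1 = k + 1 by ring]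
    linear_combination -e3 - (k + 1) * e2

lemma cC_eval_cos (k : ℤ) (θ : ℝ) : (cC k).eval (2 * cos θ) = 2 * cos (k * θ) :=
  Chebyshev.C_two_mul_real_cos ..

lemma exists_cos {x : ℝ} (hx : |x| ≤ 2) : ∃ θ ∈ Set.Icc (0 : ℝ) π, x = 2 * cos θ := by
  refine ⟨arccos (x / 2), ⟨arccos_nonneg _, arccos_le_pi _⟩, ?_⟩
  rw [abs_le] at hx
  rw [cos_arccos (by linarith) (by linarith)]; ring

lemma abs_cC_le_two (k : ℤ) {x : ℝ} (hx : |x| ≤ 2) : |(cC k).eval x| ≤ 2 := by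
  obtain ⟨θ, -, rfl⟩ := exists_cos hx
  rw [cC_eval_cos, abs_mul, abs_two]
  linarith [abs_cos_le_one (k * θ)]

lemma exists_joukowsky {x : ℝ} (hx : 2 ≤ x) : ∃ w : ℝ, 1 ≤ w ∧ x = w + w⁻¹ := by
  have h4 : 0 ≤ x ^ 2 - 4 := by nlinarith
  have hs := Real.sq_sqrt h4
  have hs0 := Real.sqrt_nonneg (x ^ 2 - 4)
  refine ⟨(x + √(x ^ 2 - 4)) / 2, by linarith, ?_⟩
  have : (x + √(x ^ 2 - 4)) / 2 ≠ 0 := by positivity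
  field_simp
  nlinarith

lemma cC_eval_joukowsky (k : ℕ) {w : ℝ} (hw : w ≠ 0) :
    (cC k).eval (w + w⁻¹) = w ^ k + (w ^ k)⁻¹ := by
  induction k using Nat.twoStepInduction with
  | zero => simp [cC]; norm_num
  | one => simp [cC]
  | more k h1 h2 =>
    have e1 := Chebyshev.C_add_two ℝ (k : ℤ)
    simp only [cC, Nat.cast_add, Nat.cast_one, Nat.cast_ofNat] at *
    rw [e1, eval_sub, eval_mul, eval_X, h1, h2]
    field_simp
    ring

lemma cC_eval_neg (k : ℕ) (x : ℝ) : (cC k).eval (-x) = (-1) ^ k * (cC k).eval x := by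
  induction k using Nat.twoStepInduction with
  | zero => simp [cC]
  | one => simp [cC]
  | more k h1 h2 =>
    have e1 := Chebyshev.C_add_two ℝ (k : ℤ)
    simp only [cC, Nat.cast_add, Nat.cast_one, Nat.cast_ofNat] at *
    rw [e1, eval_sub, eval_mul, eval_X, h1, h2]
    simp
    ring

lemma joukowsky_mono {u v : ℝ} (hu : 1 ≤ u) (huv : u + u⁻¹ ≤ v + v⁻¹) (hv : 1 ≤ v) : u ≤ v := by
  by_contra h
  push Not at h
  have hu0 : 0 < u := by linarith
  have hv0 : 0 < v := by linarith
  have : u + u⁻¹ - (v + v⁻¹) = (u - v) * (u * v - 1) / (u * v) := by field_simp; ring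
  have h1 : 0 < (u - v) * (u * v - 1) / (u * v) := by
    apply div_pos _ (by positivity)
    apply mul_pos (by linarith)
    nlinarith
  linarith

/-- On `|x| ≤ ϱ + 1/ϱ` the polynomials `cC k` grow at most like `ϱ ^ k`. -/
lemma abs_cC_le (k : ℕ) {p x : ℝ} (hp : 1 ≤ p) (hx : |x| ≤ p + p⁻¹) :
    |(cC k).eval x| ≤ 2 * p ^ k := by
  have hpk : 1 ≤ p ^ k := one_le_pow₀ hp
  rcases le_or_gt |x| 2 with h2 | h2
  · exact (abs_cC_le_two k h2).trans (by linarith)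
  · have hab : |(cC k).eval x| = |(cC k).eval (|x|)| := by
      rcases abs_cases x with ⟨h, _⟩ | ⟨h, _⟩ <;> rw [h]
      rw [cC_eval_neg, abs_mul]; simp
    obtain ⟨w, hw, hxw⟩ := exists_joukowsky h2.le
    rw [hab, hxw, cC_eval_joukowsky k (by linarith)]
    have hwp : w ≤ p := joukowsky_mono hw (hxw ▸ hx) hp
    have h1 : 1 ≤ w ^ k := one_le_pow₀ hw
    have h3 : w ^ k ≤ p ^ k := pow_le_pow_left₀ (by linarith) hwp k
    have h4 : (w ^ k)⁻¹ ≤ 1 := inv_le_one_of_one_le₀ h1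
    have h5 : 0 ≤ (w ^ k)⁻¹ := by positivity
    rw [abs_of_nonneg (by linarith)]
    linarith

lemma abs_cS_le (k : ℕ) {p x : ℝ} (hp : 1 ≤ p) (hx : |x| ≤ p + p⁻¹) :
    |(cS k).eval x| ≤ 2 * (k + 1) * p ^ k := by
  induction k using Nat.twoStepInduction with
  | zero => simp [cS]
  | one =>
    have := abs_cC_le 1 hp hx
    simp [cC, cS] at *
    linarith
  | more k h1 h2 =>
    have e := cS_add_two (k : ℤ)
    have h3 := abs_cC_le (k + 2) hp hx
    push_cast at h3 ⊢
    rw [e, eval_add]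
    refine (abs_add_le _ _).trans ?_
    have h4 : p ^ k ≤ p ^ (k + 2) := pow_le_pow_right₀ hp (by lia)
    have h5 : (0:ℝ) ≤ p ^ k := by positivity
    have : 2 * ((k:ℝ) + 1) * p ^ k ≤ 2 * ((k:ℝ) + 1) * p ^ (k + 2) := by gcongr
    nlinarith

/-- The `cS k` span all polynomials. -/
lemma cS_induction {M : ℝ[X] → Prop} (hadd : ∀ p q, M p → M q → M (p + q))
    (hsmul : ∀ (a : ℝ) p, M p → M (a • p)) (hS : ∀ k : ℕ, M (cS k)) (p : ℝ[X]) : M p := by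
  have h0 : M 0 := by simpa using hsmul 0 _ (hS 0)
  let W : Submodule ℝ ℝ[X] :=
    { carrier := {p | M p}, add_mem' := fun {a b} => hadd a b, zero_mem' := h0,
      smul_mem' := fun a p => hsmul a p }
  let W' : Submodule ℝ ℝ[X] := Submodule.span ℝ (Set.range fun k : ℕ => cS k)
  have hW : W' ≤ W := by
    rw [Submodule.span_le]; rintro _ ⟨k, rfl⟩; exact hS k
  have hX : ∀ p ∈ W', X * p ∈ W' := by
    intro p hp
    induction hp using Submodule.span_induction with
    | mem x h =>
      obtain ⟨k, rfl⟩ := h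
      have e := Chebyshev.S_add_one ℝ (k : ℤ)
      have : X * cS k = cS ((k + 1 : ℕ) : ℤ) + cS ((k : ℤ) - 1) := by
        push_cast; simp only [cS]; rw [e]; ring
      simp only [this]
      refine W'.add_mem (Submodule.subset_span ⟨k + 1, rfl⟩) ?_
      rcases k with _ | k
      · simp [cS]
      · push_cast; rw [add_sub_cancel_right]; exact Submodule.subset_span ⟨k, rfl⟩
    | zero => simp
    | add x y _ _ hx hy => rw [mul_add]; exact W'.add_mem hx hy
    | smul a x _ hx => rw [mul_smul_comm]; exact W'.smul_mem a hx
  have hall : ∀ p, p ∈ W' := by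
    intro p
    induction p using Polynomial.induction_on with
    | C a =>
      rw [← mul_one (C a), ← smul_eq_C_mul]
      refine W'.smul_mem a (Submodule.subset_span ⟨0, by simp [cS]⟩)
    | add p q hp hq => exact W'.add_mem hp hq
    | monomial n a h =>
      have := hX _ h
      rwa [show X * (C a * X ^ n) = C a * X ^ (n + 1) by ring] at this
  exact hW (hall p)

/-! ### Difference quotients -/

/-- The difference quotient `(p x - p y) / (x - y)`, extended continuously to the diagonal. -/
noncomputable def dq (p : ℝ[X]) (x y : ℝ) : ℝ :=
  p.sum fun k b => b * ∑ i ∈ Finset.range k, x ^ i * y ^ (k - 1 - i)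

lemma dq_add (p q : ℝ[X]) (x y : ℝ) : dq (p + q) x y = dq p x y + dq q x y := by
  unfold dq
  rw [Polynomial.sum_add_index]
  · intro i; simp
  · intro i a b; ring

lemma dq_smul (a : ℝ) (p : ℝ[X]) (x y : ℝ) : dq (a • p) x y = a * dq p x y := by
  unfold dq
  rw [Polynomial.sum_smul_index _ _ _ (by simp), Polynomial.sum_def, Polynomial.sum_def,
    Finset.mul_sum]
  exact Finset.sum_congr rfl fun i _ => by ring

lemma dq_continuous (p : ℝ[X]) : Continuous fun z : ℝ × ℝ => dq p z.1 z.2 := by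
  unfold dq
  simp only [Polynomial.sum_def]
  fun_prop

lemma dq_continuous_right (p : ℝ[X]) (x : ℝ) : Continuous fun y => dq p x y :=
  (dq_continuous p).comp (by fun_prop : Continuous fun y : ℝ => (x, y))

lemma dq_mul_sub (p : ℝ[X]) (x y : ℝ) : (x - y) * dq p x y = p.eval x - p.eval y := by
  unfold dq
  rw [Polynomial.eval_eq_sum, Polynomial.eval_eq_sum]
  simp only [Polynomial.sum_def]
  rw [Finset.mul_sum, ← Finset.sum_sub_distrib]
  refine Finset.sum_congr rfl fun k _ => ?_
  have := (Commute.all x y).mul_geom_sum₂ k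
  rw [← mul_sub, ← this]; ring

lemma dq_self (p : ℝ[X]) (x : ℝ) : dq p x x = (derivative p).eval x := by
  unfold dq
  rw [derivative_eval]
  simp only [Polynomial.sum_def]
  refine Finset.sum_congr rfl fun k _ => ?_
  rcases k with _ | k
  · simp
  rw [Finset.sum_congr rfl (g := fun _ => x ^ k)]
  · simp; ring
  · intro i hi
    rw [Finset.mem_range] at hi
    rw [← pow_add]; congr 1; lia

/-- A function continuous in `y` satisfying the defining identity is the difference quotient. -/
lemma dq_unique (p : ℝ[X]) (x : ℝ) (g : ℝ → ℝ) (hg : Continuous g)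
    (h : ∀ y, (x - y) * g y = p.eval x - p.eval y) : ∀ y, g y = dq p x y := by
  have hd : Dense {y : ℝ | y ≠ x} := dense_compl_singleton x
  have : g = fun y => dq p x y := by
    refine Continuous.ext_on hd hg (dq_continuous_right p x) ?_
    intro y hy
    have hxy : x - y ≠ 0 := sub_ne_zero.mpr (Ne.symm hy)
    exact mul_left_cancel₀ hxy ((h y).trans (dq_mul_sub p x y).symm)
  intro y; exact congrFun this y

lemma dq_mul (p q : ℝ[X]) (x y : ℝ) :
    dq (p * q) x y = p.eval x * dq q x y + q.eval y * dq p x y := by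
  refine (dq_unique (p * q) x (fun y => p.eval x * dq q x y + q.eval y * dq p x y) ?_ ?_ y).symm
  · have := dq_continuous_right p x
    have := dq_continuous_right q x
    fun_prop
  · intro y
    have h1 := dq_mul_sub p x y
    have h2 := dq_mul_sub q x y
    simp only [eval_mul]
    linear_combination p.eval x * h2 + q.eval y * h1

lemma dq_comm (p : ℝ[X]) (x y : ℝ) : dq p x y = dq p y x := by
  have hc : Continuous fun y => dq p y x :=
    (dq_continuous p).comp (by fun_prop : Continuous fun y : ℝ => (y, x))
  refine (dq_unique p x (fun y => dq p y x) hc ?_ y).symm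
  intro y
  have h1 := dq_mul_sub p y x
  linear_combination -h1

lemma dq_cS (m : ℕ) (x y : ℝ) :
    dq (cS m) x y = ∑ j ∈ Finset.range m, (cS j).eval x * (cS (m - 1 - j)).eval y := by
  refine (dq_unique (cS m) x
    (fun y => ∑ j ∈ Finset.range m, (cS j).eval x * (cS (m - 1 - j)).eval y)
    (by fun_prop) ?_ y).symm
  intro y
  -- telescoping: each term is a difference of consecutive products
  let g : ℕ → ℝ := fun j =>
    (cS j).eval x * (cS (m - j)).eval y - (cS ((j:ℤ) - 1)).eval x * (cS (m - 1 - j)).eval y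
  have key : ∀ j : ℕ, (x - y) * ((cS j).eval x * (cS (m - 1 - j)).eval y) = g (j + 1) - g j := by
    intro j
    have e1 := congrArg (eval x) (Chebyshev.S_add_one ℝ (j : ℤ))
    have e2 := congrArg (eval y) (Chebyshev.S_add_one ℝ ((m : ℤ) - 1 - j))
    simp only [eval_sub, eval_mul, eval_X] at e1 e2
    rw [show (m : ℤ) - 1 - j + 1 = m - j by ring] at e2
    simp only [g, cS]
    push_cast
    rw [show (j : ℤ) + 1 - 1 = j by ring, show (m : ℤ) - (j + 1) = m - 1 - j by ring, e1, e2,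
      show (m : ℤ) - 1 - (j + 1) = m - 1 - j - 1 by ring]
    ring
  rw [Finset.mul_sum, Finset.sum_congr rfl fun j _ => key j, Finset.sum_range_sub]
  simp [g, cS, Chebyshev.S_neg_one]

end Stoj

namespace Stoj
open Polynomial Real

/-! ### Semicircle integrals and the operator `B` -/

lemma sqrt_zero_off {x : ℝ} (hx : 2 < |x|) : √(4 - x ^ 2) = 0 := by
  apply Real.sqrt_eq_zero_of_nonpos
  have : x ^ 2 = |x| ^ 2 := (sq_abs x).symm
  nlinarith

lemma hasCompactSupport_mul_sqrt (f : ℝ → ℝ) :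
    HasCompactSupport fun y => f y * √(4 - y ^ 2) := by
  refine HasCompactSupport.of_support_subset_isCompact (isCompact_Icc (a := (-2:ℝ)) (b := 2)) ?_
  intro y hy
  by_contra h
  apply hy
  have : 2 < |y| := by
    by_contra h'
    exact h (abs_le.mp (not_lt.mp h'))
  simp [sqrt_zero_off this]

lemma integrable_mul_sqrt {f : ℝ → ℝ} (hf : Continuous f) :
    Integrable fun y => f y * √(4 - y ^ 2) :=
  Continuous.integrable_of_hasCompactSupport (by fun_prop) (hasCompactSupport_mul_sqrt f)

lemma integral_mul_sqrt {f : ℝ → ℝ} (hf : Continuous f) :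
    ∫ y, f y * √(4 - y ^ 2) = ∫ θ in (0:ℝ)..π, f (2 * cos θ) * (4 * sin θ ^ 2) := by
  have h1 : ∫ y, f y * √(4 - y ^ 2) = ∫ y in (-2:ℝ)..2, f y * √(4 - y ^ 2) := by
    rw [intervalIntegral.integral_of_le (by norm_num), ← integral_Icc_eq_integral_Ioc,
      setIntegral_eq_integral_of_forall_compl_eq_zero]
    intro y hy
    have : 2 < |y| := by
      by_contra h'
      exact hy (abs_le.mp (not_lt.mp h'))
    simp [sqrt_zero_off this]
  have h2 := intervalIntegral.integral_comp_mul_deriv (a := 0) (b := π)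
    (f := fun θ => 2 * cos θ) (f' := fun θ => 2 * -sin θ)
    (g := fun y => f y * √(4 - y ^ 2))
    (fun θ _ => (hasDerivAt_cos θ).const_mul 2) (by fun_prop) (by fun_prop)
  simp only [cos_zero, cos_pi] at h2
  rw [h1, intervalIntegral.integral_symm,
    show (2:ℝ) = 2 * 1 by norm_num, show (-(2 * 1) : ℝ) = 2 * -1 by norm_num,
    ← h2, ← intervalIntegral.integral_neg]
  refine intervalIntegral.integral_congr fun θ hθ => ?_
  rw [Set.uIcc_of_le pi_pos.le] at hθ
  have hs : 0 ≤ sin θ := sin_nonneg_of_mem_Icc hθ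
  have : √(4 - (2 * cos θ) ^ 2) = 2 * sin θ := by
    rw [show 4 - (2 * cos θ) ^ 2 = (2 * sin θ) ^ 2 by nlinarith [sin_sq_add_cos_sq θ]]
    exact Real.sqrt_sq (by linarith)
  simp only [Function.comp, mul_one, this]
  ring

lemma integral_cos_int (k : ℤ) :
    ∫ θ in (0:ℝ)..π, cos (k * θ) = if k = 0 then π else 0 := by
  split_ifs with h
  · simp [h]
  · rw [intervalIntegral.integral_comp_mul_left (fun x => cos x) (by exact_mod_cast h)]
    simp

/-- Orthogonality of the `cS k` with respect to the semicircle weight. -/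
lemma integral_cS_mul_cS (i j : ℕ) :
    ∫ y, (cS i).eval y * (cS j).eval y * √(4 - y ^ 2) = if i = j then 2 * π else 0 := by
  rw [integral_mul_sqrt (by fun_prop)]
  have : ∀ θ : ℝ, (cS i).eval (2 * cos θ) * (cS j).eval (2 * cos θ) * (4 * sin θ ^ 2)
      = 2 * cos (((i:ℤ) - j : ℤ) * θ) - 2 * cos (((i:ℤ) + j + 2 : ℤ) * θ) := by
    intro θ
    have h1 : (cS i).eval (2 * cos θ) * sin θ = sin (((i:ℤ) + 1) * θ) :=
      Chebyshev.S_two_mul_real_cos ..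
    have h2 : (cS j).eval (2 * cos θ) * sin θ = sin (((j:ℤ) + 1) * θ) :=
      Chebyshev.S_two_mul_real_cos ..
    have h3 := cos_sub (((i:ℤ) + 1) * θ) (((j:ℤ) + 1) * θ)
    have h4 := cos_add (((i:ℤ) + 1) * θ) (((j:ℤ) + 1) * θ)
    push_cast at *
    rw [show ((i:ℝ) - j) * θ = (i + 1) * θ - (j + 1) * θ by ring,
      show ((i:ℝ) + j + 2) * θ = (i + 1) * θ + (j + 1) * θ by ring, h3, h4]
    linear_combination 4 * ((cS j).eval (2 * cos θ) * sin θ) * h1 + 4 * sin ((i + 1) * θ) * h2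
  simp only [this]
  rw [intervalIntegral.integral_sub
    (Continuous.intervalIntegrable (by fun_prop) _ _)
    (Continuous.intervalIntegrable (by fun_prop) _ _),
    intervalIntegral.integral_const_mul, intervalIntegral.integral_const_mul,
    integral_cos_int, integral_cos_int]
  rw [if_neg (show ¬ ((i:ℤ) + j + 2 = 0) by lia)]
  by_cases h : i = j
  · simp [h]
  · rw [if_neg (by lia), if_neg h]; simp

lemma integral_cS (i : ℕ) :
    ∫ y, (cS i).eval y * √(4 - y ^ 2) = if i = 0 then 2 * π else 0 := by
  have := integral_cS_mul_cS i 0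
  simpa [cS] using this

/-- `B p (x) = x p(x) - π⁻¹ ∫ (p x - p y)/(x - y) √(4 - y²) dy`; it sends `cS k` to `cC (k+1)`. -/
noncomputable def B (p : ℝ[X]) (x : ℝ) : ℝ :=
  x * p.eval x - π⁻¹ * ∫ y, dq p x y * √(4 - y ^ 2)

lemma B_add (p q : ℝ[X]) (x : ℝ) : B (p + q) x = B p x + B q x := by
  unfold B
  simp only [dq_add, add_mul, eval_add]
  rw [integral_add (integrable_mul_sqrt (dq_continuous_right p x))
    (integrable_mul_sqrt (dq_continuous_right q x))]
  ring

lemma B_smul (a : ℝ) (p : ℝ[X]) (x : ℝ) : B (a • p) x = a * B p x := by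
  unfold B
  simp only [dq_smul, mul_assoc, eval_smul, smul_eq_mul]
  rw [integral_const_mul]
  ring

lemma B_neg (p : ℝ[X]) (x : ℝ) : B (-p) x = -B p x := by
  have := B_smul (-1) p x
  simpa using this

lemma B_sub (p q : ℝ[X]) (x : ℝ) : B (p - q) x = B p x - B q x := by
  rw [sub_eq_add_neg, B_add, B_neg]; ring

lemma B_zero (x : ℝ) : B 0 x = 0 := by simpa using B_smul 0 0 x

lemma B_sum {ι : Type*} (s : Finset ι) (f : ι → ℝ[X]) (x : ℝ) :
    B (∑ i ∈ s, f i) x = ∑ i ∈ s, B (f i) x := by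
  classical
  induction s using Finset.induction_on with
  | empty => simp [B_zero]
  | insert a s ha ih => rw [Finset.sum_insert ha, Finset.sum_insert ha, B_add, ih]

lemma B_cS (m : ℕ) (x : ℝ) : B (cS m) x = (cC (m + 1)).eval x := by
  unfold B
  simp only [dq_cS, Finset.sum_mul]
  rw [integral_finsetSum]
  · have h : ∀ j ∈ Finset.range m,
        ∫ y, (cS j).eval x * (cS (m - 1 - j)).eval y * √(4 - y ^ 2)
          = (cS j).eval x * if j + 1 = m then 2 * π else 0 := by
      intro j hj
      rw [Finset.mem_range] at hj
      have e : ((m:ℤ) - 1 - j) = ((m - 1 - j : ℕ) : ℤ) := by lia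
      simp only [mul_assoc]
      rw [integral_const_mul, e, integral_cS]
      congr 1
      by_cases hh : j + 1 = m
      · rw [if_pos (by lia), if_pos hh]
      · rw [if_neg (by lia), if_neg hh]
    rw [Finset.sum_congr rfl h]
    rw [← cS_sub]
    rcases m with _ | m
    · simp [cS]
    · rw [Finset.sum_eq_single m]
      · have e := congrArg (eval x) (Chebyshev.S_add_one ℝ ((m:ℤ) + 1))
        simp only [eval_sub, eval_mul, eval_X] at e
        push_cast
        rw [eval_sub]
        rw [e, show (m:ℤ) + 1 - 1 = m by ring]
        field_simp
        simp
        ring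
      · intro b _ hb
        rw [if_neg (by lia)]; simp
      · simp
  · intro j _
    exact integrable_mul_sqrt (by fun_prop)

lemma B_cS_int (m : ℤ) : ∃ ε : ℝ, |ε| ≤ 1 ∧ ∀ x, B (cS m) x = ε * (cC ((m + 1).natAbs : ℤ)).eval x := by
  rcases lt_trichotomy m (-1) with h | h | h
  · refine ⟨-1, by simp, fun x => ?_⟩
    obtain ⟨k, rfl⟩ : ∃ k : ℕ, m = -(k:ℤ) - 2 := ⟨(-m - 2).toNat, by lia⟩
    have : cS (-(k:ℤ) - 2) = - cS k := Chebyshev.S_neg_sub_two ℝ k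
    rw [this, B_neg, B_cS]
    rw [show ((-(k:ℤ) - 2 + 1).natAbs : ℤ) = k + 1 by lia]; ring
  · refine ⟨0, by simp, fun x => ?_⟩
    subst h
    simp [cS, B_zero]
  · refine ⟨1, by simp, fun x => ?_⟩
    obtain ⟨k, rfl⟩ : ∃ k : ℕ, m = k := ⟨m.toNat, by lia⟩
    rw [B_cS, show (((k:ℤ) + 1).natAbs : ℤ) = k + 1 by lia]; ring

lemma B_continuous (p : ℝ[X]) : Continuous (B p) := by
  refine cS_induction (M := fun p => Continuous (B p)) ?_ ?_ ?_ p
  · intro p q hp hq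
    rw [funext (B_add p q)]; exact hp.add hq
  · intro a p hp
    rw [funext (B_smul a p)]; exact continuous_const.mul hp
  · intro k
    rw [funext (B_cS k)]; fun_prop

/-- `B` is antisymmetric with respect to the semicircle weight. -/
lemma B_antisymm (p q : ℝ[X]) :
    ∫ x, B p x * q.eval x * √(4 - x ^ 2) = -∫ x, p.eval x * B q x * √(4 - x ^ 2) := by
  have hB := B_continuous
  revert q
  refine cS_induction (M := fun p => ∀ q, ∫ x, B p x * q.eval x * √(4 - x ^ 2)
    = -∫ x, p.eval x * B q x * √(4 - x ^ 2)) ?_ ?_ ?_ p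
  · intro p p' h h' q
    have := hB p; have := hB p'; have := hB q
    simp only [B_add, eval_add, add_mul]
    rw [integral_add, integral_add, h, h']
    · ring
    all_goals exact integrable_mul_sqrt (by fun_prop)
  · intro a p h q
    simp only [B_smul, eval_smul, smul_eq_mul, mul_assoc] at *
    rw [integral_const_mul, integral_const_mul, h]; ring
  · intro i q
    refine cS_induction (M := fun q => ∫ x, B (cS i) x * q.eval x * √(4 - x ^ 2)
      = -∫ x, (cS i).eval x * B q x * √(4 - x ^ 2)) ?_ ?_ ?_ q
    · intro p p' h h'
      have := hB p; have := hB p'; have := hB (cS i)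
      simp only [B_add, eval_add, add_mul, mul_add]
      rw [integral_add, integral_add, h, h']
      · ring
      all_goals exact integrable_mul_sqrt (by fun_prop)
    · intro a p h
      simp only [B_smul, eval_smul, smul_eq_mul] at *
      simp only [mul_left_comm _ a, mul_assoc] at *
      rw [integral_const_mul, integral_const_mul, h]; ring
    · intro j
      simp only [B_cS]
      have key : ∀ i j : ℕ, ∫ x, (cC (i + 1)).eval x * (cS j).eval x * √(4 - x ^ 2)
          = (if i + 1 = j then 2 * π else 0) - (if j + 1 = i then 2 * π else 0) := by
        intro i j
        rw [← cS_sub]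
        simp only [eval_sub, sub_mul]
        rw [integral_sub (integrable_mul_sqrt (by fun_prop)) (integrable_mul_sqrt (by fun_prop))]
        congr 1
        · exact_mod_cast integral_cS_mul_cS (i + 1) j
        · rcases i with _ | i
          · simp [cS]
          · push_cast
            rw [add_sub_cancel_right, integral_cS_mul_cS i j]
            by_cases h : i = j
            · simp [h]
            · rw [if_neg h, if_neg (by lia)]
      rw [key]
      have := key j i
      simp only [mul_comm (eval _ (cC _))] at this
      rw [this]; ring

/-! ### Densities on `[-2, 2]` -/

/-- The density `P(x) √(4 - x²) / (2π)`; the square root makes it vanish off `[-2, 2]`. -/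
noncomputable def rho (P : ℝ[X]) (x : ℝ) : ℝ := P.eval x * √(4 - x ^ 2) / (2 * π)

lemma rho_continuous (P : ℝ[X]) : Continuous (rho P) := by unfold rho; fun_prop

lemma rho_eq (P : ℝ[X]) (f : ℝ → ℝ) (x : ℝ) :
    f x * rho P x = (2 * π)⁻¹ * (f x * P.eval x * √(4 - x ^ 2)) := by
  unfold rho; field_simp

lemma rho_off (P : ℝ[X]) {x : ℝ} (hx : 2 < |x|) : rho P x = 0 := by
  simp [rho, sqrt_zero_off hx]

lemma integrable_mul_rho (P : ℝ[X]) {f : ℝ → ℝ} (hf : Continuous f) :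
    Integrable fun x => f x * rho P x := by
  simp only [rho_eq]
  exact (integrable_mul_sqrt (by fun_prop)).const_mul _

lemma rho_integrable (P : ℝ[X]) : Integrable (rho P) := by
  simpa using integrable_mul_rho P (f := fun _ => 1) continuous_const

/-- The one-variable part of the loop equation: `2 ∫ Dh(x,·) dμ - V' h = -B (h P)` when
`V' = B P`. -/
lemma linear_term (h P : ℝ[X]) (x : ℝ) :
    2 * (∫ y, dq h x y * rho P y) - B P x * h.eval x = - B (h * P) x := by
  unfold B
  simp only [rho_eq, dq_mul, add_mul, eval_mul]
  rw [integral_const_mul, integral_add]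
  · have e1 : ∀ y, h.eval x * dq P x y * √(4 - y ^ 2) = h.eval x * (dq P x y * √(4 - y ^ 2)) :=
      fun y => by ring
    have e2 : ∀ y, P.eval y * dq h x y * √(4 - y ^ 2) = dq h x y * P.eval y * √(4 - y ^ 2) :=
      fun y => by ring
    simp only [e1, e2]
    rw [integral_const_mul]
    have := pi_pos.ne'
    field_simp
    ring
  · have := dq_continuous_right P x
    exact integrable_mul_sqrt (by fun_prop)
  · have := dq_continuous_right h x
    exact integrable_mul_sqrt (by fun_prop)

/-- The constant part of the loop equation: `∬ Dh dμ dμ = ∫ V' h dμ` when `V' = B P`. -/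
lemma const_term (h P : ℝ[X]) :
    ∫ x, (∫ y, dq h x y * rho P y) * rho P x = ∫ x, B P x * h.eval x * rho P x := by
  have hB := B_continuous
  have e : ∀ x, (∫ y, dq h x y * rho P y) * rho P x
      = (1 / 2) * (B P x * h.eval x * rho P x) - (1 / 2) * (B (h * P) x * rho P x) := by
    intro x
    have := linear_term h P x
    linear_combination (rho P x / 2) * this
  have h1 := hB P
  have h2 := hB (h * P)
  rw [integral_congr_ae (Filter.Eventually.of_forall e), integral_sub
    ((integrable_mul_rho P (by fun_prop)).const_mul _)
    ((integrable_mul_rho P (by fun_prop)).const_mul _), integral_const_mul, integral_const_mul]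
  have := B_antisymm P (h * P)
  have e3 : ∫ x, B P x * h.eval x * rho P x
      = (2 * π)⁻¹ * ∫ x, B P x * (h * P).eval x * √(4 - x ^ 2) := by
    rw [← integral_const_mul]; congr 1; ext x; rw [rho_eq P (fun x => B P x * h.eval x)]
    simp only [eval_mul]; ring
  have e4 : ∫ x, B (h * P) x * rho P x
      = (2 * π)⁻¹ * ∫ x, P.eval x * B (h * P) x * √(4 - x ^ 2) := by
    rw [← integral_const_mul]; congr 1; ext x; rw [rho_eq]; ring
  rw [e4, e3, this]; ring

end Stoj

namespace Stoj
open Polynomial Real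

/-! ### The regularised logarithmic kernel -/

lemma hasSum_log_cos {s : ℝ} (hs : |s| < 1) (φ : ℝ) :
    HasSum (fun k : ℕ => s ^ k / k * (2 * cos (k * φ))) (-log (1 - 2 * s * cos φ + s ^ 2)) := by
  set z : ℂ := s * Complex.exp (φ * Complex.I) with hz
  have hzn : ‖z‖ = |s| := by
    rw [hz, norm_mul, Complex.norm_exp_ofReal_mul_I, mul_one, Complex.norm_real, Real.norm_eq_abs]
  have h := Complex.hasSum_taylorSeries_neg_log (z := z) (by rw [hzn]; exact hs)
  have h2 := (Complex.hasSum_re h).mul_left 2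
  have e1 : (fun k : ℕ => s ^ k / k * (2 * cos (k * φ))) = fun k : ℕ => 2 * (z ^ k / k).re := by
    ext k
    have : z ^ k = ((s ^ k : ℝ) : ℂ) * Complex.exp ((k * φ : ℝ) * Complex.I) := by
      rw [hz, mul_pow, ← Complex.exp_nat_mul]; push_cast; ring_nf
    have hk : z ^ k / (k : ℂ) = ((s ^ k / k : ℝ) : ℂ) * Complex.exp ((k * φ : ℝ) * Complex.I) := by
      rw [this]; push_cast; ring
    rw [hk, Complex.re_ofReal_mul, Complex.exp_ofReal_mul_I_re]
    ring
  have e2 : -log (1 - 2 * s * cos φ + s ^ 2) = 2 * (-Complex.log (1 - z)).re := by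
    rw [Complex.neg_re, Complex.log_re]
    have : 1 - 2 * s * cos φ + s ^ 2 = ‖1 - z‖ ^ 2 := by
      rw [← Complex.normSq_eq_norm_sq, Complex.normSq_apply, hz]
      simp only [Complex.sub_re, Complex.one_re, Complex.re_ofReal_mul, Complex.exp_ofReal_mul_I_re,
        Complex.sub_im, Complex.one_im, Complex.im_ofReal_mul, Complex.exp_ofReal_mul_I_im]
      nlinarith [sin_sq_add_cos_sq φ]
    rw [this, Real.log_pow]
    push_cast; ring
  rw [e1, e2]
  exact h2

/-- The `k`-th Chebyshev polynomial rescaled to `[-b, b]` (with values in `[-2, 2]`). -/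
noncomputable def tb (b : ℝ) (k : ℕ) (x : ℝ) : ℝ := (cC k).eval (2 * x / b)

/-- Poisson-type regularisation of `-log |x - y| + log (b/2)` on `[-b, b]`. -/
noncomputable def ker (r b x y : ℝ) : ℝ := ∑' k : ℕ, r ^ k / (2 * k) * (tb b k x * tb b k y)

lemma tb_continuous (b : ℝ) (k : ℕ) : Continuous (tb b k) := by unfold tb; fun_prop

lemma abs_two_div {b x : ℝ} (hb : 0 < b) (hx : |x| ≤ b) : |2 * x / b| ≤ 2 := by
  rw [abs_div, abs_mul, abs_two, abs_of_pos hb, div_le_iff₀ hb]; linarith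

lemma abs_tb_le {b x : ℝ} (hb : 0 < b) (hx : |x| ≤ b) (k : ℕ) : |tb b k x| ≤ 2 :=
  abs_cC_le_two _ (abs_two_div hb hx)

lemma tb_cos {b : ℝ} (hb : 0 < b) (k : ℕ) (θ : ℝ) : tb b k (b * cos θ) = 2 * cos (k * θ) := by
  unfold tb
  rw [show 2 * (b * cos θ) / b = 2 * cos θ by field_simp, cC_eval_cos]; simp

lemma exists_cos_scale {b x : ℝ} (hb : 0 < b) (hx : |x| ≤ b) : ∃ θ : ℝ, x = b * cos θ := by
  obtain ⟨θ, -, h⟩ := exists_cos (abs_two_div hb hx)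
  refine ⟨θ, ?_⟩
  field_simp at h
  linarith

lemma hasSum_ker_cos {r b : ℝ} (hr0 : 0 ≤ r) (hr1 : r < 1) (hb : 0 < b) (θ φ : ℝ) :
    HasSum (fun k : ℕ => r ^ k / (2 * k) * (tb b k (b * cos θ) * tb b k (b * cos φ)))
      (-(log (1 - 2 * r * cos (θ - φ) + r ^ 2) + log (1 - 2 * r * cos (θ + φ) + r ^ 2)) / 2) := by
  have hr : |r| < 1 := by rwa [abs_of_nonneg hr0]
  have h := ((hasSum_log_cos hr (θ - φ)).add (hasSum_log_cos hr (θ + φ))).div_const 2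
  convert h using 2
  · rfl
  · rw [tb_cos hb, tb_cos hb, mul_sub, mul_add, cos_sub, cos_add]
    ring
  · ring

lemma hasSum_ker {r b x y : ℝ} (hr0 : 0 ≤ r) (hr1 : r < 1) (hb : 0 < b) (hx : |x| ≤ b)
    (hy : |y| ≤ b) :
    HasSum (fun k : ℕ => r ^ k / (2 * k) * (tb b k x * tb b k y)) (ker r b x y) := by
  obtain ⟨θ, rfl⟩ := exists_cos_scale hb hx
  obtain ⟨φ, rfl⟩ := exists_cos_scale hb hy
  exact (hasSum_ker_cos hr0 hr1 hb θ φ).summable.hasSum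

lemma hasSum_log_one_sub {r : ℝ} (hr0 : 0 ≤ r) (hr1 : r < 1) :
    HasSum (fun k : ℕ => r ^ k / (2 * k) * 4) (-2 * log (1 - r)) := by
  have h := hasSum_log_cos (s := r) (by rwa [abs_of_nonneg hr0]) 0
  convert h using 2
  · simp; ring
  · rw [cos_zero, show 1 - 2 * r * 1 + r ^ 2 = (1 - r) ^ 2 by ring, log_pow]; push_cast; ring

lemma abs_ker_le {r b x y : ℝ} (hr0 : 0 ≤ r) (hr1 : r < 1) (hb : 0 < b) (hx : |x| ≤ b)
    (hy : |y| ≤ b) : |ker r b x y| ≤ -2 * log (1 - r) := by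
  have h := hasSum_log_one_sub hr0 hr1
  rw [← Real.norm_eq_abs]
  refine tsum_of_norm_bounded h fun k => ?_
  rw [Real.norm_eq_abs, abs_mul, abs_mul, abs_of_nonneg (by positivity : 0 ≤ r ^ k / (2 * k : ℝ))]
  have h1 := abs_tb_le hb hx k
  have h2 := abs_tb_le hb hy k
  have := abs_nonneg (tb b k x)
  have := abs_nonneg (tb b k y)
  gcongr
  nlinarith

lemma ker_formula {r b : ℝ} (hr0 : 0 ≤ r) (hr1 : r < 1) (hb : 0 < b) (θ φ : ℝ) :
    ker r b (b * cos θ) (b * cos φ) =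
      -log ((1 - 2 * r * cos (θ - φ) + r ^ 2) * (1 - 2 * r * cos (θ + φ) + r ^ 2)) / 2 := by
  have hpos : ∀ u, 0 < 1 - 2 * r * cos u + r ^ 2 := fun u => by
    nlinarith [cos_le_one u, neg_one_le_cos u]
  rw [Real.log_mul (hpos _).ne' (hpos _).ne']
  exact (hasSum_ker_cos hr0 hr1 hb θ φ).tsum_eq

lemma one_sub_two_mul_cos (r u : ℝ) :
    1 - 2 * r * cos u + r ^ 2 = (1 - r) ^ 2 + 4 * r * sin (u / 2) ^ 2 := by
  have : cos u = 1 - 2 * sin (u / 2) ^ 2 := by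
    have := cos_two_mul (u / 2)
    rw [show 2 * (u / 2) = u by ring] at this
    nlinarith [sin_sq_add_cos_sq (u / 2)]
  rw [this]; ring

lemma abs_sub_cos {b : ℝ} (hb : 0 < b) (θ φ : ℝ) :
    |b * cos θ - b * cos φ| = 2 * b * (|sin ((θ - φ) / 2)| * |sin ((θ + φ) / 2)|) := by
  rw [← mul_sub, cos_sub_cos, abs_mul, abs_mul, abs_mul, abs_of_pos hb]
  simp; ring

lemma log_le_ker {r b x y : ℝ} (hr0 : 0 < r) (hr1 : r < 1) (hb : 0 < b) (hx : |x| ≤ b)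
    (hy : |y| ≤ b) (hxy : x ≠ y) : log |x - y| ≤ log (b / 2) - log r - ker r b x y := by
  obtain ⟨θ, rfl⟩ := exists_cos_scale hb hx
  obtain ⟨φ, rfl⟩ := exists_cos_scale hb hy
  rw [ker_formula hr0.le hr1 hb]
  have habs := abs_sub_cos hb θ φ
  have hpos : 0 < |b * cos θ - b * cos φ| := abs_pos.mpr (sub_ne_zero.mpr hxy)
  set s := |sin ((θ - φ) / 2)| with hs
  set s' := |sin ((θ + φ) / 2)| with hs'
  have hss : 0 < s * s' := by rw [habs] at hpos; exact pos_of_mul_pos_right hpos (by positivity)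
  have h1 : 4 * r * s ^ 2 ≤ 1 - 2 * r * cos (θ - φ) + r ^ 2 := by
    rw [one_sub_two_mul_cos, hs, sq_abs]; nlinarith
  have h2 : 4 * r * s' ^ 2 ≤ 1 - 2 * r * cos (θ + φ) + r ^ 2 := by
    rw [one_sub_two_mul_cos, hs', sq_abs]; nlinarith
  have h3 : (4 * r * (s * s')) ^ 2 ≤
      (1 - 2 * r * cos (θ - φ) + r ^ 2) * (1 - 2 * r * cos (θ + φ) + r ^ 2) := by
    calc (4 * r * (s * s')) ^ 2 = (4 * r * s ^ 2) * (4 * r * s' ^ 2) := by ring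
      _ ≤ _ := mul_le_mul h1 h2 (by positivity) (le_trans (by positivity) h1)
  have h4 := Real.log_le_log (by positivity) h3
  rw [Real.log_pow] at h4
  have h5 : log (4 * r * (s * s')) = log r + log |b * cos θ - b * cos φ| - log (b / 2) := by
    rw [habs, ← Real.log_mul (by positivity) (by positivity),
      ← Real.log_div (by positivity) (by positivity)]
    congr 1; field_simp; ring
  push_cast at h4
  linarith

lemma log_one_add_le {s : ℝ} (hs : 0 ≤ s) : log (1 + s) ≤ 2 * √s := by
  have h1 : log (1 + s) = 2 * log √(1 + s) := by
    rw [Real.log_sqrt (by linarith)]; ring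
  have h2 := Real.log_le_sub_one_of_pos (x := √(1 + s)) (by positivity)
  have h3 : √(1 + s) ≤ 1 + √s := by
    rw [Real.sqrt_le_left (by positivity)]
    nlinarith [Real.sq_sqrt hs, Real.sqrt_nonneg s]
  linarith

lemma ker_ge {r b x y : ℝ} (hr0 : 0 < r) (hr1 : r < 1) (hb : 0 < b) (hx : |x| ≤ b)
    (hy : |y| ≤ b) (hxy : x ≠ y) :
    log (b / 2) - log |x - y| - 4 * √((1 - r) * b / |x - y|) ≤ ker r b x y := by
  obtain ⟨θ, rfl⟩ := exists_cos_scale hb hx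
  obtain ⟨φ, rfl⟩ := exists_cos_scale hb hy
  rw [ker_formula hr0.le hr1 hb]
  have habs := abs_sub_cos hb θ φ
  have hpos : 0 < |b * cos θ - b * cos φ| := abs_pos.mpr (sub_ne_zero.mpr hxy)
  set d := |b * cos θ - b * cos φ| with hd
  set s := |sin ((θ - φ) / 2)| with hs
  set s' := |sin ((θ + φ) / 2)| with hs'
  have hs0 : 0 ≤ s := abs_nonneg _
  have hs0' : 0 ≤ s' := abs_nonneg _
  have hs1 : s ≤ 1 := abs_sin_le_one _
  have hs1' : s' ≤ 1 := abs_sin_le_one _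
  have hss : 0 < s * s' := by rw [habs] at hpos; exact pos_of_mul_pos_right hpos (by positivity)
  have h1 : 1 - 2 * r * cos (θ - φ) + r ^ 2 ≤ ((1 - r) + 2 * s) ^ 2 := by
    rw [one_sub_two_mul_cos, ← sq_abs (sin _), ← hs]
    nlinarith [mul_nonneg (by linarith : 0 ≤ 1 - r) hs0, mul_nonneg (by linarith : 0 ≤ 1 - r) (sq_nonneg s)]
  have h2 : 1 - 2 * r * cos (θ + φ) + r ^ 2 ≤ ((1 - r) + 2 * s') ^ 2 := by
    rw [one_sub_two_mul_cos, ← sq_abs (sin _), ← hs']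
    nlinarith [mul_nonneg (by linarith : 0 ≤ 1 - r) hs0', mul_nonneg (by linarith : 0 ≤ 1 - r) (sq_nonneg s')]
  have hq : ∀ u, 0 < 1 - 2 * r * cos u + r ^ 2 := fun u => by
    nlinarith [cos_le_one u, neg_one_le_cos u]
  have h0 : 0 ≤ 1 - r := by linarith
  have h3 : (1 - 2 * r * cos (θ - φ) + r ^ 2) * (1 - 2 * r * cos (θ + φ) + r ^ 2)
      ≤ (4 * (s * s') * (1 + 2.5 * ((1 - r) * b / d))) ^ 2 := by
    have e : 4 * (s * s') * (1 + 2.5 * ((1 - r) * b / d)) = 4 * (s * s') + 5 * (1 - r) := by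
      rw [habs]
      have := hs0.lt_of_ne' (left_ne_zero_of_mul hss.ne')
      have := hs0'.lt_of_ne' (right_ne_zero_of_mul hss.ne')
      field_simp; ring
    rw [e]
    calc _ ≤ ((1 - r) + 2 * s) ^ 2 * ((1 - r) + 2 * s') ^ 2 :=
          mul_le_mul h1 h2 (hq _).le (by positivity)
      _ = (((1 - r) + 2 * s) * ((1 - r) + 2 * s')) ^ 2 := by ring
      _ ≤ _ := by
          apply pow_le_pow_left₀ (by positivity)
          nlinarith [mul_nonneg h0 hs0, mul_nonneg h0 hs0']
  have h4 := Real.log_le_log (mul_pos (hq _) (hq _)) h3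
  have hx0 : 0 ≤ (1 - r) * b / d := by positivity
  rw [Real.log_pow, Real.log_mul (x := 4 * (s * s')) (by positivity) (by positivity)] at h4
  have h5 : log (4 * (s * s')) = log d - log (b / 2) := by
    rw [habs, ← Real.log_div (by positivity) (by positivity)]
    congr 1; field_simp; ring
  have h6 := log_one_add_le (s := 2.5 * ((1 - r) * b / d)) (by positivity)
  have h7 : √(2.5 * ((1 - r) * b / d)) ≤ 2 * √((1 - r) * b / d) := by
    rw [Real.sqrt_le_left (by positivity), mul_pow, Real.sq_sqrt hx0]; nlinarith
  push_cast at h4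
  linarith

end Stoj

namespace Stoj
open Polynomial Real

/-! ### Bounded densities on `[-2, 2]` and their logarithmic potentials -/

/-- Continuous probability densities on `[-2, 2]` bounded by `M`. -/
structure Dens (ρ : ℝ → ℝ) (M : ℝ) : Prop where
  cont : Continuous ρ
  nonneg : ∀ x, 0 ≤ ρ x
  le : ∀ x, ρ x ≤ M
  off : ∀ x, 2 < |x| → ρ x = 0
  int : ∫ x, ρ x = 1

/-- The logarithmic potential of the density `ρ`. -/
noncomputable def pot (ρ : ℝ → ℝ) (x : ℝ) : ℝ := ∫ y, log |x - y| * ρ y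

lemma sqrt_one_div_eq {u : ℝ} (hu : u ≠ 0) :
    √(1 / |u|) ≤ |u ^ (-(1/2) : ℝ)| + |(-u) ^ (-(1/2) : ℝ)| := by
  have key : ∀ v : ℝ, 0 < v → √(1 / v) = v ^ (-(1/2) : ℝ) := fun v hv => by
    rw [Real.sqrt_eq_rpow, one_div, Real.inv_rpow hv.le, ← Real.rpow_neg hv.le]
  rcases lt_or_gt_of_ne hu with h | h
  · rw [abs_of_neg h, key _ (by linarith)]
    linarith [le_abs_self ((-u) ^ (-(1/2) : ℝ)), abs_nonneg (u ^ (-(1/2) : ℝ))]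
  · rw [abs_of_pos h, key _ h]
    linarith [le_abs_self (u ^ (-(1/2) : ℝ)), abs_nonneg ((-u) ^ (-(1/2) : ℝ))]

lemma measurable_sqrt_one_div : Measurable fun u : ℝ => √(1 / |u|) := by fun_prop

lemma integrableOn_sqrt (c d : ℝ) : IntegrableOn (fun u => √(1 / |u|)) (Set.Icc c d) := by
  rcases le_or_gt c d with hcd | hcd
  swap
  · simp [Set.Icc_eq_empty (not_le.mpr hcd)]
  have h1 : IntegrableOn (fun u : ℝ => u ^ (-(1/2) : ℝ)) (Set.Icc c d) := by
    rw [← intervalIntegrable_iff_integrableOn_Icc_of_le hcd]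
    exact intervalIntegral.intervalIntegrable_rpow' (by norm_num)
  have h2 : IntegrableOn (fun u : ℝ => (-u) ^ (-(1/2) : ℝ)) (Set.Icc c d) := by
    rw [← intervalIntegrable_iff_integrableOn_Icc_of_le hcd]
    rw [IntervalIntegrable.iff_comp_neg]
    simp only [neg_neg]
    exact intervalIntegral.intervalIntegrable_rpow' (by norm_num)
  refine Integrable.mono' (h1.norm.add h2.norm) measurable_sqrt_one_div.aestronglyMeasurable ?_
  have h0 : ∀ᵐ u : ℝ ∂volume.restrict (Set.Icc c d), u ≠ 0 :=
    ae_restrict_of_ae (Measure.ae_ne volume 0)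
  filter_upwards [h0] with u hu
  rw [Real.norm_of_nonneg (Real.sqrt_nonneg _)]
  exact sqrt_one_div_eq hu

/-- A uniform bound for `∫_{[-2,2]} |x - y|^{-1/2} dy`. -/
noncomputable def Csq : ℝ := (∫ u in Set.Icc (-1:ℝ) 1, √(1 / |u|)) + 4

lemma integrableOn_sqrt_sub (x : ℝ) :
    IntegrableOn (fun y => √(1 / |x - y|)) (Set.Icc (-2) 2) := by
  have h := integrableOn_sqrt (x - 2) (x + 2)
  rw [← intervalIntegrable_iff_integrableOn_Icc_of_le (by linarith)] at h
  have := (h.comp_sub_left x)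
  rw [← intervalIntegrable_iff_integrableOn_Icc_of_le (by norm_num)]
  convert this.symm using 1 <;> ring

lemma integral_sqrt_sub_le (x : ℝ) : ∫ y in Set.Icc (-2:ℝ) 2, √(1 / |x - y|) ≤ Csq := by
  let g : ℝ → ℝ := (Set.Icc (-1:ℝ) 1).indicator fun u => √(1 / |u|)
  have hg : Integrable g := (integrableOn_sqrt (-1) 1).integrable_indicator measurableSet_Icc
  have hg0 : ∀ u, 0 ≤ g u := fun u => Set.indicator_nonneg (fun _ _ => Real.sqrt_nonneg _) u
  have hgx : Integrable fun y => g (x - y) := hg.comp_sub_left x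
  calc ∫ y in Set.Icc (-2:ℝ) 2, √(1 / |x - y|)
      ≤ ∫ y in Set.Icc (-2:ℝ) 2, (g (x - y) + 1) := by
        refine setIntegral_mono (integrableOn_sqrt_sub x) (hgx.integrableOn.add (by simp)) ?_
        intro y
        by_cases h : x - y ∈ Set.Icc (-1:ℝ) 1
        · simp only [g, Set.indicator_of_mem h]; linarith
        · have : 1 < |x - y| := by
            by_contra h'; exact h (abs_le.mp (not_lt.mp h'))
          have h2 : √(1 / |x - y|) ≤ 1 := by
            rw [Real.sqrt_le_one]
            rw [div_le_one (by linarith)]; exact this.le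
          have := hg0 (x - y)
          simp only
          linarith
    _ = (∫ y in Set.Icc (-2:ℝ) 2, g (x - y)) + 4 := by
        rw [integral_add hgx.integrableOn (by simp)]
        simp; norm_num
    _ ≤ (∫ y, g (x - y)) + 4 :=
        add_le_add (setIntegral_le_integral hgx (Filter.Eventually.of_forall fun y => hg0 _)) le_rfl
    _ = Csq := by
        rw [integral_sub_left_eq_self g volume x, integral_indicator measurableSet_Icc]; rfl

lemma Csq_nonneg : 0 ≤ Csq :=
  le_trans (integral_nonneg fun _ => Real.sqrt_nonneg _) (integral_sqrt_sub_le 0)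

lemma integrableOn_log_sub (x : ℝ) :
    IntegrableOn (fun y => log |x - y|) (Set.Icc (-2) 2) := by
  rw [← intervalIntegrable_iff_integrableOn_Icc_of_le (by norm_num)]
  have h : IntervalIntegrable log volume (x + 2) (x - 2) := intervalIntegral.intervalIntegrable_log'
  have := h.comp_sub_left x
  simp only [Real.log_abs]
  convert this using 1 <;> ring

variable {ρ : ℝ → ℝ} {M : ℝ}

lemma Dens.M_pos (h : Dens ρ M) : 0 < M := by
  by_contra hM
  have : ∀ x, ρ x = 0 := fun x => le_antisymm ((h.le x).trans (not_lt.mp hM)) (h.nonneg x)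
  have h1 := h.int
  simp [this] at h1

lemma not_mem_Icc_two {x : ℝ} (hx : x ∉ Set.Icc (-2:ℝ) 2) : 2 < |x| := by
  by_contra h'; exact hx (abs_le.mp (not_lt.mp h'))

lemma Dens.setIntegral (h : Dens ρ M) (f : ℝ → ℝ) :
    ∫ y in Set.Icc (-2:ℝ) 2, f y * ρ y = ∫ y, f y * ρ y :=
  setIntegral_eq_integral_of_forall_compl_eq_zero fun y hy => by
    simp [h.off y (not_mem_Icc_two hy)]

lemma Dens.integrable_mul (h : Dens ρ M) {f : ℝ → ℝ} (hf : IntegrableOn f (Set.Icc (-2) 2)) :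
    Integrable fun y => f y * ρ y := by
  have h1 : IntegrableOn (fun y => f y * ρ y) (Set.Icc (-2) 2) :=
    hf.mul_continuousOn h.cont.continuousOn isCompact_Icc
  rwa [integrableOn_iff_integrable_of_support_subset] at h1
  intro y hy
  by_contra hc
  exact hy (by simp [h.off y (not_mem_Icc_two hc)])

lemma Dens.integrable_mul_cont (h : Dens ρ M) {f : ℝ → ℝ} (hf : Continuous f) :
    Integrable fun y => f y * ρ y :=
  h.integrable_mul (hf.continuousOn.integrableOn_Icc)

lemma Dens.integrable (h : Dens ρ M) : Integrable ρ := by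
  simpa using h.integrable_mul_cont (f := fun _ => 1) continuous_const

lemma Dens.integrable_log (h : Dens ρ M) (x : ℝ) : Integrable fun y => log |x - y| * ρ y :=
  h.integrable_mul (integrableOn_log_sub x)

lemma Dens.integrable_sqrt (h : Dens ρ M) (x : ℝ) : Integrable fun y => √(1 / |x - y|) * ρ y :=
  h.integrable_mul (integrableOn_sqrt_sub x)

lemma Dens.integral_sqrt_le (h : Dens ρ M) (x : ℝ) :
    ∫ y, √(1 / |x - y|) * ρ y ≤ M * Csq := by
  rw [← h.setIntegral]
  calc _ ≤ ∫ y in Set.Icc (-2:ℝ) 2, √(1 / |x - y|) * M := by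
        refine setIntegral_mono (h.integrable_sqrt x).integrableOn
          ((integrableOn_sqrt_sub x).mul_const M) fun y => ?_
        exact mul_le_mul_of_nonneg_left (h.le y) (Real.sqrt_nonneg _)
    _ = M * ∫ y in Set.Icc (-2:ℝ) 2, √(1 / |x - y|) := by rw [integral_mul_const]; ring
    _ ≤ _ := mul_le_mul_of_nonneg_left (integral_sqrt_sub_le x) h.M_pos.le

/-- The potential grows at least like `log (1 + |x|)`, uniformly in the density. -/
lemma Dens.pot_ge (h : Dens ρ M) (x : ℝ) :
    log (1 + |x|) - (log 3 + 2 * (M * Csq)) ≤ pot ρ x := by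
  have key : ∀ᵐ y, (log (1 + |x|) - log 3) * ρ y - 2 * (√(1 / |x - y|) * ρ y)
      ≤ log |x - y| * ρ y := by
    filter_upwards [Measure.ae_ne volume x] with y hy
    by_cases hy2 : 2 < |y|
    · simp [h.off y hy2]
    have hd : 0 < |x - y| := abs_pos.mpr (sub_ne_zero.mpr (Ne.symm hy))
    have h1 : 1 + |x| ≤ 3 * (|x - y| * (1 + 1 / |x - y|)) := by
      have : |x| ≤ |x - y| + |y| := by
        have := abs_add_le (x - y) y; simpa using this
      rw [mul_add, mul_one_div_cancel hd.ne']
      linarith [not_lt.mp hy2]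
    have h2 := Real.log_le_log (by positivity) h1
    rw [Real.log_mul (by norm_num) (by positivity), Real.log_mul hd.ne' (by positivity)] at h2
    have h3 := log_one_add_le (s := 1 / |x - y|) (by positivity)
    have := h.nonneg y
    nlinarith
  have hi1 : Integrable fun y => (log (1 + |x|) - log 3) * ρ y := h.integrable.const_mul _
  have hi2 := (h.integrable_sqrt x).const_mul 2
  have := integral_mono_ae (hi1.sub hi2) (h.integrable_log x) key
  simp only [Pi.sub_apply] at this
  rw [integral_sub hi1 hi2, integral_const_mul, integral_const_mul, h.int] at this
  have h4 := h.integral_sqrt_le x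
  unfold pot
  linarith

lemma Dens.pot_continuousOn (h : Dens ρ M) {a L : ℝ} (ha : 2 < a) :
    ContinuousOn (pot ρ) {x | a ≤ |x| ∧ |x| ≤ L} := by
  unfold pot
  refine continuousOn_of_dominated
    (bound := fun y => (|log (a - 2)| + |log (L + 2)|) * ρ y) ?_ ?_ ?_ ?_
  · intro x _
    exact (h.integrable_log x).aestronglyMeasurable
  · rintro x ⟨hx1, hx2⟩
    refine Filter.Eventually.of_forall fun y => ?_
    by_cases hy : 2 < |y|
    · simp [h.off y hy]
    rw [Real.norm_eq_abs, abs_mul, abs_of_nonneg (h.nonneg y)]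
    refine mul_le_mul_of_nonneg_right ?_ (h.nonneg y)
    have h1 : a - 2 ≤ |x - y| := by
      have := abs_sub_abs_le_abs_sub x y; linarith [not_lt.mp hy]
    have h2 : |x - y| ≤ L + 2 := (abs_sub x y).trans (by linarith [not_lt.mp hy])
    have h3 := Real.log_le_log (by linarith) h1
    have h4 := Real.log_le_log (by linarith) h2
    rw [abs_le]
    constructor
    · linarith [neg_abs_le (log (a - 2)), abs_nonneg (log (L + 2))]
    · linarith [le_abs_self (log (L + 2)), abs_nonneg (log (a - 2))]
  · exact h.integrable.const_mul _
  · refine Filter.Eventually.of_forall fun y => ?_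
    by_cases hy : 2 < |y|
    · simp only [h.off y hy, mul_zero]; exact continuousOn_const
    refine ContinuousOn.mul (ContinuousOn.log (by fun_prop) ?_) continuousOn_const
    rintro x ⟨hx1, hx2⟩
    have := abs_sub_abs_le_abs_sub x y
    have : 0 < |x - y| := by linarith [not_lt.mp hy]
    exact Ne.symm (ne_of_lt this)

/-! ### The kernel against a density -/

/-- Chebyshev moments of the density at scale `b`. -/
noncomputable def dco (b : ℝ) (ρ : ℝ → ℝ) (k : ℕ) : ℝ := ∫ y, tb b k y * ρ y

lemma Dens.abs_dco_le (h : Dens ρ M) {b : ℝ} (hb : 2 ≤ b) (k : ℕ) : |dco b ρ k| ≤ 2 := by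
  unfold dco
  rw [← Real.norm_eq_abs]
  refine (norm_integral_le_of_norm_le (h.integrable.const_mul 2)
    (Filter.Eventually.of_forall fun y => ?_)).trans ?_
  · by_cases hy : 2 < |y|
    · simp [h.off y hy]
    rw [Real.norm_eq_abs, abs_mul, abs_of_nonneg (h.nonneg y)]
    exact mul_le_mul_of_nonneg_right (abs_tb_le (by linarith) (by linarith [not_lt.mp hy]) k)
      (h.nonneg y)
  · rw [integral_const_mul, h.int]; norm_num

lemma Dens.hasSum_ker_int (h : Dens ρ M) {r b x : ℝ} (hr0 : 0 ≤ r) (hr1 : r < 1) (hb : 2 ≤ b)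
    (hx : |x| ≤ b) :
    HasSum (fun k : ℕ => r ^ k / (2 * k) * (tb b k x * dco b ρ k)) (∫ y, ker r b x y * ρ y) := by
  have hb0 : 0 < b := by linarith
  let F : ℕ → ℝ → ℝ := fun k y => r ^ k / (2 * k) * (tb b k x * tb b k y) * ρ y
  have hF : ∀ k, Integrable (F k) := fun k => by
    have := tb_continuous b k
    exact h.integrable_mul_cont (by fun_prop)
  have hb1 : ∀ k y, ‖F k y‖ ≤ r ^ k / (2 * k) * 4 * ρ y := by
    intro k y
    by_cases hy : 2 < |y|
    · simp [F, h.off y hy]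
    have h1 := abs_tb_le hb0 hx k
    have h2 := abs_tb_le hb0 (show |y| ≤ b by linarith [not_lt.mp hy]) k
    simp only [F]
    rw [Real.norm_eq_abs, abs_mul, abs_mul, abs_mul, abs_of_nonneg (h.nonneg y),
      abs_of_nonneg (by positivity : 0 ≤ r ^ k / (2 * k : ℝ))]
    have := abs_nonneg (tb b k x)
    have := abs_nonneg (tb b k y)
    have := h.nonneg y
    gcongr
    nlinarith
  have hs : Summable fun k => ∫ y, ‖F k y‖ := by
    refine Summable.of_nonneg_of_le (fun k => integral_nonneg fun y => norm_nonneg _) (fun k => ?_)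
      (hasSum_log_one_sub hr0 hr1).summable
    refine (integral_mono (hF k).norm (h.integrable.const_mul _) (hb1 k)).trans ?_
    rw [integral_const_mul, h.int]; simp
  have := hasSum_integral_of_summable_integral_norm hF hs
  have e1 : ∀ k, ∫ y, F k y = r ^ k / (2 * k) * (tb b k x * dco b ρ k) := by
    intro k
    simp only [F, dco]
    rw [← integral_const_mul, ← integral_const_mul]
    congr 1; ext y; ring
  have e2 : ∀ y, ∑' k, F k y = ker r b x y * ρ y := by
    intro y
    simp only [F]
    rw [tsum_mul_right]; rfl
  simpa only [e1, e2] using this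

lemma Dens.integrable_ker (h : Dens ρ M) {r b x : ℝ} (hr0 : 0 < r) (hr1 : r < 1) (hb : 2 ≤ b)
    (hx : |x| ≤ b) : Integrable fun y => ker r b x y * ρ y := by
  have hb0 : 0 < b := by linarith
  have hm : Measurable fun y => ker r b x y * ρ y := by
    have : (fun y => ker r b x y * ρ y)
        = fun y => (∑' k : ℕ, (Set.Icc (-2:ℝ) 2).indicator
            (fun y => r ^ k / (2 * k) * (tb b k x * tb b k y)) y) * ρ y := by
      ext y
      by_cases hy : y ∈ Set.Icc (-2:ℝ) 2
      · simp only [Set.indicator_of_mem hy]; rfl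
      · simp [h.off y (not_mem_Icc_two hy)]
    rw [this]
    refine Measurable.mul ?_ h.cont.measurable
    have hmk : ∀ k : ℕ, Measurable ((Set.Icc (-2:ℝ) 2).indicator
        (fun y => r ^ k / (2 * k) * (tb b k x * tb b k y))) := fun k =>
      Measurable.indicator (by have := tb_continuous b k; fun_prop) measurableSet_Icc
    have hsum : ∀ y, Summable fun k : ℕ => (Set.Icc (-2:ℝ) 2).indicator
        (fun y => r ^ k / (2 * k) * (tb b k x * tb b k y)) y := by
      intro y
      by_cases hy : y ∈ Set.Icc (-2:ℝ) 2
      · simp only [Set.indicator_of_mem hy]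
        exact (hasSum_ker hr0.le hr1 hb0 hx ((abs_le.mpr hy).trans hb)).summable
      · simp only [Set.indicator_of_notMem hy]; exact summable_zero
    refine measurable_of_tendsto_metrizable (f := fun N y => ∑ k ∈ Finset.range N,
      (Set.Icc (-2:ℝ) 2).indicator (fun y => r ^ k / (2 * k) * (tb b k x * tb b k y)) y) ?_ ?_
    · intro N
      exact Finset.measurable_fun_sum _ fun k _ => hmk k
    · rw [tendsto_pi_nhds]
      intro y
      exact (hsum y).hasSum.tendsto_sum_nat
  refine Integrable.mono' (h.integrable.const_mul (-2 * log (1 - r))) hm.aestronglyMeasurable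
    (Filter.Eventually.of_forall fun y => ?_)
  by_cases hy : 2 < |y|
  · simp [h.off y hy]
  rw [Real.norm_eq_abs, abs_mul, abs_of_nonneg (h.nonneg y)]
  exact mul_le_mul_of_nonneg_right
    (abs_ker_le hr0.le hr1 hb0 hx (by linarith [not_lt.mp hy])) (h.nonneg y)

lemma Dens.ker_int_le (h : Dens ρ M) {r b x : ℝ} (hr0 : 0 < r) (hr1 : r < 1) (hb : 2 ≤ b)
    (hx : |x| ≤ b) : ∫ y, ker r b x y * ρ y ≤ log (b / 2) - log r - pot ρ x := by
  have hi1 : Integrable fun y => (log (b / 2) - log r) * ρ y := h.integrable.const_mul _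
  have := integral_mono_ae (h.integrable_ker hr0 hr1 hb hx) (hi1.sub (h.integrable_log x)) ?_
  · simp only [Pi.sub_apply] at this
    rwa [integral_sub hi1 (h.integrable_log x), integral_const_mul, h.int, mul_one] at this
  · filter_upwards [Measure.ae_ne volume x] with y hy
    by_cases hy2 : 2 < |y|
    · simp [h.off y hy2]
    have h1 := log_le_ker hr0 hr1 (by linarith) hx
      (show |y| ≤ b by linarith [not_lt.mp hy2]) (Ne.symm hy)
    have := h.nonneg y
    simp only [Pi.sub_apply]
    nlinarith

lemma Dens.le_ker_int (h : Dens ρ M) {r b x : ℝ} (hr0 : 0 < r) (hr1 : r < 1) (hb : 2 ≤ b)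
    (hx : |x| ≤ b) :
    log (b / 2) - pot ρ x - 4 * √((1 - r) * b) * (M * Csq) ≤ ∫ y, ker r b x y * ρ y := by
  have hi1 : Integrable fun y => log (b / 2) * ρ y := h.integrable.const_mul _
  have hi2 := (h.integrable_sqrt x).const_mul (4 * √((1 - r) * b))
  have hi3 := h.integrable_log x
  have := integral_mono_ae ((hi1.sub hi3).sub hi2) (h.integrable_ker hr0 hr1 hb hx) ?_
  · simp only [Pi.sub_apply] at this
    rw [integral_sub (by exact hi1.sub hi3) hi2, integral_sub hi1 hi3, integral_const_mul,
      integral_const_mul, h.int, mul_one] at this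
    have h4 := mul_le_mul_of_nonneg_left (h.integral_sqrt_le x)
      (by positivity : 0 ≤ 4 * √((1 - r) * b))
    unfold pot
    linarith
  · filter_upwards [Measure.ae_ne volume x] with y hy
    by_cases hy2 : 2 < |y|
    · simp [h.off y hy2]
    have h1 := ker_ge hr0 hr1 (by linarith) hx
      (show |y| ≤ b by linarith [not_lt.mp hy2]) (Ne.symm hy)
    rw [show (1 - r) * b / |x - y| = ((1 - r) * b) * (1 / |x - y|) by ring,
      Real.sqrt_mul (by nlinarith)] at h1
    have := h.nonneg y
    simp only [Pi.sub_apply]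
    nlinarith

end Stoj

namespace Stoj
open Polynomial Real

/-! ### Chebyshev coefficients and the polynomial form of the equilibrium density -/

/-- The `j`-th Chebyshev coefficient of `f` on `[-2, 2]` (twice the usual one). -/
noncomputable def cf (f : ℝ → ℝ) (j : ℕ) : ℝ :=
  π⁻¹ * ∫ θ in (0:ℝ)..π, f (2 * cos θ) * (cC j).eval (2 * cos θ)

lemma cf_add {f g : ℝ → ℝ} (hf : Continuous f) (hg : Continuous g) (j : ℕ) :
    cf (fun x => f x + g x) j = cf f j + cf g j := by
  unfold cf
  rw [← mul_add, ← intervalIntegral.integral_add]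
  · congr 2; ext θ; ring
  · exact Continuous.intervalIntegrable (by fun_prop) _ _
  · exact Continuous.intervalIntegrable (by fun_prop) _ _

lemma cf_smul (f : ℝ → ℝ) (a : ℝ) (j : ℕ) : cf (fun x => a * f x) j = a * cf f j := by
  unfold cf
  simp only [mul_assoc, intervalIntegral.integral_const_mul]
  ring

lemma cf_poly_add (p q : ℝ[X]) (j : ℕ) :
    cf (fun x => (p + q).eval x) j = cf (fun x => p.eval x) j + cf (fun x => q.eval x) j := by
  simp only [eval_add]
  exact cf_add p.continuous q.continuous j

lemma cf_poly_smul (a : ℝ) (p : ℝ[X]) (j : ℕ) :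
    cf (fun x => (a • p).eval x) j = a * cf (fun x => p.eval x) j := by
  simp only [eval_smul, smul_eq_mul]
  exact cf_smul _ a j

lemma cf_cC (i j : ℕ) : cf (fun x => (cC i).eval x) j =
    if i = j then (if i = 0 then 4 else 2) else 0 := by
  unfold cf
  have h : ∀ θ : ℝ, (cC i).eval (2 * cos θ) * (cC j).eval (2 * cos θ) =
      2 * cos (((i + j : ℤ) : ℝ) * θ) + 2 * cos (((i - j : ℤ) : ℝ) * θ) := by
    intro θ
    rw [cC_eval_cos, cC_eval_cos]
    push_cast
    rw [add_mul, sub_mul, cos_add, cos_sub]; ring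
  simp only [h]
  rw [intervalIntegral.integral_add (Continuous.intervalIntegrable (by fun_prop) _ _)
    (Continuous.intervalIntegrable (by fun_prop) _ _), intervalIntegral.integral_const_mul,
    intervalIntegral.integral_const_mul, integral_cos_int, integral_cos_int]
  have hp : π ≠ 0 := pi_ne_zero
  by_cases hij : i = j
  · subst hij
    by_cases hi : i = 0
    · subst hi; simp; field_simp; norm_num
    · rw [if_neg (by omega), if_pos (by omega), if_pos rfl, if_neg hi]; field_simp; norm_num
  · rw [if_neg (by omega), if_neg (by omega), if_neg hij]; simp

/-- Polynomials are spanned by `C_0, C_1, …`. -/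
lemma cC_induction {M : ℝ[X] → Prop} (hadd : ∀ p q, M p → M q → M (p + q))
    (hsmul : ∀ (a : ℝ) p, M p → M (a • p)) (hC : ∀ k : ℕ, M (cC k)) (p : ℝ[X]) : M p := by
  refine cS_induction hadd hsmul (fun k => ?_) p
  induction k using Nat.twoStepInduction with
  | zero =>
    have : cS (0:ℕ) = (1/2 : ℝ) • cC (0:ℕ) := by
      have h2 : (2:ℝ[X]) = Polynomial.C 2 := rfl
      simp only [cS, cC, Nat.cast_zero, Chebyshev.S_zero, Chebyshev.C_zero, h2]
      rw [Polynomial.smul_C]; simp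
    rw [this]; exact hsmul _ _ (hC 0)
  | one =>
    have : cS (1:ℕ) = cC (1:ℕ) := by simp [cS, cC]
    rw [this]; exact hC 1
  | more k h1 h2 =>
    have := cS_add_two k
    rw [show ((k + 2 : ℕ) : ℤ) = (k:ℤ) + 2 by push_cast; ring, this]
    refine hadd _ _ h1 ?_
    simpa using hC (k + 2)

/-- Chebyshev coefficients of a polynomial vanish eventually. -/
lemma cf_eventually_zero (p : ℝ[X]) : ∃ N : ℕ, ∀ j > N, cf (fun x => p.eval x) j = 0 := by
  refine cC_induction (M := fun p => ∃ N : ℕ, ∀ j > N, cf (fun x => p.eval x) j = 0) ?_ ?_ ?_ p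
  · rintro p q ⟨N, hN⟩ ⟨K, hK⟩
    refine ⟨max N K, fun j hj => ?_⟩
    rw [cf_poly_add, hN j (lt_of_le_of_lt (le_max_left _ _) hj),
      hK j (lt_of_le_of_lt (le_max_right _ _) hj), add_zero]
  · rintro a p ⟨N, hN⟩
    exact ⟨N, fun j hj => by rw [cf_poly_smul, hN j hj, mul_zero]⟩
  · intro k
    exact ⟨k, fun j hj => by rw [cf_cC, if_neg (by omega)]⟩

/-- The derivative in terms of Chebyshev coefficients. -/
lemma derivative_cf (p : ℝ[X]) : ∃ N : ℕ, ∀ K ≥ N, ∀ x, (derivative p).eval x =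
    ∑ j ∈ Finset.range K, ((j + 1 : ℕ) : ℝ) / 2 * cf (fun x => p.eval x) (j + 1) *
      (cS j).eval x := by
  refine cC_induction (M := fun p => ∃ N : ℕ, ∀ K ≥ N, ∀ x, (derivative p).eval x =
    ∑ j ∈ Finset.range K, ((j + 1 : ℕ) : ℝ) / 2 * cf (fun x => p.eval x) (j + 1) *
      (cS j).eval x) ?_ ?_ ?_ p
  · rintro p q ⟨N, hN⟩ ⟨K, hK⟩
    refine ⟨max N K, fun J hJ x => ?_⟩
    rw [derivative_add, eval_add, hN J (le_trans (le_max_left _ _) hJ),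
      hK J (le_trans (le_max_right _ _) hJ), ← Finset.sum_add_distrib]
    refine Finset.sum_congr rfl fun j _ => ?_
    rw [cf_poly_add]; ring
  · rintro a p ⟨N, hN⟩
    refine ⟨N, fun J hJ x => ?_⟩
    rw [derivative_smul, eval_smul, hN J hJ, smul_eq_mul, Finset.mul_sum]
    refine Finset.sum_congr rfl fun j _ => ?_
    rw [cf_poly_smul]; ring
  · intro k
    refine ⟨k, fun J hJ x => ?_⟩
    rw [derivative_cC]
    rcases Nat.eq_zero_or_pos k with rfl | hk
    · rw [Finset.sum_eq_zero]
      · simp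
      · intro j _; rw [cf_cC, if_neg (by omega)]; simp
    · obtain ⟨l, rfl⟩ : ∃ l, k = l + 1 := ⟨k - 1, by omega⟩
      rw [Finset.sum_eq_single l]
      · rw [cf_cC, if_pos rfl, if_neg (by omega)]
        simp
      · intro j _ hj; rw [cf_cC, if_neg (by omega)]; simp
      · intro hl; simp at hl; omega

lemma four_sub_mul_cS (i : ℤ) : (4 - X ^ 2) * cS i = cC i - cC (i + 2) := by
  have h1 := Chebyshev.C_eq_S_sub_X_mul_S (R := ℝ)
  have e1 : cC i = cS i - cS (i - 2) := by
    have := cS_sub (i - 1); rw [show i - 1 + 1 = i by ring, show i - 1 - 1 = i - 2 by ring] at this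
    exact this.symm
  have e2 : cC (i + 2) = cS (i + 2) - cS i := by rw [cS_add_two]; ring
  have r1 : cS (i + 2) = X * cS (i + 1) - cS i := Chebyshev.S_add_two ..
  have r2 : cS (i + 1) = X * cS i - cS (i - 1) := by
    have := Chebyshev.S_add_two ℝ (i - 1)
    rw [show i - 1 + 2 = i + 1 by ring, show i - 1 + 1 = i by ring] at this; exact this
  have r3 : cS i = X * cS (i - 1) - cS (i - 2) := by
    have := Chebyshev.S_add_two ℝ (i - 2)
    rw [show i - 2 + 2 = i by ring, show i - 2 + 1 = i - 1 by ring] at this; exact this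
  rw [e1, e2, r1, r2]
  linear_combination (1 : ℝ[X]) * r3

/-- `B p` expressed through the Chebyshev coefficients of `(4 - x²) p / 2`. -/
lemma B_cf (p : ℝ[X]) : ∃ N : ℕ, ∀ K ≥ N, ∀ x, B p x =
    -∑ j ∈ Finset.range K, cf (fun x => ((1/2 : ℝ) • ((4 - X ^ 2) * p)).eval x) (j + 1) *
      (cS j).eval x := by
  refine cS_induction (M := fun p => ∃ N : ℕ, ∀ K ≥ N, ∀ x, B p x =
    -∑ j ∈ Finset.range K, cf (fun x => ((1/2 : ℝ) • ((4 - X ^ 2) * p)).eval x) (j + 1) *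
      (cS j).eval x) ?_ ?_ ?_ p
  · rintro p q ⟨N, hN⟩ ⟨K, hK⟩
    refine ⟨max N K, fun J hJ x => ?_⟩
    rw [B_add, hN J (le_trans (le_max_left _ _) hJ),
      hK J (le_trans (le_max_right _ _) hJ), ← neg_add, ← Finset.sum_add_distrib]
    congr 1
    refine Finset.sum_congr rfl fun j _ => ?_
    rw [mul_add, smul_add, cf_poly_add]; ring
  · rintro a p ⟨N, hN⟩
    refine ⟨N, fun J hJ x => ?_⟩
    rw [B_smul, hN J hJ, mul_neg, Finset.mul_sum]
    congr 1
    refine Finset.sum_congr rfl fun j _ => ?_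
    rw [mul_smul_comm, smul_comm, cf_poly_smul a, mul_assoc]
  · intro k
    refine ⟨k + 2, fun J hJ x => ?_⟩
    have e : ∀ j, cf (fun x => ((1/2 : ℝ) • ((4 - X ^ 2) * cS k)).eval x) (j + 1) =
        (if k = j + 1 then 1 else 0) - (if k + 1 = j then 1 else 0) := by
      intro j
      have : (1/2 : ℝ) • ((4 - X ^ 2) * cS k) = (1/2 : ℝ) • cC k + (-1/2 : ℝ) • cC ((k + 2 : ℕ)) := by
        rw [four_sub_mul_cS, smul_sub, sub_eq_add_neg, ← neg_smul]; congr 2; norm_num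
      rw [this, cf_poly_add, cf_poly_smul, cf_poly_smul, cf_cC, cf_cC]
      split_ifs <;> first | contradiction | omega | norm_num
    rw [B_cS, Finset.sum_congr rfl fun j _ => by rw [e j, sub_mul, ite_mul, ite_mul, one_mul, zero_mul],
      Finset.sum_sub_distrib, Finset.sum_ite_eq, if_pos (by simp; omega)]
    have h2 := congrArg (eval x) (cS_sub k)
    rw [eval_sub] at h2
    rw [← h2]
    rcases Nat.eq_zero_or_pos k with rfl | hk
    · rw [Finset.sum_eq_zero (fun j _ => by rw [if_neg (by omega)])]
      simp [cS]
    · obtain ⟨l, rfl⟩ : ∃ l, k = l + 1 := ⟨k - 1, by omega⟩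
      rw [Finset.sum_eq_single l]
      · simp
      · intro j _ hj; rw [if_neg (by omega)]
      · intro hl; simp at hl; omega

end Stoj

namespace Stoj
open Polynomial Real

variable {ρ : ℝ → ℝ} {M : ℝ}

lemma tb_two (k : ℕ) (x : ℝ) : tb 2 k x = (cC k).eval x := by
  unfold tb; congr 1; ring

/-- If the logarithmic potential of `ρ` is a polynomial on `[-2, 2]`, its Chebyshev coefficients
determine the Chebyshev moments of `ρ`. -/
lemma Dens.dco_eq (h : Dens ρ M) (W : ℝ[X]) (hW : ∀ x, |x| ≤ 2 → pot ρ x = W.eval x)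
    {j : ℕ} (hj : 0 < j) : dco 2 ρ j = -(j * cf (fun x => W.eval x) j) := by
  have hj' : (0:ℝ) < j := by exact_mod_cast hj
  have hpi := pi_pos
  let I : ℝ := ∫ θ in (0:ℝ)..π, W.eval (2 * cos θ) * (cC j).eval (2 * cos θ)
  have habs : ∀ θ, |2 * cos θ| ≤ 2 := fun θ => by
    rw [abs_mul, abs_two]; linarith [abs_cos_le_one θ]
  let ε : ℝ → ℝ := fun r => -log r + 4 * √((1 - r) * 2) * (M * Csq)
  have key : ∀ r, 0 < r → r < 1 → |π * r ^ j * dco 2 ρ j / j + I| ≤ ε r * 2 * π := by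
    intro r hr0 hr1
    let F : ℕ → ℝ → ℝ := fun k θ => r ^ k / (2 * k) * (tb 2 k (2 * cos θ) * dco 2 ρ k)
    let K : ℝ → ℝ := fun θ => ∫ y, ker r 2 (2 * cos θ) y * ρ y
    have hF : ∀ θ, HasSum (fun k => F k θ) (K θ) := fun θ =>
      h.hasSum_ker_int hr0.le hr1 le_rfl (habs θ)
    have hsum := (hasSum_log_one_sub hr0.le hr1).summable
    have hFb : ∀ k θ, ‖F k θ‖ ≤ r ^ k / (2 * k) * 4 := by
      intro k θ
      have h1 := abs_tb_le (b := 2) two_pos (habs θ) k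
      have h2 := h.abs_dco_le (b := 2) le_rfl k
      simp only [F]
      rw [Real.norm_eq_abs, abs_mul, abs_mul,
        abs_of_nonneg (by positivity : 0 ≤ r ^ k / (2 * k : ℝ))]
      have := abs_nonneg (tb 2 k (2 * cos θ))
      have := abs_nonneg (dco 2 ρ k)
      gcongr
      nlinarith
    have hFc : ∀ k, Continuous (F k) := fun k => by
      have := tb_continuous 2 k
      simp only [F]; fun_prop
    have hKc : Continuous K := by
      have : K = fun θ => ∑' k, F k θ := by ext θ; exact (hF θ).tsum_eq.symm
      rw [this]
      exact continuous_tsum hFc hsum hFb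
    have hintg : HasSum (fun k => ∫ θ in (0:ℝ)..π, F k θ * (cC j).eval (2 * cos θ))
        (∫ θ in (0:ℝ)..π, K θ * (cC j).eval (2 * cos θ)) := by
      refine intervalIntegral.hasSum_integral_of_dominated_convergence
        (fun k _ => r ^ k / (2 * k) * 4 * 2) ?_ ?_ ?_ ?_ ?_
      · intro k
        have := hFc k
        exact (by fun_prop : Continuous fun θ => F k θ * (cC j).eval (2 * cos θ)).aestronglyMeasurable
      · intro k
        refine Filter.Eventually.of_forall fun θ _ => ?_
        rw [norm_mul]
        have := hFb k θ
        have := abs_cC_le_two j (habs θ)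
        rw [← Real.norm_eq_abs] at this
        gcongr
      · exact Filter.Eventually.of_forall fun θ _ => hsum.mul_right 2
      · exact intervalIntegrable_const
      · exact Filter.Eventually.of_forall fun θ _ => (hF θ).mul_right _
    have hval : ∀ k, ∫ θ in (0:ℝ)..π, F k θ * (cC j).eval (2 * cos θ) =
        π * (r ^ k / (2 * k) * dco 2 ρ k * cf (fun x => (cC k).eval x) j) := by
      intro k
      unfold cf
      rw [← mul_assoc π, mul_comm π, mul_assoc, mul_inv_cancel_left₀ hpi.ne',
        ← intervalIntegral.integral_const_mul]
      congr 1; ext θ; simp only [F, tb_two]; ring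
    have hone : ∫ θ in (0:ℝ)..π, K θ * (cC j).eval (2 * cos θ) = π * r ^ j * dco 2 ρ j / j := by
      refine hintg.unique ?_
      convert hasSum_single j ?_ using 1
      · rw [hval, cf_cC, if_pos rfl, if_neg hj.ne']; field_simp
      · intro k hk; rw [hval, cf_cC, if_neg hk]; simp
    rw [← hone, ← intervalIntegral.integral_add (Continuous.intervalIntegrable (by fun_prop) _ _)
      (Continuous.intervalIntegrable (by fun_prop) _ _)]
    have hb : ∀ θ ∈ Set.uIoc 0 π, ‖K θ * (cC j).eval (2 * cos θ) +
        W.eval (2 * cos θ) * (cC j).eval (2 * cos θ)‖ ≤ ε r * 2 := by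
      intro θ _
      rw [← add_mul, norm_mul]
      have h1 := h.ker_int_le hr0 hr1 le_rfl (habs θ)
      have h2 := h.le_ker_int hr0 hr1 le_rfl (habs θ)
      rw [hW _ (habs θ), show (2:ℝ) / 2 = 1 by norm_num, log_one] at h1 h2
      have h3 := abs_cC_le_two j (habs θ)
      rw [← Real.norm_eq_abs] at h3
      have h4 : ‖K θ + W.eval (2 * cos θ)‖ ≤ ε r := by
        rw [Real.norm_eq_abs, abs_le]
        have := Csq_nonneg
        have := h.M_pos
        have : 0 ≤ 4 * √((1 - r) * 2) * (M * Csq) := by positivity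
        have : 0 ≤ -log r := by have := log_nonpos hr0.le hr1.le; linarith
        simp only [ε, K]
        constructor <;> linarith
      have := norm_nonneg (K θ + W.eval (2 * cos θ))
      gcongr
      linarith
    have := intervalIntegral.norm_integral_le_of_norm_le_const hb
    rwa [Real.norm_eq_abs, sub_zero, abs_of_pos hpi] at this
  have hlim : |π * 1 ^ j * dco 2 ρ j / j + I| ≤ ε 1 * 2 * π := by
    have hc1 : ContinuousAt (fun r : ℝ => |π * r ^ j * dco 2 ρ j / j + I|) 1 := by fun_prop
    have hc2 : ContinuousAt (fun r : ℝ => ε r * 2 * π) 1 := by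
      have : ContinuousAt log 1 := continuousAt_log one_ne_zero
      simp only [ε]
      fun_prop
    refine le_of_tendsto_of_tendsto (b := nhdsWithin 1 (Set.Iio 1))
      (hc1.tendsto.mono_left nhdsWithin_le_nhds) (hc2.tendsto.mono_left nhdsWithin_le_nhds) ?_
    have : Set.Ioo (0:ℝ) 1 ∈ nhdsWithin (1:ℝ) (Set.Iio 1) := Ioo_mem_nhdsLT one_pos
    filter_upwards [this] with r hr using key r hr.1 hr.2
  have h0 : ε 1 = 0 := by simp [ε]
  rw [h0, zero_mul, zero_mul] at hlim
  have := abs_nonpos_iff.mp hlim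
  have e : cf (fun x => W.eval x) j = π⁻¹ * I := rfl
  rw [e]
  field_simp at this ⊢
  rw [one_pow] at this
  linarith

/-- A continuous function all of whose Chebyshev coefficients vanish is zero on `[-2, 2]`. -/
lemma eq_zero_of_cf {H : ℝ → ℝ} (hH : Continuous H) (h0 : ∀ j, cf H j = 0) :
    ∀ x, |x| ≤ 2 → H x = 0 := by
  have hpi := pi_pos
  have habs : ∀ θ, |2 * cos θ| ≤ 2 := fun θ => by
    rw [abs_mul, abs_two]; linarith [abs_cos_le_one θ]
  have hp : ∀ p : ℝ[X], ∫ θ in (0:ℝ)..π, H (2 * cos θ) * p.eval (2 * cos θ) = 0 := by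
    intro p
    refine cC_induction (M := fun p : ℝ[X] =>
      ∫ θ in (0:ℝ)..π, H (2 * cos θ) * p.eval (2 * cos θ) = 0) ?_ ?_ ?_ p
    · intro p q h1 h2
      simp only [eval_add, mul_add]
      rw [intervalIntegral.integral_add (Continuous.intervalIntegrable (by fun_prop) _ _)
        (Continuous.intervalIntegrable (by fun_prop) _ _), h1, h2, add_zero]
    · intro a p h1
      simp only [eval_smul, smul_eq_mul, mul_left_comm _ a]
      rw [intervalIntegral.integral_const_mul, h1, mul_zero]
    · intro k
      have := h0 k
      unfold cf at this
      exact (mul_eq_zero.mp this).resolve_left (by positivity)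
  have hsq : ∫ θ in (0:ℝ)..π, H (2 * cos θ) * H (2 * cos θ) ≤ 0 := by
    obtain ⟨T, hT⟩ : ∃ T, ∀ θ, |H (2 * cos θ)| ≤ T := by
      obtain ⟨T, hT⟩ := (isCompact_Icc (a := (-2:ℝ)) (b := 2)).exists_bound_of_continuousOn hH.continuousOn
      exact ⟨T, fun θ => hT _ (abs_le.mp (habs θ))⟩
    have hT0 : 0 ≤ T := (abs_nonneg _).trans (hT 0)
    have key : ∀ ε > 0, ∫ θ in (0:ℝ)..π, H (2 * cos θ) * H (2 * cos θ) ≤ T * π * ε := by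
      intro ε hε
      obtain ⟨p, hpp⟩ := exists_polynomial_near_of_continuousOn (-2) 2 H hH.continuousOn ε hε
      have e : ∫ θ in (0:ℝ)..π, H (2 * cos θ) * H (2 * cos θ) =
          ∫ θ in (0:ℝ)..π, H (2 * cos θ) * (H (2 * cos θ) - p.eval (2 * cos θ)) := by
        simp only [mul_sub]
        rw [intervalIntegral.integral_sub (Continuous.intervalIntegrable (by fun_prop) _ _)
          (Continuous.intervalIntegrable (by fun_prop) _ _), hp, sub_zero]
      rw [e]
      have hb : ∀ θ ∈ Set.uIoc 0 π, ‖H (2 * cos θ) * (H (2 * cos θ) - p.eval (2 * cos θ))‖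
          ≤ T * ε := by
        intro θ _
        rw [norm_mul, Real.norm_eq_abs, Real.norm_eq_abs, abs_sub_comm]
        have := hT θ
        have := (hpp _ (abs_le.mp (habs θ))).le
        gcongr
      have := intervalIntegral.norm_integral_le_of_norm_le_const hb
      rw [sub_zero, abs_of_pos hpi] at this
      refine (le_abs_self _).trans (this.trans (le_of_eq (by ring)))
    refine le_of_forall_pos_le_add fun δ hδ => ?_
    refine (key (δ / (T * π + 1)) (by positivity)).trans ?_
    rw [zero_add, mul_div_assoc', div_le_iff₀ (by positivity)]
    nlinarith [mul_nonneg hT0 hpi.le]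
  intro x hx
  obtain ⟨θ, hθ, rfl⟩ := exists_cos hx
  by_contra hne
  have := intervalIntegral.integral_pos (f := fun θ => H (2 * cos θ) * H (2 * cos θ)) hpi
    (by fun_prop) (fun θ _ => mul_self_nonneg _) ⟨θ, hθ, mul_self_pos.mpr hne⟩
  linarith

end Stoj

namespace Stoj
open Polynomial Real

/-- The equilibrium density of a polynomial potential is `rho P` for a polynomial `P`, positive on
`[-2, 2]`, with `V' = B P`. -/
lemma exists_poly_density {V : ℝ[X]} {ρ P : ℝ → ℝ} (hC : EquilC12 (fun x => V.eval x) ρ P) :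
    ∃ (Q : ℝ[X]) (M : ℝ), ρ = rho Q ∧ Dens ρ M ∧ (∀ x, |x| ≤ 2 → 0 < Q.eval x) ∧
      ∀ x, (derivative V).eval x = B Q x := by
  have hpi := pi_pos
  obtain ⟨c, hc1, hc2⟩ := hC.equil
  have h22 : (-2:ℝ) ≤ 2 := by norm_num
  let Pe : ℝ → ℝ := Set.IccExtend h22 ((Set.Icc (-2:ℝ) 2).domRestrict P)
  have hPe : Continuous Pe := (continuousOn_iff_continuous_domRestrict.mp hC.P_cont).Icc_extend'
  have hPeq : ∀ x, |x| ≤ 2 → Pe x = P x := fun x hx => by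
    simp only [Pe]; rw [Set.IccExtend_of_mem h22 _ (abs_le.mp hx)]; rfl
  have hρe : ρ = fun x => (Pe x / (2 * π)) * √(4 - x ^ 2) := by
    ext x
    by_cases hx : |x| ≤ 2
    · rw [hC.ρ_eq x (abs_le.mp hx), hPeq x hx]; ring
    · rw [hC.ρ_supp x (fun h => hx (abs_le.mpr h)), sqrt_zero_off (not_le.mp hx), mul_zero]
  have hρc : Continuous ρ := by rw [hρe]; fun_prop
  obtain ⟨M, hM⟩ := (isCompact_Icc (a := (-2:ℝ)) (b := 2)).exists_bound_of_continuousOn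
    hρc.continuousOn
  have hD : Dens ρ M := by
    refine ⟨hρc, hC.ρ_nonneg, fun x => ?_, fun x hx => hC.ρ_supp x fun h => ?_, hC.ρ_int⟩
    · by_cases hx : |x| ≤ 2
      · exact (le_abs_self _).trans (hM x (abs_le.mp hx))
      · rw [hC.ρ_supp x (fun h => hx (abs_le.mpr h))]
        exact (norm_nonneg _).trans (hM 0 (by norm_num))
    · exact absurd (abs_le.mpr h) (not_le.mpr hx)
  let W : ℝ[X] := (1/2 : ℝ) • (V + Polynomial.C c)
  have hW : ∀ x, |x| ≤ 2 → pot ρ x = W.eval x := by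
    intro x hx
    have := hc1 x (abs_le.mp hx)
    simp only [W, eval_smul, eval_add, eval_C, smul_eq_mul]
    unfold pot; linarith
  let G : ℝ → ℝ := fun x => Pe x * (4 - x ^ 2) / 2
  have hGc : Continuous G := by simp only [G]; fun_prop
  have hdG : ∀ j, dco 2 ρ j = cf G j := by
    intro j
    unfold dco cf
    have e : ∀ y, tb 2 j y * ρ y = ((cC j).eval y * (Pe y / (2 * π))) * √(4 - y ^ 2) := by
      intro y; rw [hρe, tb_two]; ring
    simp only [e]
    rw [integral_mul_sqrt (by fun_prop), ← intervalIntegral.integral_const_mul]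
    congr 1; ext θ
    have := sin_sq_add_cos_sq θ
    simp only [G]
    rw [show 4 - (2 * cos θ) ^ 2 = 4 * sin θ ^ 2 by linear_combination (-4) * this]
    field_simp
  have hd : ∀ j : ℕ, 0 < j → cf G j = -(j * cf (fun x => W.eval x) j) := fun j hj => by
    rw [← hdG, hD.dco_eq W hW hj]
  have hd0 : cf G 0 = 2 := by
    rw [← hdG]; unfold dco
    simp only [tb_two, Nat.cast_zero, cC, Chebyshev.C_zero, eval_ofNat]
    rw [integral_const_mul, hD.int, mul_one]
  obtain ⟨N, hN⟩ := cf_eventually_zero W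
  let Gh : ℝ[X] := ∑ j ∈ Finset.range (N + 1), (if j = 0 then (1/2 : ℝ) else cf G j / 2) • cC j
  have hGh : ∀ j, cf (fun x => Gh.eval x) j = cf G j := by
    intro j
    have e : cf (fun x => Gh.eval x) j = ∑ i ∈ Finset.range (N + 1),
        (if i = 0 then (1/2 : ℝ) else cf G i / 2) * cf (fun x => (cC i).eval x) j := by
      simp only [Gh]
      induction Finset.range (N + 1) using Finset.induction_on with
      | empty => simp [cf]
      | insert a s ha ih => rw [Finset.sum_insert ha, Finset.sum_insert ha, cf_poly_add, ih,
          cf_poly_smul]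
    rw [e]
    have e2 : ∀ i, (if i = 0 then (1/2 : ℝ) else cf G i / 2) * cf (fun x => (cC i).eval x) j =
        if i = j then cf G j else 0 := by
      intro i
      rw [cf_cC]
      by_cases hij : i = j
      · subst hij
        by_cases hi : i = 0
        · subst hi; simp [hd0]; norm_num
        · simp [hi]
      · simp [hij]
    simp only [e2, Finset.sum_ite_eq']
    split_ifs with hj
    · rfl
    · simp at hj
      rw [hd j (by omega), hN j (by omega)]; simp
  have hGG : ∀ x, |x| ≤ 2 → G x = Gh.eval x := by
    intro x hx
    have := eq_zero_of_cf (H := fun x => G x + (-1) * Gh.eval x) (by fun_prop) (fun j => by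
      rw [cf_add hGc (by fun_prop), cf_smul, hGh]; ring) x hx
    linarith
  have hroot : ∀ s : ℝ, s ^ 2 = 4 → Gh.eval s = 0 := by
    intro s hs
    rw [← hGG s (abs_le_of_sq_le_sq (by nlinarith) (by norm_num))]
    simp [G, hs]
  obtain ⟨Q, hQ⟩ : ∃ Q : ℝ[X], Gh = (1/2 : ℝ) • ((4 - X ^ 2) * Q) := by
    have h1 : (X - Polynomial.C (2:ℝ)) * (X - Polynomial.C (-2:ℝ)) ∣ Gh := by
      refine IsCoprime.mul_dvd (Polynomial.isCoprime_X_sub_C_of_isUnit_sub (by norm_num)) ?_ ?_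
      · exact dvd_iff_isRoot.mpr (hroot 2 (by norm_num))
      · exact dvd_iff_isRoot.mpr (hroot (-2) (by norm_num))
    obtain ⟨Q, hQ⟩ := h1
    refine ⟨(-2 : ℝ) • Q, ?_⟩
    rw [mul_smul_comm, smul_smul, hQ]
    have e4 : (4 : ℝ[X]) = Polynomial.C 2 * Polynomial.C 2 := by rw [← C_mul]; norm_num; rfl
    rw [e4, map_neg]
    norm_num
    ring
  have hPQ : ∀ x, |x| < 2 → Pe x = Q.eval x := by
    intro x hx
    have h1 := hGG x hx.le
    rw [hQ] at h1
    simp only [G, eval_smul, eval_mul, eval_sub, eval_pow, eval_X, eval_ofNat, smul_eq_mul] at h1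
    have : 0 < 4 - x ^ 2 := by have := sq_lt_sq' (by linarith [(abs_lt.mp hx).1]) (abs_lt.mp hx).2; linarith
    have h2 : (4 - x ^ 2) * (Pe x - Q.eval x) = 0 := by linarith
    rcases mul_eq_zero.mp h2 with h3 | h3 <;> linarith
  have hPQ' : ∀ x, |x| ≤ 2 → Pe x = Q.eval x := by
    have hcl : IsClosed {x | Pe x = Q.eval x} := isClosed_eq hPe Q.continuous
    have hsub : Set.Icc (-2:ℝ) 2 ⊆ {x | Pe x = Q.eval x} := by
      rw [← closure_Ioo (by norm_num : (-2:ℝ) ≠ 2)]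
      exact closure_minimal (fun x hx => hPQ x (abs_lt.mpr hx)) hcl
    exact fun x hx => hsub (abs_le.mp hx)
  refine ⟨Q, M, ?_, hD, fun x hx => ?_, fun x => ?_⟩
  · ext x
    rw [hρe]; simp only [rho]
    by_cases hx : |x| ≤ 2
    · rw [hPQ' x hx]; ring
    · rw [sqrt_zero_off (not_le.mp hx)]; simp
  · rw [← hPQ' x hx, hPeq x hx]; exact hC.P_pos x (abs_le.mp hx)
  · obtain ⟨N1, hN1⟩ := derivative_cf W
    obtain ⟨N2, hN2⟩ := B_cf Q
    have e1 := hN1 (max N1 N2) (le_max_left _ _) x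
    have e2 := hN2 (max N1 N2) (le_max_right _ _) x
    have e3 : (derivative V).eval x = 2 * (derivative W).eval x := by
      simp only [W, derivative_smul, derivative_add, derivative_C, add_zero, eval_smul, smul_eq_mul]
      ring
    rw [e3, e1, e2, Finset.mul_sum, ← Finset.sum_neg_distrib]
    refine Finset.sum_congr rfl fun j _ => ?_
    rw [← hQ, hGh, hd (j + 1) (by omega)]; ring

end Stoj

namespace Stoj
open Polynomial Real

/-! ### The semicircle law as the equilibrium measure of `x² / 2` -/

lemma rho_one (x : ℝ) : rho 1 x = (cS (0:ℕ)).eval x * √(4 - x ^ 2) * (2 * π)⁻¹ := by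
  simp [rho, cS]; ring

lemma dens_rho_one : Dens (rho 1) 1 := by
  have hpi := pi_gt_three
  refine ⟨rho_continuous 1, fun x => ?_, fun x => ?_, fun x hx => rho_off 1 hx, ?_⟩
  · simp only [rho, eval_one]; positivity
  · simp only [rho, eval_one, one_mul]
    rw [div_le_one (by positivity)]
    have : √(4 - x ^ 2) ≤ 2 := by
      rw [Real.sqrt_le_left (by norm_num)]; nlinarith
    linarith
  · simp only [rho_one]
    rw [integral_mul_const, integral_cS, if_pos rfl]
    field_simp

lemma dco_semicircle (k : ℕ) : dco 2 (rho 1) k = if k = 0 then 2 else if k = 2 then -1 else 0 := by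
  unfold dco
  have hpi := pi_pos
  rcases k with _ | _ | k
  · simp only [tb_two, Nat.cast_zero, cC, Chebyshev.C_zero, eval_ofNat]
    rw [integral_const_mul, dens_rho_one.int, mul_one]; simp
  · have : ∀ y, tb 2 (0 + 1) y * rho 1 y = (cS (1:ℕ)).eval y * √(4 - y ^ 2) * (2 * π)⁻¹ := by
      intro y; rw [tb_two, rho_one]; simp [cS, cC]
      ring
    simp only [this]
    rw [integral_mul_const, integral_cS]; simp
  · have : ∀ y, tb 2 (k + 1 + 1) y * rho 1 y = (cS ((k + 2 : ℕ))).eval y * √(4 - y ^ 2) * (2 * π)⁻¹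
        - (cS k).eval y * √(4 - y ^ 2) * (2 * π)⁻¹ := by
      intro y
      rw [tb_two, rho_one]
      have := congrArg (eval y) (cS_add_two k)
      rw [eval_add] at this
      push_cast at this ⊢
      have h0 : (cS (0:ℤ)).eval y = 1 := by simp [cS]
      rw [this, h0, show (k:ℤ) + 1 + 1 = k + 2 by ring]
      ring
    simp only [this]
    rw [integral_sub, integral_mul_const, integral_mul_const, integral_cS, integral_cS]
    · by_cases hk : k = 0
      · simp [hk]; field_simp
      · simp [hk]
    · exact (integrable_mul_sqrt (by fun_prop)).mul_const _
    · exact (integrable_mul_sqrt (by fun_prop)).mul_const _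

lemma ker_int_semicircle {r x : ℝ} (hr0 : 0 < r) (hr1 : r < 1) (hx : |x| ≤ 2) :
    ∫ y, ker r 2 x y * rho 1 y = -(r ^ 2 / 4 * (x ^ 2 - 2)) := by
  have h := dens_rho_one.hasSum_ker_int hr0.le hr1 le_rfl hx
  refine h.unique ?_
  convert hasSum_single 2 ?_ using 1
  · rw [dco_semicircle, tb_two]; simp [cC, Chebyshev.C_two]; ring
  · intro k hk
    rw [dco_semicircle]
    rcases k with _ | k
    · simp
    · simp; omega

lemma pot_semicircle {x : ℝ} (hx : |x| ≤ 2) : pot (rho 1) x = (x ^ 2 - 2) / 4 := by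
  have h1 : ∀ r, 0 < r → r < 1 → |pot (rho 1) x - r ^ 2 / 4 * (x ^ 2 - 2)| ≤
      -log r + 4 * √((1 - r) * 2) * (1 * Csq) := by
    intro r hr0 hr1
    have h1 := dens_rho_one.ker_int_le hr0 hr1 le_rfl hx
    have h2 := dens_rho_one.le_ker_int hr0 hr1 le_rfl hx
    rw [ker_int_semicircle hr0 hr1 hx, show (2:ℝ) / 2 = 1 by norm_num, log_one] at h1 h2
    have := Csq_nonneg
    have : 0 ≤ 4 * √((1 - r) * 2) * (1 * Csq) := by positivity
    have : 0 ≤ -log r := by have := log_nonpos hr0.le hr1.le; linarith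
    rw [abs_le]; constructor <;> linarith
  have hlim : |pot (rho 1) x - 1 ^ 2 / 4 * (x ^ 2 - 2)| ≤
      -log 1 + 4 * √((1 - 1) * 2) * (1 * Csq) := by
    have hc1 : ContinuousAt (fun r : ℝ => |pot (rho 1) x - r ^ 2 / 4 * (x ^ 2 - 2)|) 1 := by fun_prop
    have hc2 : ContinuousAt (fun r : ℝ => -log r + 4 * √((1 - r) * 2) * (1 * Csq)) 1 := by
      have : ContinuousAt log 1 := continuousAt_log one_ne_zero
      fun_prop
    refine le_of_tendsto_of_tendsto (b := nhdsWithin 1 (Set.Iio 1))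
      (hc1.tendsto.mono_left nhdsWithin_le_nhds) (hc2.tendsto.mono_left nhdsWithin_le_nhds) ?_
    have : Set.Ioo (0:ℝ) 1 ∈ nhdsWithin (1:ℝ) (Set.Iio 1) := Ioo_mem_nhdsLT one_pos
    filter_upwards [this] with r hr using h1 r hr.1 hr.2
  simp at hlim
  linarith

/-- Outside the support the kernel at an endpoint is the exact logarithm. -/
lemma log_eq_ker_endpoint {w σ y : ℝ} (hw : 1 < w) (hσ : σ = 1 ∨ σ = -1) (hy : |y| ≤ 2) :
    log |σ * (w + w⁻¹) - y| = log w - ker w⁻¹ 2 (2 * σ) y := by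
  have hw0 : 0 < w := by linarith
  obtain ⟨φ, -, rfl⟩ := exists_cos hy
  obtain ⟨θ, hc, hs⟩ : ∃ θ : ℝ, cos θ = σ ∧ sin θ = 0 := by
    rcases hσ with rfl | rfl
    · exact ⟨0, by simp, by simp⟩
    · exact ⟨π, by simp, by simp⟩
  have h := (hasSum_ker_cos (b := 2) (inv_nonneg.mpr hw0.le) (inv_lt_one_of_one_lt₀ hw) two_pos θ φ).tsum_eq
  have hk : ker w⁻¹ 2 (2 * σ) (2 * cos φ) = -log (1 - 2 * w⁻¹ * (σ * cos φ) + w⁻¹ ^ 2) := by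
    rw [← hc]; unfold ker
    rw [h, cos_sub, cos_add, hs]; ring_nf
  have hσ2 : |σ| = 1 := by rcases hσ with rfl | rfl <;> simp
  have hσs : σ * σ = 1 := by rcases hσ with rfl | rfl <;> simp
  have hpos : 0 < 1 - 2 * w⁻¹ * (σ * cos φ) + w⁻¹ ^ 2 := by
    have h1 : |σ * cos φ| ≤ 1 := by rw [abs_mul, hσ2, one_mul]; exact abs_cos_le_one φ
    have h2 := (abs_le.mp h1).2
    have h3 : w⁻¹ < 1 := inv_lt_one_of_one_lt₀ hw
    have h4 : 0 < w⁻¹ := inv_pos.mpr hw0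
    nlinarith [mul_le_mul_of_nonneg_left h2 h4.le]
  rw [hk, sub_neg_eq_add, ← log_mul hw0.ne' hpos.ne']
  have : |σ * (w + w⁻¹) - 2 * cos φ| = w * (1 - 2 * w⁻¹ * (σ * cos φ) + w⁻¹ ^ 2) := by
    have e : σ * (w + w⁻¹) - 2 * cos φ = σ * (w * (1 - 2 * w⁻¹ * (σ * cos φ) + w⁻¹ ^ 2)) := by
      field_simp
      linear_combination (2 * w * cos φ) * hσs
    rw [e, abs_mul, hσ2, one_mul, abs_of_pos (by positivity)]
  rw [this]

lemma pot_semicircle_out {w σ : ℝ} (hw : 1 < w) (hσ : σ = 1 ∨ σ = -1) :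
    pot (rho 1) (σ * (w + w⁻¹)) = log w + w⁻¹ ^ 2 / 2 := by
  have hw0 : 0 < w := by linarith
  have hσ2 : |2 * σ| ≤ 2 := by rcases hσ with rfl | rfl <;> simp
  unfold pot
  have e : ∀ y, log |σ * (w + w⁻¹) - y| * rho 1 y =
      log w * rho 1 y - ker w⁻¹ 2 (2 * σ) y * rho 1 y := by
    intro y
    by_cases hy : |y| ≤ 2
    · rw [log_eq_ker_endpoint hw hσ hy]; ring
    · rw [rho_off 1 (not_le.mp hy)]; ring
  simp only [e]
  have h4 : 0 < w⁻¹ := inv_pos.mpr hw0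
  have h3 : w⁻¹ < 1 := inv_lt_one_of_one_lt₀ hw
  rw [integral_sub ((rho_integrable 1).const_mul _) (dens_rho_one.integrable_ker h4 h3 le_rfl hσ2),
    integral_const_mul, dens_rho_one.int, ker_int_semicircle h4 h3 hσ2]
  have hσs : σ ^ 2 = 1 := by rcases hσ with rfl | rfl <;> simp
  rw [mul_pow, hσs]; ring

lemma pot_semicircle_lt {x : ℝ} (hx : 2 < |x|) : 2 * pot (rho 1) x - x ^ 2 / 2 < -1 := by
  obtain ⟨w, hw1, hw⟩ := exists_joukowsky hx.le
  have hw2 : 1 < w := by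
    rcases hw1.lt_or_eq with h | h
    · exact h
    · rw [← h] at hw; norm_num at hw; linarith
  have hw0 : 0 < w := by linarith
  obtain ⟨σ, hσ, hxe⟩ : ∃ σ : ℝ, (σ = 1 ∨ σ = -1) ∧ x = σ * |x| := by
    rcases le_total 0 x with h | h
    · exact ⟨1, Or.inl rfl, by rw [abs_of_nonneg h]; ring⟩
    · exact ⟨-1, Or.inr rfl, by rw [abs_of_nonpos h]; ring⟩
  have hσs : σ ^ 2 = 1 := by rcases hσ with rfl | rfl <;> simp
  rw [hxe, hw, pot_semicircle_out hw2 hσ, mul_pow, hσs]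
  have hl : 0 < log (w ^ 2) := log_pos (by nlinarith)
  have h1 := self_lt_sinh_iff.mpr hl
  rw [sinh_log (by positivity), log_pow] at h1
  have h2 : w * w⁻¹ = 1 := mul_inv_cancel₀ hw0.ne'
  have h3 : (w ^ 2)⁻¹ = w⁻¹ ^ 2 := by rw [inv_pow]
  rw [h3] at h1
  push_cast at h1
  nlinarith

end Stoj

namespace Stoj
open Polynomial Real

/-! ### Weighted Chebyshev norms and approximate inverses -/

/-- `NT R p T`: `p` has a Chebyshev expansion `∑ b_k C_k` with `∑ |b_k| R^k ≤ T`. -/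
def NT (R : ℝ) (p : ℝ[X]) (T : ℝ) : Prop :=
  ∃ (K : ℕ) (b : ℕ → ℝ), p = ∑ k ∈ Finset.range K, b k • cC k ∧
    ∑ k ∈ Finset.range K, |b k| * R ^ k ≤ T

lemma NT.mono {R T T' : ℝ} {p : ℝ[X]} (h : NT R p T) (hT : T ≤ T') : NT R p T' := by
  obtain ⟨K, b, h1, h2⟩ := h
  exact ⟨K, b, h1, h2.trans hT⟩

lemma NT.smul {R T : ℝ} {p : ℝ[X]} (h : NT R p T) (a : ℝ) : NT R (a • p) (|a| * T) := by
  obtain ⟨K, b, h1, h2⟩ := h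
  refine ⟨K, fun k => a * b k, ?_, ?_⟩
  · rw [h1, Finset.smul_sum]; simp only [smul_smul]
  · simp only [abs_mul, mul_assoc]
    rw [← Finset.mul_sum]; gcongr

lemma NT.add {R T T' : ℝ} {p q : ℝ[X]} (hR : 0 ≤ R) (h : NT R p T) (h' : NT R q T') :
    NT R (p + q) (T + T') := by
  obtain ⟨K, b, h1, h2⟩ := h
  obtain ⟨K', b', h1', h2'⟩ := h'
  let e : ℕ → ℝ := fun k => if k < K then b k else 0
  let e' : ℕ → ℝ := fun k => if k < K' then b' k else 0
  have key : ∀ (K J : ℕ) (b : ℕ → ℝ), K ≤ J →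
      (∑ k ∈ Finset.range K, b k • cC k = ∑ k ∈ Finset.range J, (if k < K then b k else 0) • cC k) ∧
      (∑ k ∈ Finset.range K, |b k| * R ^ k =
        ∑ k ∈ Finset.range J, |if k < K then b k else 0| * R ^ k) := by
    intro K J b hKJ
    constructor
    · rw [← Finset.sum_subset (Finset.range_mono hKJ)]
      · refine Finset.sum_congr rfl fun k hk => ?_
        rw [if_pos (Finset.mem_range.mp hk)]
      · intro k _ hk; rw [if_neg (by simpa using hk), zero_smul]
    · rw [← Finset.sum_subset (Finset.range_mono hKJ)]
      · refine Finset.sum_congr rfl fun k hk => ?_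
        rw [if_pos (Finset.mem_range.mp hk)]
      · intro k _ hk; rw [if_neg (by simpa using hk)]; simp
  refine ⟨max K K', fun k => e k + e' k, ?_, ?_⟩
  · rw [h1, h1', (key K (max K K') b (le_max_left _ _)).1,
      (key K' (max K K') b' (le_max_right _ _)).1, ← Finset.sum_add_distrib]
    refine Finset.sum_congr rfl fun k _ => ?_
    rw [add_smul]
  · rw [(key K (max K K') b (le_max_left _ _)).2] at h2
    rw [(key K' (max K K') b' (le_max_right _ _)).2] at h2'
    refine le_trans ?_ (add_le_add h2 h2')
    rw [← Finset.sum_add_distrib]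
    refine Finset.sum_le_sum fun k _ => ?_
    rw [← add_mul]
    gcongr
    exact abs_add_le _ _

lemma NT.zero (R : ℝ) : NT R 0 0 := ⟨0, 0, by simp, by simp⟩

lemma NT.sum {R : ℝ} (hR : 0 ≤ R) (s : Finset ℕ) (f : ℕ → ℝ[X]) (T : ℕ → ℝ)
    (h : ∀ j ∈ s, NT R (f j) (T j)) : NT R (∑ j ∈ s, f j) (∑ j ∈ s, T j) := by
  induction s using Finset.induction_on with
  | empty => simpa using NT.zero R
  | insert a s ha ih =>
    rw [Finset.sum_insert ha, Finset.sum_insert ha]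
    exact (h a (Finset.mem_insert_self _ _)).add hR
      (ih fun j hj => h j (Finset.mem_insert_of_mem hj))

/-- Every polynomial of degree at most `D` is a combination of `C_0, …, C_D`. -/
lemma exists_expand (D : ℕ) : ∀ g : ℝ[X], g.natDegree ≤ D →
    ∃ b : ℕ → ℝ, g = ∑ k ∈ Finset.range (D + 1), b k • cC k := by
  let W : ℕ → Submodule ℝ ℝ[X] := fun D => Submodule.span ℝ ((fun k : ℕ => cC k) '' (Set.Iio (D + 1)))
  have hmono : ∀ D E, D ≤ E → W D ≤ W E := fun D E h =>
    Submodule.span_mono (Set.image_mono (Set.Iio_subset_Iio (by omega)))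
  have hX : ∀ D, ∀ p ∈ W D, X * p ∈ W (D + 1) := by
    intro D p hp
    induction hp using Submodule.span_induction with
    | mem x h =>
      obtain ⟨k, hk, rfl⟩ := h
      have hk' : k < D + 1 := hk
      have e : X * cC (k:ℤ) = cC ((k:ℤ) + 1) + cC ((k:ℤ) - 1) := by
        have := Chebyshev.C_add_two ℝ ((k:ℤ) - 1)
        rw [show (k:ℤ) - 1 + 2 = k + 1 by ring, show (k:ℤ) - 1 + 1 = k by ring] at this
        linear_combination -this
      rw [e]
      refine Submodule.add_mem _ (Submodule.subset_span ⟨k + 1, ?_, by simp⟩) ?_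
      · simp; omega
      · rcases k with _ | k
        · refine Submodule.subset_span ⟨1, ?_, ?_⟩
          · simp
          · simp [cC]
        · refine Submodule.subset_span ⟨k, ?_, ?_⟩
          · simp; omega
          · simp
    | zero => simp
    | add x y _ _ hx hy => rw [mul_add]; exact Submodule.add_mem _ hx hy
    | smul a x _ hx => rw [mul_smul_comm]; exact Submodule.smul_mem _ _ hx
  have hpow : ∀ k : ℕ, (X : ℝ[X]) ^ k ∈ W k := by
    intro k
    induction k with
    | zero =>
      have : (1 : ℝ[X]) = (1/2 : ℝ) • cC ((0:ℕ):ℤ) := by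
        have h2 : (2:ℝ[X]) = Polynomial.C 2 := rfl
        simp only [cC, Nat.cast_zero, Chebyshev.C_zero, h2]
        rw [Polynomial.smul_C]; simp
      rw [pow_zero, this]
      exact Submodule.smul_mem _ _ (Submodule.subset_span ⟨0, by simp, rfl⟩)
    | succ k ih => rw [pow_succ']; exact hX k _ ih
  intro g hg
  have hgW : g ∈ W D := by
    rw [g.as_sum_range_C_mul_X_pow]
    refine Submodule.sum_mem _ fun k hk => ?_
    rw [← smul_eq_C_mul]
    exact Submodule.smul_mem _ _ (hmono k D (by simp at hk; omega) (hpow k))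
  have : (Set.Iio (D + 1) : Set ℕ) = (Finset.range (D + 1) : Set ℕ) := by ext; simp
  simp only [W, this] at hgW
  rw [Submodule.mem_span_image_finset_iff_exists_fun] at hgW
  obtain ⟨c, hc⟩ := hgW
  refine ⟨fun k => if h : k ∈ Finset.range (D + 1) then c ⟨k, h⟩ else 0, ?_⟩
  rw [← hc, ← Finset.sum_coe_sort (Finset.range (D + 1))]
  refine Finset.sum_congr rfl fun k _ => ?_
  beta_reduce; rw [dif_pos k.2]

lemma abs_cf_le {f : ℝ → ℝ} {s : ℝ} (hs : ∀ x, |x| ≤ 2 → |f x| ≤ s) (j : ℕ) : |cf f j| ≤ 2 * s := by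
  have hpi := pi_pos
  have habs : ∀ θ, |2 * cos θ| ≤ 2 := fun θ => by
    rw [abs_mul, abs_two]; linarith [abs_cos_le_one θ]
  have hs0 : 0 ≤ s := (abs_nonneg _).trans (hs 0 (by norm_num))
  have := intervalIntegral.norm_integral_le_of_norm_le_const (a := 0) (b := π) (C := s * 2)
    (f := fun θ => f (2 * cos θ) * (cC j).eval (2 * cos θ)) (fun θ _ => by
      rw [norm_mul, Real.norm_eq_abs, Real.norm_eq_abs]
      have := hs _ (habs θ)
      have := abs_cC_le_two j (habs θ)
      gcongr)
  rw [sub_zero, abs_of_pos hpi, Real.norm_eq_abs] at this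
  unfold cf
  rw [abs_mul, abs_of_pos (inv_pos.mpr hpi)]
  rw [inv_mul_le_iff₀ hpi]; linarith

/-- Sup-norm on `[-2, 2]` controls the weighted Chebyshev norm, at the price of `R ^ degree`. -/
lemma NT.of_sup {R s : ℝ} (hR : 1 ≤ R) {D : ℕ} {g : ℝ[X]} (hg : g.natDegree ≤ D)
    (hs : ∀ x, |x| ≤ 2 → |g.eval x| ≤ s) : NT R g ((D + 1) * (s * R ^ D)) := by
  obtain ⟨b, hb⟩ := exists_expand D g hg
  have hs0 : 0 ≤ s := (abs_nonneg _).trans (hs 0 (by norm_num))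
  have hcf : ∀ j, cf (fun x => g.eval x) j = ∑ k ∈ Finset.range (D + 1),
      b k * cf (fun x => (cC k).eval x) j := by
    intro j
    conv_lhs => rw [hb]
    induction Finset.range (D + 1) using Finset.induction_on with
    | empty => simp [cf]
    | insert a s ha ih => rw [Finset.sum_insert ha, Finset.sum_insert ha, cf_poly_add, ih,
        cf_poly_smul]
  have hbk : ∀ k ∈ Finset.range (D + 1), |b k| ≤ s := by
    intro k hk
    have h1 := abs_cf_le hs k
    rw [hcf, Finset.sum_eq_single k (fun i _ hi => by rw [cf_cC, if_neg hi, mul_zero])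
      (fun h => absurd hk h), cf_cC, if_pos rfl, abs_mul] at h1
    have := abs_nonneg (b k)
    split_ifs at h1
    · rw [abs_of_pos (by norm_num : (0:ℝ) < 4)] at h1; linarith
    · rw [abs_two] at h1; linarith
  refine ⟨D + 1, b, hb, ?_⟩
  calc _ ≤ ∑ k ∈ Finset.range (D + 1), s * R ^ D := by
        refine Finset.sum_le_sum fun k hk => ?_
        have := hbk k hk
        have : k ≤ D := by simp at hk; omega
        gcongr
    _ = _ := by simp

/-- Approximate inverses: if `m₀ ≤ P ≤ M₁` on `[-2, 2]`, then for `R` close to `1` there is `q` with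
`1 - q P` small in the weighted Chebyshev norm; all constants depend only on `m₀`, `M₁`, `deg P`. -/
lemma exists_inverse {m₀ M₁ : ℝ} (hm : 0 < m₀) (hM : m₀ ≤ M₁) (d : ℕ) :
    ∃ R₀ > 1, ∀ R, 1 ≤ R → R ≤ R₀ → ∃ T : ℝ, ∀ P : ℝ[X], P.natDegree ≤ d →
      (∀ x, |x| ≤ 2 → m₀ ≤ P.eval x ∧ P.eval x ≤ M₁) →
      ∃ q : ℝ[X], NT R q T ∧ NT R (1 - q * P) (1 / 8) := by
  have hM0 : 0 < M₁ := by linarith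
  let s : ℝ := 1 - m₀ / M₁
  have hs1 : s < 1 := by have : 0 < m₀ / M₁ := by positivity
                         simp only [s]; linarith
  have hs0 : 0 ≤ s := by
    simp only [s]; rw [sub_nonneg, div_le_one hM0]; exact hM
  obtain ⟨R₀, hR₀, hRs⟩ : ∃ R₀ > 1, R₀ ^ d * s < 1 := by
    have hc : ContinuousAt (fun R : ℝ => R ^ d * s) 1 := by fun_prop
    have : ∀ᶠ R in nhds (1:ℝ), R ^ d * s < 1 :=
      hc.eventually (gt_mem_nhds (by simpa using hs1))
    have h2 : ∀ᶠ R in nhdsWithin (1:ℝ) (Set.Ioi 1), R ^ d * s < 1 := this.filter_mono nhdsWithin_le_nhds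
    obtain ⟨R, h3, h4⟩ := (h2.and self_mem_nhdsWithin).exists
    exact ⟨R, h4, h3⟩
  refine ⟨R₀, hR₀, fun R hR1 hR2 => ?_⟩
  have hR0 : 0 ≤ R := by linarith
  let u : ℝ := R ^ d * s
  have hu0 : 0 ≤ u := by positivity
  have hu1 : u < 1 := lt_of_le_of_lt (by simp only [u]; gcongr) hRs
  have hT : ∀ j : ℕ, ((j * d : ℕ) + 1 : ℝ) * (s ^ j * R ^ (j * d)) = (j * d + 1) * u ^ j := by
    intro j; simp only [u]; push_cast; rw [mul_pow, ← pow_mul, mul_comm d j]; ring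
  have hlim : Filter.Tendsto (fun j : ℕ => ((j:ℝ) * d + 1) * u ^ j) Filter.atTop (nhds 0) := by
    have h1 := tendsto_self_mul_const_pow_of_lt_one hu0 hu1
    have h2 := tendsto_pow_atTop_nhds_zero_of_lt_one hu0 hu1
    have := (h1.mul_const (d:ℝ)).add h2
    simp only [zero_mul, zero_add] at this
    refine this.congr fun j => by ring
  obtain ⟨N, hN⟩ := (hlim.eventually (gt_mem_nhds (by norm_num : (0:ℝ) < 1/8))).exists
  refine ⟨|M₁⁻¹| * ∑ j ∈ Finset.range N, ((j:ℝ) * d + 1) * u ^ j, fun P hPd hP => ?_⟩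
  let f : ℝ[X] := 1 - M₁⁻¹ • P
  have hf : ∀ x, |x| ≤ 2 → |f.eval x| ≤ s := by
    intro x hx
    obtain ⟨h1, h2⟩ := hP x hx
    simp only [f, eval_sub, eval_one, eval_smul, smul_eq_mul, s]
    have h3 : M₁⁻¹ * P.eval x ≤ 1 := by rw [inv_mul_le_iff₀ hM0]; linarith
    have h4 : m₀ / M₁ ≤ M₁⁻¹ * P.eval x := by
      rw [div_eq_inv_mul]; gcongr
    rw [abs_of_nonneg (by linarith)]; linarith
  have hfd : f.natDegree ≤ d := by
    refine (natDegree_sub_le _ _).trans ?_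
    simp only [natDegree_one]
    have := natDegree_smul_le M₁⁻¹ P
    omega
  have hfj : ∀ j : ℕ, NT R (f ^ j) (((j:ℝ) * d + 1) * u ^ j) := by
    intro j
    have := NT.of_sup (R := R) (s := s ^ j) (D := j * d) (g := f ^ j) hR1
      (natDegree_pow_le.trans (Nat.mul_le_mul_left _ hfd)) (fun x hx => by
        rw [eval_pow, abs_pow]; gcongr; exact hf x hx)
    rwa [hT] at this
  refine ⟨M₁⁻¹ • ∑ j ∈ Finset.range N, f ^ j, ?_, ?_⟩
  · exact (NT.sum hR0 _ _ _ fun j _ => hfj j).smul _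
  · have e : 1 - (M₁⁻¹ • ∑ j ∈ Finset.range N, f ^ j) * P = f ^ N := by
      have h1 := geom_sum_mul_neg f N
      have h2 : (M₁⁻¹ • ∑ j ∈ Finset.range N, f ^ j) * P = (∑ j ∈ Finset.range N, f ^ j) * (1 - f) := by
        simp only [f, sub_sub_cancel]
        rw [smul_mul_assoc, mul_smul_comm]
      rw [h2, h1]; ring
    rw [e]
    exact (hfj N).mono hN.le

end Stoj

namespace Stoj
open Polynomial Real

/-! ### The interpolating family of potentials -/

/-- The data used in the asymptotic analysis of the ensemble with potential `V`: `rho P` is its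
equilibrium density, `c` the equilibrium constant, `p + p⁻¹` and `L` the half-widths of the two
confining boxes, `κ` the gap of the effective potential, and `M₀`, `M` are bounds. -/
structure Adm (V P : ℝ[X]) (c p L κ M₀ M : ℝ) : Prop where
  p_gt : 1 < p
  a_lt : p + p⁻¹ < L
  κ_pos : 0 < κ
  M_one : 1 ≤ M
  M₀_le : M₀ ≤ M
  dens : Dens (rho P) M₀
  eq : ∀ x, |x| ≤ 2 → 2 * pot (rho P) x - V.eval x = c
  le : ∀ x, 2 * pot (rho P) x - V.eval x ≤ c
  gap : ∀ x, p + p⁻¹ ≤ |x| → |x| ≤ L → 2 * pot (rho P) x - V.eval x ≤ c - κ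
  force : ∀ x, (derivative V).eval x = B P x
  V_two : ∀ x, |x| ≤ 2 → |V.eval x| ≤ M₀
  V_le : ∀ x, |x| ≤ L → |V.eval x| ≤ M
  far : ∀ x, L ≤ |x| →
    4 * log (1 + |x|) + (M₀ + 2 * (log 3 + 2 * (M₀ * Csq)) + 2) ≤ V.eval x
  inv : ∃ q : ℝ[X], NT (p ^ 6) q M ∧ NT (p ^ 6) (1 - q * P) (1 / 8)

/-- `(1 - t) x² / 2 + t V`. -/
noncomputable def Vt (V : ℝ[X]) (t : ℝ) : ℝ[X] := ((1 - t) / 2) • X ^ 2 + t • V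

/-- `(1 - t) + t P`, the density factor belonging to `Vt`. -/
noncomputable def Pt (P : ℝ[X]) (t : ℝ) : ℝ[X] := (1 - t) • 1 + t • P

lemma Vt_eval (V : ℝ[X]) (t x : ℝ) : (Vt V t).eval x = (1 - t) * (x ^ 2 / 2) + t * V.eval x := by
  simp [Vt]; ring

lemma Pt_eval (P : ℝ[X]) (t x : ℝ) : (Pt P t).eval x = (1 - t) + t * P.eval x := by
  simp [Pt]

lemma rho_Pt (P : ℝ[X]) (t x : ℝ) : rho (Pt P t) x = (1 - t) * rho 1 x + t * rho P x := by
  simp [rho, Pt_eval]; ring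

lemma Dens.mono {ρ : ℝ → ℝ} {M M' : ℝ} (h : Dens ρ M) (hM : M ≤ M') : Dens ρ M' :=
  ⟨h.cont, h.nonneg, fun x => (h.le x).trans hM, h.off, h.int⟩

lemma dens_Pt {P : ℝ[X]} {M t : ℝ} (h : Dens (rho P) M) (hM : 1 ≤ M) (h0 : 0 ≤ t) (h1 : t ≤ 1) :
    Dens (rho (Pt P t)) M := by
  have h' := dens_rho_one.mono hM
  have e : rho (Pt P t) = fun x => (1 - t) * rho 1 x + t * rho P x := by ext; rw [rho_Pt]
  refine ⟨rho_continuous _, fun x => ?_, fun x => ?_, fun x hx => rho_off _ hx, ?_⟩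
  · rw [rho_Pt]
    have := h.nonneg x
    have := h'.nonneg x
    have : 0 ≤ 1 - t := by linarith
    positivity
  · rw [rho_Pt]
    nlinarith [h.le x, h'.le x]
  · rw [e, integral_add (h'.integrable.const_mul _) (h.integrable.const_mul _), integral_const_mul,
      integral_const_mul, h.int, h'.int]; ring

lemma pot_Pt {P : ℝ[X]} {M t : ℝ} (h : Dens (rho P) M) (x : ℝ) :
    pot (rho (Pt P t)) x = (1 - t) * pot (rho 1) x + t * pot (rho P) x := by
  unfold pot
  rw [← integral_const_mul, ← integral_const_mul,
    ← integral_add ((dens_rho_one.integrable_log x).const_mul _) ((h.integrable_log x).const_mul _)]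
  congr 1; ext y; rw [rho_Pt]; ring

/-- Uniform strict gap of an effective potential on a compact annulus off the support. -/
lemma exists_gap {V P : ℝ[X]} {M c a L : ℝ} (h : Dens (rho P) M) (ha : 2 < a)
    (hlt : ∀ x, 2 < |x| → 2 * pot (rho P) x - V.eval x < c) :
    ∃ κ > 0, ∀ x, a ≤ |x| → |x| ≤ L → 2 * pot (rho P) x - V.eval x ≤ c - κ := by
  have hcomp : IsCompact {x : ℝ | a ≤ |x| ∧ |x| ≤ L} := by
    refine (isCompact_Icc (a := -L) (b := L)).of_isClosed_subset ?_ ?_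
    · exact (isClosed_le continuous_const continuous_abs).inter
        (isClosed_le continuous_abs continuous_const)
    · intro x hx; exact abs_le.mp hx.2
  rcases Set.eq_empty_or_nonempty {x : ℝ | a ≤ |x| ∧ |x| ≤ L} with he | hne
  · refine ⟨1, one_pos, fun x h1 h2 => ?_⟩
    have : x ∈ {x : ℝ | a ≤ |x| ∧ |x| ≤ L} := ⟨h1, h2⟩
    rw [he] at this; exact absurd this (Set.notMem_empty x)
  · have hc : ContinuousOn (fun x => 2 * pot (rho P) x - V.eval x) {x : ℝ | a ≤ |x| ∧ |x| ≤ L} := by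
      have := h.pot_continuousOn (L := L) ha
      exact (continuousOn_const.mul this).sub V.continuous.continuousOn
    obtain ⟨x0, hx0, hmax⟩ := hcomp.exists_isMaxOn hne hc
    refine ⟨c - (2 * pot (rho P) x0 - V.eval x0), ?_, fun x h1 h2 => ?_⟩
    · have := hlt x0 (lt_of_lt_of_le ha hx0.1); linarith
    · have := hmax (a := x) ⟨h1, h2⟩
      simp only [Set.mem_ofPred_eq] at this
      linarith

lemma exists_bound_poly (V : ℝ[X]) (L : ℝ) : ∃ T, ∀ x, |x| ≤ L → |V.eval x| ≤ T := by
  obtain ⟨T, hT⟩ := (isCompact_Icc (a := -L) (b := L)).exists_bound_of_continuousOn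
    V.continuous.continuousOn
  exact ⟨T, fun x hx => hT x (abs_le.mp hx)⟩

/-- A polynomial of even degree and positive leading coefficient beats `4 log (1 + |x|)`. -/
lemma exists_far_lin {V : ℝ[X]} {m : ℕ} (hm : 0 < m) (hdeg : V.natDegree = 2 * m)
    (hlead : 0 < V.leadingCoeff) (D : ℝ) :
    ∃ L₀, ∀ x, L₀ ≤ |x| → 4 * |x| + D ≤ V.eval x := by
  have pos : ∀ W : ℝ[X], W.natDegree = 2 * m → 0 < W.leadingCoeff →
      ∀ᶠ x in Filter.atTop, 4 * x + D ≤ W.eval x := by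
    intro W hWd hWl
    have ht : Filter.Tendsto (fun x => W.eval x - (4 * x + D)) Filter.atTop Filter.atTop := by
      have hdd : (W - (Polynomial.C 4 * X + Polynomial.C D)).degree = W.degree := by
        refine degree_sub_eq_left_of_degree_lt ?_
        refine lt_of_le_of_lt (degree_linear_le) ?_
        have hW0 : W ≠ 0 := fun h => by simp [h] at hWl
        rw [degree_eq_natDegree hW0, hWd]
        exact_mod_cast (by omega : 1 < 2 * m)
      have hlc : (W - (Polynomial.C 4 * X + Polynomial.C D)).leadingCoeff = W.leadingCoeff := by
        refine leadingCoeff_sub_of_degree_lt ?_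
        refine lt_of_le_of_lt (degree_linear_le) ?_
        have hW0 : W ≠ 0 := fun h => by simp [h] at hWl
        rw [degree_eq_natDegree hW0, hWd]
        exact_mod_cast (by omega : 1 < 2 * m)
      have := (W - (Polynomial.C 4 * X + Polynomial.C D)).tendsto_atTop_of_leadingCoeff_nonneg
        (by
          rw [hdd]
          have hW0 : W ≠ 0 := fun h => by simp [h] at hWl
          rw [degree_eq_natDegree hW0, hWd]
          exact_mod_cast (by omega : 0 < 2 * m)) (by rw [hlc]; exact hWl.le)
      simpa using this
    filter_upwards [ht.eventually_ge_atTop 0] with x hx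
    linarith
  have hneg : ∀ᶠ x in Filter.atTop, 4 * x + D ≤ (V.comp (-X)).eval x := by
    refine pos _ ?_ ?_
    · rw [natDegree_comp, natDegree_neg, natDegree_X, mul_one, hdeg]
    · rw [leadingCoeff_comp (by simp), hdeg]
      simp only [leadingCoeff_neg, leadingCoeff_X]
      rw [pow_mul]; simpa using hlead
  obtain ⟨L1, h1⟩ := Filter.eventually_atTop.mp (pos V hdeg hlead)
  obtain ⟨L2, h2⟩ := Filter.eventually_atTop.mp hneg
  refine ⟨max L1 L2, fun x hx => ?_⟩
  rcases le_total 0 x with h | h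
  · rw [abs_of_nonneg h] at hx ⊢
    exact h1 x ((le_max_left _ _).trans hx)
  · rw [abs_of_nonpos h] at hx ⊢
    have := h2 (-x) ((le_max_right _ _).trans hx)
    simpa using this

lemma exists_far {V : ℝ[X]} {m : ℕ} (hm : 0 < m) (hdeg : V.natDegree = 2 * m)
    (hlead : 0 < V.leadingCoeff) (D : ℝ) :
    ∃ L₀, ∀ x, L₀ ≤ |x| → 4 * log (1 + |x|) + D ≤ V.eval x := by
  obtain ⟨L₀, h⟩ := exists_far_lin hm hdeg hlead D
  refine ⟨L₀, fun x hx => ?_⟩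
  have := log_le_sub_one_of_pos (by linarith [abs_nonneg x] : 0 < 1 + |x|)
  linarith [h x hx]

lemma two_lt_joukowsky {p : ℝ} (hp : 1 < p) : 2 < p + p⁻¹ := by
  have h0 : 0 < p := by linarith
  have : p * p⁻¹ = 1 := mul_inv_cancel₀ h0.ne'
  have h2 : p⁻¹ < 1 := inv_lt_one_of_one_lt₀ hp
  nlinarith

lemma B_one (x : ℝ) : B 1 x = x := by
  have := B_cS 0 x
  simpa [cS, cC] using this

/-- The whole family `Vt V t`, `t ∈ [0, 1]`, is admissible with common constants. -/
lemma exists_adm {V : ℝ[X]} {m : ℕ} (hm : 0 < m) (hdeg : V.natDegree = 2 * m)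
    (hlead : 0 < V.leadingCoeff) {ρ P : ℝ → ℝ} (hC : EquilC12 (fun x => V.eval x) ρ P) :
    ∃ (Q : ℝ[X]) (c p L κ M₀ M : ℝ), ∀ t, 0 ≤ t → t ≤ 1 →
      Adm (Vt V t) (Pt Q t) ((1 - t) * (-1) + t * c) p L κ M₀ M := by
  obtain ⟨Q, Mρ, rfl, hD, hQpos, hforce⟩ := exists_poly_density hC
  obtain ⟨c, hc1, hc2⟩ := hC.equil
  have hceq : ∀ x, |x| ≤ 2 → 2 * pot (rho Q) x - V.eval x = c := fun x hx => hc1 x (abs_le.mp hx)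
  have hclt : ∀ x, 2 < |x| → 2 * pot (rho Q) x - V.eval x < c := fun x hx =>
    hc2 x fun h => absurd (abs_le.mpr h) (not_le.mpr hx)
  obtain ⟨m1, hm1, hm1Q⟩ : ∃ m1 > 0, ∀ x, |x| ≤ 2 → m1 ≤ Q.eval x := by
    obtain ⟨x0, hx0, hmin⟩ := (isCompact_Icc (a := (-2:ℝ)) (b := 2)).exists_isMinOn
      ⟨0, by norm_num⟩ Q.continuous.continuousOn
    exact ⟨Q.eval x0, hQpos x0 (abs_le.mpr hx0), fun x hx => hmin (abs_le.mp hx)⟩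
  obtain ⟨TQ, hTQ⟩ := exists_bound_poly Q 2
  obtain ⟨R₀, hR₀, hinv⟩ := exists_inverse (m₀ := min 1 m1) (M₁ := max 1 TQ) (by positivity)
    ((min_le_left _ _).trans (le_max_left _ _)) Q.natDegree
  obtain ⟨p, hp1, hp6⟩ : ∃ p > 1, p ^ 6 ≤ R₀ := by
    have hcn : ContinuousAt (fun R : ℝ => R ^ 6) 1 := by fun_prop
    have : ∀ᶠ R in nhds (1:ℝ), R ^ 6 < R₀ := hcn.eventually (gt_mem_nhds (by simpa using hR₀))
    have h2 : ∀ᶠ R in nhdsWithin (1:ℝ) (Set.Ioi 1), R ^ 6 < R₀ := this.filter_mono nhdsWithin_le_nhds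
    obtain ⟨R, h3, h4⟩ := (h2.and self_mem_nhdsWithin).exists
    exact ⟨R, h4, h3.le⟩
  obtain ⟨T, hT⟩ := hinv (p ^ 6) (one_le_pow₀ hp1.le) hp6
  obtain ⟨TV, hTV⟩ := exists_bound_poly V 2
  let M₀ : ℝ := max (max 1 Mρ) (max 2 TV)
  obtain ⟨L1, hL1⟩ := exists_far hm hdeg hlead (M₀ + 2 * (log 3 + 2 * (M₀ * Csq)) + 2)
  obtain ⟨L0, hL0⟩ := exists_far (V := (1/2 : ℝ) • X ^ 2) (m := 1) one_pos
    (by rw [natDegree_smul _ (by norm_num), natDegree_X_pow])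
    (by rw [leadingCoeff_smul_of_smul_regular _ (IsSMulRegular.of_ne_zero (by norm_num))]; simp)
    (M₀ + 2 * (log 3 + 2 * (M₀ * Csq)) + 2)
  let L : ℝ := max (max L0 L1) (p + p⁻¹ + 1)
  have ha := two_lt_joukowsky hp1
  have hL2 : 2 ≤ L := le_trans (by linarith) (le_max_right _ _)
  obtain ⟨κ0, hκ0, hg0⟩ := exists_gap (V := (1/2 : ℝ) • X ^ 2) (c := -1) (L := L) dens_rho_one ha
    (fun x hx => by
      have := pot_semicircle_lt hx
      simp only [eval_smul, eval_pow, eval_X, smul_eq_mul]; linarith)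
  obtain ⟨κ1, hκ1, hg1⟩ := exists_gap (V := V) (c := c) (L := L) hD ha hclt
  obtain ⟨TL, hTL⟩ := exists_bound_poly V L
  refine ⟨Q, c, p, L, min κ0 κ1, M₀, max (max 1 M₀) (max T (max (L ^ 2 / 2) TL)), fun t ht0 ht1 => ?_⟩
  have h1t : 0 ≤ 1 - t := by linarith
  have conv : ∀ {a b a' b' : ℝ}, a ≤ a' → b ≤ b' → (1 - t) * a + t * b ≤ (1 - t) * a' + t * b' :=
    fun h1 h2 => add_le_add (mul_le_mul_of_nonneg_left h1 h1t) (mul_le_mul_of_nonneg_left h2 ht0)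
  have hM1 : 1 ≤ M₀ := (le_max_left _ _).trans (le_max_left _ _)
  have hv : ∀ x, 2 * pot (rho (Pt Q t)) x - (Vt V t).eval x =
      (1 - t) * (2 * pot (rho 1) x - x ^ 2 / 2) + t * (2 * pot (rho Q) x - V.eval x) := by
    intro x; rw [pot_Pt hD, Vt_eval]; ring
  have hv0 : ∀ x, 2 * pot (rho 1) x - x ^ 2 / 2 ≤ -1 := by
    intro x
    rcases le_or_gt (|x|) 2 with h | h
    · rw [pot_semicircle h]; linarith
    · exact (pot_semicircle_lt h).le
  have hv1 : ∀ x, 2 * pot (rho Q) x - V.eval x ≤ c := by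
    intro x
    rcases le_or_gt (|x|) 2 with h | h
    · exact (hceq x h).le
    · exact (hclt x h).le
  have habs : ∀ {u v T0 : ℝ}, |u| ≤ T0 → |v| ≤ T0 → |(1 - t) * u + t * v| ≤ T0 := by
    intro u v T0 h1 h2
    rw [abs_le] at h1 h2 ⊢
    constructor
    · have := conv h1.1 h2.1; linarith
    · have := conv h1.2 h2.2; linarith
  refine
    { p_gt := hp1
      a_lt := lt_of_lt_of_le (by linarith) (le_max_right _ _)
      κ_pos := by positivity
      M_one := (le_max_left _ _).trans (le_max_left _ _)
      M₀_le := (le_max_right _ _).trans (le_max_left _ _)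
      dens := dens_Pt (hD.mono ((le_max_right _ _).trans (le_max_left _ _))) hM1 ht0 ht1
      eq := ?_, le := ?_, gap := ?_, force := ?_, V_two := ?_, V_le := ?_, far := ?_, inv := ?_ }
  · intro x hx; rw [hv, hceq x hx, pot_semicircle hx]; ring
  · intro x; rw [hv]; exact conv (hv0 x) (hv1 x)
  · intro x h1 h2
    rw [hv]
    have e0 := hg0 x h1 h2
    simp only [eval_smul, eval_pow, eval_X, smul_eq_mul] at e0
    have e1 := hg1 x h1 h2
    have h3 := min_le_left κ0 κ1
    have h4 := min_le_right κ0 κ1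
    refine (conv (a' := -1 - min κ0 κ1) (b' := c - min κ0 κ1) (by linarith) (by linarith)).trans ?_
    linarith
  · intro x
    simp only [Vt, Pt, B_add, B_smul, B_one, ← hforce]
    simp; ring
  · intro x hx
    rw [Vt_eval]
    refine habs ?_ ((hTV x hx).trans ((le_max_right _ _).trans (le_max_right _ _)))
    refine le_trans ?_ ((le_max_left _ _).trans (le_max_right _ _))
    rw [abs_of_nonneg (by positivity), ← sq_abs]
    have := abs_nonneg x
    nlinarith
  · intro x hx
    rw [Vt_eval]
    refine habs ?_ ((hTL x hx).trans ((le_max_right _ _).trans ((le_max_right _ _).trans (le_max_right _ _))))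
    refine le_trans ?_ ((le_max_left _ _).trans ((le_max_right _ _).trans (le_max_right _ _)))
    rw [abs_of_nonneg (by positivity), ← sq_abs]
    have := abs_nonneg x
    gcongr
  · intro x hx
    rw [Vt_eval]
    have h0 := hL0 x (((le_max_left _ _).trans (le_max_left _ _)).trans hx)
    have h1 := hL1 x (((le_max_right _ _).trans (le_max_left _ _)).trans hx)
    simp only [eval_smul, eval_pow, eval_X, smul_eq_mul] at h0
    have := conv h0 h1
    linarith
  · obtain ⟨q, hq1, hq2⟩ := hT (Pt Q t) (by
      unfold Pt
      refine (natDegree_add_le _ _).trans (max_le ?_ (natDegree_smul_le _ _))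
      refine (natDegree_smul_le _ _).trans (by simp)) (fun x hx => by
      rw [Pt_eval]
      have h1 := hm1Q x hx
      have h2 := (abs_le.mp (hTQ x hx)).2
      constructor
      · have := conv (min_le_left 1 m1) ((min_le_right 1 m1).trans h1); linarith
      · have := conv (le_max_left 1 TQ) (h2.trans (le_max_right 1 TQ)); linarith)
    exact ⟨q, hq1.mono ((le_max_left _ _).trans (le_max_right _ _)), hq2⟩

end Stoj

namespace Stoj
open Polynomial Real

/-! ### Ensemble weights and Fubini in one particle -/

/-- The weight `∏ e^{A(x_i)} · |Δ(x)|^β`, with `Δ` the Vandermonde determinant. -/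
noncomputable def Wt (β : ℕ) (A : ℝ → ℝ) {n : ℕ} (x : Fin n → ℝ) : ℝ :=
  exp (∑ i, A (x i)) * |(Matrix.vandermonde x).det| ^ β

/-- The one-particle factor of `Wt`: the dependence on `s` when the other particles are at `y`. -/
noncomputable def phi (β : ℕ) (A : ℝ → ℝ) {n : ℕ} (y : Fin n → ℝ) (s : ℝ) : ℝ :=
  exp (A s) * (∏ j, |s - y j|) ^ β

/-- Lebesgue measure on `[-b, b]`. -/
noncomputable abbrev bx (b : ℝ) : Measure ℝ := volume.restrict (Set.Icc (-b) b)

/-- The `n`-fold product of `μ`. -/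
noncomputable abbrev pim (μ : Measure ℝ) (n : ℕ) : Measure (Fin n → ℝ) :=
  Measure.pi fun _ : Fin n => μ

lemma Wt_nonneg (β : ℕ) (A : ℝ → ℝ) {n : ℕ} (x : Fin n → ℝ) : 0 ≤ Wt β A x := by
  unfold Wt; positivity

lemma phi_nonneg (β : ℕ) (A : ℝ → ℝ) {n : ℕ} (y : Fin n → ℝ) (s : ℝ) : 0 ≤ phi β A y s := by
  unfold phi
  have : 0 ≤ ∏ j, |s - y j| := Finset.prod_nonneg fun _ _ => abs_nonneg _
  positivity

lemma vandermonde_continuous (n : ℕ) :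
    Continuous fun x : Fin n → ℝ => (Matrix.vandermonde x).det := by
  simp only [Matrix.det_vandermonde]; fun_prop

lemma Wt_continuous (β : ℕ) {A : ℝ → ℝ} (hA : Continuous A) (n : ℕ) :
    Continuous fun x : Fin n → ℝ => Wt β A x := by
  unfold Wt
  have := vandermonde_continuous n
  fun_prop

lemma phi_continuous (β : ℕ) {A : ℝ → ℝ} (hA : Continuous A) {n : ℕ} (y : Fin n → ℝ) :
    Continuous (phi β A y) := by
  unfold phi; fun_prop

lemma abs_vandermonde_insertNth {n : ℕ} (i : Fin (n + 1)) (s : ℝ) (y : Fin n → ℝ) :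
    |(Matrix.vandermonde (i.insertNth s y : Fin (n + 1) → ℝ)).det| =
      |(Matrix.vandermonde y).det| * ∏ j, |s - y j| := by
  have h1 : (i.insertNth s y : Fin (n + 1) → ℝ) = (Fin.cons s y : Fin (n + 1) → ℝ) ∘ i.cycleRange := by
    ext j; rw [Function.comp_apply, Fin.cons_apply_cycleRange]
  have h2 : Matrix.vandermonde (i.insertNth s y : Fin (n + 1) → ℝ) =
      (Matrix.vandermonde (Fin.cons s y : Fin (n + 1) → ℝ)).submatrix i.cycleRange id := by
    ext a b
    rw [h1]; rfl
  rw [h2, Matrix.det_permute, abs_mul]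
  have : |((Equiv.Perm.sign i.cycleRange : ℤ) : ℝ)| = 1 := by
    rcases Int.units_eq_one_or (Equiv.Perm.sign i.cycleRange) with h | h <;> simp [h]
  rw [this, one_mul, Matrix.det_vandermonde, Matrix.det_vandermonde, Fin.prod_univ_succ, abs_mul,
    mul_comm, Fin.prod_Ioi_zero]
  congr 1
  · congr 1
    refine Finset.prod_congr rfl fun j _ => ?_
    rw [Fin.prod_Ioi_succ]; simp
  · rw [Finset.abs_prod]
    refine Finset.prod_congr rfl fun j _ => ?_
    simp [abs_sub_comm]

lemma Wt_insertNth (β : ℕ) (A : ℝ → ℝ) {n : ℕ} (i : Fin (n + 1)) (s : ℝ) (y : Fin n → ℝ) :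
    Wt β A (i.insertNth s y : Fin (n + 1) → ℝ) = Wt β A y * phi β A y s := by
  unfold Wt phi
  rw [abs_vandermonde_insertNth, Fin.sum_univ_succAbove _ i]
  simp only [Fin.insertNth_apply_same, Fin.insertNth_apply_succAbove, exp_add, mul_pow]
  ring

lemma measurePreserving_insertNth (μ : Measure ℝ) [SigmaFinite μ] {n : ℕ} (i : Fin (n + 1)) :
    MeasurePreserving (fun q : ℝ × (Fin n → ℝ) => (i.insertNth q.1 q.2 : Fin (n + 1) → ℝ))
      (μ.prod (pim μ n)) (pim μ (n + 1)) :=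
  (measurePreserving_piFinSuccAbove (fun _ : Fin (n + 1) => μ) i).symm
    (MeasurableEquiv.piFinSuccAbove (fun _ => ℝ) i)

lemma integrable_insertNth {μ : Measure ℝ} [SigmaFinite μ] {n : ℕ} (i : Fin (n + 1))
    {F : (Fin (n + 1) → ℝ) → ℝ} (hF : Integrable F (pim μ (n + 1))) :
    Integrable (fun q : ℝ × (Fin n → ℝ) => F (i.insertNth q.1 q.2)) (μ.prod (pim μ n)) :=
  ((measurePreserving_insertNth μ i).integrable_comp_emb
    (MeasurableEquiv.piFinSuccAbove (fun _ => ℝ) i).symm.measurableEmbedding).mpr hF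

lemma integral_insertNth {μ : Measure ℝ} [SigmaFinite μ] {n : ℕ} (i : Fin (n + 1))
    {F : (Fin (n + 1) → ℝ) → ℝ} (hF : Integrable F (pim μ (n + 1))) :
    ∫ x, F x ∂(pim μ (n + 1)) = ∫ y, (∫ s, F (i.insertNth s y) ∂μ) ∂(pim μ n) := by
  rw [← (measurePreserving_insertNth μ i).integral_comp
    (MeasurableEquiv.piFinSuccAbove (fun _ => ℝ) i).symm.measurableEmbedding,
    integral_prod_symm _ (integrable_insertNth i hF)]

lemma pim_restrict (S : Set ℝ) (μ : Measure ℝ) [SigmaFinite μ] (n : ℕ) :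
    pim (μ.restrict S) n = (pim μ n).restrict (Set.univ.pi fun _ => S) :=
  (Measure.restrict_pi_pi (fun _ : Fin n => μ) fun _ => S).symm

lemma integrable_box {n : ℕ} {F : (Fin n → ℝ) → ℝ} (hF : Continuous F) (b : ℝ) :
    Integrable F (pim (bx b) n) := by
  rw [pim_restrict]
  exact hF.continuousOn.integrableOn_compact (isCompact_univ_pi fun _ => isCompact_Icc)

lemma ae_box (b : ℝ) (n : ℕ) : ∀ᵐ x ∂(pim (bx b) n), ∀ i, |x i| ≤ b := by
  rw [pim_restrict]
  filter_upwards [ae_restrict_mem (MeasurableSet.univ_pi fun _ => measurableSet_Icc)] with x hx i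
  exact abs_le.mpr (hx i (Set.mem_univ i))

lemma ae_bx (b : ℝ) : ∀ᵐ s ∂(bx b), |s| ≤ b := by
  filter_upwards [ae_restrict_mem measurableSet_Icc] with x hx
  exact abs_le.mpr hx

lemma integral_box_mono {n : ℕ} {F : (Fin n → ℝ) → ℝ} (hF : Integrable F (pim volume n))
    (h0 : ∀ x, 0 ≤ F x) (b : ℝ) : ∫ x, F x ∂(pim (bx b) n) ≤ ∫ x, F x ∂(pim volume n) := by
  rw [pim_restrict]
  exact setIntegral_le_integral hF (Filter.Eventually.of_forall h0)

lemma integral_box_mono' {n : ℕ} {F : (Fin n → ℝ) → ℝ} (hF : Continuous F)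
    (h0 : ∀ x, 0 ≤ F x) {b b' : ℝ} (hb : b ≤ b') :
    ∫ x, F x ∂(pim (bx b) n) ≤ ∫ x, F x ∂(pim (bx b') n) := by
  have h1 := integrable_box hF b'
  rw [pim_restrict] at h1 ⊢
  rw [pim_restrict]
  exact setIntegral_mono_set h1 (Filter.Eventually.of_forall h0)
    (Set.pi_mono fun _ _ => Set.Icc_subset_Icc (by linarith) hb).eventuallyLE

instance (b : ℝ) : IsFiniteMeasure (bx b) := ⟨by simp [bx]⟩

lemma bx_real {b : ℝ} (hb : 0 ≤ b) : (bx b).real Set.univ = 2 * b := by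
  simp [bx, Measure.real]; rw [ENNReal.toReal_ofReal (by linarith)]; ring

lemma pim_bx_real {b : ℝ} (hb : 0 ≤ b) (n : ℕ) : (pim (bx b) n).real Set.univ = (2 * b) ^ n := by
  have := bx_real hb
  simp only [Measure.real] at this ⊢
  rw [Measure.pi_univ, Finset.prod_const, ENNReal.toReal_pow, this]; simp

/-! ### Resampling one particle and a lower bound for the partition function -/

lemma phi_eq_exp (β : ℕ) (A : ℝ → ℝ) {n : ℕ} (y : Fin n → ℝ) {s : ℝ} (hs : ∀ j, s ≠ y j) :
    phi β A y s = exp (A s + β * ∑ j, log |s - y j|) := by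
  unfold phi
  rw [exp_add, exp_nat_mul, exp_sum]
  have h : ∏ j, |s - y j| = ∏ j, exp (log |s - y j|) := Finset.prod_congr rfl fun j _ => by
    rw [exp_log (abs_pos.mpr (sub_ne_zero.mpr (hs j)))]
  rw [h]

lemma ae_ne_all {n : ℕ} (y : Fin n → ℝ) : ∀ᵐ s : ℝ, ∀ j, s ≠ y j :=
  ae_all_iff.mpr fun j => Measure.ae_ne volume (y j)

/-- Resampling one particle from the equilibrium density (Jensen's inequality). -/
lemma resample {ρ : ℝ → ℝ} {M : ℝ} (hρ : Dens ρ M) (β : ℕ) {A : ℝ → ℝ} (hA : Continuous A)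
    {n : ℕ} (y : Fin n → ℝ) :
    exp ((∫ s, A s * ρ s) + β * ∑ j, pot ρ (y j)) ≤ M * ∫ s, phi β A y s ∂(bx 2) := by
  set u : ℝ → ℝ := fun s => A s + β * ∑ j, log |s - y j| with hu
  set u0 := (∫ s, A s * ρ s) + β * ∑ j, pot ρ (y j) with hu0
  have hAi : Integrable fun s => A s * ρ s := hρ.integrable_mul_cont hA
  have hLi : ∀ j, Integrable fun s => log |s - y j| * ρ s := fun j => by
    simpa only [abs_sub_comm] using hρ.integrable_log (y j)
  have hui : Integrable fun s => u s * ρ s := by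
    have : (fun s => u s * ρ s) = fun s => A s * ρ s + β * ∑ j, log |s - y j| * ρ s := by
      ext s; rw [hu]; simp only [add_mul, Finset.sum_mul, mul_assoc]
    rw [this]
    exact hAi.add ((integrable_finsetSum _ fun j _ => hLi j).const_mul _)
  have huI : ∫ s, u s * ρ s = u0 := by
    have : (fun s => u s * ρ s) = fun s => A s * ρ s + β * ∑ j, log |s - y j| * ρ s := by
      ext s; rw [hu]; simp only [add_mul, Finset.sum_mul, mul_assoc]
    rw [this, integral_add hAi ((integrable_finsetSum _ fun j _ => hLi j).const_mul _),
      integral_const_mul, integral_finsetSum _ fun j _ => hLi j]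
    simp only [pot, hu0, abs_sub_comm]
  have hpi : Integrable fun s => phi β A y s * ρ s := hρ.integrable_mul_cont (phi_continuous β hA y)
  have hρi := hρ.integrable
  have h1 : exp u0 ≤ ∫ s, phi β A y s * ρ s := by
    have h2 : ∫ s, exp u0 * ((1 - u0) * ρ s + u s * ρ s) ≤ ∫ s, phi β A y s * ρ s := by
      refine integral_mono_ae (((hρi.const_mul _).add hui).const_mul _) hpi ?_
      filter_upwards [ae_ne_all y] with s hs
      show exp u0 * ((1 - u0) * ρ s + u s * ρ s) ≤ _
      rw [phi_eq_exp β A y hs]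
      have : exp (u s) = exp u0 * exp (u s - u0) := by rw [← exp_add]; ring_nf
      change _ ≤ exp (u s) * ρ s
      rw [this]
      have h3 := add_one_le_exp (u s - u0)
      have h4 := hρ.nonneg s
      have h5 := (exp_pos u0).le
      have : exp u0 * ((1 - u0) * ρ s + u s * ρ s) = exp u0 * (u s - u0 + 1) * ρ s := by ring
      rw [this]; gcongr
    rw [integral_const_mul, integral_add (hρi.const_mul _) hui, integral_const_mul, hρ.int, huI] at h2
    linarith
  refine h1.trans ?_
  rw [← hρ.setIntegral, ← integral_const_mul]
  refine integral_mono_ae hpi.integrableOn ?_ (Filter.Eventually.of_forall fun s => ?_)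
  · exact ((phi_continuous β hA y).continuousOn.integrableOn_compact isCompact_Icc).const_mul _
  · have := phi_nonneg β A y s
    show phi β A y s * ρ s ≤ M * phi β A y s
    nlinarith [hρ.le s]

lemma lower_bound {ρ ψ : ℝ → ℝ} {M : ℝ} (hρ : Dens ρ M) (hψ : Continuous ψ)
    (hψ2 : ∀ x, |x| ≤ 2 → pot ρ x = ψ x) (β n : ℕ) : ∀ (A : ℝ → ℝ), Continuous A →
    exp (n * (∫ s, A s * ρ s) + β * (n * (n - 1) / 2) * (∫ s, ψ s * ρ s)) ≤
      M ^ n * ∫ x, Wt β A x ∂(pim (bx 2) n) := by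
  induction n with
  | zero =>
    intro A _
    simp [Wt, Matrix.det_isEmpty, pim_bx_real]
  | succ n ih =>
    intro A hA
    have hc := Wt_continuous β hA (n + 1)
    have hMp := hρ.M_pos
    have hA' : Continuous fun s => A s + β * ψ s := by fun_prop
    have hI : ∫ s, (A s + β * ψ s) * ρ s = (∫ s, A s * ρ s) + β * ∫ s, ψ s * ρ s := by
      rw [← integral_const_mul, ← integral_add (hρ.integrable_mul_cont hA)
        ((hρ.integrable_mul_cont hψ).const_mul _)]
      congr 1; ext s; ring
    have key : exp (∫ s, A s * ρ s) * ∫ x, Wt β (fun s => A s + β * ψ s) x ∂(pim (bx 2) n) ≤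
        M * ∫ x, Wt β A x ∂(pim (bx 2) (n + 1)) := by
      rw [integral_insertNth 0 (integrable_box hc 2), ← integral_const_mul, ← integral_const_mul]
      refine integral_mono_ae ((integrable_box (Wt_continuous β hA' n) 2).const_mul _) ?_ ?_
      · exact (integrable_insertNth 0 (integrable_box hc 2)).integral_prod_right.const_mul _
      · filter_upwards [ae_box 2 n] with y hy
        have h1 := resample hρ β hA y
        simp only [Wt_insertNth, integral_const_mul]
        have h2 : exp (∫ s, A s * ρ s) * Wt β (fun s => A s + β * ψ s) y =
            Wt β A y * exp ((∫ s, A s * ρ s) + β * ∑ j, pot ρ (y j)) := by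
          unfold Wt
          rw [Finset.sum_add_distrib, exp_add, exp_add, ← Finset.mul_sum,
            Finset.sum_congr rfl fun j _ => hψ2 (y j) (hy j)]
          ring
        rw [h2]
        calc _ ≤ Wt β A y * (M * ∫ s, phi β A y s ∂(bx 2)) :=
              mul_le_mul_of_nonneg_left h1 (Wt_nonneg _ _ _)
          _ = _ := by ring
    have h3 := ih _ hA'
    rw [hI] at h3
    calc _ = exp (∫ s, A s * ρ s) * exp (n * ((∫ s, A s * ρ s) + β * ∫ s, ψ s * ρ s) +
            β * (n * (n - 1) / 2) * ∫ s, ψ s * ρ s) := by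
          rw [← exp_add]; congr 1; push_cast; ring
      _ ≤ exp (∫ s, A s * ρ s) * (M ^ n * ∫ x, Wt β (fun s => A s + β * ψ s) x ∂(pim (bx 2) n)) := by
          gcongr
      _ = M ^ n * (exp (∫ s, A s * ρ s) *
            ∫ x, Wt β (fun s => A s + β * ψ s) x ∂(pim (bx 2) n)) := by ring
      _ ≤ M ^ n * (M * ∫ x, Wt β A x ∂(pim (bx 2) (n + 1))) := by gcongr
      _ = _ := by ring

end Stoj

namespace Stoj
open Polynomial Real

/-! ### The energy inequality -/

variable {ρ : ℝ → ℝ} {M : ℝ}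

/-- The centred linear statistic of `tb b k`. -/
noncomputable def cN (b : ℝ) (ρ : ℝ → ℝ) (k : ℕ) {n : ℕ} (x : Fin n → ℝ) : ℝ :=
  (∑ i, tb b k (x i)) - n * dco b ρ k

/-- The regularised electrostatic energy of `∑ δ_{x_i} - n ρ` (scale `b`, regularisation `r`). -/
noncomputable def En (r b : ℝ) (ρ : ℝ → ℝ) {n : ℕ} (x : Fin n → ℝ) : ℝ :=
  ∑' k : ℕ, r ^ k / (2 * k) * cN b ρ k x ^ 2

lemma summable_w {r : ℝ} (hr0 : 0 ≤ r) (hr1 : r < 1) {f : ℕ → ℝ} {K : ℝ} (hf : ∀ k, |f k| ≤ K) :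
    Summable fun k : ℕ => r ^ k / (2 * k) * f k := by
  refine Summable.of_norm_bounded ((hasSum_log_one_sub hr0 hr1).summable.mul_right (K / 4))
    fun k => ?_
  rw [Real.norm_eq_abs, abs_mul, abs_of_nonneg (by positivity : 0 ≤ r ^ k / (2 * k : ℝ))]
  have := mul_le_mul_of_nonneg_left (hf k) (by positivity : 0 ≤ r ^ k / (2 * k : ℝ))
  linarith

/-- The regularised self-energy of `ρ`. -/
noncomputable def selfEn (r b : ℝ) (ρ : ℝ → ℝ) : ℝ :=
  ∑' k : ℕ, r ^ k / (2 * k) * (dco b ρ k * dco b ρ k)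

lemma hasSum_selfEn (h : Dens ρ M) {r b : ℝ} (hr0 : 0 ≤ r) (hr1 : r < 1) (hb : 2 ≤ b) :
    HasSum (fun k : ℕ => r ^ k / (2 * k) * (dco b ρ k * dco b ρ k)) (selfEn r b ρ) := by
  refine (summable_w hr0 hr1 (K := 4) fun k => ?_).hasSum
  have := h.abs_dco_le hb k
  rw [abs_mul]; nlinarith [abs_nonneg (dco b ρ k)]

lemma selfEn_le (h : Dens ρ M) {ψ : ℝ → ℝ} (hψ : Continuous ψ) (hψ2 : ∀ x, |x| ≤ 2 → pot ρ x = ψ x)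
    {r b : ℝ} (hr0 : 0 < r) (hr1 : r < 1) (hb : 2 ≤ b) :
    selfEn r b ρ ≤ log (b / 2) - log r - ∫ x, ψ x * ρ x := by
  have hb0 : 0 < b := by linarith
  have hg := hasSum_log_one_sub hr0.le hr1
  set T := -2 * log (1 - r) with hT
  -- partial sums are controlled up to the tail of the dominating series
  have key : ∀ N : ℕ, ∑ k ∈ Finset.range N, r ^ k / (2 * k) * (dco b ρ k * dco b ρ k) ≤
      (log (b / 2) - log r - ∫ x, ψ x * ρ x) + (T - ∑ k ∈ Finset.range N, r ^ k / (2 * k) * 4) := by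
    intro N
    set t := T - ∑ k ∈ Finset.range N, r ^ k / (2 * k : ℝ) * 4 with ht
    have hF : ∀ k ∈ Finset.range N,
        Integrable fun x => (r ^ k / (2 * k) * dco b ρ k) * (tb b k x * ρ x) := fun k _ =>
      (h.integrable_mul_cont (tb_continuous b k)).const_mul _
    have e1 : ∑ k ∈ Finset.range N, r ^ k / (2 * k) * (dco b ρ k * dco b ρ k) =
        ∫ x, ∑ k ∈ Finset.range N, (r ^ k / (2 * k) * dco b ρ k) * (tb b k x * ρ x) := by
      rw [integral_finsetSum _ hF]
      refine Finset.sum_congr rfl fun k _ => ?_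
      rw [integral_const_mul]
      change _ = _ * dco b ρ k
      ring
    have hI := h.integrable.const_mul (log (b / 2) - log r + t)
    have e2 : (log (b / 2) - log r - ∫ x, ψ x * ρ x) + t =
        ∫ x, ((log (b / 2) - log r + t) * ρ x - ψ x * ρ x) := by
      rw [integral_sub hI (h.integrable_mul_cont hψ), integral_const_mul, h.int]; ring
    rw [e1, e2]
    refine integral_mono (integrable_finsetSum _ hF) (hI.sub (h.integrable_mul_cont hψ)) fun x => ?_
    by_cases hx : 2 < |x|
    · simp [h.off x hx]
    push Not at hx
    have hG := h.hasSum_ker_int hr0.le hr1 hb (hx.trans hb)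
    have h1 := h.ker_int_le hr0 hr1 hb (hx.trans hb)
    rw [hψ2 x hx] at h1
    have h2 := sum_le_hasSum (Finset.range N) (fun k _ => ?_) (hG.add hg)
    · rw [Finset.sum_add_distrib] at h2
      have h3 : ∑ k ∈ Finset.range N, r ^ k / (2 * k) * (tb b k x * dco b ρ k) ≤
          log (b / 2) - log r - ψ x + t := by rw [ht]; linarith
      have h4 : ∑ k ∈ Finset.range N, (r ^ k / (2 * k) * dco b ρ k) * (tb b k x * ρ x) =
          (∑ k ∈ Finset.range N, r ^ k / (2 * k) * (tb b k x * dco b ρ k)) * ρ x := by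
        rw [Finset.sum_mul]; exact Finset.sum_congr rfl fun k _ => by ring
      show ∑ k ∈ Finset.range N, (r ^ k / (2 * k) * dco b ρ k) * (tb b k x * ρ x) ≤ _
      rw [h4]
      nlinarith [mul_le_mul_of_nonneg_right h3 (h.nonneg x)]
    · have h1 := h.abs_dco_le hb k
      have h2 := abs_tb_le hb0 (hx.trans hb) k
      rw [← mul_add]
      have : |tb b k x * dco b ρ k| ≤ 4 := by
        rw [abs_mul]; nlinarith [abs_nonneg (dco b ρ k), abs_nonneg (tb b k x)]
      have := (abs_le.mp this).1
      have : 0 ≤ tb b k x * dco b ρ k + 4 := by linarith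
      positivity
  have l1 := (hasSum_selfEn h hr0.le hr1 hb).tendsto_sum_nat
  have l2 := (tendsto_const_nhds (x := T)).sub hg.tendsto_sum_nat
  rw [sub_self] at l2
  simpa using le_of_tendsto_of_tendsto' l1 (l2.const_add _) key

lemma hasSum_cross (h : Dens ρ M) {r b : ℝ} (hr0 : 0 ≤ r) (hr1 : r < 1) (hb : 2 ≤ b) {n : ℕ}
    {x : Fin n → ℝ} (hx : ∀ i, |x i| ≤ b) {s : ℝ} (hs : |s| ≤ b) :
    HasSum (fun k : ℕ => r ^ k / (2 * k) * ((tb b k s - dco b ρ k) * cN b ρ k x))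
      ((∑ i, ker r b s (x i)) - n * (∫ y, ker r b s y * ρ y) - (∑ i, ∫ y, ker r b (x i) y * ρ y)
        + n * selfEn r b ρ) := by
  have hb0 : 0 < b := by linarith
  have h1 := hasSum_sum (s := Finset.univ) fun i _ => hasSum_ker hr0 hr1 hb0 hs (hx i)
  have h2 := (h.hasSum_ker_int hr0 hr1 hb hs).mul_left (n : ℝ)
  have h3 := hasSum_sum (s := Finset.univ) fun i _ => h.hasSum_ker_int hr0 hr1 hb (hx i)
  have h4 := (hasSum_selfEn h hr0 hr1 hb).mul_left (n : ℝ)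
  convert ((h1.sub h2).sub h3).add h4 using 2 with k
  · rfl
  unfold cN
  rw [← Finset.mul_sum, ← Finset.mul_sum, ← Finset.mul_sum, ← Finset.sum_mul]
  ring

lemma hasSum_En (h : Dens ρ M) {r b : ℝ} (hr0 : 0 ≤ r) (hr1 : r < 1) (hb : 2 ≤ b) {n : ℕ}
    {x : Fin n → ℝ} (hx : ∀ i, |x i| ≤ b) :
    HasSum (fun k : ℕ => r ^ k / (2 * k) * cN b ρ k x ^ 2)
      ((∑ i, ∑ j, ker r b (x i) (x j)) - 2 * n * (∑ i, ∫ y, ker r b (x i) y * ρ y)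
        + n ^ 2 * selfEn r b ρ) := by
  have hb0 : 0 < b := by linarith
  have h1 := hasSum_sum (s := Finset.univ) fun i _ =>
    hasSum_sum (s := Finset.univ) fun j _ => hasSum_ker hr0 hr1 hb0 (hx i) (hx j)
  have h3 := (hasSum_sum (s := Finset.univ) fun i _ =>
    h.hasSum_ker_int hr0 hr1 hb (hx i)).mul_left (2 * n : ℝ)
  have h4 := (hasSum_selfEn h hr0 hr1 hb).mul_left ((n : ℝ) ^ 2)
  convert (h1.sub h3).add h4 using 2 with k
  · rfl
  unfold cN
  simp only [← Finset.mul_sum, ← Finset.sum_mul]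
  ring

lemma En_nonneg {r b : ℝ} (hr0 : 0 ≤ r) {n : ℕ} (x : Fin n → ℝ) : 0 ≤ En r b ρ x :=
  tsum_nonneg fun _ => by positivity

lemma term_le_En (h : Dens ρ M) {r b : ℝ} (hr0 : 0 ≤ r) (hr1 : r < 1) (hb : 2 ≤ b) {n : ℕ}
    {x : Fin n → ℝ} (hx : ∀ i, |x i| ≤ b) (k : ℕ) :
    r ^ k / (2 * k) * cN b ρ k x ^ 2 ≤ En r b ρ x :=
  (hasSum_En h hr0 hr1 hb hx).summable.le_tsum k fun _ _ => by positivity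

/-- The energy inequality: the discrete logarithmic energy is bounded by its mean-field value
minus the regularised energy of the fluctuation. -/
lemma energy (h : Dens ρ M) {ψ : ℝ → ℝ} (hψ : Continuous ψ) (hψ2 : ∀ x, |x| ≤ 2 → pot ρ x = ψ x)
    {r b : ℝ} (hr0 : 0 < r) (hr1 : r < 1) (hb : 2 ≤ b) {n : ℕ}
    {x : Fin n → ℝ} (hx : ∀ i, |x i| ≤ b) (hinj : Function.Injective x) :
    ∑ i, ∑ j ∈ ({i}ᶜ : Finset (Fin n)), log |x i - x j| ≤
      2 * n * (∑ i, pot ρ (x i)) - n ^ 2 * (∫ x, ψ x * ρ x) - En r b ρ x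
        + (-(2 * n ^ 2 * log r) - 2 * n * log (1 - r) + 8 * n ^ 2 * √((1 - r) * b) * (M * Csq)) := by
  have hb0 : 0 < b := by linarith
  have hE : En r b ρ x = _ := (hasSum_En h hr0.le hr1 hb hx).tsum_eq
  have hS := selfEn_le h hψ hψ2 hr0 hr1 hb
  have hlr : log r ≤ 0 := log_nonpos hr0.le hr1.le
  have hlb : 0 ≤ log (b / 2) := log_nonneg (by linarith)
  have h1 : ∑ i, ∑ j ∈ ({i}ᶜ : Finset (Fin n)), log |x i - x j| ≤
      ∑ i, ((n - 1) * (log (b / 2) - log r) - (∑ j, ker r b (x i) (x j)) - 2 * log (1 - r)) := by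
    refine Finset.sum_le_sum fun i _ => ?_
    have e : ∑ j ∈ ({i}ᶜ : Finset (Fin n)), log |x i - x j| ≤
        ∑ j ∈ ({i}ᶜ : Finset (Fin n)), (log (b / 2) - log r - ker r b (x i) (x j)) := by
      refine Finset.sum_le_sum fun j hj => log_le_ker hr0 hr1 hb0 (hx i) (hx j) fun hij => ?_
      simp only [Finset.mem_compl, Finset.mem_singleton] at hj
      exact hj (hinj hij.symm)
    refine e.trans ?_
    have hd := abs_le.mp (abs_ker_le hr0.le hr1 hb0 (hx i) (hx i))
    have hn : 1 ≤ n := Nat.one_le_iff_ne_zero.mpr fun h0 => by subst h0; exact i.elim0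
    rw [Finset.sum_sub_distrib, Finset.sum_const, Finset.card_compl, Fintype.card_fin,
      Finset.card_singleton, nsmul_eq_mul, Nat.cast_sub hn, Nat.cast_one,
      ← Finset.sum_compl_add_sum {i} fun j => ker r b (x i) (x j), Finset.sum_singleton]
    linarith [hd.2]
  have h2 : ∑ i : Fin n, (log (b / 2) - pot ρ (x i) - 4 * √((1 - r) * b) * (M * Csq)) ≤
      ∑ i, ∫ y, ker r b (x i) y * ρ y :=
    Finset.sum_le_sum fun i _ => h.le_ker_int hr0 hr1 hb (hx i)
  simp only [Finset.sum_sub_distrib, Finset.sum_const, Finset.card_univ, Fintype.card_fin,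
    nsmul_eq_mul] at h1 h2
  have hn0 : (0:ℝ) ≤ n := Nat.cast_nonneg n
  have h3 := mul_le_mul_of_nonneg_left h2 (by positivity : (0:ℝ) ≤ 2 * n)
  have h4 := mul_le_mul_of_nonneg_left hS (by positivity : (0:ℝ) ≤ (n:ℝ) ^ 2)
  have h5 : 0 ≤ n * log (b / 2) := by positivity
  have h6 : n * log r ≤ 0 := mul_nonpos_of_nonneg_of_nonpos hn0 hlr
  nlinarith

/-- Cauchy–Schwarz for the mixed energy of a point charge and the fluctuation. -/
lemma cross_ge (h : Dens ρ M) {r b : ℝ} (hr0 : 0 ≤ r) (hr1 : r < 1) (hb : 2 ≤ b) {n : ℕ}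
    {x : Fin n → ℝ} (hx : ∀ i, |x i| ≤ b) {s : ℝ} (hs : |s| ≤ b) {ε : ℝ} (hε : 0 < ε) :
    -(ε / 2 * En r b ρ x + 4 / ε * (-log (1 - r))) ≤
      (∑ i, ker r b s (x i)) - n * (∫ y, ker r b s y * ρ y) - (∑ i, ∫ y, ker r b (x i) y * ρ y)
        + n * selfEn r b ρ := by
  have h1 := hasSum_cross h hr0 hr1 hb hx hs
  have h2 := (hasSum_En h hr0 hr1 hb hx).summable.hasSum.mul_left (ε / 2)
  have h3 := (hasSum_log_one_sub hr0 hr1).mul_left (2 / ε)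
  have h4 : -(ε / 2 * En r b ρ x + 4 / ε * (-log (1 - r))) =
      -(ε / 2 * En r b ρ x + 2 / ε * (-2 * log (1 - r))) := by ring
  rw [h4]
  refine hasSum_le (fun k => ?_) (h2.add h3).neg h1
  have hd := h.abs_dco_le hb k
  have ht := abs_tb_le (by linarith : 0 < b) hs k
  set u := tb b k s - dco b ρ k
  have hu : u ^ 2 ≤ 16 := by
    have : |u| ≤ 4 := (abs_sub _ _).trans (by linarith)
    rw [← sq_abs]; nlinarith [abs_nonneg u]
  have hw : 0 ≤ r ^ k / (2 * k : ℝ) := by positivity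
  set w := r ^ k / (2 * k : ℝ)
  set c := cN b ρ k x
  have key : -(ε / 2 * c ^ 2 + 2 / ε * 4) ≤ u * c := by
    have : 0 ≤ (ε * c + u) ^ 2 / (2 * ε) := by positivity
    have e : (ε * c + u) ^ 2 / (2 * ε) = ε / 2 * c ^ 2 + u * c + u ^ 2 / (2 * ε) := by
      field_simp
      ring
    have : u ^ 2 / (2 * ε) ≤ 16 / (2 * ε) := by gcongr
    have e2 : 16 / (2 * ε) = 2 / ε * 4 := by field_simp; norm_num
    linarith
  nlinarith [mul_le_mul_of_nonneg_left key hw]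

end Stoj

namespace Stoj
open Polynomial Real

/-! ### A priori bounds on the weight -/

/-- The one-particle exponent `-(nβ/2) V`. -/
noncomputable def pw (n β : ℕ) (V : ℝ[X]) (s : ℝ) : ℝ := -((n : ℝ) * β / 2 * V.eval s)

lemma pw_continuous (n β : ℕ) (V : ℝ[X]) : Continuous (pw n β V) := by
  unfold pw; fun_prop

/-- The regularisation parameter `1 - n⁻²`. -/
noncomputable def rn (n : ℕ) : ℝ := 1 - 1 / (n : ℝ) ^ 2

lemma rn_lt {n : ℕ} (hn : 2 ≤ n) : rn n < 1 := by
  have : (0:ℝ) < n := by positivity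
  unfold rn; linarith [show 0 < 1 / (n:ℝ) ^ 2 by positivity]

lemma inv_sq_le {n : ℕ} (hn : 2 ≤ n) : 1 / (n : ℝ) ^ 2 ≤ 1 / 4 := by
  have : (2:ℝ) ≤ n := by exact_mod_cast hn
  apply one_div_le_one_div_of_le <;> nlinarith

lemma rn_pos {n : ℕ} (hn : 2 ≤ n) : 0 < rn n := by
  unfold rn; linarith [inv_sq_le hn]

lemma neg_log_rn {n : ℕ} (hn : 2 ≤ n) : -log (rn n) ≤ 2 / (n : ℝ) ^ 2 := by
  have h1 := rn_pos hn
  have h2 := inv_sq_le hn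
  have h3 := Real.one_sub_inv_le_log_of_pos h1
  have h0 : (0:ℝ) < 1 / (n:ℝ) ^ 2 := by positivity
  have h4 : (rn n)⁻¹ - 1 ≤ 2 / (n : ℝ) ^ 2 := by
    have e : (rn n)⁻¹ - 1 = (1 / (n:ℝ) ^ 2) / rn n := by
      rw [eq_div_iff h1.ne', sub_mul, inv_mul_cancel₀ h1.ne']; unfold rn; ring
    rw [e, div_le_iff₀ h1, show 2 / (n:ℝ) ^ 2 = 2 * (1 / (n:ℝ) ^ 2) by ring]
    unfold rn; nlinarith
  linarith

lemma log_one_sub_rn (n : ℕ) : log (1 - rn n) = -(2 * log n) := by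
  unfold rn; rw [sub_sub_cancel, one_div, log_inv, log_pow]; push_cast; ring

lemma sqrt_rn {n : ℕ} (hn : 2 ≤ n) (b : ℝ) : √((1 - rn n) * b) = √b / n := by
  unfold rn
  rw [sub_sub_cancel, one_div, ← inv_pow, Real.sqrt_mul (by positivity), Real.sqrt_sq (by positivity)]
  ring

lemma pot_le {ρ : ℝ → ℝ} {M : ℝ} (h : Dens ρ M) {x b : ℝ} (hx : |x| ≤ b) :
    pot ρ x ≤ b + 1 := by
  have : ∫ y, (b + 1) * ρ y = b + 1 := by rw [integral_const_mul, h.int, mul_one]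
  rw [← this]
  refine integral_mono_ae (h.integrable_log x) (h.integrable.const_mul _) ?_
  filter_upwards [Measure.ae_ne volume x] with y hy
  by_cases hy2 : 2 < |y|
  · simp [h.off y hy2]
  push Not at hy2
  refine mul_le_mul_of_nonneg_right ?_ (h.nonneg y)
  have h1 := Real.log_le_sub_one_of_pos (abs_pos.mpr (sub_ne_zero.mpr hy.symm))
  have h2 := abs_sub x y
  linarith

section
variable {V P : ℝ[X]} {c p L κ M₀ M : ℝ}

/-- The logarithmic potential on the support. -/
noncomputable def psi (V : ℝ[X]) (c x : ℝ) : ℝ := (V.eval x + c) / 2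

lemma psi_continuous (V : ℝ[X]) (c : ℝ) : Continuous (psi V c) := by unfold psi; fun_prop

/-- The logarithmic energy of the equilibrium measure. -/
noncomputable def eqEn (V P : ℝ[X]) (c : ℝ) : ℝ := ∫ x, psi V c x * rho P x

namespace Adm

lemma pot_eq (h : Adm V P c p L κ M₀ M) (x : ℝ) (hx : |x| ≤ 2) : pot (rho P) x = psi V c x := by
  have := h.eq x hx
  unfold psi; linarith

lemma two_lt (h : Adm V P c p L κ M₀ M) : 2 < p + p⁻¹ := two_lt_joukowsky h.p_gt

lemma integral_V (h : Adm V P c p L κ M₀ M) :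
    ∫ x, V.eval x * rho P x = 2 * eqEn V P c - c := by
  have h1 : ∫ x, c * rho P x = c := by rw [integral_const_mul, h.dens.int, mul_one]
  have h2 : 2 * eqEn V P c - ∫ x, c * rho P x = ∫ x, V.eval x * rho P x := by
    unfold eqEn
    rw [← integral_const_mul, ← integral_sub
      ((h.dens.integrable_mul_cont (psi_continuous V c)).const_mul 2) (h.dens.integrable.const_mul c)]
    congr 1; ext x; unfold psi; ring
  rw [← h2, h1]

lemma integral_pw (h : Adm V P c p L κ M₀ M) (n β : ℕ) :
    ∫ s, pw n β V s * rho P s = -((n : ℝ) * β / 2 * (2 * eqEn V P c - c)) := by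
  rw [← h.integral_V, ← integral_const_mul, ← integral_neg]
  congr 1; ext s; unfold pw; ring

lemma eqEn_le (h : Adm V P c p L κ M₀ M) : eqEn V P c ≤ 3 := by
  have : ∫ y, 3 * rho P y = 3 := by rw [integral_const_mul, h.dens.int, mul_one]
  rw [← this]
  refine integral_mono (h.dens.integrable_mul_cont (psi_continuous V c))
    (h.dens.integrable.const_mul _) fun x => ?_
  by_cases hx : 2 < |x|
  · simp [h.dens.off x hx]
  push Not at hx
  refine mul_le_mul_of_nonneg_right ?_ (h.dens.nonneg x)
  rw [← h.pot_eq x hx]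
  linarith [pot_le h.dens hx]

lemma abs_integral_V (h : Adm V P c p L κ M₀ M) : |∫ x, V.eval x * rho P x| ≤ M₀ := by
  rw [← Real.norm_eq_abs]
  refine (norm_integral_le_of_norm_le (h.dens.integrable.const_mul M₀)
    (Filter.Eventually.of_forall fun x => ?_)).trans ?_
  · by_cases hx : 2 < |x|
    · simp [h.dens.off x hx]
    rw [Real.norm_eq_abs, abs_mul, abs_of_nonneg (h.dens.nonneg x)]
    exact mul_le_mul_of_nonneg_right (h.V_two x (not_lt.mp hx)) (h.dens.nonneg x)
  · rw [integral_const_mul, h.dens.int, mul_one]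

/-- Lower bound for the partition function on `[-2, 2]`. -/
lemma Z_ge (h : Adm V P c p L κ M₀ M) (n β : ℕ) :
    exp (β / 2 * (n ^ 2 * (c - eqEn V P c) - n * eqEn V P c)) ≤
      M₀ ^ n * ∫ x, Wt β (pw n β V) x ∂(pim (bx 2) n) := by
  have h1 := lower_bound h.dens (psi_continuous V c) h.pot_eq β n _ (pw_continuous n β V)
  rw [h.integral_pw] at h1
  refine le_trans (le_of_eq ?_) h1
  congr 1
  change _ = _ + _ * eqEn V P c
  ring

lemma Z_pos (h : Adm V P c p L κ M₀ M) (n β : ℕ) :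
    0 < ∫ x, Wt β (pw n β V) x ∂(pim (bx 2) n) := by
  have := (exp_pos _).trans_le (h.Z_ge n β)
  exact pos_of_mul_pos_right this (pow_nonneg h.dens.M_pos.le n)

lemma Wt_eq_zero {β : ℕ} (hβ : 1 ≤ β) {A : ℝ → ℝ} {n : ℕ} {x : Fin n → ℝ}
    (hx : ¬ Function.Injective x) : Wt β A x = 0 := by
  have : (Matrix.vandermonde x).det = 0 := by
    by_contra h0
    exact hx (Matrix.det_vandermonde_ne_zero_iff.mp h0)
  unfold Wt; rw [this]; simp; omega

lemma Wt_eq_exp (β : ℕ) (A : ℝ → ℝ) {n : ℕ} {x : Fin n → ℝ} (hx : Function.Injective x) :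
    Wt β A x = exp ((∑ i, A (x i)) +
      β / 2 * ∑ i, ∑ j ∈ ({i}ᶜ : Finset (Fin n)), log |x i - x j|) := by
  have h0 := Matrix.det_vandermonde_ne_zero_iff.mpr hx
  have h1 : 2 * log |(Matrix.vandermonde x).det| =
      ∑ i, ∑ j ∈ ({i}ᶜ : Finset (Fin n)), log |x i - x j| := by
    have hsym : ∑ i, ∑ j ∈ ({i}ᶜ : Finset (Fin n)), log |x i - x j| =
        ∑ i, ∑ j ∈ ({i}ᶜ : Finset (Fin n)), log |x j - x i| := by simp only [abs_sub_comm]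
    rw [hsym, ← Finset.sum_sum_Ioi_add_eq_sum_sum_off_diag (fun i j => log |x i - x j|),
      Matrix.det_vandermonde, log_abs, log_prod]
    · rw [Finset.mul_sum]
      refine Finset.sum_congr rfl fun i _ => ?_
      rw [log_prod, Finset.mul_sum]
      · refine Finset.sum_congr rfl fun j _ => ?_
        rw [← log_abs, abs_sub_comm (x i) (x j)]; ring
      · intro j hj
        exact sub_ne_zero.mpr fun e => (Finset.mem_Ioi.mp hj).ne (hx e).symm
    · intro i _
      rw [Finset.prod_ne_zero_iff]
      intro j hj
      exact sub_ne_zero.mpr fun e => (Finset.mem_Ioi.mp hj).ne (hx e).symm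
  rw [← h1, exp_add]
  unfold Wt
  congr 1
  rw [show (β:ℝ) / 2 * (2 * log |(Matrix.vandermonde x).det|) = β * log |(Matrix.vandermonde x).det| by
    ring, exp_nat_mul, exp_log (abs_pos.mpr h0)]

/-- Configurations of large energy have a negligible weight. -/
lemma Wt_le_of_En (h : Adm V P c p L κ M₀ M) {n β : ℕ} (hn : 3 ≤ n) (hβ : 1 ≤ β) {b : ℝ} (hb : 2 ≤ b)
    {x : Fin n → ℝ} (hx : ∀ i, |x i| ≤ b)
    (hE : (16 + 8 * √b * (M * Csq) + 2 * M) * (n * log n) ≤ En (rn n) b (rho P) x) :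
    Wt β (pw n β V) x ≤ exp (-(n * log n)) * ∫ x, Wt β (pw n β V) x ∂(pim (bx 2) n) := by
  have hZ := h.Z_pos n β
  by_cases hinj : Function.Injective x
  swap
  · rw [Wt_eq_zero hβ hinj]; positivity
  have hn2 : 2 ≤ n := by omega
  have hM0 := h.dens.M_pos
  have hn3 : (3:ℝ) ≤ n := by exact_mod_cast hn
  have hβ1 : (1:ℝ) ≤ β := by exact_mod_cast hβ
  have hen := energy h.dens (psi_continuous V c) h.pot_eq (rn_pos hn2) (rn_lt hn2) hb hx hinj
  rw [Wt_eq_exp β _ hinj]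
  have hlog : 1 ≤ log n := by
    rw [Real.le_log_iff_exp_le (by linarith)]; linarith [Real.exp_one_lt_d9]
  have hCsq := Csq_nonneg
  have hV : ∑ i, pw n β V (x i) ≤ -(n * β / 2) * ∑ i, (2 * pot (rho P) (x i) - c) := by
    rw [Finset.mul_sum]
    refine Finset.sum_le_sum fun i _ => ?_
    have := h.le (x i)
    have h2 : (0:ℝ) ≤ n * β / 2 := by positivity
    unfold pw
    nlinarith [mul_le_mul_of_nonneg_left (show 2 * pot (rho P) (x i) - c ≤ V.eval (x i) by linarith) h2]
  rw [Finset.sum_sub_distrib, ← Finset.mul_sum, Finset.sum_const, Finset.card_univ,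
    Fintype.card_fin, nsmul_eq_mul] at hV
  change _ ≤ _ - _ * eqEn V P c - _ + _ at hen
  rw [log_one_sub_rn, sqrt_rn hn2] at hen
  have h2 := neg_log_rn hn2
  have e1 : -(2 * (n:ℝ) ^ 2 * log (rn n)) ≤ 4 := by
    have := mul_le_mul_of_nonneg_left h2 (by positivity : (0:ℝ) ≤ 2 * n ^ 2)
    have e : 2 * (n:ℝ) ^ 2 * (2 / n ^ 2) = 4 := by field_simp; norm_num
    linarith
  have e2 : 8 * (n:ℝ) ^ 2 * (√b / n) * (M₀ * Csq) ≤ 8 * √b * (M * Csq) * n := by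
    have : 8 * (n:ℝ) ^ 2 * (√b / n) * (M₀ * Csq) = 8 * √b * (M₀ * Csq) * n := by
      field_simp
    rw [this]
    have := h.M₀_le
    gcongr
  have hnl : (n:ℝ) ≤ n * log n := by nlinarith
  have h3 := h.eqEn_le
  have h4 : log M₀ ≤ M := by
    have := Real.log_le_sub_one_of_pos hM0
    linarith [h.M₀_le]
  have hZge := h.Z_ge n β
  have hM1 := h.M_one
  have hbs : 0 ≤ √b * (M * Csq) := by positivity
  set I := eqEn V P c
  set X := ∑ i, pot (rho P) (x i)
  set D := En (rn n) b (rho P) x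
  set Y := ∑ i, ∑ j ∈ ({i}ᶜ : Finset (Fin n)), log |x i - x j|
  -- total exponent relative to the lower bound of the partition function
  have h5 : (∑ i, pw n β V (x i)) + β / 2 * Y ≤ β / 2 * (n ^ 2 * (c - I) - n * I) +
      β / 2 * (n * I - D + (4 + 4 * (n * log n) + 8 * √b * (M * Csq) * n)) := by
    have := mul_le_mul_of_nonneg_left hen (by positivity : (0:ℝ) ≤ β / 2)
    have h6 : -(2 * (n:ℝ) ^ 2 * log (rn n)) - 2 * n * (-(2 * log n)) + 8 * n ^ 2 * (√b / n) * (M₀ * Csq)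
        ≤ 4 + 4 * (n * log n) + 8 * √b * (M * Csq) * n := by linarith
    have h7 := mul_le_mul_of_nonneg_left h6 (by positivity : (0:ℝ) ≤ β / 2)
    have e3 : -(n * β / 2) * (2 * X - n * c) = β / 2 * (n ^ 2 * c - 2 * n * X) := by ring
    rw [e3] at hV
    linarith
  have h8 : n * I - D + (4 + 4 * (n * log n) + 8 * √b * (M * Csq) * n) ≤
      -(2 * (n * log n) + 2 * (n * log M₀)) := by
    have a1 : 8 * √b * (M * Csq) * n ≤ 8 * √b * (M * Csq) * (n * log n) := by gcongr
    have a2 : (n:ℝ) * I ≤ 3 * (n * log n) := by nlinarith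
    have a3 : n * log M₀ ≤ M * (n * log n) := by nlinarith
    linarith
  have h9 : β / 2 * (n * I - D + (4 + 4 * (n * log n) + 8 * √b * (M * Csq) * n)) ≤
      -(n * log n) - n * log M₀ := by
    have a1 : 8 * √b * (M * Csq) * n ≤ 8 * √b * (M * Csq) * (n * log n) := by gcongr
    have a2 : (n:ℝ) * I ≤ 3 * (n * log n) := by nlinarith
    have a3 : 0 ≤ M * (n * log n) := by positivity
    have a4 : n * I - D + (4 + 4 * (n * log n) + 8 * √b * (M * Csq) * n) ≤ 0 := by linarith
    have a5 := mul_le_mul_of_nonpos_right (by linarith : (1:ℝ) / 2 ≤ β / 2) a4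
    linarith
  calc exp ((∑ i, pw n β V (x i)) + β / 2 * Y)
      ≤ exp (β / 2 * (n ^ 2 * (c - I) - n * I) + (-(n * log n) - n * log M₀)) := by
        apply exp_le_exp.mpr; linarith
    _ = exp (-(n * log n)) * (exp (β / 2 * (n ^ 2 * (c - I) - n * I)) / M₀ ^ n) := by
        rw [exp_add, exp_sub (-(n * log n)), exp_nat_mul, exp_log hM0]
        ring
    _ ≤ _ := by
        refine mul_le_mul_of_nonneg_left ?_ (exp_pos _).le
        rw [div_le_iff₀ (by positivity)]
        linarith

end Adm
end
end Stoj

namespace Stoj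
open Polynomial Real

/-! ### Confinement of a single particle -/

section
variable {V P : ℝ[X]} {c p L κ M₀ M : ℝ}

/-- The constant in front of `n log n` in the definition of a configuration of large energy. -/
noncomputable def CK (b M : ℝ) : ℝ := 16 + 8 * √b * (M * Csq) + 2 * M

lemma CK_pos {b M : ℝ} (hM : 1 ≤ M) : 0 < CK b M := by
  unfold CK
  have := Csq_nonneg
  have : 0 ≤ √b * (M * Csq) := by positivity
  linarith

/-- The constant of the error term of the one-particle estimate. -/
noncomputable def CT (b M : ℝ) : ℝ := 17 + 8 * √b * (M * Csq) + CK b M + b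

/-- One-particle estimate: if the energy of the configuration is not too large, the conditional
weight of a particle at `s` is governed by the effective potential. -/
lemma log_phi_le (h : Adm V P c p L κ M₀ M) {m : ℕ} (hn : 3 ≤ m + 1) (i : Fin (m + 1))
    {b : ℝ} (hb : 2 ≤ b) {y : Fin m → ℝ} {s : ℝ} (hy : ∀ j, |y j| ≤ b) (hs : |s| ≤ b) (hsy : ∀ j, s ≠ y j)
    (hE : En (rn (m + 1)) b (rho P) (i.insertNth s y : Fin (m + 1) → ℝ) ≤
      CK b M * ((m + 1 : ℕ) * log (m + 1 : ℕ))) :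
    ∑ j, log |s - y j| ≤ (m + 1 + 1) * pot (rho P) s + ∑ j, pot (rho P) (y j)
      - (m + 1) * eqEn V P c + (CT b M - b - 1) * (√(m + 1 : ℕ) * log (m + 1 : ℕ)) := by
  have hn2 : 2 ≤ m + 1 := by omega
  set n : ℝ := ((m + 1 : ℕ) : ℝ) with hN
  have hnR : n = m + 1 := by rw [hN]; push_cast; ring
  have hn3 : (3:ℝ) ≤ n := by rw [hN]; exact_mod_cast hn
  have hn0 : 0 < n := by linarith
  have hr0 := rn_pos hn2
  have hr1 := rn_lt hn2
  have hlog : 1 ≤ log n := by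
    rw [Real.le_log_iff_exp_le (by linarith)]; linarith [Real.exp_one_lt_d9]
  have hb0 : 0 < b := by linarith
  have hsq : 1 ≤ √n := by rw [Real.one_le_sqrt]; linarith
  have hx : ∀ k, |(i.insertNth s y : Fin (m + 1) → ℝ) k| ≤ b := by
    intro k
    refine i.succAboveCases ?_ (fun j => ?_) k <;> simp [hs, hy]
  have hcr := cross_ge h.dens hr0.le hr1 hb hx hs (ε := 1 / √n) (by positivity)
  rw [Fin.sum_univ_succAbove _ i, Fin.sum_univ_succAbove _ i] at hcr
  simp only [Fin.insertNth_apply_same, Fin.insertNth_apply_succAbove] at hcr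
  have hself := selfEn_le h.dens (psi_continuous V c) h.pot_eq hr0 hr1 hb
  change _ ≤ _ - eqEn V P c at hself
  have hGs := h.dens.le_ker_int hr0 hr1 hb hs
  have hGy : ∑ j, (log (b / 2) - pot (rho P) (y j) - 4 * √((1 - rn (m + 1)) * b) * (M₀ * Csq)) ≤
      ∑ j, ∫ z, ker (rn (m + 1)) b (y j) z * rho P z :=
    Finset.sum_le_sum fun j _ => h.dens.le_ker_int hr0 hr1 hb (hy j)
  have hlk : ∑ j, log |s - y j| ≤ ∑ j, (log (b / 2) - log (rn (m + 1)) - ker (rn (m + 1)) b s (y j)) :=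
    Finset.sum_le_sum fun j _ => log_le_ker hr0 hr1 hb0 hs (hy j) (hsy j)
  have hss := (abs_le.mp (abs_ker_le hr0.le hr1 hb0 hs hs)).2
  rw [log_one_sub_rn, ← hN] at hss hcr
  rw [sqrt_rn hn2, ← hN] at hGs hGy
  simp only [Finset.sum_sub_distrib, Finset.sum_const, Finset.card_univ, Fintype.card_fin,
    nsmul_eq_mul] at hlk hGy
  have hlb : 0 ≤ log (b / 2) := Real.log_nonneg (by linarith)
  have hlr := neg_log_rn hn2
  rw [← hN] at hlr
  have e1 : 2 * n * (-log (rn (m + 1))) ≤ 4 / 3 := by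
    have := mul_le_mul_of_nonneg_left hlr (by positivity : (0:ℝ) ≤ 2 * n)
    have e : 2 * n * (2 / n ^ 2) = 4 / n := by field_simp; norm_num
    have : (4:ℝ) / n ≤ 4 / 3 := by gcongr
    linarith
  have e2 : 2 * n * (4 * (√b / n) * (M₀ * Csq)) ≤ 8 * √b * (M * Csq) := by
    have e : 2 * n * (4 * (√b / n) * (M₀ * Csq)) = 8 * √b * (M₀ * Csq) := by
      field_simp; ring
    rw [e]
    have := h.M₀_le
    have := Csq_nonneg
    gcongr
  have hlr0 : 0 ≤ -log (rn (m + 1)) := by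
    have := Real.log_nonpos hr0.le hr1.le; linarith
  have e3 : 1 / √n / 2 * En (rn (m + 1)) b (rho P) (i.insertNth s y : Fin (m + 1) → ℝ) ≤
      CK b M / 2 * (√n * log n) := by
    have e : 1 / √n / 2 * (CK b M * (n * log n)) = CK b M / 2 * (√n * log n) := by
      have : n = √n * √n := (Real.mul_self_sqrt (by positivity)).symm
      nth_rw 2 [this]
      field_simp
    rw [← e]
    gcongr
  have e4 : 4 / (1 / √n) * (- -(2 * log n)) = 8 * (√n * log n) := by field_simp; ring
  rw [e4] at hcr
  have e5 : 1 ≤ √n * log n := by nlinarith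
  have e6 : log n ≤ √n * log n := by nlinarith
  have e7 : 0 ≤ √b * (M * Csq) := by
    have := Csq_nonneg; have := h.M_one; positivity
  have e8 : 8 * √b * (M * Csq) ≤ 8 * √b * (M * Csq) * (√n * log n) := by nlinarith
  have e9 : 0 ≤ CK b M / 2 * (√n * log n) := by
    have := CK_pos (b := b) h.M_one; positivity
  unfold CT
  have hnself := mul_le_mul_of_nonneg_left hself (by positivity : (0:ℝ) ≤ n)
  have hnG := mul_le_mul_of_nonneg_left hGs (by positivity : (0:ℝ) ≤ n)
  have hmn : (m:ℝ) = n - 1 := by linarith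
  rw [hmn] at hlk hGy ⊢
  set Gs := ∫ z, ker (rn (m + 1)) b s z * rho P z
  set SG := ∑ j, ∫ z, ker (rn (m + 1)) b (y j) z * rho P z
  set Sk := ∑ j, ker (rn (m + 1)) b s (y j)
  set Sp := ∑ j, pot (rho P) (y j)
  set ps := pot (rho P) s
  set S := selfEn (rn (m + 1)) b (rho P)
  set I := eqEn V P c
  set Q := √n * log n
  set e := 4 * (√b / n) * (M₀ * Csq)
  set E := 1 / √n / 2 * En (rn (m + 1)) b (rho P) (i.insertNth s y : Fin (m + 1) → ℝ)
  linarith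

/-- Fine confinement: a particle in the gap region is exponentially unlikely. -/
lemma fine_conf (h : Adm V P c p L κ M₀ M) {m β : ℕ} (hn : 3 ≤ m + 1) (hβ : 1 ≤ β)
    (hlarge : CT L M * (√(m + 1 : ℕ) * log (m + 1 : ℕ)) ≤ κ / 4 * (m + 1 : ℕ))
    (i : Fin (m + 1)) {y : Fin m → ℝ} {s : ℝ} (hy : ∀ j, |y j| ≤ L) (hs : |s| ≤ L)
    (hsa : p + p⁻¹ ≤ |s|) :
    Wt β (pw (m + 1) β V) (i.insertNth s y : Fin (m + 1) → ℝ) ≤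
      exp (-((m + 1 : ℕ) * log (m + 1 : ℕ))) * (∫ x, Wt β (pw (m + 1) β V) x ∂(pim (bx 2) (m + 1)))
      + M * exp (-(κ / 4 * (m + 1 : ℕ))) *
        ∫ s', Wt β (pw (m + 1) β V) (i.insertNth s' y : Fin (m + 1) → ℝ) ∂(bx 2) := by
  have hZ := h.Z_pos (m + 1) β
  have hM := h.M_one
  have hL : 2 ≤ L := by linarith [h.two_lt, h.a_lt]
  have hI0 : 0 ≤ ∫ s', Wt β (pw (m + 1) β V) (i.insertNth s' y : Fin (m + 1) → ℝ) ∂(bx 2) :=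
    integral_nonneg fun _ => Wt_nonneg _ _ _
  have hx : ∀ k, |(i.insertNth s y : Fin (m + 1) → ℝ) k| ≤ L := by
    intro k
    refine i.succAboveCases ?_ (fun j => ?_) k <;> simp [hs, hy]
  rcases le_total (CK L M * ((m + 1 : ℕ) * log (m + 1 : ℕ)))
    (En (rn (m + 1)) L (rho P) (i.insertNth s y : Fin (m + 1) → ℝ)) with hE | hE
  · refine (h.Wt_le_of_En hn hβ hL hx hE).trans ?_
    have : 0 ≤ M * exp (-(κ / 4 * (m + 1 : ℕ))) *
        ∫ s', Wt β (pw (m + 1) β V) (i.insertNth s' y : Fin (m + 1) → ℝ) ∂(bx 2) := by positivity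
    linarith
  refine le_add_of_nonneg_of_le (by positivity) ?_
  simp only [Wt_insertNth, integral_const_mul]
  rw [mul_left_comm]
  refine mul_le_mul_of_nonneg_left ?_ (Wt_nonneg _ _ _)
  by_cases hsy : ∀ j, s ≠ y j
  swap
  · push Not at hsy
    obtain ⟨j, hj⟩ := hsy
    have : phi β (pw (m + 1) β V) y s = 0 := by
      unfold phi
      rw [Finset.prod_eq_zero (Finset.mem_univ j) (by simp [hj]), zero_pow (by omega), mul_zero]
    rw [this]
    have : 0 ≤ ∫ s', phi β (pw (m + 1) β V) y s' ∂(bx 2) := integral_nonneg fun _ => phi_nonneg _ _ _ _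
    positivity
  have h1 := log_phi_le h hn i hL hy hs hsy hE
  have h2 := resample h.dens β (pw_continuous (m + 1) β V) y
  rw [phi_eq_exp β _ y hsy]
  rw [h.integral_pw] at h2
  have hg := h.gap s hsa hs
  have hp := pot_le h.dens hs
  have hβ1 : (1:ℝ) ≤ β := by exact_mod_cast hβ
  set n : ℝ := ((m + 1 : ℕ) : ℝ) with hN
  have hnR : n = m + 1 := by rw [hN]; push_cast; ring
  have hn3 : (3:ℝ) ≤ n := by rw [hN]; exact_mod_cast hn
  have hQ : 1 ≤ √n * log n := by
    have hlog : 1 ≤ log n := by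
      rw [Real.le_log_iff_exp_le (by linarith)]; linarith [Real.exp_one_lt_d9]
    have hsq : 1 ≤ √n := by rw [Real.one_le_sqrt]; linarith
    nlinarith
  set I := eqEn V P c
  set X := ∑ j, pot (rho P) (y j)
  set Y := ∑ j, log |s - y j|
  have hexp : pw (m + 1) β V s + β * Y ≤ -(κ / 4 * n) + (-(n * β / 2 * (2 * I - c)) + β * X) := by
    have e1 : (L + 1) ≤ (L + 1) * (√n * log n) := by nlinarith
    have e2 : Y ≤ n * pot (rho P) s + X - n * I + κ / 4 * n := by
      rw [← hnR] at h1
      linarith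
    have e3 := mul_le_mul_of_nonneg_left e2 (by positivity : (0:ℝ) ≤ β)
    have e4 := mul_le_mul_of_nonneg_left hg (by positivity : (0:ℝ) ≤ n * β / 2)
    have e5 : κ / 4 * n ≤ β * (κ / 4 * n) := by
      have := h.κ_pos
      have : 0 ≤ κ / 4 * n := by positivity
      nlinarith
    unfold pw
    rw [← hN]
    linarith
  calc exp (pw (m + 1) β V s + β * Y)
      ≤ exp (-(κ / 4 * n)) * exp (-(n * β / 2 * (2 * I - c)) + β * X) := by
        rw [← exp_add]; exact exp_le_exp.mpr hexp
    _ ≤ exp (-(κ / 4 * n)) * (M * ∫ s, phi β (pw (m + 1) β V) y s ∂(bx 2)) := by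
        refine mul_le_mul_of_nonneg_left (h2.trans ?_) (exp_pos _).le
        exact mul_le_mul_of_nonneg_right h.M₀_le (integral_nonneg fun _ => phi_nonneg _ _ _ _)
    _ = _ := by ring

/-- Crude confinement: the weight of a far-away particle. -/
lemma crude_conf (h : Adm V P c p L κ M₀ M) {m β : ℕ} (hn : 1 ≤ m) (hβ : 1 ≤ β)
    (i : Fin (m + 1)) (y : Fin m → ℝ) {s : ℝ} (hs : L ≤ |s|) :
    Wt β (pw (m + 1) β V) (i.insertNth s y : Fin (m + 1) → ℝ) ≤
      M * exp (-((m + 1 : ℕ) : ℝ) * β) * ((1 + |s|) ^ 2)⁻¹ *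
        ∫ s', Wt β (pw (m + 1) β V) (i.insertNth s' y : Fin (m + 1) → ℝ) ∂(bx 2) := by
  simp only [Wt_insertNth, integral_const_mul]
  rw [mul_left_comm]
  refine mul_le_mul_of_nonneg_left ?_ (Wt_nonneg _ _ _)
  have h2 := resample h.dens β (pw_continuous (m + 1) β V) y
  have hV := (abs_le.mp h.abs_integral_V).2
  have hfar := h.far s hs
  have hintg : ∫ s, pw (m + 1) β V s * rho P s = -((m + 1 : ℕ) * β / 2 * ∫ s, V.eval s * rho P s) := by
    rw [← integral_const_mul, ← integral_neg]
    congr 1; ext s; unfold pw; ring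
  rw [hintg] at h2
  have hC : ∀ j, log (1 + |y j|) - (log 3 + 2 * (M₀ * Csq)) ≤ pot (rho P) (y j) :=
    fun j => h.dens.pot_ge (y j)
  set C0 := log 3 + 2 * (M₀ * Csq) with hC0
  have hC0n : 0 ≤ C0 := by
    have := h.dens.M_pos; have := Csq_nonneg
    have := Real.log_nonneg (by norm_num : (1:ℝ) ≤ 3)
    positivity
  have hβ1 : (1:ℝ) ≤ β := by exact_mod_cast hβ
  have hls : 0 ≤ log (1 + |s|) := Real.log_nonneg (by linarith [abs_nonneg s])
  have hphi : phi β (pw (m + 1) β V) y s ≤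
      exp (pw (m + 1) β V s + β * ∑ j, (log (1 + |s|) + log (1 + |y j|))) := by
    unfold phi
    rw [exp_add, exp_nat_mul, exp_sum]
    refine mul_le_mul_of_nonneg_left ?_ (exp_pos _).le
    refine pow_le_pow_left₀ (Finset.prod_nonneg fun _ _ => abs_nonneg _) ?_ β
    refine Finset.prod_le_prod (fun _ _ => abs_nonneg _) fun j _ => ?_
    have h1 := abs_nonneg s
    have h2 := abs_nonneg (y j)
    rw [exp_add, exp_log (by linarith), exp_log (by linarith)]
    have := abs_sub s (y j)
    nlinarith
  refine hphi.trans ?_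
  have hsum : ∑ j, log (1 + |y j|) ≤ (∑ j, pot (rho P) (y j)) + m * C0 := by
    have : ∑ j, log (1 + |y j|) ≤ ∑ j, (pot (rho P) (y j) + C0) :=
      Finset.sum_le_sum fun j _ => by linarith [hC j]
    simpa [Finset.sum_add_distrib] using this
  rw [Finset.sum_add_distrib, Finset.sum_const, Finset.card_univ, Fintype.card_fin, nsmul_eq_mul]
  set n : ℝ := ((m + 1 : ℕ) : ℝ) with hN
  have hnR : (m:ℝ) = n - 1 := by rw [hN]; push_cast; ring
  have hn2 : (2:ℝ) ≤ n := by
    have : (1:ℝ) ≤ m := by exact_mod_cast hn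
    linarith
  set X := ∑ j, pot (rho P) (y j)
  set J := ∫ s, V.eval s * rho P s
  have hexp : pw (m + 1) β V s + β * (m * log (1 + |s|) + ∑ j, log (1 + |y j|)) ≤
      -n * β + -(2 * log (1 + |s|)) + (-(n * β / 2 * J) + β * X) := by
    have e3 := mul_le_mul_of_nonneg_left hsum (by positivity : (0:ℝ) ≤ β)
    have e4 := mul_le_mul_of_nonneg_left hfar (by positivity : (0:ℝ) ≤ n * β / 2)
    have e5 := mul_le_mul_of_nonneg_left hV (by positivity : (0:ℝ) ≤ n * β / 2)
    have e6 : 2 * log (1 + |s|) ≤ n * β * log (1 + |s|) := by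
      have : (2:ℝ) ≤ n * β := by nlinarith
      exact mul_le_mul_of_nonneg_right this hls
    have e7 : 0 ≤ (β:ℝ) * log (1 + |s|) := by positivity
    have e8 : 0 ≤ (β:ℝ) * C0 := by positivity
    rw [hnR] at e3 ⊢
    unfold pw
    rw [← hN]
    linarith
  have hs1 : 0 < 1 + |s| := by positivity
  have hI0 : 0 ≤ ∫ s, phi β (pw (m + 1) β V) y s ∂(bx 2) := integral_nonneg fun _ => phi_nonneg _ _ _ _
  calc exp (pw (m + 1) β V s + β * (m * log (1 + |s|) + ∑ j, log (1 + |y j|)))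
      ≤ exp (-n * β) * ((1 + |s|) ^ 2)⁻¹ * exp (-(n * β / 2 * J) + β * X) := by
        have : ((1 + |s|) ^ 2)⁻¹ = exp (-(2 * log (1 + |s|))) := by
          rw [exp_neg, show 2 * log (1 + |s|) = (2:ℕ) * log (1 + |s|) by norm_num, exp_nat_mul,
            exp_log hs1]
        rw [this, ← exp_add, ← exp_add]; exact exp_le_exp.mpr hexp
    _ ≤ exp (-n * β) * ((1 + |s|) ^ 2)⁻¹ * (M * ∫ s, phi β (pw (m + 1) β V) y s ∂(bx 2)) := by
        refine mul_le_mul_of_nonneg_left (h2.trans ?_) (by positivity)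
        exact mul_le_mul_of_nonneg_right h.M₀_le hI0
    _ = _ := by ring
end
end Stoj

namespace Stoj
open Polynomial Real

/-! ### Integrability of the weight and confinement of the ensemble -/

lemma integrable_inv_sq : Integrable fun x : ℝ => ((1 + |x|) ^ 2)⁻¹ := by
  have := integrable_one_add_norm (E := ℝ) (μ := volume) (r := 2) (by simp)
  refine this.congr (Filter.Eventually.of_forall fun x => ?_)
  simp only [Real.norm_eq_abs]
  rw [rpow_neg (by positivity), rpow_two]

/-- A potential growing at least linearly. -/
def Grow (V : ℝ[X]) : Prop := ∃ C : ℝ, ∀ x, |x| - C ≤ V.eval x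

lemma integrable_exp_neg {A : ℝ → ℝ} (hA : Continuous A) {s C : ℝ} (hs : 0 < s)
    (h : ∀ x, A x ≤ -(s * |x|) + C) (N : ℕ) :
    Integrable fun x => (1 + |x|) ^ N * exp (A x) := by
  set D := ((N + 2).factorial : ℝ) * exp s / s ^ (N + 2) * exp C
  refine Integrable.mono' (integrable_inv_sq.const_mul D) (by fun_prop)
    (Filter.Eventually.of_forall fun x => ?_)
  have h1 : 0 < 1 + |x| := by positivity
  rw [Real.norm_of_nonneg (by positivity), ← div_eq_mul_inv, le_div_iff₀ (by positivity)]
  have h2 := Real.pow_div_factorial_le_exp (s * (1 + |x|)) (by positivity) (N + 2)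
  rw [div_le_iff₀ (by positivity), mul_pow] at h2
  have h3 : (1 + |x|) ^ (N + 2) ≤ exp (s * (1 + |x|)) * (N + 2).factorial / s ^ (N + 2) := by
    rw [le_div_iff₀ (by positivity)]; linarith
  calc (1 + |x|) ^ N * exp (A x) * (1 + |x|) ^ 2 = (1 + |x|) ^ (N + 2) * exp (A x) := by ring
    _ ≤ (exp (s * (1 + |x|)) * (N + 2).factorial / s ^ (N + 2)) * exp (-(s * |x|) + C) := by
        gcongr; exact h x
    _ = D := by
        have : exp (s * (1 + |x|)) = exp s * exp (s * |x|) := by rw [← exp_add]; ring_nf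
        rw [this, exp_add, exp_neg]; simp only [D]
        field_simp

lemma abs_vandermonde_le {n : ℕ} (x : Fin n → ℝ) :
    |(Matrix.vandermonde x).det| ≤ ∏ i, (1 + |x i|) ^ n := by
  induction n with
  | zero => simp
  | succ n ih =>
    have h1 := abs_vandermonde_insertNth 0 (x 0) (fun j => x j.succ)
    rw [show (Fin.insertNth 0 (x 0) fun j => x j.succ : Fin (n + 1) → ℝ) = x by
      rw [Fin.insertNth_zero]; exact Fin.cons_self_tail x] at h1
    rw [h1, Fin.prod_univ_succ]
    have h2 : ∏ j : Fin n, |x 0 - x j.succ| ≤ ∏ j : Fin n, ((1 + |x 0|) * (1 + |x j.succ|)) := by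
      refine Finset.prod_le_prod (fun _ _ => abs_nonneg _) fun j _ => ?_
      have := abs_sub (x 0) (x j.succ)
      nlinarith [abs_nonneg (x 0), abs_nonneg (x j.succ)]
    rw [Finset.prod_mul_distrib, Finset.prod_const, Finset.card_univ, Fintype.card_fin] at h2
    have h3 := ih fun j => x j.succ
    calc _ ≤ (∏ j : Fin n, (1 + |x j.succ|) ^ n) * ((1 + |x 0|) ^ n * ∏ j : Fin n, (1 + |x j.succ|)) :=
          mul_le_mul h3 h2 (Finset.prod_nonneg fun _ _ => abs_nonneg _)
            (Finset.prod_nonneg fun _ _ => by positivity)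
      _ = (1 + |x 0|) ^ n * ∏ j : Fin n, (1 + |x j.succ|) ^ (n + 1) := by
          simp only [pow_succ, Finset.prod_mul_distrib]; ring
      _ ≤ _ := by
          refine mul_le_mul_of_nonneg_right ?_ (Finset.prod_nonneg fun _ _ => by positivity)
          exact pow_le_pow_right₀ (by linarith [abs_nonneg (x 0)]) (by omega)

lemma integrable_Wt (β : ℕ) {A : ℝ → ℝ} (hA : Continuous A) {s C : ℝ} (hs : 0 < s)
    (h : ∀ x, A x ≤ -(s * |x|) + C) (n : ℕ) :
    Integrable (fun x : Fin n → ℝ => Wt β A x) (pim volume n) := by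
  have h1 := Integrable.fintype_prod (ι := Fin n) (μ := fun _ => (volume : Measure ℝ))
    fun _ => integrable_exp_neg hA hs h (n * β)
  refine h1.mono' (Wt_continuous β hA n).aestronglyMeasurable
    (Filter.Eventually.of_forall fun x => ?_)
  rw [Real.norm_of_nonneg (Wt_nonneg _ _ _)]
  unfold Wt
  rw [Finset.prod_mul_distrib, ← exp_sum, mul_comm]
  refine mul_le_mul_of_nonneg_right ?_ (exp_pos _).le
  simp only [pow_mul]
  rw [Finset.prod_pow]
  exact pow_le_pow_left₀ (abs_nonneg _) (abs_vandermonde_le x) β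

lemma Grow.integrable {V : ℝ[X]} (hV : Grow V) {n β : ℕ} (hn : 1 ≤ n) (hβ : 1 ≤ β) :
    Integrable (fun x : Fin n → ℝ => Wt β (pw n β V) x) (pim volume n) := by
  obtain ⟨C, hC⟩ := hV
  have h0 : (0:ℝ) < n * β / 2 := by
    have : (0:ℝ) < n := by exact_mod_cast hn
    have : (0:ℝ) < β := by exact_mod_cast hβ
    positivity
  refine integrable_Wt β (pw_continuous n β V) h0 (C := n * β / 2 * C) (fun x => ?_) n
  unfold pw
  have := mul_le_mul_of_nonneg_left (hC x) h0.le
  linarith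

/-- Union bound: the mass outside the box `S ^ n`. -/
lemma conf_union {μ : Measure ℝ} [SigmaFinite μ] {S : Set ℝ} (hS : MeasurableSet S) {m : ℕ}
    {F : (Fin (m + 1) → ℝ) → ℝ} (hF : Integrable F (pim μ (m + 1))) (h0 : ∀ x, 0 ≤ F x) :
    ∫ x, F x ∂(pim μ (m + 1)) ≤ (∫ x, F x ∂(pim (μ.restrict S) (m + 1))) +
      ∑ i : Fin (m + 1), ∫ y, (∫ s in Sᶜ, F (i.insertNth s y) ∂μ) ∂(pim μ m) := by
  have hm : ∀ i : Fin (m + 1), MeasurableSet {x : Fin (m + 1) → ℝ | x i ∈ Sᶜ} := fun i =>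
    measurable_pi_apply i hS.compl
  have h1 : ∀ i : Fin (m + 1), ∫ y, (∫ s in Sᶜ, F (i.insertNth s y) ∂μ) ∂(pim μ m) =
      ∫ x, {x : Fin (m + 1) → ℝ | x i ∈ Sᶜ}.indicator F x ∂(pim μ (m + 1)) := by
    intro i
    rw [integral_insertNth i (hF.indicator (hm i))]
    congr 1; ext y
    rw [← integral_indicator hS.compl]
    congr 1; ext s
    by_cases hs : s ∈ Sᶜ
    · rw [Set.indicator_of_mem hs, Set.indicator_of_mem (by simpa using hs)]
    · rw [Set.indicator_of_notMem hs, Set.indicator_of_notMem (by simpa using hs)]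
  simp only [h1]
  have hU : MeasurableSet (Set.univ.pi fun _ : Fin (m + 1) => S) := MeasurableSet.univ_pi fun _ => hS
  rw [pim_restrict, ← integral_indicator hU, ← integral_finsetSum _ fun i _ => hF.indicator (hm i),
    ← integral_add (hF.indicator hU) (integrable_finsetSum _ fun i _ => hF.indicator (hm i))]
  refine integral_mono hF ((hF.indicator hU).add
    (integrable_finsetSum _ fun i _ => hF.indicator (hm i))) fun x => ?_
  have hnn : ∀ i : Fin (m + 1), 0 ≤ {x : Fin (m + 1) → ℝ | x i ∈ Sᶜ}.indicator F x :=
    fun i => Set.indicator_nonneg (fun x _ => h0 x) x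
  by_cases hx : x ∈ Set.univ.pi fun _ : Fin (m + 1) => S
  · simp only [Set.indicator_of_mem hx]
    linarith [Finset.sum_nonneg fun i (_ : i ∈ Finset.univ) => hnn i]
  · simp only [Set.mem_univ_pi, not_forall] at hx
    obtain ⟨i, hi⟩ := hx
    have h3 := Finset.single_le_sum (fun i _ => hnn i) (Finset.mem_univ i)
    rw [Set.indicator_of_mem (by exact hi)] at h3
    have := Set.indicator_nonneg (fun x (_ : x ∈ Set.univ.pi fun _ : Fin (m + 1) => S) => h0 x) x
    linarith

/-- From a pointwise one-particle bound to the confinement of the whole ensemble. -/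
lemma conf {μ : Measure ℝ} [SigmaFinite μ] {S : Set ℝ} (hS : MeasurableSet S) {m : ℕ}
    {F : (Fin (m + 1) → ℝ) → ℝ} (hF : Integrable F (pim μ (m + 1))) (h0 : ∀ x, 0 ≤ F x)
    {τ : ℝ} (hτ1 : Integrable (fun _ => τ) (pim μ m)) (hτ2 : Integrable (fun _ => τ) (μ.restrict Sᶜ))
    {g : ℝ → ℝ} (hg : Integrable g (μ.restrict Sᶜ))
    (hp : ∀ i : Fin (m + 1), ∀ᵐ y ∂(pim μ m), ∀ᵐ s ∂(μ.restrict Sᶜ),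
      F (i.insertNth s y) ≤ τ + g s * ∫ s', F (i.insertNth s' y) ∂μ) :
    ∫ x, F x ∂(pim μ (m + 1)) ≤ (∫ x, F x ∂(pim (μ.restrict S) (m + 1))) +
      (m + 1) * ((pim μ m).real Set.univ * ((μ.restrict Sᶜ).real Set.univ * τ) +
        (∫ s in Sᶜ, g s ∂μ) * ∫ x, F x ∂(pim μ (m + 1))) := by
  refine (conf_union hS hF h0).trans (add_le_add le_rfl ?_)
  have key : ∀ i : Fin (m + 1), ∫ y, (∫ s in Sᶜ, F (i.insertNth s y) ∂μ) ∂(pim μ m) ≤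
      (pim μ m).real Set.univ * ((μ.restrict Sᶜ).real Set.univ * τ) +
        (∫ s in Sᶜ, g s ∂μ) * ∫ x, F x ∂(pim μ (m + 1)) := by
    intro i
    have hI := integrable_insertNth i hF
    have hI2 := hI.integral_prod_right
    have hae := hI.prod_left_ae
    rw [integral_insertNth i hF, ← integral_const_mul]
    have hc : Integrable (fun _ => (μ.restrict Sᶜ).real Set.univ * τ) (pim μ m) := hτ1.const_mul _
    have : (pim μ m).real Set.univ * ((μ.restrict Sᶜ).real Set.univ * τ) =
        ∫ _, (μ.restrict Sᶜ).real Set.univ * τ ∂(pim μ m) := by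
      rw [integral_const, smul_eq_mul]
    rw [this, ← integral_add hc (hI2.const_mul _)]
    refine integral_mono_of_nonneg (Filter.Eventually.of_forall fun y => integral_nonneg fun _ => h0 _)
      (hc.add (hI2.const_mul _)) ?_
    filter_upwards [hp i, hae] with y hy hyi
    have e : (μ.restrict Sᶜ).real Set.univ * τ + (∫ s in Sᶜ, g s ∂μ) * ∫ s', F (i.insertNth s' y) ∂μ
        = ∫ s in Sᶜ, (τ + g s * ∫ s', F (i.insertNth s' y) ∂μ) ∂μ := by
      rw [integral_add hτ2 (hg.mul_const _), integral_mul_const, integral_const, smul_eq_mul]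
    refine le_trans ?_ (le_of_eq e.symm)
    exact integral_mono_ae hyi.integrableOn (hτ2.add (hg.mul_const _)) hy
  refine (Finset.sum_le_sum fun i _ => key i).trans (le_of_eq ?_)
  rw [Finset.sum_const, Finset.card_univ, Fintype.card_fin, nsmul_eq_mul]
  push_cast; ring
end Stoj

namespace Stoj
open Polynomial Real

lemma ev_exp (C : ℝ) {δ ε : ℝ} (hδ : 0 < δ) (hε : 0 < ε) (j : ℕ) :
    ∀ᶠ n : ℕ in Filter.atTop, C * (n:ℝ) ^ j * exp (-(δ * n)) ≤ ε := by
  have h1 := (Real.tendsto_pow_mul_exp_neg_atTop_nhds_zero j).comp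
    ((tendsto_natCast_atTop_atTop (R := ℝ)).const_mul_atTop hδ)
  have h2 := h1.const_mul (C / δ ^ j)
  rw [mul_zero] at h2
  filter_upwards [h2.eventually (ge_mem_nhds hε)] with n hn
  simp only [Function.comp_apply] at hn
  refine le_trans (le_of_eq ?_) hn
  rw [mul_pow]
  field_simp

lemma ev_log (K : ℝ) : ∀ᶠ n : ℕ in Filter.atTop, K ≤ log n :=
  (Real.tendsto_log_atTop.comp (tendsto_natCast_atTop_atTop (R := ℝ))).eventually_ge_atTop K

lemma ev_pow {K : ℝ} (hK : 0 < K) :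
    ∀ᶠ n : ℕ in Filter.atTop, K ^ n * exp (-(n * log n)) ≤ exp (-n) := by
  filter_upwards [ev_log (log K + 1)] with n hn
  have : K ^ n = exp (n * log K) := by rw [exp_nat_mul, exp_log hK]
  rw [this, ← exp_add]
  apply exp_le_exp.mpr
  have := mul_le_mul_of_nonneg_left hn (by positivity : (0:ℝ) ≤ n)
  linarith

lemma ev_sqrt_log (C : ℝ) {κ : ℝ} (hκ : 0 < κ) :
    ∀ᶠ n : ℕ in Filter.atTop, C * (√(n:ℝ) * log n) ≤ κ * n := by
  have h0 := (isLittleO_log_rpow_atTop (by norm_num : (0:ℝ) < 1 / 2))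
  have hc : 0 < κ / (|C| + 1) := by positivity
  have h1 := (h0.def hc)
  have h2 := (tendsto_natCast_atTop_atTop (R := ℝ)).eventually h1
  filter_upwards [h2, Filter.eventually_ge_atTop 1] with n hn hn1
  have hlog : 0 ≤ log (n:ℝ) := Real.log_natCast_nonneg n
  have hs : 0 ≤ √(n:ℝ) := Real.sqrt_nonneg _
  rw [Real.norm_of_nonneg hlog, ← Real.sqrt_eq_rpow, Real.norm_of_nonneg hs, div_mul_eq_mul_div,
    le_div_iff₀ (by positivity)] at hn
  have h3 : C * (√(n:ℝ) * log n) ≤ (|C| + 1) * (√(n:ℝ) * log n) := by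
    have := le_abs_self C
    gcongr; linarith
  have h4 : √(n:ℝ) * √n = n := Real.mul_self_sqrt (by positivity)
  nlinarith

section
variable {V P : ℝ[X]} {c p L κ M₀ M : ℝ}

/-- The partition function restricted to the box `[-b, b] ^ n`. -/
noncomputable def ZB (n β : ℕ) (V : ℝ[X]) (b : ℝ) : ℝ := ∫ x, Wt β (pw n β V) x ∂(pim (bx b) n)

lemma ZB_mono (n β : ℕ) (V : ℝ[X]) {b b' : ℝ} (h : b ≤ b') : ZB n β V b ≤ ZB n β V b' :=
  integral_box_mono' (Wt_continuous β (pw_continuous n β V) n) (fun _ => Wt_nonneg _ _ _) h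

lemma Adm.ZB_pos (h : Adm V P c p L κ M₀ M) (n β : ℕ) {b : ℝ} (hb : 2 ≤ b) : 0 < ZB n β V b :=
  (h.Z_pos n β).trans_le (ZB_mono n β V hb)

lemma integral_Wt_mono (β : ℕ) {A : ℝ → ℝ} (hA : Continuous A) {m : ℕ} (i : Fin (m + 1))
    (y : Fin m → ℝ) {b : ℝ} (hb : 2 ≤ b) :
    ∫ s', Wt β A (i.insertNth s' y : Fin (m + 1) → ℝ) ∂(bx 2) ≤
      ∫ s', Wt β A (i.insertNth s' y : Fin (m + 1) → ℝ) ∂(bx b) := by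
  have hc : Continuous fun s' : ℝ => Wt β A (i.insertNth s' y : Fin (m + 1) → ℝ) := by
    simp only [Wt_insertNth]
    exact (phi_continuous β hA y).const_mul _
  refine setIntegral_mono_set (hc.continuousOn.integrableOn_compact isCompact_Icc)
    (Filter.Eventually.of_forall fun _ => Wt_nonneg _ _ _) ?_
  exact (Set.Icc_subset_Icc (by linarith) hb).eventuallyLE

/-- For large `n` half of the mass lies in the box `[-L, L] ^ n`. -/
lemma crude_ensemble (L M : ℝ) : ∀ᶠ n : ℕ in Filter.atTop,
    ∀ (V P : ℝ[X]) (c p κ M₀ : ℝ) (β : ℕ), Adm V P c p L κ M₀ M → Grow V → 1 ≤ β →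
      ∫ x, Wt β (pw n β V) x ∂(pim volume n) ≤ 2 * ZB n β V L := by
  set CI := ∫ s : ℝ, ((1 + |s|) ^ 2)⁻¹
  filter_upwards [ev_exp (M * CI) one_pos (by norm_num : (0:ℝ) < 1 / 2) 1,
    Filter.eventually_ge_atTop 3] with n hn hn3 V P c p κ M₀ β h hG hβ
  obtain ⟨m, rfl⟩ : ∃ m, n = m + 1 := ⟨n - 1, by omega⟩
  have hF := hG.integrable (n := m + 1) (by omega) hβ
  have hM := h.M_one
  have hβ1 : (1:ℝ) ≤ β := by exact_mod_cast hβ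
  set E := M * exp (-((m + 1 : ℕ) : ℝ) * β) with hE
  have hE0 : 0 ≤ E := by positivity
  have hg : Integrable fun s : ℝ => E * ((1 + |s|) ^ 2)⁻¹ := integrable_inv_sq.const_mul E
  have hL : 2 ≤ L := by linarith [h.two_lt, h.a_lt]
  have hA := pw_continuous (m + 1) β V
  have key := conf (μ := volume) (S := Set.Icc (-L) L) measurableSet_Icc hF (fun _ => Wt_nonneg _ _ _)
    (τ := 0) (integrable_zero _ _ _) (integrable_zero _ _ _) (g := fun s => E * ((1 + |s|) ^ 2)⁻¹)
    hg.integrableOn (by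
      intro i
      have hae := (integrable_insertNth i hF).prod_left_ae
      filter_upwards [hae] with y hy
      filter_upwards [ae_restrict_mem measurableSet_Icc.compl] with s hs
      have hsL : L ≤ |s| := by
        by_contra hlt
        exact hs (abs_le.mp (not_le.mp hlt).le)
      have h1 := crude_conf h (by omega) hβ i y hsL
      rw [zero_add]
      refine h1.trans (mul_le_mul_of_nonneg_left ?_ (by positivity))
      exact setIntegral_le_integral hy (Filter.Eventually.of_forall fun _ => Wt_nonneg _ _ _))
  change _ ≤ ZB _ _ _ _ + _ at key
  have hgi : ∫ s in (Set.Icc (-L) L)ᶜ, E * ((1 + |s|) ^ 2)⁻¹ ≤ E * CI := by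
    rw [← integral_const_mul]
    exact setIntegral_le_integral hg (Filter.Eventually.of_forall fun _ => by positivity)
  have hZ0 : 0 ≤ ∫ x, Wt β (pw (m + 1) β V) x ∂(pim volume (m + 1)) :=
    integral_nonneg fun _ => Wt_nonneg _ _ _
  have hCI : 0 ≤ CI := integral_nonneg fun _ => by positivity
  have hsm : (m + 1) * (E * CI) ≤ 1 / 2 := by
    refine le_trans ?_ hn
    rw [hE]
    have : exp (-((m + 1 : ℕ) : ℝ) * β) ≤ exp (-(1 * (m + 1 : ℕ))) := by
      apply exp_le_exp.mpr
      have : (0:ℝ) ≤ (m + 1 : ℕ) := by positivity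
      nlinarith
    calc (m + 1) * (M * exp (-((m + 1 : ℕ) : ℝ) * β) * CI)
        = (M * CI) * ((m + 1 : ℕ) : ℝ) ^ 1 * exp (-((m + 1 : ℕ) : ℝ) * β) := by push_cast; ring
      _ ≤ _ := by gcongr
  have h5 : (m + 1) * ((∫ s in (Set.Icc (-L) L)ᶜ, E * ((1 + |s|) ^ 2)⁻¹) *
      ∫ x, Wt β (pw (m + 1) β V) x ∂(pim volume (m + 1))) ≤
      1 / 2 * ∫ x, Wt β (pw (m + 1) β V) x ∂(pim volume (m + 1)) := by
    rw [← mul_assoc]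
    refine mul_le_mul_of_nonneg_right (le_trans ?_ hsm) hZ0
    gcongr
  rw [mul_zero, mul_zero, zero_add] at key
  linarith

/-- For large `n` half of the mass of the box `[-L, L] ^ n` lies in the smaller box. -/
lemma fine_ensemble (p L κ M : ℝ) (hκ : 0 < κ) (hL : 2 ≤ L) (hM : 1 ≤ M) : ∀ᶠ n : ℕ in Filter.atTop,
    ∀ (V P : ℝ[X]) (c M₀ : ℝ) (β : ℕ), Adm V P c p L κ M₀ M → 1 ≤ β →
      ZB n β V L ≤ 2 * ZB n β V (p + p⁻¹) := by
  filter_upwards [ev_exp (2 * L * M) (by positivity : 0 < κ / 4) (by norm_num : (0:ℝ) < 1 / 4) 1,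
    ev_exp 1 one_pos (by norm_num : (0:ℝ) < 1 / 4) 1, ev_pow (by positivity : 0 < 2 * L),
    ev_sqrt_log (CT L M) (by positivity : 0 < κ / 4),
    Filter.eventually_ge_atTop 3] with n hn1 hn2 hn4 hlarge hn3 V P c M₀ β h hβ
  obtain ⟨m, rfl⟩ : ∃ m, n = m + 1 := ⟨n - 1, by omega⟩
  have hA := pw_continuous (m + 1) β V
  have hF := integrable_box (Wt_continuous β hA (m + 1)) L
  have ha := h.two_lt
  have haL := h.a_lt
  set a := p + p⁻¹
  set G := M * exp (-(κ / 4 * (m + 1 : ℕ))) with hG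
  have hG0 : 0 ≤ G := by positivity
  set τ := exp (-((m + 1 : ℕ) * log (m + 1 : ℕ))) * ZB (m + 1) β V 2 with hτ
  have hZ2 := h.Z_pos (m + 1) β
  change 0 < ZB (m + 1) β V 2 at hZ2
  have hZL := h.ZB_pos (m + 1) β hL
  have hZ2L := ZB_mono (m + 1) β V hL
  have key := conf (μ := bx L) (S := Set.Icc (-a) a) measurableSet_Icc hF (fun _ => Wt_nonneg _ _ _)
    (τ := τ) (integrable_const _) (integrable_const _) (g := fun _ => G) (integrable_const _) (by
      intro i
      filter_upwards [ae_box L m] with y hy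
      filter_upwards [ae_restrict_mem measurableSet_Icc.compl, ae_restrict_of_ae (ae_bx L)] with s hs hsL
      have hsa : a ≤ |s| := by
        by_contra hlt
        exact hs (abs_le.mp (not_le.mp hlt).le)
      refine (fine_conf h hn3 hβ hlarge i hy hsL hsa).trans (add_le_add le_rfl ?_)
      exact mul_le_mul_of_nonneg_left (integral_Wt_mono β hA i y hL) hG0)
  rw [pim_bx_real (by linarith), integral_const, smul_eq_mul,
    show (bx L).restrict (Set.Icc (-a) a) = bx a by
      rw [Measure.restrict_restrict measurableSet_Icc,
        Set.inter_eq_left.mpr (Set.Icc_subset_Icc (by linarith) haL.le)]] at key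
  change ZB _ _ _ L ≤ ZB _ _ _ a + _ * (_ + _ * ZB _ _ _ L) at key
  have hr : ((bx L).restrict (Set.Icc (-a) a)ᶜ).real Set.univ ≤ 2 * L := by
    rw [← bx_real (by linarith : 0 ≤ L), measureReal_restrict_apply_univ]
    exact measureReal_mono (Set.subset_univ _)
  set R := ((bx L).restrict (Set.Icc (-a) a)ᶜ).real Set.univ
  have hR0 : 0 ≤ R := measureReal_nonneg
  have e1 : (m + 1) * ((2 * L) ^ m * (R * τ)) ≤ 1 / 4 * ZB (m + 1) β V L := by
    calc (m + 1) * ((2 * L) ^ m * (R * τ)) ≤ (m + 1) * ((2 * L) ^ m * (2 * L * τ)) := by gcongr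
      _ = (m + 1) * ((2 * L) ^ (m + 1) * exp (-((m + 1 : ℕ) * log (m + 1 : ℕ)))) * ZB (m + 1) β V 2 := by
          rw [hτ]; ring
      _ ≤ (m + 1) * exp (-((m + 1 : ℕ) : ℝ)) * ZB (m + 1) β V L := by gcongr
      _ ≤ _ := by
          refine mul_le_mul_of_nonneg_right (le_trans (le_of_eq ?_) hn2) hZL.le
          push_cast; ring_nf
  have e2 : (m + 1) * (R * G * ZB (m + 1) β V L) ≤ 1 / 4 * ZB (m + 1) β V L := by
    rw [← mul_assoc]
    refine mul_le_mul_of_nonneg_right (le_trans ?_ hn1) hZL.le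
    calc (m + 1) * (R * G) ≤ (m + 1) * (2 * L * G) := by gcongr
      _ = _ := by rw [hG]; push_cast; ring
  linarith

/-- The weight of configurations with a particle at an endpoint of the box. -/
lemma boundary_small (p L κ M : ℝ) (hκ : 0 < κ) : ∀ᶠ n : ℕ in Filter.atTop,
    ∀ (m : ℕ), n = m + 1 → ∀ (V P : ℝ[X]) (c M₀ : ℝ) (β : ℕ), Adm V P c p L κ M₀ M → 1 ≤ β →
      ∀ (i : Fin (m + 1)) (s : ℝ), |s| = p + p⁻¹ →
      ∫ y, Wt β (pw n β V) (i.insertNth s y : Fin (m + 1) → ℝ) ∂(pim (bx (p + p⁻¹)) m) ≤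
        (exp (-n) + M * exp (-(κ / 4 * n))) * ZB n β V (p + p⁻¹) := by
  by_cases hpp : p + p⁻¹ ≤ 2
  · refine Filter.Eventually.of_forall fun n m _ V P c M₀ β h => ?_
    exact absurd h.two_lt (not_lt.mpr hpp)
  push Not at hpp
  filter_upwards [ev_pow (by positivity : 0 < 2 * (p + p⁻¹)),
    ev_sqrt_log (CT L M) (by positivity : 0 < κ / 4),
    Filter.eventually_ge_atTop 3] with n hn4 hlarge hn3 m hm V P c M₀ β h hβ i s hs
  subst hm
  have haL := h.a_lt
  have hM := h.M_one
  have hA := pw_continuous (m + 1) β V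
  set a := p + p⁻¹
  have ha0 : 0 ≤ a := by linarith
  have hF := integrable_box (Wt_continuous β hA (m + 1)) a
  set G := M * exp (-(κ / 4 * (m + 1 : ℕ))) with hG
  have hG0 : 0 ≤ G := by positivity
  set τ := exp (-((m + 1 : ℕ) * log (m + 1 : ℕ))) * ZB (m + 1) β V 2 with hτ
  have hZa := h.ZB_pos (m + 1) β hpp.le
  have hZ2a := ZB_mono (m + 1) β V hpp.le
  have hI2 := (integrable_insertNth i hF).integral_prod_right
  have hstep : ∫ y, Wt β (pw (m + 1) β V) (i.insertNth s y : Fin (m + 1) → ℝ) ∂(pim (bx a) m) ≤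
      ∫ y, (τ + G * ∫ s', Wt β (pw (m + 1) β V) (i.insertNth s' y : Fin (m + 1) → ℝ) ∂(bx a))
        ∂(pim (bx a) m) := by
    refine integral_mono_of_nonneg (Filter.Eventually.of_forall fun y => Wt_nonneg _ _ _)
      ((integrable_const _).add (hI2.const_mul _)) ?_
    filter_upwards [ae_box a m] with y hy
    refine (fine_conf h hn3 hβ hlarge i (fun j => (hy j).trans haL.le) (by linarith) hs.ge).trans
      (add_le_add le_rfl ?_)
    exact mul_le_mul_of_nonneg_left (integral_Wt_mono β hA i y hpp.le) hG0
  refine hstep.trans ?_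
  rw [integral_add (integrable_const _) (hI2.const_mul _), integral_const, smul_eq_mul,
    pim_bx_real ha0, integral_const_mul, ← integral_insertNth i hF]
  change _ + G * ZB (m + 1) β V a ≤ _
  rw [add_mul]
  refine add_le_add ?_ le_rfl
  have h1 : (1:ℝ) ≤ 2 * a := by linarith
  calc (2 * a) ^ m * τ = (2 * a) ^ m * exp (-((m + 1 : ℕ) * log (m + 1 : ℕ))) * ZB (m + 1) β V 2 := by
        rw [hτ]; ring
    _ ≤ (2 * a) ^ (m + 1) * exp (-((m + 1 : ℕ) * log (m + 1 : ℕ))) * ZB (m + 1) β V a := by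
        have := h.Z_pos (m + 1) β
        change 0 < ZB (m + 1) β V 2 at this
        gcongr
        omega
    _ ≤ _ := mul_le_mul_of_nonneg_right hn4 hZa.le
end
end Stoj

namespace Stoj
open Polynomial Real

/-! ### The loop equation -/

lemma hasDerivAt_phi (β : ℕ) {A A' : ℝ → ℝ} (hA : ∀ s, HasDerivAt A (A' s) s) {m : ℕ}
    (y : Fin m → ℝ) {s : ℝ} (hs : ∀ j, s ≠ y j) :
    HasDerivAt (phi β A y) (phi β A y s * (A' s + β * ∑ j, (s - y j)⁻¹)) s := by
  have hev : phi β A y =ᶠ[nhds s] fun s => exp (A s + β * ∑ j, log (s - y j)) := by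
    have : ∀ᶠ s' in nhds s, ∀ j, s' ≠ y j :=
      Filter.eventually_all.mpr fun j => isOpen_ne.mem_nhds (hs j)
    filter_upwards [this] with s' hs'
    rw [phi_eq_exp β A y hs']
    simp only [log_abs]
  have h1 : HasDerivAt (fun s => A s + β * ∑ j, log (s - y j)) (A' s + β * ∑ j, (s - y j)⁻¹) s := by
    refine (hA s).add (HasDerivAt.const_mul _ (HasDerivAt.fun_sum fun j _ => ?_))
    have := ((hasDerivAt_id s).sub_const (y j)).log (sub_ne_zero.mpr (hs j))
    simpa using this
  have h2 := h1.exp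
  rw [phi_eq_exp β A y hs]
  simp only [log_abs]
  exact h2.congr_of_eventuallyEq hev

lemma integrable_Wt_div {β : ℕ} (hβ : 1 ≤ β) {A : ℝ → ℝ} (hA : Continuous A) {n : ℕ} (i j : Fin n)
    {f : (Fin n → ℝ) → ℝ} (hf : Continuous f) (b : ℝ) :
    Integrable (fun x => f x * (Wt β A x * (x i - x j)⁻¹)) (pim (bx b) n) := by
  by_cases hij : i = j
  · subst hij; simp
  obtain ⟨m, rfl⟩ : ∃ m, n = m + 1 := ⟨n - 1, by have := i.pos; omega⟩
  obtain ⟨l, rfl⟩ := Fin.exists_succAbove_eq (Ne.symm hij)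
  -- the Vandermonde determinant with the factor `x i - x j` removed
  set K : (Fin (m + 1) → ℝ) → ℝ := fun x => exp (∑ k, A (x k)) * |(Matrix.vandermonde x).det| ^ (β - 1) *
    (|(Matrix.vandermonde (fun k => x (i.succAbove k))).det| *
      ∏ k ∈ Finset.univ.erase l, |x i - x (i.succAbove k)|) with hK
  have hKc : Continuous K := by
    have h1 := vandermonde_continuous (m + 1)
    have h2 : Continuous fun x : Fin (m + 1) → ℝ =>
        (Matrix.vandermonde (fun k => x (i.succAbove k))).det :=
      (vandermonde_continuous m).comp (by fun_prop)
    simp only [hK]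
    fun_prop
  have hK0 : ∀ x, 0 ≤ K x := fun x => by
    have : 0 ≤ ∏ k ∈ Finset.univ.erase l, |x i - x (i.succAbove k)| :=
      Finset.prod_nonneg fun _ _ => abs_nonneg _
    simp only [hK]; positivity
  have hW := Wt_continuous β hA (m + 1)
  refine (integrable_box (hf.abs.mul hKc) b).mono' (Measurable.aestronglyMeasurable ?_)
    (Filter.Eventually.of_forall fun x => ?_)
  · have h1 := hf.measurable
    have h2 := hW.measurable
    fun_prop
  rw [Real.norm_eq_abs, abs_mul]
  refine mul_le_mul_of_nonneg_left ?_ (abs_nonneg _)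
  by_cases h0 : x i - x (i.succAbove l) = 0
  · rw [h0]; simpa using hK0 x
  have hdet : |(Matrix.vandermonde x).det| =
      |(Matrix.vandermonde (fun k => x (i.succAbove k))).det| * ∏ k, |x i - x (i.succAbove k)| := by
    rw [← abs_vandermonde_insertNth i (x i) (fun k => x (i.succAbove k))]
    congr 3
    exact (Fin.insertNth_self_removeNth i x).symm
  rw [← Finset.mul_prod_erase _ _ (Finset.mem_univ l)] at hdet
  rw [abs_mul, abs_inv, abs_of_nonneg (Wt_nonneg _ _ _), ← div_eq_mul_inv,
    div_le_iff₀ (abs_pos.mpr h0)]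
  unfold Wt
  obtain ⟨γ, rfl⟩ : ∃ γ, β = γ + 1 := ⟨β - 1, by omega⟩
  rw [pow_succ]
  nth_rw 2 [hdet]
  simp only [hK, Nat.add_sub_cancel]
  exact le_of_eq (by ring)

lemma loop_integrable {β : ℕ} (hβ : 1 ≤ β) {A A' : ℝ → ℝ} (hA : Continuous A)
    (hA' : Continuous A') (h g : ℝ[X]) (c0 : ℝ) {m : ℕ} (i : Fin (m + 1)) (b : ℝ) :
    Integrable (fun x : Fin (m + 1) → ℝ =>
      (((derivative h).eval (x i) * ((∑ k, g.eval (x k)) + c0) +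
        h.eval (x i) * (derivative g).eval (x i) +
        h.eval (x i) * ((∑ k, g.eval (x k)) + c0) * A' (x i)) * Wt β A x +
        β * ∑ j, h.eval (x i) * ((∑ k, g.eval (x k)) + c0) * (Wt β A x * (x i - x j)⁻¹)))
      (pim (bx b) (m + 1)) := by
  have hW := Wt_continuous β hA (m + 1)
  exact (integrable_box (by fun_prop) b).add (Integrable.const_mul
    (integrable_finsetSum _ fun j _ => integrable_Wt_div hβ hA i j (by fun_prop) b) _)

/-- Integration by parts in the `i`-th particle. -/
lemma loop_one {β : ℕ} (hβ : 1 ≤ β) {A A' : ℝ → ℝ} (hA : ∀ s, HasDerivAt A (A' s) s)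
    (hA' : Continuous A') (h g : ℝ[X]) (c0 : ℝ) {m : ℕ} (i : Fin (m + 1)) {b : ℝ} (hb : 0 ≤ b) :
    ∫ x, (((derivative h).eval (x i) * ((∑ k, g.eval (x k)) + c0) +
        h.eval (x i) * (derivative g).eval (x i) +
        h.eval (x i) * ((∑ k, g.eval (x k)) + c0) * A' (x i)) * Wt β A x +
        β * ∑ j, h.eval (x i) * ((∑ k, g.eval (x k)) + c0) * (Wt β A x * (x i - x j)⁻¹))
        ∂(pim (bx b) (m + 1)) =
      ∫ y, (h.eval b * (g.eval b + (∑ k, g.eval (y k)) + c0) *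
          Wt β A (i.insertNth b y : Fin (m + 1) → ℝ) -
        h.eval (-b) * (g.eval (-b) + (∑ k, g.eval (y k)) + c0) *
          Wt β A (i.insertNth (-b) y : Fin (m + 1) → ℝ)) ∂(pim (bx b) m) := by
  have hAc : Continuous A := continuous_iff_continuousAt.mpr fun s => (hA s).continuousAt
  have hW := Wt_continuous β hAc (m + 1)
  have hintg := loop_integrable hβ hAc hA' h g c0 i b
  rw [integral_insertNth i hintg]
  refine integral_congr_ae ?_
  filter_upwards [(integrable_insertNth i hintg).prod_left_ae] with y hy
  rw [integral_Icc_eq_integral_Ioc, ← intervalIntegral.integral_of_le (by linarith)]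
  refine (integral_eq_of_hasDerivAt_off_countable_of_le
    (fun s => h.eval s * (g.eval s + (∑ k, g.eval (y k)) + c0) *
      Wt β A (i.insertNth s y : Fin (m + 1) → ℝ)) _ (by linarith)
    (s := Set.range y) (Set.countable_range y) ?_ ?_ ?_)
  · simp only [Wt_insertNth]
    have := phi_continuous β hAc y
    fun_prop
  · intro s hs
    have hsy : ∀ j, s ≠ y j := fun j e => hs.2 ⟨j, e.symm⟩
    have h1 := hasDerivAt_phi β hA y hsy
    have h2 := ((h.hasDerivAt s).mul (((g.hasDerivAt s).add_const
      (∑ k, g.eval (y k))).add_const c0)).mul (h1.const_mul (Wt β A y))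
    simp only [Wt_insertNth, Fin.insertNth_apply_same, Fin.sum_univ_succAbove _ i,
      Fin.insertNth_apply_succAbove, sub_self, inv_zero, mul_zero, zero_add]
    refine h2.congr_deriv ?_
    have e : ∑ j, h.eval s * (g.eval s + (∑ k, g.eval (y k)) + c0) *
        (Wt β A y * phi β A y s * (s - y j)⁻¹) = h.eval s * (g.eval s + (∑ k, g.eval (y k)) + c0) *
        (Wt β A y * phi β A y s) * ∑ j, (s - y j)⁻¹ := by
      rw [Finset.mul_sum]; exact Finset.sum_congr rfl fun j _ => by ring
    rw [e]
    simp only [Pi.mul_apply]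
    ring
  · rw [intervalIntegrable_iff_integrableOn_Icc_of_le (by linarith)]
    exact hy

lemma sum_div_eq (h : ℝ[X]) {n : ℕ} {x : Fin n → ℝ} (hx : Function.Injective x) :
    ∑ i, ∑ j, h.eval (x i) * (x i - x j)⁻¹ =
      1 / 2 * ((∑ i, ∑ j, dq h (x i) (x j)) - ∑ i, (derivative h).eval (x i)) := by
  have h1 : ∑ i, ∑ j, h.eval (x i) * (x i - x j)⁻¹ = -∑ i, ∑ j, h.eval (x j) * (x i - x j)⁻¹ := by
    rw [Finset.sum_comm, ← Finset.sum_neg_distrib]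
    refine Finset.sum_congr rfl fun i _ => ?_
    rw [← Finset.sum_neg_distrib]
    refine Finset.sum_congr rfl fun j _ => ?_
    rw [← neg_sub (x i) (x j), inv_neg]; ring
  have h2 : ∀ i j, h.eval (x i) * (x i - x j)⁻¹ - h.eval (x j) * (x i - x j)⁻¹ =
      dq h (x i) (x j) - if i = j then (derivative h).eval (x i) else 0 := by
    intro i j
    by_cases hij : i = j
    · subst hij; simp [dq_self]
    · have : x i - x j ≠ 0 := sub_ne_zero.mpr fun e => hij (hx e)
      rw [if_neg hij, sub_zero, ← sub_mul, ← dq_mul_sub]; field_simp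
  have h3 : (∑ i, ∑ j, h.eval (x i) * (x i - x j)⁻¹) - ∑ i, ∑ j, h.eval (x j) * (x i - x j)⁻¹ =
      (∑ i, ∑ j, dq h (x i) (x j)) - ∑ i, (derivative h).eval (x i) := by
    simp only [← Finset.sum_sub_distrib, h2]
    simp [Finset.sum_sub_distrib]
  linarith

/-- The loop equation on a box, with the boundary terms. -/
lemma loop_eq {β : ℕ} (hβ : 1 ≤ β) {A A' : ℝ → ℝ} (hA : ∀ s, HasDerivAt A (A' s) s)
    (hA' : Continuous A') (h g : ℝ[X]) (c0 : ℝ) (m : ℕ) {b : ℝ} (hb : 0 ≤ b) :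
    ∫ x, ((∑ i, (derivative g * h).eval (x i)) + ((∑ k, g.eval (x k)) + c0) *
        ((∑ i, h.eval (x i) * A' (x i)) + β / 2 * (∑ i, ∑ j, dq h (x i) (x j)) +
          (1 - β / 2) * ∑ i, (derivative h).eval (x i))) * Wt β A x ∂(pim (bx b) (m + 1)) =
      ∑ i : Fin (m + 1), ∫ y, (h.eval b * (g.eval b + (∑ k, g.eval (y k)) + c0) *
          Wt β A (i.insertNth b y : Fin (m + 1) → ℝ) -
        h.eval (-b) * (g.eval (-b) + (∑ k, g.eval (y k)) + c0) *
          Wt β A (i.insertNth (-b) y : Fin (m + 1) → ℝ)) ∂(pim (bx b) m) := by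
  have hAc : Continuous A := continuous_iff_continuousAt.mpr fun s => (hA s).continuousAt
  have hW := Wt_continuous β hAc (m + 1)
  simp only [← loop_one hβ hA hA' h g c0 _ hb]
  rw [← integral_finsetSum _ fun i _ => loop_integrable hβ hAc hA' h g c0 i b]
  congr 1; ext x
  by_cases hx : Function.Injective x
  swap
  · simp [Adm.Wt_eq_zero hβ hx]
  have h1 := sum_div_eq h hx
  set X := (∑ k, g.eval (x k)) + c0
  set W := Wt β A x
  have e1 : ∀ i, ∑ j, h.eval (x i) * X * (W * (x i - x j)⁻¹) =
      X * W * ∑ j, h.eval (x i) * (x i - x j)⁻¹ := fun i => by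
    rw [Finset.mul_sum]; exact Finset.sum_congr rfl fun j _ => by ring
  simp only [e1]
  rw [Finset.sum_add_distrib, ← Finset.mul_sum, ← Finset.mul_sum, h1, ← Finset.sum_mul,
    Finset.sum_add_distrib, Finset.sum_add_distrib]
  have e2 : ∑ i, (derivative h).eval (x i) * X = X * ∑ i, (derivative h).eval (x i) := by
    rw [Finset.mul_sum]; exact Finset.sum_congr rfl fun j _ => by ring
  have e3 : ∑ i, h.eval (x i) * X * A' (x i) = X * ∑ i, h.eval (x i) * A' (x i) := by
    rw [Finset.mul_sum]; exact Finset.sum_congr rfl fun j _ => by ring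
  have e4 : ∑ i, h.eval (x i) * (derivative g).eval (x i) = ∑ i, (derivative g * h).eval (x i) :=
    Finset.sum_congr rfl fun j _ => by rw [eval_mul]; ring
  rw [e2, e3, e4]
  ring
end Stoj

namespace Stoj
open Polynomial Real

/-! ### A priori bounds on linear statistics -/

/-- The centred linear statistic `∑ f(x_i) - n ∫ f ρ`. -/
noncomputable def Nf (ρ : ℝ → ℝ) (f : ℝ → ℝ) {n : ℕ} (x : Fin n → ℝ) : ℝ :=
  (∑ i, f (x i)) - n * ∫ y, f y * ρ y

lemma Nf_continuous (ρ : ℝ → ℝ) {f : ℝ → ℝ} (hf : Continuous f) (n : ℕ) :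
    Continuous fun x : Fin n → ℝ => Nf ρ f x := by
  unfold Nf; fun_prop

lemma Nf_add {ρ : ℝ → ℝ} {M : ℝ} (h : Dens ρ M) {f g : ℝ → ℝ} (hf : Continuous f)
    (hg : Continuous g) {n : ℕ} (x : Fin n → ℝ) :
    Nf ρ (fun y => f y + g y) x = Nf ρ f x + Nf ρ g x := by
  unfold Nf
  simp only [add_mul, Finset.sum_add_distrib]
  rw [integral_add (h.integrable_mul_cont hf) (h.integrable_mul_cont hg)]; ring

lemma Nf_smul (ρ : ℝ → ℝ) (a : ℝ) (f : ℝ → ℝ) {n : ℕ} (x : Fin n → ℝ) :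
    Nf ρ (fun y => a * f y) x = a * Nf ρ f x := by
  unfold Nf
  simp only [mul_assoc, ← Finset.mul_sum]
  rw [integral_const_mul]; ring

lemma Nf_sub {ρ : ℝ → ℝ} {M : ℝ} (h : Dens ρ M) {f g : ℝ → ℝ} (hf : Continuous f)
    (hg : Continuous g) {n : ℕ} (x : Fin n → ℝ) :
    Nf ρ (fun y => f y - g y) x = Nf ρ f x - Nf ρ g x := by
  have := Nf_add h hf (hg.const_mul (-1) : Continuous fun y => -1 * g y) x
  rw [Nf_smul] at this
  simp only [neg_one_mul, ← sub_eq_add_neg] at this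
  exact this

lemma Nf_const {ρ : ℝ → ℝ} {M : ℝ} (h : Dens ρ M) (a : ℝ) {n : ℕ} (x : Fin n → ℝ) :
    Nf ρ (fun _ => a) x = 0 := by
  unfold Nf
  rw [integral_const_mul, h.int]; simp

lemma Nf_sum {ρ : ℝ → ℝ} {M : ℝ} (h : Dens ρ M) (s : Finset ℕ) {f : ℕ → ℝ → ℝ}
    (hf : ∀ k, Continuous (f k)) (b : ℕ → ℝ) {n : ℕ} (x : Fin n → ℝ) :
    Nf ρ (fun y => ∑ k ∈ s, b k * f k y) x = ∑ k ∈ s, b k * Nf ρ (f k) x := by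
  induction s using Finset.induction_on with
  | empty => simp [Nf]
  | insert a s ha ih =>
    simp only [Finset.sum_insert ha]
    rw [Nf_add h ((hf a).const_mul _) (by fun_prop), Nf_smul, ih]

/-- Crude bound of a linear statistic. -/
lemma abs_Nf_le {ρ : ℝ → ℝ} {M : ℝ} (h : Dens ρ M) {f : ℝ → ℝ} (hf : Continuous f) {b T : ℝ}
    (hb : 2 ≤ b) (hT : ∀ y, |y| ≤ b → |f y| ≤ T) {n : ℕ} {x : Fin n → ℝ} (hx : ∀ i, |x i| ≤ b) :
    |Nf ρ f x| ≤ 2 * n * T := by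
  have h1 : |∑ i, f (x i)| ≤ n * T := by
    refine (Finset.abs_sum_le_sum_abs _ _).trans ((Finset.sum_le_sum fun i _ => hT _ (hx i)).trans ?_)
    simp
  have h2 : |∫ y, f y * ρ y| ≤ T := by
    rw [← mul_one T, ← h.int, ← integral_const_mul]
    refine abs_integral_le_integral_abs.trans (integral_mono_ae (h.integrable_mul_cont hf).abs
      (h.integrable_mul_cont continuous_const) (Filter.Eventually.of_forall fun y => ?_))
    simp only [abs_mul, abs_of_nonneg (h.nonneg y)]
    by_cases hy : |y| ≤ 2
    · exact mul_le_mul_of_nonneg_right (hT y (hy.trans hb)) (h.nonneg y)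
    · rw [h.off y (lt_of_not_ge hy)]; simp
  unfold Nf
  have h3 : |(n:ℝ) * ∫ y, f y * ρ y| ≤ n * T := by
    rw [abs_mul, Nat.abs_cast]; exact mul_le_mul_of_nonneg_left h2 (Nat.cast_nonneg n)
  have h4 := abs_sub (∑ i, f (x i)) ((n:ℝ) * ∫ y, f y * ρ y)
  linarith

lemma natDegree_cC_le (k : ℕ) : (cC k).natDegree ≤ k := by
  induction k using Nat.twoStepInduction with
  | zero => simp [cC, Chebyshev.C_zero]
  | one => simp [cC, Chebyshev.C_one]
  | more k h0 h1 =>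
    have := Chebyshev.C_add_two ℝ (k:ℤ)
    push_cast at h1 ⊢
    simp only [cC] at h0 h1 ⊢
    rw [this]
    refine (natDegree_sub_le _ _).trans (max_le (natDegree_mul_le.trans ?_) (by omega))
    have := natDegree_X_le (R := ℝ)
    omega

/-- Fluctuations of Chebyshev statistics are controlled by the energy. -/
lemma abs_Nf_cC_le {ρ : ℝ → ℝ} {M : ℝ} (h : Dens ρ M) {p r : ℝ} (hp : 1 < p) (hr0 : 0 ≤ r)
    (hr1 : r < 1) (hrs : 1 ≤ r * √p) {n : ℕ} {x : Fin n → ℝ} (hx : ∀ i, |x i| ≤ p + p⁻¹) (k : ℕ) :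
    |Nf ρ (fun y => (cC k).eval y) x| ≤
      √(2 / (√p - 1)) * (2 * √p / (√p - 1)) * √(En r (p + p⁻¹) ρ x) * p ^ (2 * k) := by
  set s := √p with hs
  have hs1 : 1 < s := by rw [hs]; exact Real.lt_sqrt_of_sq_lt (by simpa using hp)
  have hsp : s * s = p := Real.mul_self_sqrt (by linarith)
  set a := p + p⁻¹ with ha
  have ha2 : 2 < a := two_lt_joukowsky hp
  set E := En r a ρ x
  have hE : 0 ≤ E := En_nonneg hr0 x
  -- rescale to the interval `[-2, 2]`
  set g : ℝ[X] := (cC k).comp (C (a / 2) * X) with hg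
  have hdeg : g.natDegree ≤ k := by
    rw [hg]
    refine natDegree_comp_le.trans ?_
    have h1 : (cC k).natDegree ≤ k := natDegree_cC_le k
    have h2 : (C (a / 2) * X : ℝ[X]).natDegree ≤ 1 := (natDegree_C_mul_le _ _).trans natDegree_X_le
    calc _ ≤ k * 1 := Nat.mul_le_mul h1 h2
      _ = k := mul_one k
  have hsup : ∀ u, |u| ≤ 2 → |g.eval u| ≤ 2 * p ^ k := by
    intro u hu
    rw [hg, eval_comp]
    refine abs_cC_le k hp.le ?_
    simp only [eval_mul, eval_C, eval_X]
    rw [abs_mul, abs_of_pos (by linarith : 0 < a / 2)]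
    nlinarith
  obtain ⟨K, b, hgb, hbs⟩ := NT.of_sup hs1.le hdeg hsup
  have hcc : ∀ y, (cC k).eval y = ∑ j ∈ Finset.range K, b j * tb a j y := by
    intro y
    have := congrArg (eval (2 * y / a)) hgb
    rw [hg, eval_comp] at this
    simp only [eval_mul, eval_C, eval_X, eval_finsetSum, eval_smul, smul_eq_mul] at this
    rw [show a / 2 * (2 * y / a) = y by field_simp] at this
    exact this
  have hN : Nf ρ (fun y => (cC k).eval y) x = ∑ j ∈ Finset.range K, b j * cN a ρ j x := by
    simp only [hcc]
    rw [Nf_sum h _ fun j => tb_continuous a j]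
    rfl
  have hs0 : 0 < s - 1 := by linarith
  have hber : ∀ j : ℕ, (j:ℝ) ≤ s ^ j / (s - 1) := by
    intro j
    rw [le_div_iff₀ hs0]
    have := one_add_mul_le_pow (a := s - 1) (by linarith) j
    simp only [add_sub_cancel] at this
    linarith
  have hcN : ∀ j, |cN a ρ j x| ≤ √(2 / (s - 1)) * √E * s ^ j := by
    intro j
    rcases Nat.eq_zero_or_pos j with rfl | hj
    · have : cN a ρ 0 x = 0 := by
        have := Nf_const h 2 x
        unfold Nf at this
        unfold cN dco tb
        simpa using this
      rw [this]; simp; positivity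
    have h1 := term_le_En h hr0 hr1 ha2.le hx j
    have hj' : (0:ℝ) < j := by exact_mod_cast hj
    have h2 : cN a ρ j x ^ 2 ≤ 2 / (s - 1) * E * (s ^ j) ^ 2 := by
      have h3 : 1 ≤ r ^ j * s ^ j := by rw [← mul_pow]; exact one_le_pow₀ hrs
      have h4 : cN a ρ j x ^ 2 ≤ (r ^ j * s ^ j) * cN a ρ j x ^ 2 :=
        le_mul_of_one_le_left (sq_nonneg _) h3
      have h5 : (r ^ j * s ^ j) * cN a ρ j x ^ 2 =
          2 * j * s ^ j * (r ^ j / (2 * j) * cN a ρ j x ^ 2) := by field_simp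
      have h6 : 2 * j * s ^ j * (r ^ j / (2 * j) * cN a ρ j x ^ 2) ≤ 2 * j * s ^ j * E :=
        mul_le_mul_of_nonneg_left h1 (by positivity)
      have h7 : 2 * j * s ^ j * E ≤ 2 * (s ^ j / (s - 1)) * s ^ j * E := by
        have := hber j
        gcongr
      calc _ ≤ _ := h4
        _ ≤ _ := h5.le.trans (h6.trans h7)
        _ = _ := by ring
    refine abs_le_of_sq_le_sq ?_ (by positivity)
    rw [mul_pow, mul_pow, Real.sq_sqrt (by positivity), Real.sq_sqrt hE]
    exact h2
  rw [hN]
  calc |∑ j ∈ Finset.range K, b j * cN a ρ j x|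
      ≤ ∑ j ∈ Finset.range K, |b j| * s ^ j * (√(2 / (s - 1)) * √E) := by
        refine (Finset.abs_sum_le_sum_abs _ _).trans (Finset.sum_le_sum fun j _ => ?_)
        rw [abs_mul]
        calc _ ≤ |b j| * (√(2 / (s - 1)) * √E * s ^ j) :=
              mul_le_mul_of_nonneg_left (hcN j) (abs_nonneg _)
          _ = _ := by ring
    _ ≤ ((k + 1) * (2 * p ^ k * s ^ k)) * (√(2 / (s - 1)) * √E) := by
        rw [← Finset.sum_mul]; exact mul_le_mul_of_nonneg_right hbs (by positivity)
    _ ≤ ((s ^ (k + 1) / (s - 1)) * (2 * p ^ k * s ^ k)) * (√(2 / (s - 1)) * √E) := by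
        have := hber (k + 1)
        push_cast at this
        gcongr
    _ = _ := by
        have : p ^ (2 * k) = p ^ k * (s ^ k * s ^ k) := by
          rw [← mul_pow, hsp, two_mul, pow_add]
        rw [this, pow_succ]; ring

/-- Up to configurations of negligible weight, the statistic of `C_k` is `o(n) p^{2k}`. -/
lemma good_event (p L κ M : ℝ) (hp : 1 < p) (hM : 1 ≤ M) {δ : ℝ} (hδ : 0 < δ) :
    ∀ᶠ n : ℕ in Filter.atTop, ∀ (V P : ℝ[X]) (c M₀ : ℝ) (β : ℕ), Adm V P c p L κ M₀ M → 1 ≤ β →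
      ∀ x : Fin n → ℝ, (∀ i, |x i| ≤ p + p⁻¹) →
        (∀ k : ℕ, |Nf (rho P) (fun y => (cC k).eval y) x| ≤ δ * n * p ^ (2 * k)) ∨
        Wt β (pw n β V) x ≤ exp (-(n * log n)) * ZB n β V (p + p⁻¹) := by
  have hs1 : 1 < √p := Real.lt_sqrt_of_sq_lt (by simpa using hp)
  have ha2 := two_lt_joukowsky hp
  set G := √(2 / (√p - 1)) * (2 * √p / (√p - 1)) with hG
  have hG0 : 0 ≤ G := by
    have : 0 < √p - 1 := by linarith
    positivity
  have hr : ∀ᶠ n : ℕ in Filter.atTop, 1 ≤ rn n * √p := by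
    have h1 : Filter.Tendsto (fun n : ℕ => rn n * √p) Filter.atTop (nhds ((1 - 0) * √p)) := by
      unfold rn
      refine Filter.Tendsto.mul_const _ (Filter.Tendsto.const_sub _ ?_)
      have := (tendsto_one_div_add_atTop_nhds_zero_nat (𝕜 := ℝ))
      have h2 : Filter.Tendsto (fun n : ℕ => 1 / (n:ℝ)) Filter.atTop (nhds 0) :=
        tendsto_one_div_atTop_nhds_zero_nat
      have h3 := h2.mul h2
      simp only [mul_zero] at h3
      refine h3.congr fun n => ?_
      rw [one_div_mul_one_div, sq]
    rw [sub_zero, one_mul] at h1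
    filter_upwards [h1.eventually_const_lt hs1] with n hn using hn.le
  filter_upwards [hr, ev_log 1, ev_sqrt_log (G * √(CK (p + p⁻¹) M)) hδ, Filter.eventually_ge_atTop 3]
    with n hr hlog hsq hn V P c M₀ β h hβ x hx
  rcases le_total (CK (p + p⁻¹) M * (n * log n)) (En (rn n) (p + p⁻¹) (rho P) x) with hE | hE
  · right
    have h1 := h.Wt_le_of_En hn hβ ha2.le hx hE
    refine h1.trans (mul_le_mul_of_nonneg_left (ZB_mono n β V ha2.le) (exp_pos _).le)
  · left
    intro k
    refine (abs_Nf_cC_le h.dens hp (rn_pos (by omega)).le (rn_lt (by omega)) hr hx k).trans ?_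
    refine mul_le_mul_of_nonneg_right ?_ (by positivity)
    have hCK := CK_pos (b := p + p⁻¹) hM
    have h1 : √(En (rn n) (p + p⁻¹) (rho P) x) ≤ √(CK (p + p⁻¹) M) * (√n * log n) := by
      refine (Real.sqrt_le_sqrt hE).trans ?_
      rw [Real.sqrt_mul hCK.le, Real.sqrt_mul (Nat.cast_nonneg n)]
      have : √(log n) ≤ log n := by
        rw [Real.sqrt_le_left (by linarith)]
        nlinarith
      gcongr
    calc _ ≤ G * (√(CK (p + p⁻¹) M) * (√n * log n)) := mul_le_mul_of_nonneg_left h1 hG0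
      _ = G * √(CK (p + p⁻¹) M) * (√n * log n) := by ring
      _ ≤ _ := hsq
end Stoj

namespace Stoj
open Polynomial Real

/-! ### Expectations and the quadratic part of the loop equation -/

/-- Expectation in the ensemble conditioned to the box `[-b, b]^n`. -/
noncomputable def Ex (n β : ℕ) (V : ℝ[X]) (b : ℝ) (f : (Fin n → ℝ) → ℝ) : ℝ :=
  (∫ x, f x * Wt β (pw n β V) x ∂(pim (bx b) n)) / ZB n β V b

section
variable {n β : ℕ} {V : ℝ[X]} {b : ℝ}

lemma integrable_Ex {f : (Fin n → ℝ) → ℝ} (hf : Continuous f) :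
    Integrable (fun x => f x * Wt β (pw n β V) x) (pim (bx b) n) :=
  integrable_box (hf.mul (Wt_continuous β (pw_continuous n β V) n)) b

lemma Ex_add {f g : (Fin n → ℝ) → ℝ} (hf : Continuous f) (hg : Continuous g) :
    Ex n β V b (fun x => f x + g x) = Ex n β V b f + Ex n β V b g := by
  unfold Ex
  simp only [add_mul]
  rw [integral_add (integrable_Ex hf) (integrable_Ex hg), add_div]

lemma Ex_smul (a : ℝ) (f : (Fin n → ℝ) → ℝ) :
    Ex n β V b (fun x => a * f x) = a * Ex n β V b f := by
  unfold Ex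
  simp only [mul_assoc]
  rw [integral_const_mul, mul_div_assoc]

lemma Ex_sub {f g : (Fin n → ℝ) → ℝ} (hf : Continuous f) (hg : Continuous g) :
    Ex n β V b (fun x => f x - g x) = Ex n β V b f - Ex n β V b g := by
  unfold Ex
  simp only [sub_mul]
  rw [integral_sub (integrable_Ex hf) (integrable_Ex hg), sub_div]

lemma Ex_sum (s : Finset ℕ) {f : ℕ → (Fin n → ℝ) → ℝ} (hf : ∀ k, Continuous (f k)) :
    Ex n β V b (fun x => ∑ k ∈ s, f k x) = ∑ k ∈ s, Ex n β V b (f k) := by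
  unfold Ex
  simp only [Finset.sum_mul]
  rw [integral_finsetSum _ fun k _ => integrable_Ex (hf k), Finset.sum_div]

lemma Ex_const (hZ : 0 < ZB n β V b) (a : ℝ) : Ex n β V b (fun _ => a) = a := by
  unfold Ex
  rw [integral_const_mul]
  exact mul_div_cancel_right₀ a hZ.ne'

lemma Ex_mono (hZ : 0 < ZB n β V b) {f g : (Fin n → ℝ) → ℝ} (hf : Continuous f) (hg : Continuous g)
    (h : ∀ x : Fin n → ℝ, (∀ i, |x i| ≤ b) → f x ≤ g x) : Ex n β V b f ≤ Ex n β V b g := by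
  unfold Ex
  refine div_le_div_of_nonneg_right (integral_mono_ae (integrable_Ex hf) (integrable_Ex hg) ?_) hZ.le
  filter_upwards [ae_box b n] with x hx
  exact mul_le_mul_of_nonneg_right (h x hx) (Wt_nonneg _ _ _)

lemma abs_Ex_le (hZ : 0 < ZB n β V b) {f g : (Fin n → ℝ) → ℝ} (hf : Continuous f)
    (hg : Continuous g) (h : ∀ x : Fin n → ℝ, (∀ i, |x i| ≤ b) → |f x| ≤ g x) :
    |Ex n β V b f| ≤ Ex n β V b g := by
  refine abs_le.mpr ⟨?_, Ex_mono hZ hf hg fun x hx => (le_abs_self _).trans (h x hx)⟩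
  rw [← neg_one_mul, ← Ex_smul]
  refine Ex_mono hZ (hg.const_mul (-1) : Continuous fun x => -1 * g x) hf fun x hx => ?_
  have := neg_abs_le (f x)
  linarith [h x hx]

lemma abs_Ex_le_const (hZ : 0 < ZB n β V b) {f : (Fin n → ℝ) → ℝ} (hf : Continuous f) {T : ℝ}
    (h : ∀ x : Fin n → ℝ, (∀ i, |x i| ≤ b) → |f x| ≤ T) : |Ex n β V b f| ≤ T := by
  rw [← Ex_const hZ T]
  exact abs_Ex_le hZ hf continuous_const h

/-- A scale-invariant form of the inequality between arithmetic and geometric means. -/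
lemma Ex_abs_mul_le (hZ : 0 < ZB n β V b) {f g : (Fin n → ℝ) → ℝ} (hf : Continuous f)
    (hg : Continuous g) {K u v : ℝ} (hu : 0 < u) (hv : 0 < v)
    (h1 : Ex n β V b (fun x => f x ^ 2) ≤ K * u ^ 2) (h2 : Ex n β V b (fun x => g x ^ 2) ≤ K * v ^ 2) :
    Ex n β V b (fun x => |f x * g x|) ≤ K * (u * v) := by
  have h3 : Ex n β V b (fun x => |f x * g x|) ≤
      Ex n β V b (fun x => (v / (2 * u)) * f x ^ 2 + (u / (2 * v)) * g x ^ 2) := by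
    refine Ex_mono hZ (by fun_prop) (by fun_prop) fun x _ => ?_
    rw [abs_mul, ← sq_abs (f x), ← sq_abs (g x)]
    have e : (v / (2 * u)) * |f x| ^ 2 + (u / (2 * v)) * |g x| ^ 2 - |f x| * |g x| =
        (v * |f x| - u * |g x|) ^ 2 / (2 * u * v) := by field_simp; ring
    have : 0 ≤ (v * |f x| - u * |g x|) ^ 2 / (2 * u * v) := by positivity
    linarith
  rw [Ex_add (by fun_prop) (by fun_prop), Ex_smul, Ex_smul] at h3
  have h4 : (v / (2 * u)) * Ex n β V b (fun x => f x ^ 2) ≤ (v / (2 * u)) * (K * u ^ 2) :=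
    mul_le_mul_of_nonneg_left h1 (by positivity)
  have h5 : (u / (2 * v)) * Ex n β V b (fun x => g x ^ 2) ≤ (u / (2 * v)) * (K * v ^ 2) :=
    mul_le_mul_of_nonneg_left h2 (by positivity)
  have e : (v / (2 * u)) * (K * u ^ 2) + (u / (2 * v)) * (K * v ^ 2) = K * (u * v) := by
    field_simp; ring
  linarith
end

/-- The quadratic statistic of the difference quotient of `h` against `∑ δ_{x_i} - n ρ_P`
in both variables; see `NN_cS`. -/
noncomputable def NN (P h : ℝ[X]) {n : ℕ} (x : Fin n → ℝ) : ℝ :=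
  (∑ i, ∑ j, dq h (x i) (x j)) - n * (∑ i, B P (x i) * h.eval (x i)) + n * Nf (rho P) (B (h * P)) x

lemma NN_continuous (P h : ℝ[X]) (n : ℕ) : Continuous fun x : Fin n → ℝ => NN P h x := by
  unfold NN
  have h1 := B_continuous P
  have h2 := Nf_continuous (rho P) (B_continuous (h * P)) n
  have h3 := dq_continuous h
  have h4 : ∀ i j, Continuous fun x : Fin n → ℝ => dq h (x i) (x j) := fun i j =>
    h3.comp (by fun_prop : Continuous fun x : Fin n → ℝ => (x i, x j))
  fun_prop

lemma NN_add {P : ℝ[X]} {M : ℝ} (hP : Dens (rho P) M) (f g : ℝ[X]) {n : ℕ} (x : Fin n → ℝ) :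
    NN P (f + g) x = NN P f x + NN P g x := by
  unfold NN
  have e : B ((f + g) * P) = fun y => B (f * P) y + B (g * P) y := by
    ext y; rw [add_mul, B_add]
  rw [e, Nf_add hP (B_continuous _) (B_continuous _)]
  simp only [dq_add, eval_add, mul_add, Finset.sum_add_distrib]
  ring

lemma NN_smul (P : ℝ[X]) (a : ℝ) (f : ℝ[X]) {n : ℕ} (x : Fin n → ℝ) :
    NN P (a • f) x = a * NN P f x := by
  unfold NN
  have e : B ((a • f) * P) = fun y => a * B (f * P) y := by
    ext y; rw [smul_mul_assoc, B_smul]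
  rw [e, Nf_smul]
  have e2 : ∑ i, B P (x i) * (a • f).eval (x i) = a * ∑ i, B P (x i) * f.eval (x i) := by
    rw [Finset.mul_sum]
    exact Finset.sum_congr rfl fun i _ => by rw [eval_smul, smul_eq_mul]; ring
  simp only [dq_smul, ← Finset.mul_sum]
  rw [e2]
  ring

lemma NN_cS {P : ℝ[X]} {M : ℝ} (hP : Dens (rho P) M) (l : ℕ) {n : ℕ} (x : Fin n → ℝ) :
    NN P (cS l) x = ∑ j ∈ Finset.range l,
      Nf (rho P) (fun y => (cS j).eval y) x * Nf (rho P) (fun y => (cS (l - 1 - j : ℕ)).eval y) x := by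
  set I : ℕ → ℝ := fun j => ∫ y, (cS j).eval y * rho P y with hI
  set S : ℕ → ℝ := fun j => ∑ i, (cS j).eval (x i) with hS
  have hdq : ∀ y z, dq (cS l) y z = ∑ j ∈ Finset.range l, (cS j).eval y * (cS (l - 1 - j : ℕ)).eval z := by
    intro y z
    rw [dq_cS]
    refine Finset.sum_congr rfl fun j hj => ?_
    have hj := Finset.mem_range.mp hj
    rw [show ((l - 1 - j : ℕ) : ℤ) = (l:ℤ) - 1 - j by omega]
  have hinner : ∀ y, ∫ z, dq (cS l) y z * rho P z =
      ∑ j ∈ Finset.range l, (cS j).eval y * I (l - 1 - j) := by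
    intro y
    simp only [hdq, Finset.sum_mul, mul_assoc]
    rw [integral_finsetSum _ fun j _ => (hP.integrable_mul_cont (by fun_prop)).const_mul _]
    simp only [integral_const_mul, hI]
  have hdouble : ∫ y, (∫ z, dq (cS l) y z * rho P z) * rho P y =
      ∑ j ∈ Finset.range l, I j * I (l - 1 - j) := by
    simp only [hinner, Finset.sum_mul]
    have e : ∀ (y : ℝ) (j : ℕ), (cS j).eval y * I (l - 1 - j) * rho P y =
        I (l - 1 - j) * ((cS j).eval y * rho P y) := fun y j => by ring
    simp only [e]
    rw [integral_finsetSum _ fun j _ => (hP.integrable_mul_cont (by fun_prop)).const_mul _]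
    simp only [integral_const_mul, hI]
    exact Finset.sum_congr rfl fun j _ => by ring
  have hlin : ∀ y, B P y * (cS l).eval y = 2 * (∫ z, dq (cS l) y z * rho P z) + B (cS l * P) y :=
    fun y => by have := linear_term (cS l) P y; linarith
  have hB := B_continuous
  have hconst : ∫ y, B (cS l * P) y * rho P y = -∑ j ∈ Finset.range l, I j * I (l - 1 - j) := by
    have h1 := const_term (cS l) P
    rw [hdouble] at h1
    simp only [hlin, add_mul] at h1
    have h0 : Continuous fun y => ∫ z, dq (cS l) y z * rho P z := by
      simp only [hinner]; fun_prop
    rw [integral_add (hP.integrable_mul_cont (h0.const_mul 2)) (hP.integrable_mul_cont (hB _))] at h1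
    simp only [mul_assoc] at h1
    rw [integral_const_mul, hdouble] at h1
    linarith
  have e1 : ∑ i, ∑ i', dq (cS l) (x i) (x i') = ∑ j ∈ Finset.range l, S j * S (l - 1 - j) := by
    simp only [hdq, hS, Finset.sum_mul_sum]
    rw [Finset.sum_comm' (t' := Finset.univ) (s' := fun _ => Finset.univ) (by simp)]
    rw [Finset.sum_comm]
    simp only [Finset.sum_comm (s := Finset.univ) (t := Finset.range l)]
  have e2 : ∑ i, B P (x i) * (cS l).eval (x i) =
      2 * (∑ j ∈ Finset.range l, S j * I (l - 1 - j)) + ∑ i, B (cS l * P) (x i) := by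
    simp only [hlin, hinner, Finset.sum_add_distrib, hS, Finset.sum_mul]
    rw [← Finset.mul_sum, Finset.sum_comm]
  have e3 : ∑ j ∈ Finset.range l, I j * S (l - 1 - j) = ∑ j ∈ Finset.range l, S j * I (l - 1 - j) := by
    rw [← Finset.sum_range_reflect]
    refine Finset.sum_congr rfl fun j hj => ?_
    have hj := Finset.mem_range.mp hj
    rw [show l - 1 - (l - 1 - j) = j by omega]; ring
  have e4 : ∀ j, Nf (rho P) (fun y => (cS (j:ℕ)).eval y) x = S j - n * I j := fun j => rfl
  have e5 : ∑ j ∈ Finset.range l, Nf (rho P) (fun y => (cS j).eval y) x *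
      Nf (rho P) (fun y => (cS (l - 1 - j : ℕ)).eval y) x =
      (∑ j ∈ Finset.range l, S j * S (l - 1 - j)) - n * (∑ j ∈ Finset.range l, S j * I (l - 1 - j)) -
      n * (∑ j ∈ Finset.range l, I j * S (l - 1 - j)) + n ^ 2 * ∑ j ∈ Finset.range l, I j * I (l - 1 - j) := by
    simp only [Finset.mul_sum, ← Finset.sum_sub_distrib, ← Finset.sum_add_distrib, e4]
    exact Finset.sum_congr rfl fun j _ => by ring
  rw [e5, e3]
  unfold NN
  rw [e1, e2]
  unfold Nf
  rw [hconst]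
  ring

/-- A linear functional growing at most like `R^{l+1}` on the basis `S_l` is bounded by `R^k` on
`S_{k-1} q`. -/
lemma linear_bound {F : ℝ[X] → ℝ} (hF : IsLinearMap ℝ F) {R R' K T : ℝ} (hR : 1 ≤ R) (hRR : R ≤ R')
    (hK : 0 ≤ K) (h : ∀ l : ℕ, |F (cS l)| ≤ K * R ^ (l + 1)) {q : ℝ[X]} (hq : NT R' q T) (k : ℕ) :
    |F (cS ((k:ℤ) - 1) * q)| ≤ 2 * K * T * R ^ k := by
  have hR0 : 0 < R := by linarith
  -- the reflection `S_{-l-2} = -S_l` covers the negative indices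
  have hintg : ∀ (l : ℤ) (N : ℕ), l + 1 ≤ N → -(l + 1) ≤ N → |F (cS l)| ≤ K * R ^ N := by
    intro l N h1 h2
    rcases lt_trichotomy l (-1) with hl | hl | hl
    · obtain ⟨j, rfl⟩ : ∃ j : ℕ, l = -(j:ℤ) - 2 := ⟨(-l - 2).toNat, by omega⟩
      have e : cS (-(j:ℤ) - 2) = (-1 : ℝ) • cS j := by
        have := Chebyshev.S_neg_sub_two ℝ (j:ℤ)
        simp only [cS]
        rw [this]; simp
      rw [e, hF.map_smul, smul_eq_mul, neg_one_mul, abs_neg]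
      exact (h j).trans (mul_le_mul_of_nonneg_left (pow_le_pow_right₀ hR (by omega)) hK)
    · subst hl
      have e : cS (-1) = (0:ℝ) • (0 : ℝ[X]) := by simp [cS]
      rw [e, hF.map_smul]; simp; positivity
    · obtain ⟨j, rfl⟩ : ∃ j : ℕ, l = j := ⟨l.toNat, by omega⟩
      exact (h j).trans (mul_le_mul_of_nonneg_left (pow_le_pow_right₀ hR (by omega)) hK)
  obtain ⟨N, b, rfl, hb⟩ := hq
  have e : F (cS ((k:ℤ) - 1) * ∑ j ∈ Finset.range N, b j • cC j) =
      ∑ j ∈ Finset.range N, b j * (F (cS ((k:ℤ) - 1 + j)) + F (cS ((k:ℤ) - 1 - j))) := by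
    rw [Finset.mul_sum]
    have := map_sum (hF.mk' F) (fun j : ℕ => cS ((k:ℤ) - 1) * (b j • cC (j:ℤ))) (Finset.range N)
    simp only [IsLinearMap.mk'_apply] at this
    rw [this]
    refine Finset.sum_congr rfl fun j _ => ?_
    rw [mul_smul_comm, hF.map_smul, cS_mul_cC_nat, hF.map_add, smul_eq_mul]
  rw [e]
  calc _ ≤ ∑ j ∈ Finset.range N, |b j| * R' ^ j * (2 * K * R ^ k) := by
        refine (Finset.abs_sum_le_sum_abs _ _).trans (Finset.sum_le_sum fun j _ => ?_)
        rw [abs_mul]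
        have h1 := hintg ((k:ℤ) - 1 + j) (k + j) (by push_cast; omega) (by push_cast; omega)
        have h2 := hintg ((k:ℤ) - 1 - j) (k + j) (by push_cast; omega) (by push_cast; omega)
        have h3 : R ^ j ≤ R' ^ j := pow_le_pow_left₀ hR0.le hRR j
        calc _ ≤ |b j| * (K * R ^ (k + j) + K * R ^ (k + j)) :=
              mul_le_mul_of_nonneg_left ((abs_add_le _ _).trans (add_le_add h1 h2)) (abs_nonneg _)
          _ = |b j| * R ^ j * (2 * K * R ^ k) := by rw [pow_add]; ring
          _ ≤ _ := by gcongr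
    _ ≤ T * (2 * K * R ^ k) := by
        rw [← Finset.sum_mul]; exact mul_le_mul_of_nonneg_right hb (by positivity)
    _ = _ := by ring
end Stoj

namespace Stoj
open Polynomial Real

/-! ### Consequences of the loop equation -/

variable {V P : ℝ[X]} {c p L κ M₀ M : ℝ}

/-- `η` bounds the density of a particle at the end points of the box. -/
def BdSmall (β m : ℕ) (V : ℝ[X]) (b η : ℝ) : Prop :=
  ∀ (i : Fin (m + 1)) (s : ℝ), |s| = b →
    ∫ y, Wt β (pw (m + 1) β V) (i.insertNth s y : Fin (m + 1) → ℝ) ∂(pim (bx b) m) ≤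
      η * ZB (m + 1) β V b

lemma abs_boundary_le {β m : ℕ} {b η : ℝ} (hb : 0 ≤ b) (hη : BdSmall β m V b η)
    {F : Fin (m + 1) → ℝ → (Fin m → ℝ) → ℝ} (hF : ∀ i s, Continuous (F i s)) {T : ℝ} (hT : 0 ≤ T)
    (h : ∀ i s y, |s| = b → (∀ k, |y k| ≤ b) → |F i s y| ≤ T) :
    |∑ i : Fin (m + 1), ∫ y, (F i b y * Wt β (pw (m + 1) β V) (i.insertNth b y : Fin (m + 1) → ℝ) -
        F i (-b) y * Wt β (pw (m + 1) β V) (i.insertNth (-b) y : Fin (m + 1) → ℝ))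
        ∂(pim (bx b) m)| ≤ 2 * (m + 1) * T * η * ZB (m + 1) β V b := by
  have hpw := pw_continuous (m + 1) β V
  have hWc : ∀ (i : Fin (m + 1)) (s : ℝ), Continuous fun y : Fin m → ℝ =>
      Wt β (pw (m + 1) β V) (i.insertNth s y : Fin (m + 1) → ℝ) := by
    intro i s
    refine (Wt_continuous β hpw (m + 1)).comp ?_
    exact continuous_const.finInsertNth i continuous_id
  have hbd : ∀ (i : Fin (m + 1)) (s : ℝ), |s| = b →
      |∫ y, F i s y * Wt β (pw (m + 1) β V) (i.insertNth s y : Fin (m + 1) → ℝ) ∂(pim (bx b) m)| ≤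
        T * η * ZB (m + 1) β V b := by
    intro i s hs
    refine abs_integral_le_integral_abs.trans ?_
    calc _ ≤ ∫ y, T * Wt β (pw (m + 1) β V) (i.insertNth s y : Fin (m + 1) → ℝ) ∂(pim (bx b) m) := by
          refine integral_mono_ae (integrable_box (((hF i s).mul (hWc i s)).abs) b)
            (integrable_box ((hWc i s).const_mul T) b) ?_
          filter_upwards [ae_box b m] with y hy
          rw [abs_mul, abs_of_nonneg (Wt_nonneg _ _ _)]
          exact mul_le_mul_of_nonneg_right (h i s y hs hy) (Wt_nonneg _ _ _)
      _ ≤ _ := by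
          rw [integral_const_mul, mul_assoc]
          exact mul_le_mul_of_nonneg_left (hη i s hs) hT
  have hone : ∀ i : Fin (m + 1), |∫ y, (F i b y * Wt β (pw (m + 1) β V) (i.insertNth b y : Fin (m + 1) → ℝ) -
        F i (-b) y * Wt β (pw (m + 1) β V) (i.insertNth (-b) y : Fin (m + 1) → ℝ))
        ∂(pim (bx b) m)| ≤ 2 * T * η * ZB (m + 1) β V b := by
    intro i
    have hc : ∀ s, Integrable (fun y => F i s y *
        Wt β (pw (m + 1) β V) (i.insertNth s y : Fin (m + 1) → ℝ)) (pim (bx b) m) := fun s =>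
      integrable_box ((hF i s).mul (hWc i s)) b
    rw [integral_sub (hc b) (hc (-b))]
    have h1 := hbd i b (abs_of_nonneg hb)
    have h2 := hbd i (-b) (by rw [abs_neg, abs_of_nonneg hb])
    have h3 := abs_sub
      (∫ y, F i b y * Wt β (pw (m + 1) β V) (i.insertNth b y : Fin (m + 1) → ℝ) ∂(pim (bx b) m))
      (∫ y, F i (-b) y * Wt β (pw (m + 1) β V) (i.insertNth (-b) y : Fin (m + 1) → ℝ) ∂(pim (bx b) m))
    linarith
  refine (Finset.abs_sum_le_sum_abs _ _).trans ((Finset.sum_le_sum fun i _ => hone i).trans ?_)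
  simp only [Finset.sum_const, Finset.card_univ, Fintype.card_fin, nsmul_eq_mul]
  push_cast
  exact le_of_eq (by ring)

/-- The loop equation for the conditioned ensemble, up to an exponentially small error. -/
lemma loop_ineq (h : Adm V P c p L κ M₀ M) {β m : ℕ} (hβ : 1 ≤ β) {η : ℝ}
    (hη : BdSmall β m V (p + p⁻¹) η) (f g : ℝ[X]) (c0 : ℝ) {H X₀ : ℝ}
    (hH : ∀ s, |s| ≤ p + p⁻¹ → |f.eval s| ≤ H)
    (hX : ∀ x : Fin (m + 1) → ℝ, (∀ i, |x i| ≤ p + p⁻¹) → |(∑ k, g.eval (x k)) + c0| ≤ X₀) :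
    |Ex (m + 1) β V (p + p⁻¹) (fun x => ∑ i, (derivative g * f).eval (x i)) +
      Ex (m + 1) β V (p + p⁻¹) (fun x => ((∑ k, g.eval (x k)) + c0) *
        (β / 2 * (NN P f x - (m + 1 : ℕ) * Nf (rho P) (B (f * P)) x) +
          (1 - β / 2) * ∑ i, (derivative f).eval (x i)))| ≤ 2 * (m + 1) * (H * X₀) * η := by
  set a := p + p⁻¹ with ha
  have ha2 : 2 < a := h.two_lt
  have hZ := h.ZB_pos (m + 1) β ha2.le
  have hpw := pw_continuous (m + 1) β V
  have hd : ∀ s, HasDerivAt (pw (m + 1) β V)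
      (-(((m + 1 : ℕ):ℝ) * β / 2 * (derivative V).eval s)) s := fun s => by
    unfold pw
    exact ((V.hasDerivAt s).const_mul _).neg
  have hloop := loop_eq hβ hd (by fun_prop) f g c0 m (b := a) (by linarith)
  have hH0 : 0 ≤ H := (abs_nonneg _).trans (hH 0 (by rw [abs_zero]; linarith))
  have hX0 : 0 ≤ X₀ := (abs_nonneg _).trans (hX (fun _ => 0) (by intro i; rw [abs_zero]; linarith))
  have hbd := abs_boundary_le (by linarith) hη (F := fun (_ : Fin (m + 1)) s y =>
      f.eval s * (g.eval s + (∑ k, g.eval (y k)) + c0)) (fun i s => by fun_prop) (mul_nonneg hH0 hX0)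
    (fun i s y hs hy => by
      rw [abs_mul]
      refine mul_le_mul (hH s hs.le) ?_ (abs_nonneg _) hH0
      have := hX (i.insertNth s y) (fun j => by
        refine i.succAboveCases ?_ (fun k => ?_) j
        · simp [hs.le]
        · simp [hy k])
      simpa [Fin.sum_univ_succAbove _ i] using this)
  rw [← hloop] at hbd
  rw [← Ex_add]
  rotate_left
  · fun_prop
  · have h1 := NN_continuous P f (m + 1)
    have h2 := Nf_continuous (rho P) (B_continuous (f * P)) (m + 1)
    fun_prop
  unfold Ex
  rw [abs_div, abs_of_pos hZ, div_le_iff₀ hZ]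
  refine le_trans (le_of_eq ?_) hbd
  congr 2
  ext x
  congr 2
  unfold NN
  simp only [← h.force]
  have e : ∑ i, f.eval (x i) * -(((m + 1 : ℕ):ℝ) * β / 2 * (derivative V).eval (x i)) =
      -(((m + 1 : ℕ):ℝ) * β / 2) * ∑ i, (derivative V).eval (x i) * f.eval (x i) := by
    rw [Finset.mul_sum]; exact Finset.sum_congr rfl fun i _ => by ring
  rw [e]
  ring

/-! ### Bounds on the test functions -/

lemma exists_poly_le_pow (hp : 1 < p) : ∃ D : ℝ, 1 ≤ D ∧ ∀ l : ℕ, ((l:ℝ) + 1) ^ 3 ≤ D * p ^ l := by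
  have h1 : Filter.Tendsto (fun l : ℕ => ((l:ℝ)) ^ 3 / p ^ l) Filter.atTop (nhds 0) :=
    tendsto_pow_const_div_const_pow_of_one_lt 3 hp
  obtain ⟨D, hD⟩ := (Metric.isBounded_range_of_tendsto _ h1).exists_norm_le
  have h2 : ∀ l : ℕ, (l:ℝ) ^ 3 ≤ D * p ^ l := by
    intro l
    have := (le_abs_self _).trans (hD _ ⟨l, rfl⟩)
    rwa [div_le_iff₀ (by positivity)] at this
  have hD1 : 1 ≤ D * p := by simpa using h2 1
  refine ⟨D * p, hD1, fun l => ?_⟩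
  have := h2 (l + 1)
  push_cast at this
  calc _ ≤ _ := this
    _ = _ := by rw [pow_succ]; ring

section
variable {D : ℝ}

lemma eval_test_le (hp : 1 < p) (hD : ∀ l : ℕ, ((l:ℝ) + 1) ^ 3 ≤ D * p ^ l)
    {q : ℝ[X]} {T : ℝ} (hq : NT (p ^ 6) q T) (k : ℕ) {x : ℝ} (hx : |x| ≤ p + p⁻¹) :
    |(cS ((k:ℤ) - 1) * q).eval x| ≤ 4 * D * T * p ^ (2 * k) := by
  have hD0 : 1 ≤ D := by simpa using hD 0
  have := linear_bound (F := fun f => f.eval x) ⟨fun f g => by simp, fun a f => by simp⟩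
    (R := p ^ 2) (K := 2 * D) (one_le_pow₀ hp.le) (pow_le_pow_right₀ hp.le (by norm_num : 2 ≤ 6))
    (by positivity) (fun l => ?_) hq k
  · rw [pow_mul]; linarith
  · refine (abs_cS_le l hp.le hx).trans ?_
    have h1 : (l:ℝ) + 1 ≤ D * p ^ l := (le_self_pow₀ (by linarith [(Nat.cast_nonneg l : (0:ℝ) ≤ l)])
      (by norm_num : 3 ≠ 0)).trans (hD l)
    have h2 : p ^ l * p ^ l ≤ (p ^ 2) ^ (l + 1) := by
      rw [← pow_add, ← pow_mul]; exact pow_le_pow_right₀ hp.le (by omega)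
    calc _ ≤ 2 * (D * p ^ l) * p ^ l := by gcongr
      _ = 2 * D * (p ^ l * p ^ l) := by ring
      _ ≤ _ := by gcongr

lemma eval_derivative_cS_le (hp : 1 < p) (hD : ∀ l : ℕ, ((l:ℝ) + 1) ^ 3 ≤ D * p ^ l)
    (l : ℕ) {x : ℝ} (hx : |x| ≤ p + p⁻¹) :
    |(derivative (cS l)).eval x| ≤ 4 * D * (p ^ 2) ^ l := by
  have hD0 : 1 ≤ D := by simpa using hD 0
  rw [← dq_self, dq_cS]
  have hterm : ∀ j ∈ Finset.range l, |(cS j).eval x * (cS ((l:ℤ) - 1 - j)).eval x| ≤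
      4 * ((l:ℝ) + 1) ^ 2 * p ^ l := by
    intro j hj
    have hj := Finset.mem_range.mp hj
    rw [show (l:ℤ) - 1 - j = ((l - 1 - j : ℕ) : ℤ) by omega, abs_mul]
    have h1 := abs_cS_le j hp.le hx
    have h2 := abs_cS_le (l - 1 - j) hp.le hx
    have h3 : ((l - 1 - j : ℕ):ℝ) + 1 ≤ l + 1 := by
      have : l - 1 - j ≤ l := by omega
      have : ((l - 1 - j : ℕ):ℝ) ≤ l := by exact_mod_cast this
      linarith
    have h4 : (j:ℝ) + 1 ≤ l + 1 := by
      have : (j:ℝ) ≤ l := by exact_mod_cast hj.le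
      linarith
    have h5 : p ^ j * p ^ (l - 1 - j) ≤ p ^ l := by
      rw [← pow_add]; exact pow_le_pow_right₀ hp.le (by omega)
    calc _ ≤ (2 * ((j:ℝ) + 1) * p ^ j) * (2 * (((l - 1 - j : ℕ):ℝ) + 1) * p ^ (l - 1 - j)) :=
          mul_le_mul h1 h2 (abs_nonneg _) (by positivity)
      _ = 4 * (((j:ℝ) + 1) * (((l - 1 - j : ℕ):ℝ) + 1)) * (p ^ j * p ^ (l - 1 - j)) := by ring
      _ ≤ 4 * (((l:ℝ) + 1) * ((l:ℝ) + 1)) * p ^ l := by gcongr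
      _ = _ := by ring
  refine (Finset.abs_sum_le_sum_abs _ _).trans ((Finset.sum_le_sum hterm).trans ?_)
  simp only [Finset.sum_const, Finset.card_range, nsmul_eq_mul]
  have h0 : (0:ℝ) ≤ l := Nat.cast_nonneg l
  calc _ ≤ ((l:ℝ) + 1) * (4 * ((l:ℝ) + 1) ^ 2 * p ^ l) := by gcongr; linarith
    _ = 4 * ((l:ℝ) + 1) ^ 3 * p ^ l := by ring
    _ ≤ 4 * (D * p ^ l) * p ^ l := by have := hD l; gcongr
    _ = _ := by rw [← pow_mul, two_mul, pow_add]; ring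

lemma eval_derivative_test_le (hp : 1 < p) (hD : ∀ l : ℕ, ((l:ℝ) + 1) ^ 3 ≤ D * p ^ l)
    {q : ℝ[X]} {T : ℝ} (hq : NT (p ^ 6) q T) (k : ℕ) {x : ℝ}
    (hx : |x| ≤ p + p⁻¹) :
    |(derivative (cS ((k:ℤ) - 1) * q)).eval x| ≤ 8 * D * T * p ^ (2 * k) := by
  have hD0 : 1 ≤ D := by simpa using hD 0
  have := linear_bound (F := fun f => (derivative f).eval x)
    ⟨fun f g => by simp only [derivative_add, eval_add], fun a f => by simp⟩
    (R := p ^ 2) (K := 4 * D) (one_le_pow₀ hp.le) (pow_le_pow_right₀ hp.le (by norm_num : 2 ≤ 6))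
    (by positivity) (fun l => ?_) hq k
  · rw [pow_mul]; linarith
  · refine (eval_derivative_cS_le hp hD l hx).trans ?_
    have : (p ^ 2) ^ l ≤ (p ^ 2) ^ (l + 1) := pow_le_pow_right₀ (one_le_pow₀ hp.le) (by omega)
    gcongr

lemma eval_derivative_cC_le (hp : 1 < p) (hD : ∀ l : ℕ, ((l:ℝ) + 1) ^ 3 ≤ D * p ^ l)
    (k : ℕ) {x : ℝ} (hx : |x| ≤ p + p⁻¹) :
    |(derivative (cC k)).eval x| ≤ 2 * D * p ^ (2 * k) := by
  have hD0 : 1 ≤ D := by simpa using hD 0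
  rw [derivative_cC, eval_mul, eval_natCast, abs_mul, Nat.abs_cast]
  rcases k with _ | k
  · simp; positivity
  rw [show ((k + 1 : ℕ):ℤ) - 1 = (k:ℤ) by push_cast; ring]
  have h1 := abs_cS_le k hp.le hx
  have h0 : (0:ℝ) ≤ k := Nat.cast_nonneg k
  have h2 : ((k:ℝ) + 1) ^ 2 ≤ D * p ^ k :=
    (pow_le_pow_right₀ (by linarith) (by norm_num : 2 ≤ 3)).trans (hD k)
  push_cast
  calc _ ≤ ((k:ℝ) + 1) * (2 * (k + 1) * p ^ k) := by gcongr
    _ = 2 * (k + 1) ^ 2 * p ^ k := by ring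
    _ ≤ 2 * (D * p ^ k) * p ^ k := by gcongr
    _ = 2 * D * p ^ (2 * k) := by rw [two_mul k, pow_add]; ring
    _ ≤ _ := by
      have : p ^ (2 * k) ≤ p ^ (2 * (k + 1)) := pow_le_pow_right₀ hp.le (by omega)
      gcongr
end
end Stoj

namespace Stoj
open Polynomial Real

/-! ### Uniform second moments of the Chebyshev statistics -/

variable {V P : ℝ[X]} {c p L κ M₀ M : ℝ}

/-- The centred statistic of the Chebyshev polynomial `C_k`. -/
noncomputable def cc (P : ℝ[X]) (k : ℕ) {n : ℕ} (x : Fin n → ℝ) : ℝ :=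
  Nf (rho P) (fun y => (cC k).eval y) x

/-- The centred statistic of the Chebyshev polynomial `S_l`. -/
noncomputable def ee (P : ℝ[X]) (l : ℕ) {n : ℕ} (x : Fin n → ℝ) : ℝ :=
  Nf (rho P) (fun y => (cS l).eval y) x

lemma cc_continuous (P : ℝ[X]) (k n : ℕ) : Continuous fun x : Fin n → ℝ => cc P k x :=
  Nf_continuous _ (by fun_prop) n

lemma ee_continuous (P : ℝ[X]) (k n : ℕ) : Continuous fun x : Fin n → ℝ => ee P k x :=
  Nf_continuous _ (by fun_prop) n

lemma abs_cc_le (hP : Dens (rho P) M) (hp : 1 < p) (k : ℕ) {n : ℕ} {x : Fin n → ℝ}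
    (hx : ∀ i, |x i| ≤ p + p⁻¹) : |cc P k x| ≤ 4 * n * p ^ k := by
  refine (abs_Nf_le hP (by fun_prop) (two_lt_joukowsky hp).le
    (fun y hy => abs_cC_le k hp.le hy) hx).trans (le_of_eq (by ring))

lemma abs_ee_le (hP : Dens (rho P) M) (hp : 1 < p) (l : ℕ) {n : ℕ} {x : Fin n → ℝ}
    (hx : ∀ i, |x i| ≤ p + p⁻¹) : |ee P l x| ≤ 4 * n * ((l + 1) * p ^ l) := by
  refine (abs_Nf_le hP (by fun_prop) (two_lt_joukowsky hp).le
    (fun y hy => abs_cS_le l hp.le hy) hx).trans (le_of_eq (by ring))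

lemma ee_zero (hP : Dens (rho P) M) {n : ℕ} (x : Fin n → ℝ) : ee P 0 x = 0 := by
  have := Nf_const hP 1 x
  simpa [ee, cS] using this

lemma ee_one (P : ℝ[X]) {n : ℕ} (x : Fin n → ℝ) : ee P 1 x = cc P 1 x := by
  simp [ee, cc, cS, cC]

lemma ee_add_two (hP : Dens (rho P) M) (l : ℕ) {n : ℕ} (x : Fin n → ℝ) :
    ee P (l + 2) x = ee P l x + cc P (l + 2) x := by
  unfold ee cc
  rw [← Nf_add hP (by fun_prop) (by fun_prop)]
  congr 1
  ext y
  rw [← eval_add]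
  congr 1
  push_cast
  exact cS_add_two l

lemma NN_cS' (hP : Dens (rho P) M) (l : ℕ) {n : ℕ} (x : Fin n → ℝ) :
    NN P (cS l) x = ∑ j ∈ Finset.range l, ee P j x * ee P (l - 1 - j) x := NN_cS hP l x

/-- The loss incurred when passing from the statistics of `C_k` to those of `S_l`. -/
noncomputable def CE (p : ℝ) : ℝ := (p ^ 6 / (p ^ 6 - 1)) ^ 2

lemma one_le_CE (hp : 1 < p) : 1 ≤ CE p := by
  have h1 : 1 < p ^ 6 := one_lt_pow₀ hp (by norm_num)
  unfold CE
  refine one_le_pow₀ ?_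
  rw [le_div_iff₀ (by linarith)]
  linarith

section
variable {n β : ℕ}

lemma Ex_ee_sq (hP : Dens (rho P) M) (hp : 1 < p) (hZ : 0 < ZB n β V (p + p⁻¹)) {Q : ℝ} (hQ0 : 0 ≤ Q)
    (hQ : ∀ k, Ex n β V (p + p⁻¹) (fun x => cc P k x ^ 2) ≤ Q * p ^ (6 * k)) (l : ℕ) :
    Ex n β V (p + p⁻¹) (fun x => ee P l x ^ 2) ≤ CE p * Q * p ^ (6 * l) := by
  have hC := one_le_CE hp
  induction l using Nat.twoStepInduction with
  | zero =>
    simp only [ee_zero hP]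
    rw [Ex_const hZ, zero_pow two_ne_zero]
    positivity
  | one =>
    simp only [ee_one]
    refine (hQ 1).trans ?_
    rw [mul_assoc]
    exact le_mul_of_one_le_left (by positivity) hC
  | more l h0 _ =>
    set u := p ^ 6 with hu
    have hu1 : 1 < u := one_lt_pow₀ hp (by norm_num)
    have hu2 : 0 < u - 1 := by linarith
    have hcc := cc_continuous P (l + 2) n
    have hee := ee_continuous P l n
    have hee2 := ee_continuous P (l + 2) n
    have h1 : Ex n β V (p + p⁻¹) (fun x => ee P (l + 2) x ^ 2) ≤
        Ex n β V (p + p⁻¹) (fun x => u * ee P l x ^ 2 + u / (u - 1) * cc P (l + 2) x ^ 2) := by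
      refine Ex_mono hZ (by fun_prop) (by fun_prop) fun x _ => ?_
      rw [ee_add_two hP]
      have e : u * ee P l x ^ 2 + u / (u - 1) * cc P (l + 2) x ^ 2 -
          (ee P l x + cc P (l + 2) x) ^ 2 = ((u - 1) * ee P l x - cc P (l + 2) x) ^ 2 / (u - 1) := by
        field_simp; ring
      have : 0 ≤ ((u - 1) * ee P l x - cc P (l + 2) x) ^ 2 / (u - 1) := by positivity
      linarith
    rw [Ex_add (by fun_prop) (by fun_prop), Ex_smul, Ex_smul] at h1
    have h2 : u * Ex n β V (p + p⁻¹) (fun x => ee P l x ^ 2) ≤ u * (CE p * Q * p ^ (6 * l)) :=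
      mul_le_mul_of_nonneg_left h0 (by linarith)
    have h3 : u / (u - 1) * Ex n β V (p + p⁻¹) (fun x => cc P (l + 2) x ^ 2) ≤
        u / (u - 1) * (Q * p ^ (6 * (l + 2))) :=
      mul_le_mul_of_nonneg_left (hQ (l + 2)) (by positivity)
    have e : u * (CE p * Q * p ^ (6 * l)) + u / (u - 1) * (Q * p ^ (6 * (l + 2))) =
        CE p * Q * p ^ (6 * (l + 2)) := by
      have : p ^ (6 * (l + 2)) = u ^ 2 * p ^ (6 * l) := by rw [hu]; ring
      rw [this]
      unfold CE
      rw [← hu]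
      field_simp
      ring
    linarith

lemma Ex_abs_ee_mul (hP : Dens (rho P) M) (hp : 1 < p) (hZ : 0 < ZB n β V (p + p⁻¹)) {Q : ℝ}
    (hQ0 : 0 ≤ Q) (hQ : ∀ k, Ex n β V (p + p⁻¹) (fun x => cc P k x ^ 2) ≤ Q * p ^ (6 * k)) (i j : ℕ) :
    Ex n β V (p + p⁻¹) (fun x => |ee P i x * ee P j x|) ≤ CE p * Q * p ^ (3 * (i + j)) := by
  have hp0 : 0 < p := by linarith
  have e : ∀ l, p ^ (6 * l) = (p ^ (3 * l)) ^ 2 := fun l => by rw [← pow_mul]; congr 1; ring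
  have := Ex_abs_mul_le hZ (ee_continuous P i n) (ee_continuous P j n)
    (u := p ^ (3 * i)) (v := p ^ (3 * j)) (K := CE p * Q) (by positivity) (by positivity)
    (by rw [← e]; exact Ex_ee_sq hP hp hZ hQ0 hQ i) (by rw [← e]; exact Ex_ee_sq hP hp hZ hQ0 hQ j)
  rwa [← pow_add, ← mul_add] at this

lemma Ex_abs_cc_mul (hp : 1 < p) (hZ : 0 < ZB n β V (p + p⁻¹)) {Q : ℝ}
    (hQ : ∀ k, Ex n β V (p + p⁻¹) (fun x => cc P k x ^ 2) ≤ Q * p ^ (6 * k)) (i j : ℕ) :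
    Ex n β V (p + p⁻¹) (fun x => |cc P i x * cc P j x|) ≤ Q * p ^ (3 * (i + j)) := by
  have hp0 : 0 < p := by linarith
  have e : ∀ l, p ^ (6 * l) = (p ^ (3 * l)) ^ 2 := fun l => by rw [← pow_mul]; congr 1; ring
  have := Ex_abs_mul_le hZ (cc_continuous P i n) (cc_continuous P j n)
    (u := p ^ (3 * i)) (v := p ^ (3 * j)) (K := Q) (by positivity) (by positivity)
    (by rw [← e]; exact hQ i) (by rw [← e]; exact hQ j)
  rwa [← pow_add, ← mul_add] at this

/-- Outside a set of negligible weight a factor `cc k` can be replaced by `δ n p^{2k}`. -/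
lemma Ex_good (hP : Dens (rho P) M) (hp : 1 < p) (hZ : 0 < ZB n β V (p + p⁻¹)) {δ : ℝ} (hδ : 0 ≤ δ)
    (hgood : ∀ x : Fin n → ℝ, (∀ i, |x i| ≤ p + p⁻¹) →
      (∀ k : ℕ, |cc P k x| ≤ δ * n * p ^ (2 * k)) ∨
      Wt β (pw n β V) x ≤ exp (-(n * log n)) * ZB n β V (p + p⁻¹))
    (hpow : (2 * (p + p⁻¹)) ^ n * exp (-(n * log n)) ≤ exp (-n))
    {T : (Fin n → ℝ) → ℝ} (hT : Continuous T) (hT0 : ∀ x, 0 ≤ T x) {T₀ : ℝ} (hT₀ : 0 ≤ T₀)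
    (hTle : ∀ x : Fin n → ℝ, (∀ i, |x i| ≤ p + p⁻¹) → T x ≤ T₀) (k : ℕ) :
    Ex n β V (p + p⁻¹) (fun x => |cc P k x| * T x) ≤
      δ * n * p ^ (2 * k) * Ex n β V (p + p⁻¹) T + 4 * n * p ^ k * T₀ * exp (-n) := by
  set a := p + p⁻¹
  have ha : 2 < a := two_lt_joukowsky hp
  have hcc := cc_continuous P k n
  have hW := Wt_continuous β (pw_continuous n β V) n
  have hp0 : 0 < p := by linarith
  set τ := exp (-(n * log n)) * ZB n β V a with hτ
  have hτ0 : 0 ≤ τ := mul_nonneg (exp_pos _).le hZ.le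
  have h1 : ∫ x, |cc P k x| * T x * Wt β (pw n β V) x ∂(pim (bx a) n) ≤
      ∫ x, (δ * n * p ^ (2 * k) * (T x * Wt β (pw n β V) x) + 4 * n * p ^ k * T₀ * τ) ∂(pim (bx a) n) := by
    refine integral_mono_ae (integrable_box (by fun_prop) a) (integrable_box (by fun_prop) a) ?_
    filter_upwards [ae_box a n] with x hx
    have hW0 := Wt_nonneg β (pw n β V) x
    have hTx := hT0 x
    rcases hgood x hx with hg | hg
    · have : |cc P k x| * T x * Wt β (pw n β V) x ≤ δ * n * p ^ (2 * k) * (T x * Wt β (pw n β V) x) := by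
        rw [mul_assoc]
        exact mul_le_mul_of_nonneg_right (hg k) (by positivity)
      have : 0 ≤ 4 * n * p ^ k * T₀ * τ := by positivity
      linarith
    · have : |cc P k x| * T x * Wt β (pw n β V) x ≤ 4 * n * p ^ k * T₀ * τ := by
        have h1 := abs_cc_le hP hp k hx
        have h2 := hTle x hx
        gcongr
      have : 0 ≤ δ * n * p ^ (2 * k) * (T x * Wt β (pw n β V) x) := by positivity
      linarith
  rw [integral_add (integrable_box (by fun_prop) a) (integrable_box (by fun_prop) a),
    integral_const_mul, integral_const, pim_bx_real (by linarith), smul_eq_mul] at h1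
  unfold Ex
  rw [div_le_iff₀ hZ]
  refine h1.trans ?_
  have h2 : (2 * a) ^ n * (4 * n * p ^ k * T₀ * τ) ≤ 4 * n * p ^ k * T₀ * exp (-n) * ZB n β V a := by
    calc _ = 4 * n * p ^ k * T₀ * ((2 * a) ^ n * exp (-(n * log n))) * ZB n β V a := by rw [hτ]; ring
      _ ≤ _ := by gcongr
  rw [add_mul, mul_assoc _ (_ / _) _, div_mul_cancel₀ _ hZ.ne']
  linarith

lemma Ex_abs_NN_cS (hP : Dens (rho P) M) (hp : 1 < p) (hZ : 0 < ZB n β V (p + p⁻¹)) {Q D : ℝ}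
    (hD : ∀ l : ℕ, ((l:ℝ) + 1) ^ 3 ≤ D * p ^ l) (hQ0 : 0 ≤ Q)
    (hQ : ∀ k, Ex n β V (p + p⁻¹) (fun x => cc P k x ^ 2) ≤ Q * p ^ (6 * k)) (l : ℕ) :
    |Ex n β V (p + p⁻¹) (fun x => NN P (cS l) x)| ≤ CE p * D * Q * (p ^ 4) ^ (l + 1) := by
  have hC := one_le_CE hp
  have hp0 : 0 < p := by linarith
  have hee := fun j => ee_continuous P j n
  simp only [NN_cS' hP]
  rw [Ex_sum _ fun j => by fun_prop]
  refine (Finset.abs_sum_le_sum_abs _ _).trans ?_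
  have h1 : ∀ j ∈ Finset.range l,
      |Ex n β V (p + p⁻¹) (fun x => ee P j x * ee P (l - 1 - j) x)| ≤ CE p * Q * p ^ (3 * l) := by
    intro j hj
    have hj := Finset.mem_range.mp hj
    refine (abs_Ex_le hZ (by fun_prop) (by fun_prop) fun x _ => le_refl _).trans
      ((Ex_abs_ee_mul hP hp hZ hQ0 hQ j (l - 1 - j)).trans ?_)
    exact mul_le_mul_of_nonneg_left (pow_le_pow_right₀ hp.le (by omega)) (by positivity)
  refine (Finset.sum_le_sum h1).trans ?_
  simp only [Finset.sum_const, Finset.card_range, nsmul_eq_mul]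
  have h0 : (0:ℝ) ≤ l := Nat.cast_nonneg l
  have h2 : (l:ℝ) ≤ D * p ^ l := by
    have := le_self_pow₀ (by linarith : (1:ℝ) ≤ l + 1) (by norm_num : 3 ≠ 0)
    linarith [hD l]
  have hD0 : 1 ≤ D := by simpa using hD 0
  calc _ ≤ D * p ^ l * (CE p * Q * p ^ (3 * l)) := by gcongr
    _ = CE p * D * Q * (p ^ 4) ^ l := by rw [← pow_mul]; ring
    _ ≤ _ := by
      have : (p ^ 4) ^ l ≤ (p ^ 4) ^ (l + 1) := pow_le_pow_right₀ (one_le_pow₀ hp.le) (by omega)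
      gcongr

lemma Ex_abs_cc_NN_cS (hP : Dens (rho P) M) (hp : 1 < p) (hZ : 0 < ZB n β V (p + p⁻¹)) {Q D δ : ℝ}
    (hD : ∀ l : ℕ, ((l:ℝ) + 1) ^ 3 ≤ D * p ^ l) (hδ : 0 ≤ δ)
    (hgood : ∀ x : Fin n → ℝ, (∀ i, |x i| ≤ p + p⁻¹) →
      (∀ k : ℕ, |cc P k x| ≤ δ * n * p ^ (2 * k)) ∨
      Wt β (pw n β V) x ≤ exp (-(n * log n)) * ZB n β V (p + p⁻¹))
    (hpow : (2 * (p + p⁻¹)) ^ n * exp (-(n * log n)) ≤ exp (-n)) (hQ0 : 0 ≤ Q)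
    (hQ : ∀ k, Ex n β V (p + p⁻¹) (fun x => cc P k x ^ 2) ≤ Q * p ^ (6 * k)) (k l : ℕ) :
    |Ex n β V (p + p⁻¹) (fun x => cc P k x * NN P (cS l) x)| ≤
      p ^ (2 * k) * (δ * n * (CE p * D * Q) + 64 * D * n ^ 3 * exp (-n)) * (p ^ 4) ^ (l + 1) := by
  have hC := one_le_CE hp
  have hp0 : 0 < p := by linarith
  have hD0 : 1 ≤ D := by simpa using hD 0
  have hee := fun j => ee_continuous P j n
  have hcc := cc_continuous P k n
  simp only [NN_cS' hP, Finset.mul_sum]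
  rw [Ex_sum _ fun j => by fun_prop]
  refine (Finset.abs_sum_le_sum_abs _ _).trans ?_
  have h1 : ∀ j ∈ Finset.range l,
      |Ex n β V (p + p⁻¹) (fun x => cc P k x * (ee P j x * ee P (l - 1 - j) x))| ≤
        δ * n * p ^ (2 * k) * (CE p * Q * p ^ (3 * l)) +
          4 * n * p ^ k * (16 * n ^ 2 * ((l + 1) ^ 2 * p ^ l)) * exp (-n) := by
    intro j hj
    have hj := Finset.mem_range.mp hj
    have hb : ∀ x : Fin n → ℝ, (∀ i, |x i| ≤ p + p⁻¹) →
        |ee P j x * ee P (l - 1 - j) x| ≤ 16 * n ^ 2 * ((l + 1) ^ 2 * p ^ l) := by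
      intro x hx
      rw [abs_mul]
      have h2 := abs_ee_le hP hp j hx
      have h3 := abs_ee_le hP hp (l - 1 - j) hx
      have h4 : (j:ℝ) ≤ l := by exact_mod_cast hj.le
      have h5 : ((l - 1 - j : ℕ):ℝ) ≤ l := by exact_mod_cast (by omega : l - 1 - j ≤ l)
      have h6 : p ^ j * p ^ (l - 1 - j) ≤ p ^ l := by
        rw [← pow_add]; exact pow_le_pow_right₀ hp.le (by omega)
      calc _ ≤ (4 * n * (((j:ℝ) + 1) * p ^ j)) *
            (4 * n * ((((l - 1 - j : ℕ):ℝ) + 1) * p ^ (l - 1 - j))) :=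
            mul_le_mul h2 h3 (abs_nonneg _) (by positivity)
        _ = 16 * n ^ 2 * ((((j:ℝ) + 1) * (((l - 1 - j : ℕ):ℝ) + 1)) * (p ^ j * p ^ (l - 1 - j))) := by
            ring
        _ ≤ 16 * n ^ 2 * ((((l:ℝ) + 1) * ((l:ℝ) + 1)) * p ^ l) := by gcongr
        _ = _ := by ring
    have h2 := Ex_good hP hp hZ hδ hgood hpow (T := fun x => |ee P j x * ee P (l - 1 - j) x|)
      (by fun_prop) (fun _ => abs_nonneg _) (by positivity) hb k
    have h3 := Ex_abs_ee_mul hP hp hZ hQ0 hQ j (l - 1 - j)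
    have h4 : CE p * Q * p ^ (3 * (j + (l - 1 - j))) ≤ CE p * Q * p ^ (3 * l) :=
      mul_le_mul_of_nonneg_left (pow_le_pow_right₀ hp.le (by omega)) (by positivity)
    have h5 : δ * n * p ^ (2 * k) *
        Ex n β V (p + p⁻¹) (fun x => |ee P j x * ee P (l - 1 - j) x|) ≤
        δ * n * p ^ (2 * k) * (CE p * Q * p ^ (3 * l)) :=
      mul_le_mul_of_nonneg_left (h3.trans h4) (by positivity)
    refine (abs_Ex_le hZ (by fun_prop) (g := fun x => |cc P k x| * |ee P j x * ee P (l - 1 - j) x|)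
      (by fun_prop) fun x _ => (abs_mul _ _).le).trans ?_
    linarith
  refine (Finset.sum_le_sum h1).trans ?_
  simp only [Finset.sum_const, Finset.card_range, nsmul_eq_mul]
  have h0 : (0:ℝ) ≤ l := Nat.cast_nonneg l
  have h2 : (l:ℝ) ≤ D * p ^ l := by
    have := le_self_pow₀ (by linarith : (1:ℝ) ≤ l + 1) (by norm_num : 3 ≠ 0)
    linarith [hD l]
  have h3 : (l:ℝ) * (l + 1) ^ 2 ≤ D * p ^ l := by
    refine le_trans ?_ (hD l)
    nlinarith [sq_nonneg ((l:ℝ) + 1)]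
  have h4 : p ^ l * p ^ (3 * l) ≤ (p ^ 4) ^ (l + 1) := by
    rw [← pow_add, ← pow_mul]; exact pow_le_pow_right₀ hp.le (by omega)
  have h5 : p ^ l * p ^ l ≤ (p ^ 4) ^ (l + 1) := by
    rw [← pow_add, ← pow_mul]; exact pow_le_pow_right₀ hp.le (by omega)
  have h6 : p ^ k ≤ p ^ (2 * k) := pow_le_pow_right₀ hp.le (by omega)
  calc _ = δ * n * p ^ (2 * k) * (CE p * Q) * (l * p ^ (3 * l)) +
        64 * n ^ 3 * p ^ k * exp (-n) * ((l * (l + 1) ^ 2) * p ^ l) := by ring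
    _ ≤ δ * n * p ^ (2 * k) * (CE p * Q) * ((D * p ^ l) * p ^ (3 * l)) +
        64 * n ^ 3 * p ^ (2 * k) * exp (-n) * ((D * p ^ l) * p ^ l) := by gcongr
    _ = δ * n * p ^ (2 * k) * (CE p * Q) * D * (p ^ l * p ^ (3 * l)) +
        64 * n ^ 3 * p ^ (2 * k) * exp (-n) * D * (p ^ l * p ^ l) := by ring
    _ ≤ δ * n * p ^ (2 * k) * (CE p * Q) * D * (p ^ 4) ^ (l + 1) +
        64 * n ^ 3 * p ^ (2 * k) * exp (-n) * D * (p ^ 4) ^ (l + 1) := by gcongr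
    _ = _ := by ring
end
end Stoj

namespace Stoj
open Polynomial Real

variable {V P : ℝ[X]} {c p L κ M₀ M : ℝ}

/-- With `q` an approximate inverse of `P`, the test polynomial `S_{k-1} q` inverts the operator
`h ↦ B (h P)` at `C_k`, up to the remainder `S_{k-1} (1 - q P)`. -/
lemma Nf_B_test (hP : Dens (rho P) M) (q : ℝ[X]) (k : ℕ) {n : ℕ} (x : Fin n → ℝ) :
    Nf (rho P) (B (cS ((k:ℤ) - 1) * q * P)) x =
      cc P k x - Nf (rho P) (B (cS ((k:ℤ) - 1) * (1 - q * P))) x := by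
  have e : B (cS ((k:ℤ) - 1) * q * P) = fun y =>
      B (cS ((k:ℤ) - 1)) y - B (cS ((k:ℤ) - 1) * (1 - q * P)) y := by
    ext y
    rw [← B_sub]; congr 1; ring
  rw [e, Nf_sub hP (B_continuous _) (B_continuous _)]
  congr 1
  rcases k with _ | k
  · have h1 : B (cS (((0:ℕ):ℤ) - 1)) = fun _ => 0 := by
      ext y
      rw [show cS (((0:ℕ):ℤ) - 1) = 0 by simp [cS]]; exact B_zero y
    have h2 : (fun y : ℝ => (cC ((0:ℕ):ℤ)).eval y) = fun _ => 2 := by ext y; simp [cC]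
    rw [h1, Nf_const hP]
    unfold cc
    rw [h2, Nf_const hP]
  · have h1 : B (cS (((k + 1:ℕ):ℤ) - 1)) = fun y => (cC ((k + 1 : ℕ):ℤ)).eval y := by
      ext y
      rw [show ((k + 1 : ℕ):ℤ) - 1 = (k:ℤ) by push_cast; ring, B_cS]; push_cast; rfl
    rw [h1]; rfl

/-- The loop equation for the test polynomial `S_{k-1} q`, sorted into its constituents. -/
lemma loop_split (h : Adm V P c p L κ M₀ M) {β m : ℕ} (hβ : 1 ≤ β) {η : ℝ}
    (hη : BdSmall β m V (p + p⁻¹) η) (q g : ℝ[X]) (k : ℕ) (c0 : ℝ) {H X₀ : ℝ}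
    (hH : ∀ s, |s| ≤ p + p⁻¹ → |(cS ((k:ℤ) - 1) * q).eval s| ≤ H)
    (hX : ∀ x : Fin (m + 1) → ℝ, (∀ i, |x i| ≤ p + p⁻¹) → |(∑ k, g.eval (x k)) + c0| ≤ X₀) :
    |2 * Ex (m + 1) β V (p + p⁻¹) (fun x => ∑ i, (derivative g * (cS ((k:ℤ) - 1) * q)).eval (x i)) +
      β * Ex (m + 1) β V (p + p⁻¹)
        (fun x => ((∑ k, g.eval (x k)) + c0) * NN P (cS ((k:ℤ) - 1) * q) x) -
      ((m:ℝ) + 1) * β * Ex (m + 1) β V (p + p⁻¹) (fun x => ((∑ k, g.eval (x k)) + c0) * cc P k x) +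
      ((m:ℝ) + 1) * β * Ex (m + 1) β V (p + p⁻¹) (fun x => ((∑ k, g.eval (x k)) + c0) *
        Nf (rho P) (B (cS ((k:ℤ) - 1) * (1 - q * P))) x) +
      (2 - β) * Ex (m + 1) β V (p + p⁻¹) (fun x => ((∑ k, g.eval (x k)) + c0) *
        ∑ i, (derivative (cS ((k:ℤ) - 1) * q)).eval (x i))| ≤ 4 * (m + 1) * (H * X₀) * η := by
  have hl := loop_ineq h hβ hη (cS ((k:ℤ) - 1) * q) g c0 hH hX
  have h1 := NN_continuous P (cS ((k:ℤ) - 1) * q) (m + 1)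
  have h2 := Nf_continuous (rho P) (B_continuous (cS ((k:ℤ) - 1) * (1 - q * P))) (m + 1)
  have h3 := cc_continuous P k (m + 1)
  have e : (fun x : Fin (m + 1) → ℝ => ((∑ k, g.eval (x k)) + c0) *
        (β / 2 * (NN P (cS ((k:ℤ) - 1) * q) x -
          (m + 1 : ℕ) * Nf (rho P) (B (cS ((k:ℤ) - 1) * q * P)) x) +
          (1 - β / 2) * ∑ i, (derivative (cS ((k:ℤ) - 1) * q)).eval (x i))) =
      fun x => (β / 2 * (((∑ k, g.eval (x k)) + c0) * NN P (cS ((k:ℤ) - 1) * q) x) +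
        (-(((m:ℝ) + 1) * β / 2)) * (((∑ k, g.eval (x k)) + c0) * cc P k x)) +
        ((((m:ℝ) + 1) * β / 2) * (((∑ k, g.eval (x k)) + c0) *
          Nf (rho P) (B (cS ((k:ℤ) - 1) * (1 - q * P))) x) +
        (1 - β / 2) * (((∑ k, g.eval (x k)) + c0) *
          ∑ i, (derivative (cS ((k:ℤ) - 1) * q)).eval (x i))) := by
    ext x
    rw [Nf_B_test h.dens]
    push_cast
    ring
  rw [e, Ex_add (by fun_prop) (by fun_prop), Ex_add (by fun_prop) (by fun_prop),
    Ex_add (by fun_prop) (by fun_prop), Ex_smul, Ex_smul, Ex_smul, Ex_smul] at hl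
  rw [abs_le] at hl ⊢
  constructor <;> linarith [hl.1, hl.2]

lemma iterate_bound {a w : ℕ → ℝ} {C : ℝ} (hC : 0 ≤ C) (hw : ∀ k, 0 ≤ w k)
    (h0 : ∃ Q, 0 ≤ Q ∧ ∀ k, a k ≤ Q * w k)
    (hs : ∀ Q, 0 ≤ Q → (∀ k, a k ≤ Q * w k) → ∀ k, a k ≤ (Q / 2 + C) * w k) (k : ℕ) :
    a k ≤ 2 * C * w k := by
  obtain ⟨Q, hQ, h0⟩ := h0
  have key : ∀ j : ℕ, ∀ k, a k ≤ (Q * (1 / 2) ^ j + 2 * C) * w k := by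
    intro j
    induction j with
    | zero =>
      intro k
      refine (h0 k).trans (mul_le_mul_of_nonneg_right ?_ (hw k))
      simp; linarith
    | succ j ih =>
      intro k
      refine (hs _ (by positivity) ih k).trans (le_of_eq ?_)
      rw [pow_succ]; ring
  have ht : Filter.Tendsto (fun j : ℕ => (Q * (1 / 2) ^ j + 2 * C) * w k) Filter.atTop
      (nhds ((Q * 0 + 2 * C) * w k)) :=
    (((tendsto_pow_atTop_nhds_zero_of_lt_one (by norm_num) (by norm_num)).const_mul Q).add_const
      _).mul_const _
  have := ge_of_tendsto' ht fun j => key j k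
  simpa using this

lemma isLinearMap_Ex_Nf_B (hP : Dens (rho P) M) {n β : ℕ} {b : ℝ} {X : (Fin n → ℝ) → ℝ}
    (hX : Continuous X) :
    IsLinearMap ℝ fun f : ℝ[X] => Ex n β V b (fun x => X x * Nf (rho P) (B f) x) := by
  have hc : ∀ f, Continuous fun x : Fin n → ℝ => Nf (rho P) (B f) x := fun f =>
    Nf_continuous _ (B_continuous f) n
  constructor
  · intro f g
    have e : B (f + g) = fun y => B f y + B g y := by ext y; exact B_add f g y
    have h1 := hc f
    have h2 := hc g
    simp only [e, Nf_add hP (B_continuous f) (B_continuous g), mul_add]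
    exact Ex_add (by fun_prop) (by fun_prop)
  · intro a f
    have e : B (a • f) = fun y => a * B f y := by ext y; exact B_smul a f y
    simp only [e, Nf_smul]
    rw [smul_eq_mul, ← Ex_smul]
    congr 1; ext x; ring

lemma isLinearMap_Ex_NN (hP : Dens (rho P) M) {n β : ℕ} {b : ℝ} {X : (Fin n → ℝ) → ℝ}
    (hX : Continuous X) :
    IsLinearMap ℝ fun f : ℝ[X] => Ex n β V b (fun x => X x * NN P f x) := by
  constructor
  · intro f g
    have h1 := NN_continuous P f n
    have h2 := NN_continuous P g n
    simp only [NN_add hP, mul_add]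
    exact Ex_add (by fun_prop) (by fun_prop)
  · intro a f
    simp only [NN_smul]
    rw [smul_eq_mul, ← Ex_smul]
    congr 1; ext x; ring

lemma Nf_B_cS (P : ℝ[X]) (l : ℕ) {n : ℕ} (x : Fin n → ℝ) :
    Nf (rho P) (B (cS l)) x = cc P (l + 1) x := by
  have : B (cS l) = fun y => (cC ((l + 1 : ℕ):ℤ)).eval y := by
    ext y; rw [B_cS]; push_cast; rfl
  rw [this]; rfl

set_option maxHeartbeats 800000 in
/-- One bootstrap step: a bound `Q` on the second moments improves to `Q / 2 + C`. -/
lemma bootstrap_step (h : Adm V P c p L κ M₀ M) {β m : ℕ} (hβ : 1 ≤ β) {η D : ℝ}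
    (hη : BdSmall β m V (p + p⁻¹) η)
    (hD : ∀ l : ℕ, ((l:ℝ) + 1) ^ 3 ≤ D * p ^ l)
    (hgood : ∀ x : Fin (m + 1) → ℝ, (∀ i, |x i| ≤ p + p⁻¹) →
      (∀ k : ℕ, |cc P k x| ≤ (1 / (16 * M * CE p * D)) * (m + 1 : ℕ) * p ^ (2 * k)) ∨
      Wt β (pw (m + 1) β V) x ≤
        exp (-((m + 1 : ℕ) * log (m + 1 : ℕ))) * ZB (m + 1) β V (p + p⁻¹))
    (hpow : (2 * (p + p⁻¹)) ^ (m + 1) * exp (-((m + 1 : ℕ) * log (m + 1 : ℕ))) ≤ exp (-(m + 1 : ℕ)))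
    (he1 : 128 * M * D * ((m + 1 : ℕ):ℝ) ^ 2 * exp (-(m + 1 : ℕ)) ≤ 1)
    (he2 : 64 * D * M * ((m + 1 : ℕ):ℝ) * η ≤ 1)
    {Q : ℝ} (hQ0 : 0 ≤ Q)
    (hQ : ∀ k, Ex (m + 1) β V (p + p⁻¹) (fun x => cc P k x ^ 2) ≤ Q * p ^ (6 * k)) (k : ℕ) :
    Ex (m + 1) β V (p + p⁻¹) (fun x => cc P k x ^ 2) ≤
      (Q / 2 + 2 * (16 * D ^ 2 * M + 128 * D ^ 2 * M ^ 2 + 2)) * p ^ (6 * k) := by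
  have hp := h.p_gt
  have hM := h.M_one
  have hD0 : 1 ≤ D := by simpa using hD 0
  have hCE := one_le_CE hp
  have hZ := h.ZB_pos (m + 1) β h.two_lt.le
  obtain ⟨q, hq, hr⟩ := h.inv
  set c0 : ℝ := -((m + 1 : ℕ) * ∫ y, (cC k).eval y * rho P y) with hc0
  have hcc : ∀ x : Fin (m + 1) → ℝ, (∑ j, (cC k).eval (x j)) + c0 = cc P k x := fun x => by
    simp only [cc, Nf, hc0]; ring
  have hl := loop_split h hβ hη q (cC k) k c0 (fun s hs => eval_test_le hp hD hq k hs)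
    (X₀ := 4 * (m + 1 : ℕ) * p ^ k) (fun x hx => by rw [hcc]; exact abs_cc_le h.dens hp k hx)
  simp only [hcc] at hl
  have hcont := cc_continuous P k (m + 1)
  have hcn := cc_continuous P
  set hk : ℝ[X] := cS ((k:ℤ) - 1) * q with hhk
  -- the five terms
  have t1 : |Ex (m + 1) β V (p + p⁻¹) (fun x => ∑ i, (derivative (cC k) * hk).eval (x i))| ≤
      ((m:ℝ) + 1) * (8 * D ^ 2 * M * p ^ (6 * k)) := by
    refine abs_Ex_le_const hZ (by fun_prop) fun x hx => ?_
    refine (Finset.abs_sum_le_sum_abs _ _).trans ((Finset.sum_le_sum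
      (g := fun _ => 8 * D ^ 2 * M * p ^ (6 * k)) fun i _ => ?_).trans ?_)
    · rw [eval_mul, abs_mul]
      calc _ ≤ (2 * D * p ^ (2 * k)) * (4 * D * M * p ^ (2 * k)) :=
            mul_le_mul (eval_derivative_cC_le hp hD k (hx i)) (eval_test_le hp hD hq k (hx i))
              (abs_nonneg _) (by positivity)
        _ = 8 * D ^ 2 * M * p ^ (4 * k) := by
            rw [show 4 * k = 2 * k + 2 * k by ring, pow_add]; ring
        _ ≤ _ := by
            have : p ^ (4 * k) ≤ p ^ (6 * k) := pow_le_pow_right₀ hp.le (by omega)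
            gcongr
    · simp
  have t2 : |Ex (m + 1) β V (p + p⁻¹) (fun x => cc P k x * NN P hk x)| ≤
      ((m:ℝ) + 1) * (Q / 8 + 1) * p ^ (6 * k) := by
    have hb := linear_bound (isLinearMap_Ex_NN (V := V) (β := β) (b := p + p⁻¹) h.dens hcont)
      (R := p ^ 4) (one_le_pow₀ hp.le) (pow_le_pow_right₀ hp.le (by norm_num : 4 ≤ 6)) (by positivity)
      (fun l => Ex_abs_cc_NN_cS h.dens hp hZ hD (by positivity) hgood hpow hQ0 hQ k l) hq k
    refine hb.trans ?_
    have e1 : (1 / (16 * M * CE p * D)) * (m + 1 : ℕ) * (CE p * D * Q) =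
        ((m:ℝ) + 1) * (Q / (16 * M)) := by push_cast; field_simp
    rw [e1]
    have e2 : p ^ (2 * k) * (p ^ 4) ^ k = p ^ (6 * k) := by rw [← pow_mul, ← pow_add]; congr 1; ring
    have e3 : 2 * (((m:ℝ) + 1) * (Q / (16 * M)) + 64 * D * (m + 1 : ℕ) ^ 3 * exp (-(m + 1 : ℕ))) * M ≤
        ((m:ℝ) + 1) * (Q / 8 + 1) := by
      have : 2 * (((m:ℝ) + 1) * (Q / (16 * M)) + 64 * D * (m + 1 : ℕ) ^ 3 * exp (-(m + 1 : ℕ))) * M =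
          ((m:ℝ) + 1) * (Q / 8 + 128 * M * D * ((m + 1 : ℕ):ℝ) ^ 2 * exp (-(m + 1 : ℕ))) := by
        push_cast; field_simp; ring
      rw [this]; gcongr
    calc _ = (2 * (((m:ℝ) + 1) * (Q / (16 * M)) + 64 * D * (m + 1 : ℕ) ^ 3 * exp (-(m + 1 : ℕ))) * M) *
          (p ^ (2 * k) * (p ^ 4) ^ k) := by ring
      _ ≤ _ := by rw [e2]; gcongr
  have t3 : |Ex (m + 1) β V (p + p⁻¹) (fun x => cc P k x *
      Nf (rho P) (B (cS ((k:ℤ) - 1) * (1 - q * P))) x)| ≤ Q / 4 * p ^ (6 * k) := by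
    have hb := linear_bound (isLinearMap_Ex_Nf_B (V := V) (β := β) (b := p + p⁻¹) h.dens hcont)
      (R := p ^ 3) (K := Q * p ^ (3 * k)) (one_le_pow₀ hp.le)
      (pow_le_pow_right₀ hp.le (by norm_num : 3 ≤ 6)) (by positivity)
      (fun l => ?_) hr k
    · refine hb.trans (le_of_eq ?_)
      rw [← pow_mul, show 6 * k = 3 * k + 3 * k by ring, pow_add]; ring
    · simp only [Nf_B_cS]
      have h1 := hcn (l + 1) (m + 1)
      refine (abs_Ex_le hZ (by fun_prop) (by fun_prop) fun x _ => le_rfl).trans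
        ((Ex_abs_cc_mul hp hZ hQ k (l + 1)).trans (le_of_eq ?_))
      rw [mul_add, pow_add, ← pow_mul]; ring
  have t4 : |Ex (m + 1) β V (p + p⁻¹) (fun x => cc P k x * ∑ i, (derivative hk).eval (x i))| ≤
      ((m:ℝ) + 1) * (Ex (m + 1) β V (p + p⁻¹) (fun x => cc P k x ^ 2) / 8 +
        128 * D ^ 2 * M ^ 2 * p ^ (6 * k)) := by
    have h1 : |Ex (m + 1) β V (p + p⁻¹) (fun x => cc P k x * ∑ i, (derivative hk).eval (x i))| ≤
        Ex (m + 1) β V (p + p⁻¹) (fun x => (((m:ℝ) + 1) / 8) * cc P k x ^ 2 +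
          ((m:ℝ) + 1) * (128 * D ^ 2 * M ^ 2 * p ^ (6 * k))) := by
      refine abs_Ex_le hZ (by fun_prop) (by fun_prop) fun x hx => ?_
      have h2 : |∑ i, (derivative hk).eval (x i)| ≤ ((m:ℝ) + 1) * (8 * D * M * p ^ (2 * k)) := by
        refine (Finset.abs_sum_le_sum_abs _ _).trans ((Finset.sum_le_sum
          fun i _ => eval_derivative_test_le hp hD hq k (hx i)).trans ?_)
        simp
      rw [abs_mul]
      have h3 : (8 * D * M * p ^ (2 * k)) ^ 2 ≤ 64 * D ^ 2 * M ^ 2 * p ^ (6 * k) := by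
        have : p ^ (4 * k) ≤ p ^ (6 * k) := pow_le_pow_right₀ hp.le (by omega)
        calc _ = 64 * D ^ 2 * M ^ 2 * p ^ (4 * k) := by
              rw [show 4 * k = 2 * k * 2 by ring, pow_mul p (2 * k) 2]; ring
          _ ≤ _ := by gcongr
      calc _ ≤ |cc P k x| * (((m:ℝ) + 1) * (8 * D * M * p ^ (2 * k))) := by gcongr
        _ = ((m:ℝ) + 1) * (|cc P k x| * (8 * D * M * p ^ (2 * k))) := by ring
        _ ≤ ((m:ℝ) + 1) * (cc P k x ^ 2 / 8 + 128 * D ^ 2 * M ^ 2 * p ^ (6 * k)) := by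
            gcongr
            rw [← sq_abs (cc P k x)]
            nlinarith [sq_nonneg (|cc P k x| / 4 - (8 * D * M * p ^ (2 * k)))]
        _ = _ := by ring
    rw [Ex_add (by fun_prop) (by fun_prop), Ex_smul, Ex_const hZ] at h1
    linarith
  have t5 : 4 * ((m:ℝ) + 1) * (4 * D * M * p ^ (2 * k) * (4 * (m + 1 : ℕ) * p ^ k)) * η ≤
      ((m:ℝ) + 1) * p ^ (6 * k) := by
    have e : 4 * ((m:ℝ) + 1) * (4 * D * M * p ^ (2 * k) * (4 * (m + 1 : ℕ) * p ^ k)) * η =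
        ((m:ℝ) + 1) * ((64 * D * M * ((m + 1 : ℕ):ℝ) * η) * p ^ (3 * k)) := by
      rw [show 3 * k = 2 * k + k by ring, pow_add]; ring
    rw [e]
    have h3 : p ^ (3 * k) ≤ p ^ (6 * k) := pow_le_pow_right₀ hp.le (by omega)
    have : (64 * D * M * ((m + 1 : ℕ):ℝ) * η) * p ^ (3 * k) ≤ p ^ (6 * k) :=
      (mul_le_of_le_one_left (by positivity) he2).trans h3
    gcongr
  have hsq : (fun x : Fin (m + 1) → ℝ => cc P k x * cc P k x) = fun x => cc P k x ^ 2 := by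
    ext x; ring
  rw [hsq] at hl
  set E2 := Ex (m + 1) β V (p + p⁻¹) (fun x => cc P k x ^ 2) with hE2
  set A := Ex (m + 1) β V (p + p⁻¹) (fun x => ∑ i, (derivative (cC k) * hk).eval (x i))
  set G := Ex (m + 1) β V (p + p⁻¹) (fun x => cc P k x * NN P hk x)
  set F := Ex (m + 1) β V (p + p⁻¹) (fun x => cc P k x *
      Nf (rho P) (B (cS ((k:ℤ) - 1) * (1 - q * P))) x)
  set U := Ex (m + 1) β V (p + p⁻¹) (fun x => cc P k x * ∑ i, (derivative hk).eval (x i))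
  set w := p ^ (6 * k)
  set N := (m:ℝ) + 1 with hN
  have hN0 : 0 < N := by positivity
  have hb1 : (1:ℝ) ≤ β := by exact_mod_cast hβ
  have hw0 : 0 ≤ w := by positivity
  have hE20 : 0 ≤ E2 := by
    have := Ex_mono (β := β) (V := V) hZ continuous_const (by fun_prop : Continuous fun x => cc P k x ^ 2)
      (fun x _ => sq_nonneg (cc P k x))
    rwa [Ex_const hZ] at this
  have hl' := (abs_le.mp (hl.trans t5)).1
  have hA : 2 * A ≤ 2 * (β * |A|) := by
    have : A ≤ |A| := le_abs_self A
    nlinarith [abs_nonneg A]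
  have hG : β * G ≤ β * |G| := by have := le_abs_self G; gcongr
  have hF : N * β * F ≤ N * β * |F| := by have := le_abs_self F; gcongr
  have hU : (2 - β) * U ≤ β * |U| := by
    calc _ ≤ |(2 - β) * U| := le_abs_self _
      _ = |2 - (β:ℝ)| * |U| := abs_mul _ _
      _ ≤ _ := by
        gcongr
        rw [abs_le]; constructor <;> linarith
  have hNw : N * w ≤ β * (N * w) := le_mul_of_one_le_left (by positivity) hb1
  have main : β * (N * E2) ≤ β * (2 * |A| + |G| + N * |F| + |U| + N * w) := by
    have : β * (2 * |A| + |G| + N * |F| + |U| + N * w) =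
      2 * (β * |A|) + β * |G| + N * β * |F| + β * |U| + β * (N * w) := by ring
    rw [this]
    have e : β * (N * E2) = N * β * E2 := by ring
    rw [e]
    linarith
  have main2 : N * E2 ≤ 2 * |A| + |G| + N * |F| + |U| + N * w :=
    le_of_mul_le_mul_left main (by linarith)
  have main3 : N * E2 ≤ N * (2 * (8 * D ^ 2 * M * w) + (Q / 8 + 1) * w + Q / 4 * w +
      (E2 / 8 + 128 * D ^ 2 * M ^ 2 * w) + w) := by
    have : N * |F| ≤ N * (Q / 4 * w) := by gcongr
    linarith
  have main4 := le_of_mul_le_mul_left main3 hN0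
  have : 0 ≤ D ^ 2 * M * w := by positivity
  have : 0 ≤ D ^ 2 * M ^ 2 * w := by positivity
  have : 0 ≤ Q * w := by positivity
  linarith
end Stoj

namespace Stoj
open Polynomial Real

variable {V P : ℝ[X]} {c p L κ M₀ M : ℝ}

/-- The second moments of the Chebyshev statistics are bounded uniformly in `n`. -/
lemma second_moment (p L κ M : ℝ) {D : ℝ} (hp : 1 < p) (hM : 1 ≤ M) (hκ : 0 < κ)
    (hD : ∀ l : ℕ, ((l:ℝ) + 1) ^ 3 ≤ D * p ^ l) :
    ∃ C : ℝ, 1 ≤ C ∧ ∀ᶠ n : ℕ in Filter.atTop, ∀ (m : ℕ), n = m + 1 →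
      ∀ (V P : ℝ[X]) (c M₀ : ℝ) (β : ℕ), Adm V P c p L κ M₀ M → 1 ≤ β →
      (∀ k, Ex (m + 1) β V (p + p⁻¹) (fun x => cc P k x ^ 2) ≤ C * p ^ (6 * k)) ∧
      ∃ η, BdSmall β m V (p + p⁻¹) η ∧ 64 * D * M * ((m + 1 : ℕ):ℝ) * η ≤ 1 := by
  have hD0 : 1 ≤ D := by simpa using hD 0
  have hCE := one_le_CE hp
  have ha2 := two_lt_joukowsky hp
  have hδ : 0 < 1 / (16 * M * CE p * D) := by positivity
  refine ⟨2 * (2 * (16 * D ^ 2 * M + 128 * D ^ 2 * M ^ 2 + 2)), by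
    have : 0 ≤ D ^ 2 * M := by positivity
    have : 0 ≤ D ^ 2 * M ^ 2 := by positivity
    linarith, ?_⟩
  filter_upwards [good_event p L κ M hp hM hδ, ev_pow (by linarith : 0 < 2 * (p + p⁻¹)),
    boundary_small p L κ M hκ, ev_exp (128 * M * D) one_pos one_pos 2,
    ev_exp (64 * D * M) one_pos (one_half_pos) 1,
    ev_exp (64 * D * M * M) (by positivity : 0 < κ / 4) (one_half_pos) 1]
    with n hgood hpow hbd he1 he2 he3 m hnm V P c M₀ β h hβ
  subst hnm
  have hη : BdSmall β m V (p + p⁻¹) (exp (-(m + 1 : ℕ)) + M * exp (-(κ / 4 * (m + 1 : ℕ)))) :=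
    hbd m rfl V P c M₀ β h hβ
  have hη1 : 64 * D * M * ((m + 1 : ℕ):ℝ) * (exp (-(m + 1 : ℕ)) + M * exp (-(κ / 4 * (m + 1 : ℕ)))) ≤ 1 := by
    rw [pow_one, one_mul] at he2
    rw [pow_one] at he3
    linarith
  rw [one_mul] at he1
  refine ⟨?_, _, hη, hη1⟩
  have hZ := h.ZB_pos (m + 1) β h.two_lt.le
  refine iterate_bound (by positivity) (fun k => by positivity) ⟨(4 * (m + 1 : ℕ)) ^ 2, by positivity, fun k => ?_⟩
    fun Q hQ0 hQ k => bootstrap_step h hβ hη hD (hgood V P c M₀ β h hβ) hpow he1 hη1 hQ0 hQ k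
  have hcont := cc_continuous P k (m + 1)
  refine (le_abs_self _).trans (abs_Ex_le_const hZ (by fun_prop) fun x hx => ?_)
  rw [abs_pow]
  calc _ ≤ (4 * (m + 1 : ℕ) * p ^ k) ^ 2 := by
        have := abs_cc_le h.dens hp k hx
        gcongr
    _ = (4 * (m + 1 : ℕ)) ^ 2 * p ^ (2 * k) := by rw [mul_pow, ← pow_mul, mul_comm k]
    _ ≤ _ := by
      have : p ^ (2 * k) ≤ p ^ (6 * k) := pow_le_pow_right₀ hp.le (by omega)
      gcongr

lemma natDegree_cS_le (k : ℕ) : (cS k).natDegree ≤ k := by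
  induction k using Nat.twoStepInduction with
  | zero => simp [cS]
  | one => simp [cS]
  | more k h0 h1 =>
    have h2 := cS_add_two k
    push_cast
    rw [h2]
    refine (natDegree_add_le _ _).trans (max_le (h0.trans (by omega)) ?_)
    exact_mod_cast natDegree_cC_le (k + 2)

section
variable {n β : ℕ}

lemma Ex_abs_cc (hp : 1 < p) (hZ : 0 < ZB n β V (p + p⁻¹)) {C : ℝ} (hC : 1 ≤ C)
    (hQ : ∀ k, Ex n β V (p + p⁻¹) (fun x => cc P k x ^ 2) ≤ C * p ^ (6 * k)) (k : ℕ) :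
    |Ex n β V (p + p⁻¹) (fun x => cc P k x)| ≤ C * p ^ (3 * k) := by
  have h1 := cc_continuous P k n
  have := Ex_abs_mul_le (f := fun x => cc P k x) (g := fun _ => 1) hZ h1 continuous_const (K := C)
    (u := p ^ (3 * k)) (v := 1) (by positivity) one_pos
    (by rw [← pow_mul, show 3 * k * 2 = 6 * k by ring]; exact hQ k)
    (by rw [Ex_const hZ]; simpa using hC)
  rw [mul_one] at this
  exact (abs_Ex_le hZ h1 (by fun_prop) fun x _ => by simp).trans this

/-- First moments of a polynomial statistic from those of the Chebyshev statistics. -/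
lemma Ex_abs_Nf (hP : Dens (rho P) M) {C R T : ℝ} {b : ℝ} (hC : 0 ≤ C)
    (hQ : ∀ k, |Ex n β V b (fun x => cc P k x)| ≤ C * R ^ k) {g : ℝ[X]} (hg : NT R g T) :
    |Ex n β V b (fun x => Nf (rho P) (fun y => g.eval y) x)| ≤ C * T := by
  obtain ⟨K, b', rfl, hb⟩ := hg
  have hc := cc_continuous P
  have e : (fun x : Fin n → ℝ => Nf (rho P) (fun y => (∑ k ∈ Finset.range K, b' k • cC k).eval y) x) =
      fun x => ∑ k ∈ Finset.range K, b' k * cc P k x := by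
    ext x
    unfold cc
    rw [← Nf_sum hP _ (fun k => by fun_prop)]
    congr 1; ext y
    rw [eval_finsetSum]; simp
  rw [e, Ex_sum _ (fun k => (hc k n).const_mul _)]
  calc _ ≤ ∑ k ∈ Finset.range K, |b' k| * (C * R ^ k) := by
        refine (Finset.abs_sum_le_sum_abs _ _).trans (Finset.sum_le_sum fun k _ => ?_)
        rw [Ex_smul, abs_mul]
        exact mul_le_mul_of_nonneg_left (hQ k) (abs_nonneg _)
    _ = C * ∑ k ∈ Finset.range K, |b' k| * R ^ k := by
        rw [Finset.mul_sum]; exact Finset.sum_congr rfl fun k _ => by ring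
    _ ≤ _ := by gcongr

lemma Ex_abs_Nf_derivative (hP : Dens (rho P) M) (hp : 1 < p) {C D T : ℝ} (hC : 0 ≤ C)
    (hD : ∀ l : ℕ, ((l:ℝ) + 1) ^ 3 ≤ D * p ^ l)
    (hQ : ∀ k, |Ex n β V (p + p⁻¹) (fun x => cc P k x)| ≤ C * p ^ (3 * k)) {q : ℝ[X]}
    (hq : NT (p ^ 6) q T) (k : ℕ) :
    |Ex n β V (p + p⁻¹) (fun x => Nf (rho P) (fun y => (derivative (cS ((k:ℤ) - 1) * q)).eval y) x)| ≤
      8 * D ^ 2 * C * T * p ^ (6 * k) := by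
  have hD0 : 1 ≤ D := by simpa using hD 0
  have hlin : IsLinearMap ℝ fun f : ℝ[X] =>
      Ex n β V (p + p⁻¹) (fun x => Nf (rho P) (fun y => (derivative f).eval y) x) := by
    have hc : ∀ f : ℝ[X], Continuous fun x : Fin n → ℝ => Nf (rho P) (fun y => (derivative f).eval y) x :=
      fun f => Nf_continuous _ (by fun_prop) n
    constructor
    · intro f g
      simp only [derivative_add, eval_add]
      rw [← Ex_add (hc f) (hc g)]
      congr 1; ext x
      exact Nf_add hP (by fun_prop) (by fun_prop) x
    · intro a f
      simp only [derivative_smul, eval_smul, smul_eq_mul, Nf_smul]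
      exact Ex_smul _ _
  have hb := linear_bound hlin (R := p ^ 6) (K := 4 * D ^ 2 * C) (one_le_pow₀ hp.le) le_rfl
    (by positivity) (fun l => ?_) hq k
  · refine hb.trans (le_of_eq ?_)
    rw [← pow_mul]; ring
  · have hN : NT (p ^ 3) (derivative (cS l)) ((l + 1) * ((4 * D * (p ^ 2) ^ l) * (p ^ 3) ^ l)) := by
      refine NT.of_sup (one_le_pow₀ hp.le) ?_ fun x hx =>
        eval_derivative_cS_le hp hD l (hx.trans (two_lt_joukowsky hp).le)
      exact (natDegree_derivative_le _).trans (by have := natDegree_cS_le l; omega)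
    have h1 := Ex_abs_Nf hP hC (R := p ^ 3) (fun k => by rw [← pow_mul]; exact hQ k) hN
    refine h1.trans ?_
    have h2 : (l:ℝ) + 1 ≤ D * p ^ l := (le_self_pow₀ (by linarith [(Nat.cast_nonneg l : (0:ℝ) ≤ l)])
      (by norm_num : 3 ≠ 0)).trans (hD l)
    have h3 : (p ^ 6) ^ l ≤ (p ^ 6) ^ (l + 1) := pow_le_pow_right₀ (one_le_pow₀ hp.le) (by omega)
    calc _ ≤ C * ((D * p ^ l) * ((4 * D * (p ^ 2) ^ l) * (p ^ 3) ^ l)) := by gcongr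
      _ = 4 * D ^ 2 * C * (p ^ 6) ^ l := by
        rw [← pow_mul, ← pow_mul, ← pow_mul, show 6 * l = l + 2 * l + 3 * l by ring, pow_add, pow_add]
        ring
      _ ≤ _ := by gcongr
end

/-- First moments: up to a bounded error, the mean of the statistic of `C_k` is the small multiple
coming from the remainder of the approximate inverse plus an explicit term of order one which is
proportional to `2 - β`. -/
lemma first_moment (p L κ M : ℝ) (hp : 1 < p) (hM : 1 ≤ M) (hκ : 0 < κ) :
    ∃ C : ℝ, 1 ≤ C ∧ ∀ᶠ n : ℕ in Filter.atTop,
      ∀ (V P : ℝ[X]) (c M₀ : ℝ) (β : ℕ), Adm V P c p L κ M₀ M → 1 ≤ β → β ≤ 4 →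
      ∀ q : ℝ[X], NT (p ^ 6) q M → ∀ k : ℕ,
      |(n:ℝ) * β * Ex n β V (p + p⁻¹) (fun x => cc P k x) -
        (n:ℝ) * β * Ex n β V (p + p⁻¹) (fun x => Nf (rho P) (B (cS ((k:ℤ) - 1) * (1 - q * P))) x) -
        (2 - β) * (n * ∫ y, (derivative (cS ((k:ℤ) - 1) * q)).eval y * rho P y)| ≤ C * p ^ (6 * k) := by
  obtain ⟨D, hD0, hD⟩ := exists_poly_le_pow hp
  obtain ⟨C, hC, hev⟩ := second_moment p L κ M hp hM hκ hD
  have hCE := one_le_CE hp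
  refine ⟨4 * (2 * (CE p * D * C) * M) + 2 * (8 * D ^ 2 * C * M) + 1, le_add_of_nonneg_left (by positivity), ?_⟩
  filter_upwards [hev, Filter.eventually_ge_atTop 1] with n hn hn1 V P c M₀ β h hβ hβ4 q hq k
  obtain ⟨m, rfl⟩ : ∃ m, n = m + 1 := ⟨n - 1, by omega⟩
  obtain ⟨hQ, η, hη, hη1⟩ := hn m rfl V P c M₀ β h hβ
  have hZ := h.ZB_pos (m + 1) β h.two_lt.le
  have hl := loop_split h hβ hη q 0 k 1 (fun s hs => eval_test_le hp hD hq k hs)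
    (X₀ := 1) (fun x hx => by simp)
  simp only [eval_zero, Finset.sum_const_zero, zero_add, one_mul, derivative_zero, zero_mul,
    Ex_const hZ, mul_zero] at hl
  set hk : ℝ[X] := cS ((k:ℤ) - 1) * q with hhk
  have hw4 : p ^ (4 * k) ≤ p ^ (6 * k) := pow_le_pow_right₀ hp.le (by omega)
  have t1 : |Ex (m + 1) β V (p + p⁻¹) (fun x => NN P hk x)| ≤ 2 * (CE p * D * C) * M * p ^ (6 * k) := by
    have hlin : IsLinearMap ℝ fun f : ℝ[X] => Ex (m + 1) β V (p + p⁻¹) (fun x => NN P f x) := by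
      simpa using isLinearMap_Ex_NN (V := V) (β := β) (b := p + p⁻¹) (n := m + 1) h.dens
        (X := fun _ => 1) continuous_const
    have hb := linear_bound hlin (R := p ^ 4) (one_le_pow₀ hp.le)
      (pow_le_pow_right₀ hp.le (by norm_num : 4 ≤ 6)) (by positivity)
      (fun l => Ex_abs_NN_cS h.dens hp hZ hD (by linarith) hQ l) hq k
    rw [← pow_mul] at hb
    refine hb.trans ?_
    gcongr
  have t2 := Ex_abs_Nf_derivative h.dens hp (by linarith) hD (Ex_abs_cc hp hZ hC hQ) hq k
  rw [← hhk] at t2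
  have e : (fun x : Fin (m + 1) → ℝ => ∑ i, (derivative hk).eval (x i)) = fun x =>
      Nf (rho P) (fun y => (derivative hk).eval y) x +
        (m + 1 : ℕ) * ∫ y, (derivative hk).eval y * rho P y := by
    ext x; unfold Nf; ring
  have hcn : Continuous fun x : Fin (m + 1) → ℝ => Nf (rho P) (fun y => (derivative hk).eval y) x :=
    Nf_continuous _ (by fun_prop) _
  rw [e, Ex_add hcn continuous_const, Ex_const hZ] at hl
  have t3 : 4 * ((m:ℝ) + 1) * (4 * D * M * p ^ (2 * k) * 1) * η ≤ p ^ (6 * k) := by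
    have e1 : 4 * ((m:ℝ) + 1) * (4 * D * M * p ^ (2 * k) * 1) * η =
        (64 * D * M * ((m + 1 : ℕ):ℝ) * η) * (p ^ (2 * k) / 4) := by push_cast; ring
    rw [e1]
    have h3 : p ^ (2 * k) ≤ p ^ (6 * k) := pow_le_pow_right₀ hp.le (by omega)
    refine (mul_le_of_le_one_left (by positivity) hη1).trans ?_
    linarith [(by positivity : 0 ≤ p ^ (2 * k))]
  have hl' := hl.trans t3
  set A := Ex (m + 1) β V (p + p⁻¹) (fun x => NN P hk x)
  set U := Ex (m + 1) β V (p + p⁻¹) (fun x => Nf (rho P) (fun y => (derivative hk).eval y) x)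
  set w := p ^ (6 * k)
  have hb1 : (1:ℝ) ≤ β := by exact_mod_cast hβ
  have hb4 : (β:ℝ) ≤ 4 := by exact_mod_cast hβ4
  have hw0 : 0 ≤ w := by positivity
  have hA : |β * A| ≤ 4 * (2 * (CE p * D * C) * M * w) := by
    rw [abs_mul, abs_of_pos (by linarith : (0:ℝ) < β)]
    gcongr
  have hU : |(2 - β) * U| ≤ 2 * (8 * D ^ 2 * C * M * w) := by
    rw [abs_mul]
    have : |2 - (β:ℝ)| ≤ 2 := by rw [abs_le]; constructor <;> linarith
    gcongr
  rw [abs_le] at hA hU hl' ⊢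
  push_cast at hl' ⊢
  constructor <;> linarith [hl'.1, hl'.2, hA.1, hA.2, hU.1, hU.2]

/-- The combination of first moments entering the logarithmic derivative of the ratio
`Q_{2K,1} Q_{K,4} / Q_{2K,2}`. -/
noncomputable def DF (V P : ℝ[X]) (p : ℝ) (K : ℕ) (f : ℝ → ℝ) : ℝ :=
  2 * K * Ex (2 * K) 1 V (p + p⁻¹) (fun x => Nf (rho P) f x) +
    4 * K * Ex K 4 V (p + p⁻¹) (fun x => Nf (rho P) f x) -
    4 * K * Ex (2 * K) 2 V (p + p⁻¹) (fun x => Nf (rho P) f x)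

/-- The terms of order one in `first_moment` cancel in `DF`, whence this combination is bounded. -/
lemma diff_moment (p L κ M : ℝ) (hp : 1 < p) (hM : 1 ≤ M) (hκ : 0 < κ) :
    ∃ C : ℝ, 0 ≤ C ∧ ∀ᶠ K : ℕ in Filter.atTop,
      ∀ (V P : ℝ[X]) (c M₀ : ℝ), Adm V P c p L κ M₀ M → ∀ k : ℕ,
      |DF V P p K (fun y => (cC k).eval y)| ≤ C * p ^ (6 * k) := by
  obtain ⟨C, hC, hev⟩ := first_moment p L κ M hp hM hκ
  refine ⟨2 * (3 * C), by positivity, ?_⟩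
  have h2 : Filter.Tendsto (fun K : ℕ => 2 * K) Filter.atTop Filter.atTop :=
    Filter.tendsto_id.const_mul_atTop' (by norm_num)
  filter_upwards [hev, h2.eventually hev] with K h1 h2 V P c M₀ h
  obtain ⟨q, hq, hr⟩ := h.inv
  have hZ1 := h.ZB_pos (2 * K) 1 h.two_lt.le
  have hZ2 := h.ZB_pos (2 * K) 2 h.two_lt.le
  have hZ4 := h.ZB_pos K 4 h.two_lt.le
  refine iterate_bound (by positivity) (fun k => by positivity)
    ⟨2 * K * (8 * K) + 4 * K * (8 * K) + 4 * K * (8 * K), by positivity, fun k => ?_⟩ fun Q hQ0 hQ k => ?_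
  · have hc := fun n => cc_continuous P k n
    have hw : p ^ k ≤ p ^ (6 * k) := pow_le_pow_right₀ hp.le (by omega)
    have b1 := abs_Ex_le_const hZ1 (hc _) fun x hx => abs_cc_le h.dens hp k hx
    have b2 := abs_Ex_le_const hZ2 (hc _) fun x hx => abs_cc_le h.dens hp k hx
    have b4 := abs_Ex_le_const hZ4 (hc _) fun x hx => abs_cc_le h.dens hp k hx
    unfold cc at b1 b2 b4
    push_cast at b1 b2
    have hK : (0:ℝ) ≤ K := Nat.cast_nonneg K
    have hKw : (K:ℝ) * p ^ k ≤ K * p ^ (6 * k) := by gcongr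
    have hKw0 : 0 ≤ (K:ℝ) * p ^ k := by positivity
    have g1 : |2 * K * Ex (2 * K) 1 V (p + p⁻¹) (fun x => Nf (rho P) (fun y => (cC k).eval y) x)| ≤
        2 * K * (8 * K * p ^ (6 * k)) := by
      rw [abs_mul, abs_of_nonneg (by positivity : (0:ℝ) ≤ 2 * K)]
      gcongr; linarith
    have g2 : |4 * K * Ex (2 * K) 2 V (p + p⁻¹) (fun x => Nf (rho P) (fun y => (cC k).eval y) x)| ≤
        4 * K * (8 * K * p ^ (6 * k)) := by
      rw [abs_mul, abs_of_nonneg (by positivity : (0:ℝ) ≤ 4 * K)]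
      gcongr; linarith
    have g4 : |4 * K * Ex K 4 V (p + p⁻¹) (fun x => Nf (rho P) (fun y => (cC k).eval y) x)| ≤
        4 * K * (8 * K * p ^ (6 * k)) := by
      rw [abs_mul, abs_of_nonneg (by positivity : (0:ℝ) ≤ 4 * K)]
      gcongr; linarith
    unfold DF
    rw [abs_le] at g1 g2 g4 ⊢
    constructor <;> linarith [g1.1, g1.2, g2.1, g2.2, g4.1, g4.2]
  · have f1 := h2 V P c M₀ 1 h le_rfl (by norm_num) q hq k
    have f2 := h2 V P c M₀ 2 h (by norm_num) (by norm_num) q hq k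
    have f4 := h1 V P c M₀ 4 h (by norm_num) (by norm_num) q hq k
    have hlin : IsLinearMap ℝ fun f : ℝ[X] => DF V P p K (B f) := by
      have l1 : IsLinearMap ℝ fun f : ℝ[X] =>
          Ex (2 * K) 1 V (p + p⁻¹) (fun x => Nf (rho P) (B f) x) := by
        simpa using isLinearMap_Ex_Nf_B (V := V) (β := 1) (b := p + p⁻¹) (n := 2 * K) h.dens
          (X := fun _ => 1) continuous_const
      have l2 : IsLinearMap ℝ fun f : ℝ[X] =>
          Ex (2 * K) 2 V (p + p⁻¹) (fun x => Nf (rho P) (B f) x) := by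
        simpa using isLinearMap_Ex_Nf_B (V := V) (β := 2) (b := p + p⁻¹) (n := 2 * K) h.dens
          (X := fun _ => 1) continuous_const
      have l4 : IsLinearMap ℝ fun f : ℝ[X] =>
          Ex K 4 V (p + p⁻¹) (fun x => Nf (rho P) (B f) x) := by
        simpa using isLinearMap_Ex_Nf_B (V := V) (β := 4) (b := p + p⁻¹) (n := K) h.dens
          (X := fun _ => 1) continuous_const
      constructor
      · intro f g
        unfold DF
        rw [l1.map_add, l2.map_add, l4.map_add]; ring
      · intro a f
        unfold DF
        rw [l1.map_smul, l2.map_smul, l4.map_smul]; simp only [smul_eq_mul]; ring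
    have hb := linear_bound hlin (R := p ^ 6) (K := Q) (one_le_pow₀ hp.le) le_rfl hQ0 (fun l => ?_) hr k
    · rw [← pow_mul] at hb
      push_cast at f1 f2 f4
      unfold DF at hb ⊢
      unfold cc at f1 f2 f4
      have hw0 : 0 ≤ Q * p ^ (6 * k) := by positivity
      rw [abs_le] at f1 f2 f4 hb ⊢
      constructor <;> linarith [f1.1, f1.2, f2.1, f2.2, f4.1, f4.2, hb.1, hb.2]
    · have : B (cS l) = fun y => (cC ((l + 1 : ℕ):ℤ)).eval y := by
        ext y; rw [B_cS]; push_cast; rfl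
      simp only [this]
      rw [← pow_mul]
      exact hQ (l + 1)
end Stoj

namespace Stoj
open Polynomial Real

/-! ### Interpolation between the Gaussian potential and `V` -/

variable {V P : ℝ[X]} {c p L κ M₀ M : ℝ}

/-- The derivative of the logarithm of the partition function along the interpolation. -/
lemma hasDerivAt_log_ZB (V : ℝ[X]) (n β : ℕ) {b : ℝ} (t : ℝ) (hZ : 0 < ZB n β (Vt V t) b) :
    HasDerivAt (fun t => log (ZB n β (Vt V t) b))
      (-(n * β / 2 * Ex n β (Vt V t) b (fun x => ∑ i, (V - (1 / 2 : ℝ) • X ^ 2).eval (x i)))) t := by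
  set f : ℝ[X] := V - (1 / 2 : ℝ) • X ^ 2 with hf
  have heval : ∀ t s, (Vt V t).eval s = s ^ 2 / 2 + t * f.eval s := by
    intro t s
    rw [Vt_eval, hf, eval_sub, eval_smul, eval_pow, eval_X, smul_eq_mul]; ring
  let F : ℝ → (Fin n → ℝ) → ℝ := fun t x => Wt β (pw n β (Vt V t)) x
  let F' : ℝ → (Fin n → ℝ) → ℝ := fun t x => -(n * β / 2) * ((∑ i, f.eval (x i)) * Wt β (pw n β (Vt V t)) x)
  have hWj : Continuous fun z : ℝ × (Fin n → ℝ) => Wt β (pw n β (Vt V z.1)) z.2 := by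
    unfold Wt pw
    simp only [heval]
    have : Continuous fun z : ℝ × (Fin n → ℝ) => (Matrix.vandermonde z.2).det := by
      refine Continuous.matrix_det ?_
      refine continuous_matrix fun i j => ?_
      simp only [Matrix.vandermonde_apply]
      fun_prop
    fun_prop
  have hcont : ∀ t, Continuous (F t) := fun t => Wt_continuous β (pw_continuous n β _) n
  have hF'j : Continuous fun z : ℝ × (Fin n → ℝ) => F' z.1 z.2 := by
    simp only [F']; fun_prop
  have hF'c : ∀ t, Continuous (F' t) := fun t => hF'j.comp (by fun_prop : Continuous fun x => (t, x))
  obtain ⟨T, hT⟩ := ((isCompact_Icc (a := t - 1) (b := t + 1)).prod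
    (isCompact_univ_pi fun _ : Fin n => isCompact_Icc (a := -b) (b := b))).exists_bound_of_continuousOn
    hF'j.continuousOn
  have hd := (hasDerivAt_integral_of_dominated_loc_of_deriv_le (μ := pim (bx b) n) (F := F) (F' := F')
    (x₀ := t) (s := Set.Icc (t - 1) (t + 1)) (bound := fun _ => T)
    (Icc_mem_nhds (by linarith) (by linarith))
    (Filter.Eventually.of_forall fun s => (hcont s).aestronglyMeasurable)
    (integrable_box (hcont t) b) (hF'c t).aestronglyMeasurable
    (by
      filter_upwards [ae_box b n] with x hx s hs
      exact hT (s, x) ⟨hs, fun i _ => abs_le.mp (hx i)⟩)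
    (integrable_box continuous_const b)
    (Filter.Eventually.of_forall fun x s _ => by
      have h1 : HasDerivAt (fun t => ∑ i, pw n β (Vt V t) (x i)) (∑ i, -(n * β / 2 * f.eval (x i))) s := by
        refine HasDerivAt.fun_sum fun i _ => ?_
        unfold pw
        simp only [heval]
        have := (((hasDerivAt_id s).mul_const (f.eval (x i))).const_add (x i ^ 2 / 2)).const_mul
          ((n:ℝ) * β / 2)
        simpa using this.fun_neg
      have h2 := h1.exp.mul_const (|(Matrix.vandermonde x).det| ^ β)
      refine h2.congr_deriv ?_
      simp only [F', Wt]
      rw [Finset.sum_neg_distrib, ← Finset.mul_sum]; ring)).2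
  have := hd.log hZ.ne'
  refine this.congr_deriv ?_
  unfold Ex ZB
  simp only [F', F]
  rw [integral_const_mul]
  ring

/-- The combination of logarithms of partition functions that is compared along the
interpolation. -/
noncomputable def LR (Z : ℕ → ℕ → ℝ) (K : ℕ) : ℝ :=
  log (Z (2 * K) 1) + log (Z K 4) - log (Z (2 * K) 2)

/-- The partition function over all of `ℝ^n`. -/
noncomputable def ZF (V : ℝ[X]) (n β : ℕ) : ℝ := ∫ x, Wt β (pw n β V) x ∂(pim volume n)

lemma DF_sum (hP : Dens (rho P) M) (p : ℝ) (K N : ℕ) (b : ℕ → ℝ) :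
    DF V P p K (fun y => (∑ k ∈ Finset.range N, b k • cC k).eval y) =
      ∑ k ∈ Finset.range N, b k * DF V P p K (fun y => (cC k).eval y) := by
  have e : (fun y => (∑ k ∈ Finset.range N, b k • cC k).eval y) =
      fun y => ∑ k ∈ Finset.range N, b k * (cC k).eval y := by
    ext y; rw [eval_finsetSum]; simp
  have hc : ∀ (n k : ℕ), Continuous fun x : Fin n → ℝ => b k * Nf (rho P) (fun y => (cC k).eval y) x :=
    fun n k => (cc_continuous P k n).const_mul _
  unfold DF
  rw [e]
  simp only [Nf_sum hP _ (fun k : ℕ => (by fun_prop : Continuous fun y => (cC k).eval y))]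
  rw [Ex_sum _ (hc _), Ex_sum _ (hc _), Ex_sum _ (hc _), Finset.mul_sum, Finset.mul_sum, Finset.mul_sum,
    ← Finset.sum_add_distrib, ← Finset.sum_sub_distrib]
  refine Finset.sum_congr rfl fun k _ => ?_
  rw [Ex_smul, Ex_smul, Ex_smul]; ring

lemma compare_box {Q : ℝ[X]} {c : ℝ}
    (hA : ∀ t, 0 ≤ t → t ≤ 1 → Adm (Vt V t) (Pt Q t) ((1 - t) * (-1) + t * c) p L κ M₀ M) :
    ∃ C : ℝ, ∀ᶠ K : ℕ in Filter.atTop,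
      |LR (fun n β => ZB n β (Vt V 1) (p + p⁻¹)) K - LR (fun n β => ZB n β (Vt V 0) (p + p⁻¹)) K| ≤ C := by
  have h0 := hA 0 le_rfl zero_le_one
  obtain ⟨C, hC, hev⟩ := diff_moment p L κ M h0.p_gt h0.M_one h0.κ_pos
  set f : ℝ[X] := V - (1 / 2 : ℝ) • X ^ 2 with hf
  obtain ⟨b, hb⟩ := exists_expand f.natDegree f le_rfl
  refine ⟨(∑ k ∈ Finset.range (f.natDegree + 1), |b k| * (C * p ^ (6 * k))) / 2, ?_⟩
  filter_upwards [hev] with K hK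
  have hmv := norm_image_sub_le_of_norm_deriv_le_segment_01'
    (f := fun t => LR (fun n β => ZB n β (Vt V t) (p + p⁻¹)) K)
    (f' := fun t => -(DF (Vt V t) (Pt Q t) p K (fun y => f.eval y) / 2))
    (C := (∑ k ∈ Finset.range (f.natDegree + 1), |b k| * (C * p ^ (6 * k))) / 2) ?_ ?_
  · simpa using hmv
  · intro t ht
    have h := hA t ht.1 ht.2
    have d1 := hasDerivAt_log_ZB V (2 * K) 1 t (h.ZB_pos (2 * K) 1 h.two_lt.le)
    have d2 := hasDerivAt_log_ZB V (2 * K) 2 t (h.ZB_pos (2 * K) 2 h.two_lt.le)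
    have d4 := hasDerivAt_log_ZB V K 4 t (h.ZB_pos K 4 h.two_lt.le)
    refine (((d1.add d4).sub d2).congr_deriv ?_).hasDerivWithinAt
    have hE : ∀ n β, Ex n β (Vt V t) (p + p⁻¹) (fun x => ∑ i, f.eval (x i)) =
        Ex n β (Vt V t) (p + p⁻¹) (fun x => Nf (rho (Pt Q t)) (fun y => f.eval y) x) +
          n * ∫ y, f.eval y * rho (Pt Q t) y := by
      intro n β
      have hcn : Continuous fun x : Fin n → ℝ => Nf (rho (Pt Q t)) (fun y => f.eval y) x :=
        Nf_continuous _ (by fun_prop) _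
      have hZ := h.ZB_pos n β h.two_lt.le
      rw [← Ex_const hZ (n * ∫ y, f.eval y * rho (Pt Q t) y), ← Ex_add hcn continuous_const]
      congr 1; ext x
      unfold Nf
      ring
    rw [← hf, hE, hE, hE]
    unfold DF
    push_cast
    ring
  · intro t ht
    have h := hA t ht.1 ht.2.le
    rw [norm_neg, norm_eq_abs, abs_div, abs_two]
    refine div_le_div_of_nonneg_right ?_ (by norm_num)
    conv_lhs => rw [hb]
    rw [DF_sum h.dens]
    refine (Finset.abs_sum_le_sum_abs _ _).trans (Finset.sum_le_sum fun k _ => ?_)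
    rw [abs_mul]
    exact mul_le_mul_of_nonneg_left (hK _ _ _ _ h k) (abs_nonneg _)

lemma grow_of_far {W : ℝ[X]} {L₀ : ℝ} (h : ∀ x, L₀ ≤ |x| → |x| ≤ W.eval x) : Grow W := by
  obtain ⟨T, hT⟩ := (isCompact_Icc (a := -L₀) (b := L₀)).exists_bound_of_continuousOn
    (W.continuous.continuousOn)
  refine ⟨|L₀| + |T|, fun x => ?_⟩
  by_cases hx : L₀ ≤ |x|
  · have := h x hx
    linarith [abs_nonneg L₀, abs_nonneg T]
  · push Not at hx
    have h1 := hT x (abs_le.mp hx.le)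
    have h2 := neg_abs_le (W.eval x)
    rw [norm_eq_abs] at h1
    have := le_abs_self L₀
    have := le_abs_self T
    linarith

lemma grow_V {m : ℕ} (hm : 0 < m) (hdeg : V.natDegree = 2 * m) (hlead : 0 < V.leadingCoeff) : Grow V := by
  obtain ⟨L₀, h⟩ := exists_far_lin hm hdeg hlead 0
  exact grow_of_far fun x hx => by linarith [h x hx, abs_nonneg x]

lemma grow_gauss : Grow ((1 / 2 : ℝ) • X ^ 2 : ℝ[X]) := by
  refine ⟨1, fun x => ?_⟩
  rw [eval_smul, eval_pow, eval_X, smul_eq_mul, ← sq_abs]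
  nlinarith [sq_nonneg (|x| - 1)]

lemma ZB_le_ZF (hV : Grow V) {n β : ℕ} (hn : 1 ≤ n) (hβ : 1 ≤ β) (b : ℝ) : ZB n β V b ≤ ZF V n β := by
  unfold ZB ZF
  refine integral_mono_measure ?_ (Filter.Eventually.of_forall fun x => Wt_nonneg _ _ _)
    (hV.integrable hn hβ)
  rw [pim_restrict]
  exact Measure.restrict_le_self

/-- For large `n` nothing but a factor `4` is lost by confining the particles to the box. -/
lemma ZF_le (p L κ M : ℝ) (hκ : 0 < κ) (hL : 2 ≤ L) (hM : 1 ≤ M) : ∀ᶠ n : ℕ in Filter.atTop,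
    ∀ (V P : ℝ[X]) (c M₀ : ℝ) (β : ℕ), Adm V P c p L κ M₀ M → Grow V → 1 ≤ β →
      |log (ZF V n β) - log (ZB n β V (p + p⁻¹))| ≤ log 4 := by
  filter_upwards [crude_ensemble L M, fine_ensemble p L κ M hκ hL hM, Filter.eventually_ge_atTop 1]
    with n h1 h2 hn V P c M₀ β h hV hβ
  have hZ := h.ZB_pos n β h.two_lt.le
  have b1 : ZF V n β ≤ 4 * ZB n β V (p + p⁻¹) := by
    have e1 := h1 V P c p κ M₀ β h hV hβ
    have e2 := h2 V P c M₀ β h hβ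
    unfold ZF; linarith
  have b2 := ZB_le_ZF hV hn hβ (p + p⁻¹)
  have l1 := log_le_log (hZ.trans_le b2) b1
  rw [log_mul (by norm_num) hZ.ne'] at l1
  have l2 := log_le_log hZ b2
  have : 0 ≤ log 4 := log_nonneg (by norm_num)
  rw [abs_le]; constructor <;> linarith

lemma compare_gauss {m : ℕ} (hm : 0 < m) (hdeg : V.natDegree = 2 * m)
    (hlead : 0 < V.leadingCoeff) {ρ P : ℝ → ℝ} (hC : EquilC12 (fun x => V.eval x) ρ P) :
    ∃ C : ℝ, ∀ᶠ K : ℕ in Filter.atTop,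
      |LR (ZF V) K - LR (ZF ((1 / 2 : ℝ) • X ^ 2)) K| ≤ C := by
  obtain ⟨Q, c, p, L, κ, M₀, M, hA⟩ := exists_adm hm hdeg hlead hC
  obtain ⟨C, hev⟩ := compare_box hA
  have h0 := hA 0 le_rfl zero_le_one
  have h1 := hA 1 zero_le_one le_rfl
  have e0 : Vt V 0 = (1 / 2 : ℝ) • X ^ 2 := by simp [Vt]
  have e1 : Vt V 1 = V := by simp [Vt]
  rw [e0] at h0
  rw [e1] at h1
  rw [e0, e1] at hev
  have hz := ZF_le p L κ M h0.κ_pos (h0.two_lt.le.trans h0.a_lt.le) h0.M_one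
  have h2 : Filter.Tendsto (fun K : ℕ => 2 * K) Filter.atTop Filter.atTop :=
    Filter.tendsto_id.const_mul_atTop' (by norm_num)
  refine ⟨C + 6 * log 4, ?_⟩
  filter_upwards [hev, hz, h2.eventually hz] with K hK g1 g2
  have a1 := g2 _ _ _ _ 1 h1 (grow_V hm hdeg hlead) le_rfl
  have a2 := g2 _ _ _ _ 2 h1 (grow_V hm hdeg hlead) (by norm_num)
  have a4 := g1 _ _ _ _ 4 h1 (grow_V hm hdeg hlead) (by norm_num)
  have b1 := g2 _ _ _ _ 1 h0 grow_gauss le_rfl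
  have b2 := g2 _ _ _ _ 2 h0 grow_gauss (by norm_num)
  have b4 := g1 _ _ _ _ 4 h0 grow_gauss (by norm_num)
  unfold LR at hK ⊢
  rw [abs_le] at a1 a2 a4 b1 b2 b4 hK ⊢
  constructor <;> linarith [a1.1, a1.2, a2.1, a2.2, a4.1, a4.2, b1.1, b1.2, b2.1, b2.2, b4.1, b4.2,
    hK.1, hK.2]
end Stoj

namespace Stoj
open Polynomial Real

/-! ### Pfaffian-type sums -/

/-- The bijection `inl j ↦ 2 j`, `inr j ↦ 2 j + 1`. -/
noncomputable def pe (k : ℕ) : Fin k ⊕ Fin k ≃ Fin (2 * k) :=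
  Equiv.ofBijective (Sum.elim (fun j => ⟨2 * j, by omega⟩) (fun j => ⟨2 * j + 1, by omega⟩)) (by
    rw [Fintype.bijective_iff_injective_and_card]
    refine ⟨?_, by simp; ring⟩
    rintro (i | i) (j | j) h <;> simp [Fin.ext_iff] at h ⊢ <;> omega)

@[simp] lemma pe_inl (k : ℕ) (j : Fin k) : (pe k (Sum.inl j) : ℕ) = 2 * j := rfl
@[simp] lemma pe_inr (k : ℕ) (j : Fin k) : (pe k (Sum.inr j) : ℕ) = 2 * j + 1 := rfl

/-- `2^k k!` times the Pfaffian of `(A - Aᵀ) / 2`, as a sum over all permutations. -/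
noncomputable def Pf {k : ℕ} (A : Fin (2 * k) → Fin (2 * k) → ℝ) : ℝ :=
  ∑ σ : Equiv.Perm (Fin (2 * k)), (Equiv.Perm.sign σ : ℝ) *
    ∏ j, A (σ (pe k (Sum.inl j))) (σ (pe k (Sum.inr j)))

/-- Only the domino tilings contribute to `Pf A` when `A` is supported on the superdiagonal. -/
lemma Pf_super {k : ℕ} {A : Fin (2 * k) → Fin (2 * k) → ℝ}
    (hA : ∀ a b, A a b ≠ 0 → (b:ℕ) = a + 1) :
    Pf A = (Nat.factorial k) * ∏ j, A (pe k (Sum.inl j)) (pe k (Sum.inr j)) := by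
  let φ : Equiv.Perm (Fin k) → Equiv.Perm (Fin (2 * k)) := fun τ =>
    (pe k).permCongr (Equiv.Perm.sumCongr τ τ)
  have hl : ∀ τ j, φ τ (pe k (Sum.inl j)) = pe k (Sum.inl (τ j)) := fun τ j => by simp [φ]
  have hr : ∀ τ j, φ τ (pe k (Sum.inr j)) = pe k (Sum.inr (τ j)) := fun τ j => by simp [φ]
  have hinj : Function.Injective φ := by
    intro τ τ' h
    ext j
    have := hl τ j
    rw [h, hl] at this
    simpa using (congrArg Fin.val (Sum.inl_injective ((pe k).injective this))).symm
  have hsum := Fintype.sum_of_injective φ hinj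
    (fun _ => ∏ j, A (pe k (Sum.inl j)) (pe k (Sum.inr j)))
    (fun σ => (Equiv.Perm.sign σ : ℝ) * ∏ j, A (σ (pe k (Sum.inl j))) (σ (pe k (Sum.inr j)))) ?_ ?_
  · unfold Pf
    rw [← hsum, Finset.sum_const, Finset.card_univ, Fintype.card_perm, Fintype.card_fin, nsmul_eq_mul]
  · intro σ hσ
    by_contra hne
    refine hσ ?_
    have hs : ∀ j, (σ (pe k (Sum.inr j)) : ℕ) = σ (pe k (Sum.inl j)) + 1 := fun j =>
      hA _ _ fun h0 => hne (by rw [Finset.prod_eq_zero (Finset.mem_univ j) h0, mul_zero])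
    have heven : ∀ m : ℕ, ∀ j, (σ (pe k (Sum.inl j)) : ℕ) = m → Even m := by
      intro m
      induction m using Nat.strong_induction_on with
      | _ m ih =>
        intro j hj
        by_contra hodd
        rw [Nat.not_even_iff_odd] at hodd
        obtain ⟨r, hr⟩ := hodd
        have hlt : 2 * r < 2 * k := by have := (σ (pe k (Sum.inl j))).2; omega
        obtain ⟨s, hs'⟩ := ((pe k).trans σ).surjective ⟨2 * r, hlt⟩
        rcases s with i | i
        · have h1 := hs i
          have h2 : (σ (pe k (Sum.inl i)) : ℕ) = 2 * r := congrArg Fin.val hs'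
          have h3 : σ (pe k (Sum.inr i)) = σ (pe k (Sum.inl j)) := Fin.ext (by omega)
          have := (pe k).injective (σ.injective h3)
          simp at this
        · have h1 := hs i
          have h2 : (σ (pe k (Sum.inr i)) : ℕ) = 2 * r := congrArg Fin.val hs'
          have h3 := ih (σ (pe k (Sum.inl i)) : ℕ) (by omega) i rfl
          rw [Nat.even_iff] at h3
          omega
    have hex : ∀ j, ∃ i : Fin k, σ (pe k (Sum.inl j)) = pe k (Sum.inl i) := fun j => by
      obtain ⟨r, hr⟩ := heven _ j rfl
      have := (σ (pe k (Sum.inl j))).2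
      exact ⟨⟨r, by omega⟩, Fin.ext (by simp; omega)⟩
    choose t ht using hex
    have htinj : Function.Injective t := by
      intro i j hij
      have : σ (pe k (Sum.inl i)) = σ (pe k (Sum.inl j)) := by rw [ht, ht, hij]
      exact Sum.inl_injective ((pe k).injective (σ.injective this))
    refine ⟨Equiv.ofBijective t (Finite.injective_iff_bijective.mp htinj), ?_⟩
    refine Equiv.ext fun a => ?_
    obtain ⟨s, rfl⟩ := (pe k).surjective a
    rcases s with j | j
    · rw [hl, ht]; rfl
    · rw [hr]
      refine Fin.ext ?_
      rw [hs, ht]; rfl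
  · intro τ
    have hsign : Equiv.Perm.sign (φ τ) = 1 := by
      simp only [φ, Equiv.Perm.sign_permCongr, Equiv.Perm.sign_sumCongr]
      exact Int.units_mul_self _
    rw [hsign]
    simp only [hl, hr]
    rw [Equiv.prod_comp τ fun j => A (pe k (Sum.inl j)) (pe k (Sum.inr j))]
    simp

/-- `Pf` only sees the antisymmetric part. -/
lemma Pf_add_symm {k : ℕ} (A S : Fin (2 * k) → Fin (2 * k) → ℝ) (hS : ∀ a b, S a b = S b a) :
    Pf (fun a b => A a b + S a b) = Pf A := by
  unfold Pf
  simp only [Finset.prod_add, Finset.mul_sum]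
  rw [Finset.sum_comm, Finset.sum_eq_single_of_mem Finset.univ (Finset.mem_powerset_self _)]
  · simp
  · intro s _ hs
    obtain ⟨j, hj⟩ : ∃ j, j ∉ s := by
      by_contra h; push Not at h; exact hs (Finset.eq_univ_iff_forall.mpr h)
    set u := Equiv.swap (pe k (Sum.inl j)) (pe k (Sum.inr j)) with hu
    have hne : pe k (Sum.inl j) ≠ pe k (Sum.inr j) := fun h => by simpa using (pe k).injective h
    set T : Equiv.Perm (Fin (2 * k)) → ℝ := fun σ => (Equiv.Perm.sign σ : ℝ) *
      ((∏ i ∈ s, A (σ (pe k (Sum.inl i))) (σ (pe k (Sum.inr i)))) *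
        ∏ i ∈ Finset.univ \ s, S (σ (pe k (Sum.inl i))) (σ (pe k (Sum.inr i)))) with hT
    have hneg : ∀ σ, T (σ * u) = -T σ := by
      intro σ
      have e1 : ∀ i ≠ j, u (pe k (Sum.inl i)) = pe k (Sum.inl i) ∧ u (pe k (Sum.inr i)) = pe k (Sum.inr i) := by
        intro i hij
        constructor <;> refine Equiv.swap_apply_of_ne_of_ne ?_ ?_ <;> simp [hij]
      have h1 : ∏ i ∈ s, A ((σ * u) (pe k (Sum.inl i))) ((σ * u) (pe k (Sum.inr i))) =
          ∏ i ∈ s, A (σ (pe k (Sum.inl i))) (σ (pe k (Sum.inr i))) := by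
        refine Finset.prod_congr rfl fun i hi => ?_
        have := e1 i (fun h => hj (h ▸ hi))
        rw [Equiv.Perm.mul_apply, Equiv.Perm.mul_apply, this.1, this.2]
      have h2 : ∏ i ∈ Finset.univ \ s, S ((σ * u) (pe k (Sum.inl i))) ((σ * u) (pe k (Sum.inr i))) =
          ∏ i ∈ Finset.univ \ s, S (σ (pe k (Sum.inl i))) (σ (pe k (Sum.inr i))) := by
        refine Finset.prod_congr rfl fun i hi => ?_
        rw [Equiv.Perm.mul_apply, Equiv.Perm.mul_apply]
        by_cases hij : i = j
        · subst hij
          rw [hu, Equiv.swap_apply_left, Equiv.swap_apply_right, hS]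
        · rw [(e1 i hij).1, (e1 i hij).2]
      simp only [hT]
      rw [h1, h2, Equiv.Perm.sign_mul, hu, Equiv.Perm.sign_swap hne]
      push_cast
      ring
    have h3 : ∑ σ, T (σ * u) = ∑ σ, T σ := Equiv.sum_comp (Equiv.mulRight u) T
    simp only [hneg, Finset.sum_neg_distrib] at h3
    have : ∑ σ, T σ = 0 := by linarith
    exact this

/-- The transformation of `Pf` under congruence. -/
lemma Pf_congr {k : ℕ} (A : Fin (2 * k) → Fin (2 * k) → ℝ) (B : Matrix (Fin (2 * k)) (Fin (2 * k)) ℝ) :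
    Pf (fun a b => ∑ z : Fin (2 * k) × Fin (2 * k), B a z.1 * A z.1 z.2 * B b z.2) = B.det * Pf A := by
  unfold Pf
  simp only [Finset.prod_univ_sum, Fintype.piFinset_univ, Finset.mul_sum]
  rw [Finset.sum_comm]
  let y : (Fin k → Fin (2 * k) × Fin (2 * k)) → Fin (2 * k) → Fin (2 * k) := fun x =>
    Sum.elim (fun j => (x j).1) (fun j => (x j).2) ∘ (pe k).symm
  have hterm : ∀ x : Fin k → Fin (2 * k) × Fin (2 * k),
      ∑ σ : Equiv.Perm (Fin (2 * k)), (Equiv.Perm.sign σ : ℝ) *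
        ∏ j, B (σ (pe k (Sum.inl j))) (x j).1 * A (x j).1 (x j).2 * B (σ (pe k (Sum.inr j))) (x j).2 =
      (∏ j, A (x j).1 (x j).2) * (B.submatrix id (y x)).det := by
    intro x
    rw [Matrix.det_apply', Finset.mul_sum]
    refine Finset.sum_congr rfl fun σ _ => ?_
    rw [← Equiv.prod_comp (pe k), Fintype.prod_sum_type]
    simp only [Matrix.submatrix_apply, id, y, Function.comp, Equiv.symm_apply_apply, Sum.elim_inl,
      Sum.elim_inr, Finset.prod_mul_distrib]
    ring
  simp only [hterm]
  symm
  refine Fintype.sum_of_injective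
    (fun (τ : Equiv.Perm (Fin (2 * k))) j => (τ (pe k (Sum.inl j)), τ (pe k (Sum.inr j)))) ?_ _ _ ?_ ?_
  · intro τ τ' h
    refine Equiv.ext fun a => ?_
    obtain ⟨s, rfl⟩ := (pe k).surjective a
    rcases s with j | j
    · exact congrArg Prod.fst (congrFun h j)
    · exact congrArg Prod.snd (congrFun h j)
  · intro x hx
    have hni : ¬ Function.Injective (y x) := by
      intro hi
      refine hx ⟨Equiv.ofBijective (y x) (Finite.injective_iff_bijective.mp hi), ?_⟩
      ext j <;> simp [y]
    rw [Function.not_injective_iff] at hni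
    obtain ⟨a, b, hab, hne⟩ := hni
    rw [Matrix.det_zero_of_column_eq hne (fun i => by simp [hab]), mul_zero]
  · intro τ
    have hy : y (fun j => (τ (pe k (Sum.inl j)), τ (pe k (Sum.inr j)))) = τ := by
      funext a
      obtain ⟨s, rfl⟩ := (pe k).surjective a
      rcases s with j | j <;> simp [y]
    rw [hy, Matrix.det_permute']
    ring

lemma sum_fin_val_eq {n : ℕ} (m : ℕ) (f : Fin n → ℝ) :
    (∑ d : Fin n, if (d:ℕ) = m then f d else 0) = if h : m < n then f ⟨m, h⟩ else 0 := by
  split_ifs with h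
  · rw [Finset.sum_eq_single ⟨m, h⟩]
    · simp
    · intro d _ hd
      rw [if_neg fun h' => hd (Fin.ext h')]
    · simp
  · refine Finset.sum_eq_zero fun d _ => if_neg ?_
    have := d.2; omega

/-- For an increasing configuration the order indicators have `Pf` equal to `k!`. -/
lemma Pf_lt (k : ℕ) : Pf (fun a b : Fin (2 * k) => if a < b then (1:ℝ) else 0) = Nat.factorial k := by
  let B : Matrix (Fin (2 * k)) (Fin (2 * k)) ℝ := fun a c =>
    (if (c:ℕ) = a then 1 else 0) - (if (c:ℕ) = a + 1 then 1 else 0)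
  have hdet : B.det = 1 := by
    rw [Matrix.det_of_isUpperTriangular]
    · refine Finset.prod_eq_one fun a _ => ?_
      simp [B]
    · intro a b hab
      have : (b:ℕ) < a := hab
      simp only [B]
      rw [if_neg (by omega), if_neg (by omega)]; simp
  have h := Pf_congr (fun a b : Fin (2 * k) => if a < b then (1:ℝ) else 0) B
  rw [hdet, one_mul] at h
  rw [← h]
  -- after summation by parts the indicator becomes a superdiagonal matrix minus the identity
  have e : (fun a b : Fin (2 * k) => ∑ z : Fin (2 * k) × Fin (2 * k),
      B a z.1 * (if z.1 < z.2 then (1:ℝ) else 0) * B b z.2) =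
      fun (a b : Fin (2 * k)) => (if (b:ℕ) = (a:ℕ) + 1 then (1:ℝ) else 0) +
        (if a = b ∧ (a:ℕ) + 1 < 2 * k then (-1:ℝ) else 0) := by
    funext a b
    have h1 : ∀ c : Fin (2 * k), ∑ d, B a c * (if c < d then (1:ℝ) else 0) * B b d =
        B a c * ((if c < b then 1 else 0) - (if (b:ℕ) + 1 < 2 * k then (if (c:ℕ) < b + 1 then 1 else 0) else 0)) := by
      intro c
      simp only [B, mul_sub, Finset.sum_sub_distrib, mul_ite, mul_one, mul_zero]
      rw [sum_fin_val_eq, sum_fin_val_eq]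
      simp only [Fin.is_lt, dite_true, Fin.eta, Fin.lt_def]
      simp
    rw [Fintype.sum_prod_type]
    simp only [h1]
    simp only [B, sub_mul, Finset.sum_sub_distrib, ite_mul, one_mul, zero_mul]
    rw [sum_fin_val_eq, sum_fin_val_eq]
    have ha := a.2
    have hb := b.2
    simp only [Fin.is_lt, dite_true, Fin.eta, Fin.lt_def, Fin.ext_iff]
    split_ifs <;> first | omega | norm_num
  rw [e, Pf_add_symm _ _ (fun a b => by
    by_cases hab : a = b
    · rw [hab]
    · rw [if_neg (fun h => hab h.1), if_neg (fun h => hab h.1.symm)])]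
  rw [Pf_super (fun a b hab => by by_contra h; exact hab (if_neg h))]
  simp

/-- De Bruijn's identity for the signs of an arbitrary configuration. -/
lemma abs_det_eq_Pf {k : ℕ} (x : Fin (2 * k) → ℝ) :
    (Nat.factorial k) * |(Matrix.vandermonde x).det| =
      (Matrix.vandermonde x).det * Pf (fun a b => if x a < x b then (1:ℝ) else 0) := by
  by_cases hx : Function.Injective x
  swap
  · have : (Matrix.vandermonde x).det = 0 := by
      by_contra h; exact hx (Matrix.det_vandermonde_ne_zero_iff.mp h)
    rw [this]; simp
  set τ := Tuple.sort x with hτ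
  have hmono : StrictMono (x ∘ τ) :=
    (Tuple.monotone_sort x).strictMono_of_injective (hx.comp τ.injective)
  have h1 : (Matrix.vandermonde (x ∘ τ)).det = Equiv.Perm.sign τ * (Matrix.vandermonde x).det := by
    have : Matrix.vandermonde (x ∘ τ) = (Matrix.vandermonde x).submatrix τ id := by
      ext i j; simp [Matrix.vandermonde_apply]
    rw [this, Matrix.det_permute]
  have h2 : Pf (fun a b => if x (τ a) < x (τ b) then (1:ℝ) else 0) =
      Equiv.Perm.sign τ * Pf (fun a b => if x a < x b then (1:ℝ) else 0) := by
    unfold Pf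
    rw [← Equiv.sum_comp (Equiv.mulLeft τ) (fun σ : Equiv.Perm (Fin (2 * k)) => (Equiv.Perm.sign σ : ℝ) *
      ∏ j, if x (σ (pe k (Sum.inl j))) < x (σ (pe k (Sum.inr j))) then (1:ℝ) else 0), Finset.mul_sum]
    refine Finset.sum_congr rfl fun σ _ => ?_
    simp only [Equiv.coe_mulLeft, Equiv.Perm.sign_mul, Equiv.Perm.mul_apply]
    push_cast
    rcases Int.units_eq_one_or (Equiv.Perm.sign τ) with h | h <;> rw [h] <;> simp <;> congr
  have h3 : Pf (fun a b => if x (τ a) < x (τ b) then (1:ℝ) else 0) = Nat.factorial k := by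
    rw [← Pf_lt k]
    congr 1
    funext a b
    have : x (τ a) < x (τ b) ↔ a < b := hmono.lt_iff_lt
    simp only [this]
  have h4 : 0 < (Matrix.vandermonde (x ∘ τ)).det := by
    rw [Matrix.det_vandermonde]
    exact Finset.prod_pos fun i _ => Finset.prod_pos fun j hj =>
      sub_pos.mpr (hmono (Finset.mem_Ioi.mp hj))
  have h5 : |(Matrix.vandermonde x).det| = Equiv.Perm.sign τ * (Matrix.vandermonde x).det := by
    rw [← h1, ← abs_of_pos h4, h1, abs_mul]
    rcases Int.units_eq_one_or (Equiv.Perm.sign τ) with h | h <;> rw [h] <;> simp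
  rw [h5, ← h3, h2]
  rcases Int.units_eq_one_or (Equiv.Perm.sign τ) with h | h <;> rw [h] <;> simp <;> ring
end Stoj

namespace Stoj
open Polynomial Real

/-! ### The confluent Vandermonde determinant -/

lemma det_vandermonde_ite {n : ℕ} (z : Fin n → ℝ) :
    (Matrix.vandermonde z).det = ∏ a, ∏ b, if a < b then z b - z a else 1 := by
  rw [Matrix.det_vandermonde]
  refine Finset.prod_congr rfl fun a _ => ?_
  rw [← Finset.prod_filter]
  refine Finset.prod_congr ?_ fun _ _ => rfl
  ext; simp

/-- The confluent Vandermonde determinant: columns are monic polynomials, rows are values and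
derivatives at the points `x j`. It is the limit of ordinary Vandermonde determinants at the points
`x j`, `x j + ε`, divided by `ε ^ k`. -/
lemma det_confluent {k : ℕ} (x : Fin k → ℝ) (p : ℕ → ℝ[X]) (hd : ∀ (i : ℕ), (p i).natDegree = i)
    (hp : ∀ (i : ℕ), (p i).Monic) :
    (Matrix.of fun (s t : Fin k ⊕ Fin k) => (Sum.elim (fun j => (p (pe k t)).eval (x j))
      (fun j => (derivative (p (pe k t))).eval (x j)) s : ℝ)).det =
      (Matrix.vandermonde x).det ^ 4 := by
  let W : ℝ → Matrix (Fin k ⊕ Fin k) (Fin k ⊕ Fin k) ℝ := fun ε => Matrix.of fun s t =>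
    Sum.elim (fun j => (p (pe k t)).eval (x j)) (fun j => dq (p (pe k t)) (x j + ε) (x j)) s
  let G : ℝ → ℝ := fun ε => ∏ i, ∏ j, if i < j then
    (x j - x i) ^ 2 * (x j + ε - x i) * (x j - x i - ε) else 1
  have key : ∀ ε, ε ^ k * (W ε).det = ε ^ k * G ε := by
    intro ε
    let z : Fin (2 * k) → ℝ := Sum.elim x (fun j => x j + ε) ∘ (pe k).symm
    have h1 : (Matrix.vandermonde z).det = ε ^ k * (W ε).det := by
      rw [Matrix.det_eval_matrixOfPolynomials_eq_det_vandermonde z (fun i => p i) (fun i => hd i)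
        (fun i => hp i), ← Matrix.det_submatrix_equiv_self (pe k)]
      have : (Matrix.of fun i (j : Fin (2 * k)) => (p j).eval (z i)).submatrix (pe k) (pe k) =
          Matrix.fromBlocks 1 0 1 (ε • (1 : Matrix (Fin k) (Fin k) ℝ)) * W ε := by
        ext s t
        rw [Matrix.mul_apply, Fintype.sum_sum_type]
        rcases s with j | j
        · simp [z, W, Matrix.one_apply]
        · have := dq_mul_sub (p (pe k t)) (x j + ε) (x j)
          simp only [Matrix.submatrix_apply, Matrix.of_apply, z, Function.comp,
            Equiv.symm_apply_apply, Sum.elim_inr, Matrix.fromBlocks_apply₂₁,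
            Matrix.fromBlocks_apply₂₂, W, Sum.elim_inl, Matrix.one_apply, Matrix.smul_apply,
            ite_mul, one_mul, zero_mul, Finset.sum_ite_eq, Finset.mem_univ, if_true, smul_eq_mul,
            mul_ite, mul_one, mul_zero]
          linarith
      rw [this, Matrix.det_mul, Matrix.det_fromBlocks_zero₁₂]
      simp
    rw [← h1, det_vandermonde_ite, ← Equiv.prod_comp (pe k)]
    simp only [← Equiv.prod_comp (pe k) (fun b => if _ < b then z b - z _ else (1:ℝ))]
    simp only [Fintype.prod_sum_type]
    have h2 : ε ^ k = ∏ i : Fin k, ∏ j : Fin k, if i = j then ε else 1 := by simp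
    rw [h2]
    simp only [G, ← Finset.prod_mul_distrib]
    refine Finset.prod_congr rfl fun i _ => Finset.prod_congr rfl fun j _ => ?_
    simp only [z, Function.comp, Equiv.symm_apply_apply, Sum.elim_inl, Sum.elim_inr, Fin.lt_def,
      pe_inl, pe_inr, Fin.ext_iff]
    rcases lt_trichotomy (i:ℕ) j with h | h | h
    · rw [if_pos (by omega), if_pos (by omega), if_pos (by omega), if_pos (by omega),
        if_neg (by omega), if_pos h]
      ring
    · obtain rfl : i = j := Fin.ext h
      simp
    · rw [if_neg (by omega), if_neg (by omega), if_neg (by omega), if_neg (by omega),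
        if_neg (by omega), if_neg (by omega)]
      ring
  have hWc : Continuous fun ε => (W ε).det := by
    refine Continuous.matrix_det (continuous_matrix fun s t => ?_)
    rcases s with j | j
    · exact continuous_const
    · exact (dq_continuous (p (pe k t))).comp (by fun_prop : Continuous fun ε : ℝ => (x j + ε, x j))
  have hGc : Continuous G := by
    refine continuous_finsetProd _ fun i _ => continuous_finsetProd _ fun j _ => ?_
    split_ifs <;> fun_prop
  have hWG : (fun ε => (W ε).det) = G := by
    refine Continuous.ext_on (dense_compl_singleton (0:ℝ)) hWc hGc fun ε hε => ?_
    exact mul_left_cancel₀ (pow_ne_zero k hε) (key ε)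
  have h0 := congrFun hWG 0
  rw [det_vandermonde_ite]
  simp only [← Finset.prod_pow]
  convert h0 using 1
  · congr 1
    ext s t
    rcases s with j | j <;> simp [W, dq_self]
  · refine Finset.prod_congr rfl fun i _ => Finset.prod_congr rfl fun j _ => ?_
    split_ifs <;> ring

/-! ### Gaussian integrals of polynomials -/

lemma integrable_gauss {b : ℝ} (hb : 0 < b) (p : ℝ[X]) :
    Integrable fun x : ℝ => p.eval x * exp (-b * x ^ 2) := by
  simp only [eval_eq_sum_range, Finset.sum_mul]
  refine integrable_finsetSum _ fun i _ => ?_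
  have := (integrable_rpow_mul_exp_neg_mul_sq hb (s := (i:ℝ))
    (by have := Nat.cast_nonneg (α := ℝ) i; linarith)).const_mul (p.coeff i)
  refine this.congr (ae_of_all _ fun x => ?_)
  simp only [rpow_natCast]; ring

lemma hasDerivAt_gauss (b : ℝ) (p : ℝ[X]) (x : ℝ) :
    HasDerivAt (fun x => p.eval x * exp (-b * x ^ 2))
      ((derivative p - C (2 * b) * X * p).eval x * exp (-b * x ^ 2)) x := by
  have h1 : HasDerivAt (fun x : ℝ => -b * x ^ 2) (-b * (2 * x)) x := by
    simpa using (hasDerivAt_pow 2 x).const_mul (-b)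
  refine ((p.hasDerivAt x).mul h1.exp).congr_deriv ?_
  simp; ring

/-- The Gaussian functional `p ↦ ∫ p(x) e^{-b x²} dx`. -/
noncomputable def ig (b : ℝ) (p : ℝ[X]) : ℝ := ∫ x : ℝ, p.eval x * exp (-b * x ^ 2)

lemma ig_sub {b : ℝ} (hb : 0 < b) (p q : ℝ[X]) : ig b (p - q) = ig b p - ig b q := by
  unfold ig
  rw [← integral_sub (integrable_gauss hb p) (integrable_gauss hb q)]
  simp only [eval_sub, sub_mul]

lemma ig_add {b : ℝ} (hb : 0 < b) (p q : ℝ[X]) : ig b (p + q) = ig b p + ig b q := by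
  unfold ig
  rw [← integral_add (integrable_gauss hb p) (integrable_gauss hb q)]
  simp only [eval_add, add_mul]

lemma ig_C_mul (b a : ℝ) (p : ℝ[X]) : ig b (C a * p) = a * ig b p := by
  unfold ig
  rw [← integral_const_mul]
  simp only [eval_mul, eval_C, mul_assoc]

lemma ig_ibp {b : ℝ} (hb : 0 < b) (p : ℝ[X]) : ig b (derivative p) = 2 * b * ig b (X * p) := by
  have h := integral_eq_zero_of_hasDerivAt_of_integrable (hasDerivAt_gauss b p)
    (integrable_gauss hb _) (integrable_gauss hb p)
  change ig b _ = 0 at h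
  rw [ig_sub hb, mul_assoc, ig_C_mul] at h
  linarith

/-! ### Hermite polynomials for the weight `e^{-N x² / 2}` -/

/-- Monic Hermite polynomials for the weight `e^{-N x² / 2}`. -/
noncomputable def hp (N : ℝ) : ℕ → ℝ[X]
  | 0 => 1
  | i + 1 => X * hp N i - C (1 / N) * derivative (hp N i)

/-- `X p + a p'` is monic of degree `i + 1` when `p` is monic of degree `i`. -/
lemma monic_X_mul_sub {p : ℝ[X]} {i : ℕ} (hp : p.Monic) (hd : p.natDegree = i) (a : ℝ) :
    (X * p - C a * derivative p).Monic ∧ (X * p - C a * derivative p).natDegree = i + 1 := by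
  have hX : (X * p).Monic := monic_X.mul hp
  have hXd : (X * p).natDegree = i + 1 := by rw [monic_X.natDegree_mul hp, hd, natDegree_X]; ring
  have hlt : (C a * derivative p).natDegree < (X * p).natDegree := by
    rw [hXd]
    have := natDegree_C_mul_le a (derivative p)
    have := natDegree_derivative_le p
    omega
  have hlt' : (C a * derivative p).degree < (X * p).degree := degree_lt_degree hlt
  exact ⟨hX.sub_of_left hlt', by rw [natDegree_sub_eq_left_of_natDegree_lt hlt, hXd]⟩

lemma hp_monic (N : ℝ) (i : ℕ) : (hp N i).Monic ∧ (hp N i).natDegree = i := by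
  induction i with
  | zero => simp [hp]
  | succ i ih => exact monic_X_mul_sub ih.1 ih.2 _

lemma hp_derivative (N : ℝ) (i : ℕ) : derivative (hp N (i + 1)) = C ((i:ℝ) + 1) * hp N i := by
  induction i with
  | zero => simp [hp]
  | succ i ih =>
    rw [hp, derivative_sub, derivative_mul, derivative_mul, ih]
    simp only [derivative_X, derivative_C, derivative_mul, hp]
    push_cast
    simp only [C_add, C_1]
    ring

lemma hp_parity (N : ℝ) (i : ℕ) (x : ℝ) :
    (hp N i).eval (-x) = (-1) ^ i * (hp N i).eval x ∧
      (derivative (hp N i)).eval (-x) = -(-1) ^ i * (derivative (hp N i)).eval x := by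
  induction i with
  | zero => simp [hp]
  | succ i ih =>
    refine ⟨?_, ?_⟩
    · simp only [hp, eval_sub, eval_mul, eval_X, eval_C, ih.1, ih.2]; ring
    · rw [hp_derivative, eval_mul, eval_mul, ih.1]; simp; ring

/-- The squared norms of the Hermite polynomials. -/
noncomputable def hn (N : ℝ) (i : ℕ) : ℝ := ig (N / 2) (hp N i * hp N i)

lemma ig_hp_succ {N : ℝ} (hN : 0 < N) (i : ℕ) (g : ℝ[X]) :
    ig (N / 2) (hp N (i + 1) * g) = 1 / N * ig (N / 2) (hp N i * derivative g) := by
  have hb : 0 < N / 2 := by positivity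
  have h := ig_ibp hb (hp N i * g)
  rw [derivative_mul, ig_add hb] at h
  have e : hp N (i + 1) * g = X * (hp N i * g) - C (1 / N) * (derivative (hp N i) * g) := by
    rw [hp]; ring
  rw [e, ig_sub hb, ig_C_mul]
  field_simp
  linarith

lemma hn_succ {N : ℝ} (hN : 0 < N) (i : ℕ) : hn N (i + 1) = ((i:ℝ) + 1) / N * hn N i := by
  unfold hn
  rw [ig_hp_succ hN, hp_derivative, mul_left_comm, ig_C_mul]
  ring

lemma ig_hp_mul_hp {N : ℝ} (hN : 0 < N) (i j : ℕ) :
    ig (N / 2) (hp N i * hp N j) = if i = j then hn N i else 0 := by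
  have hlt : ∀ (i j : ℕ), i < j → ig (N / 2) (hp N j * hp N i) = 0 := by
    intro i
    induction i with
    | zero =>
      intro j hj
      obtain ⟨j, rfl⟩ : ∃ r, j = r + 1 := ⟨j - 1, by omega⟩
      rw [ig_hp_succ hN]; simp [hp, ig]
    | succ i ih =>
      intro j hj
      obtain ⟨j, rfl⟩ : ∃ r, j = r + 1 := ⟨j - 1, by omega⟩
      rw [ig_hp_succ hN, hp_derivative, mul_left_comm, ig_C_mul, ih j (by omega)]
      simp
  split_ifs with h
  · rw [h]; rfl
  · rcases lt_or_gt_of_ne h with h | h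
    · rw [mul_comm, hlt _ _ h]
    · exact hlt _ _ h
end Stoj

namespace Stoj
open Polynomial Real

/-! ### The Gaussian partition functions -/

lemma det_expand {n : ℕ} (x : Fin n → ℝ) (p : ℕ → ℝ[X]) (hd : ∀ (i : ℕ), (p i).natDegree = i)
    (hp : ∀ (i : ℕ), (p i).Monic) :
    (Matrix.vandermonde x).det =
      ∑ σ : Equiv.Perm (Fin n), (Equiv.Perm.sign σ : ℝ) * ∏ a, (p (σ a)).eval (x a) := by
  rw [Matrix.det_eval_matrixOfPolynomials_eq_det_vandermonde x (fun i => p i) (fun i => hd i)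
    (fun i => hp i), ← Matrix.det_transpose, Matrix.det_apply']
  rfl

lemma conf_expand {k : ℕ} (x : Fin k → ℝ) (p : ℕ → ℝ[X]) (hd : ∀ (i : ℕ), (p i).natDegree = i)
    (hp : ∀ (i : ℕ), (p i).Monic) :
    (Matrix.vandermonde x).det ^ 4 =
      ∑ σ : Equiv.Perm (Fin (2 * k)), (Equiv.Perm.sign σ : ℝ) *
        ∏ j, (p (σ (pe k (Sum.inl j))) * derivative (p (σ (pe k (Sum.inr j))))).eval (x j) := by
  rw [← det_confluent x p hd hp, ← Matrix.det_submatrix_equiv_self (pe k).symm,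
    ← Matrix.det_transpose, Matrix.det_apply']
  refine Finset.sum_congr rfl fun σ _ => ?_
  congr 1
  rw [← Equiv.prod_comp (pe k), Fintype.prod_sum_type, ← Finset.prod_mul_distrib]
  simp

lemma exp_sum_gauss {n m β : ℕ} {b : ℝ} (hb : (m:ℝ) * β / 4 = b) (x : Fin n → ℝ) :
    exp (∑ i, pw m β ((1/2:ℝ) • X ^ 2) (x i)) = ∏ i, exp (-b * x i ^ 2) := by
  rw [exp_sum]
  refine Finset.prod_congr rfl fun i _ => ?_
  congr 1
  simp only [pw, eval_smul, eval_pow, eval_X, smul_eq_mul, ← hb]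
  ring

/-- The Gaussian partition function at `β = 2`. -/
lemma gauss_two {n : ℕ} (hn1 : 1 ≤ n) :
    ZF ((1/2:ℝ) • X ^ 2) n 2 = (Nat.factorial n) * ∏ i : Fin n, hn n i := by
  have hN : (0:ℝ) < n := by exact_mod_cast hn1
  have hb : (0:ℝ) < n / 2 := by positivity
  have e : ∀ x : Fin n → ℝ, Wt 2 (pw n 2 ((1/2:ℝ) • X ^ 2)) x =
      ∑ σ : Equiv.Perm (Fin n), ∑ τ : Equiv.Perm (Fin n),
        ((Equiv.Perm.sign σ : ℝ) * (Equiv.Perm.sign τ : ℝ)) *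
          ∏ a, ((hp n (σ a) * hp n (τ a)).eval (x a) * exp (-(n / 2 : ℝ) * x a ^ 2)) := by
    intro x
    rw [Wt, exp_sum_gauss (b := n / 2) (by push_cast; ring), sq_abs, sq]
    conv_lhs => rw [det_expand x (hp n) (fun i => (hp_monic _ i).2) (fun i => (hp_monic _ i).1)]
    rw [Finset.sum_mul_sum, Finset.mul_sum]
    refine Finset.sum_congr rfl fun σ _ => ?_
    rw [Finset.mul_sum]
    refine Finset.sum_congr rfl fun τ _ => ?_
    simp only [eval_mul, Finset.prod_mul_distrib]
    ring
  have hintg : ∀ σ τ : Equiv.Perm (Fin n), Integrable (fun x : Fin n → ℝ =>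
      ∏ a, ((hp n (σ a) * hp n (τ a)).eval (x a) * exp (-(n / 2 : ℝ) * x a ^ 2))) := fun σ τ =>
    Integrable.fintype_prod (f := fun a s => (hp n (σ a) * hp n (τ a)).eval s * exp (-(n / 2 : ℝ) * s ^ 2))
      fun a => integrable_gauss hb _
  have hval : ∀ σ τ : Equiv.Perm (Fin n), (∫ x : Fin n → ℝ,
      ∏ a, ((hp n (σ a) * hp n (τ a)).eval (x a) * exp (-(n / 2 : ℝ) * x a ^ 2))) =
      if σ = τ then ∏ i : Fin n, hn n i else 0 := by
    intro σ τ
    rw [integral_fintype_prod_volume_eq_prod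
      (fun a s => (hp n (σ a) * hp n (τ a)).eval s * exp (-(n / 2 : ℝ) * s ^ 2))]
    change ∏ a, ig (n / 2) (hp n (σ a) * hp n (τ a)) = _
    simp only [ig_hp_mul_hp hN]
    split_ifs with h
    · subst h
      simp only [if_true]
      exact Equiv.prod_comp σ (fun i : Fin n => hn n i)
    · obtain ⟨a, ha⟩ : ∃ a, σ a ≠ τ a := by
        by_contra h'; push Not at h'; exact h (Equiv.ext h')
      exact Finset.prod_eq_zero (Finset.mem_univ a) (if_neg fun h' => ha (Fin.ext h'))
  change ∫ x : Fin n → ℝ, Wt 2 (pw n 2 ((1/2:ℝ) • X ^ 2)) x = _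
  simp only [e]
  rw [integral_finsetSum _ fun σ _ => integrable_finsetSum _ fun τ _ => (hintg σ τ).const_mul _]
  have h1 : ∀ σ : Equiv.Perm (Fin n), (∫ x : Fin n → ℝ, ∑ τ : Equiv.Perm (Fin n),
        ((Equiv.Perm.sign σ : ℝ) * (Equiv.Perm.sign τ : ℝ)) *
          ∏ a, ((hp n (σ a) * hp n (τ a)).eval (x a) * exp (-(n / 2 : ℝ) * x a ^ 2))) =
      ∏ i : Fin n, hn n i := by
    intro σ
    rw [integral_finsetSum _ fun τ _ => (hintg σ τ).const_mul _]
    simp only [integral_const_mul, hval, mul_ite, mul_zero]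
    rw [Finset.sum_ite_eq]
    rcases Int.units_eq_one_or (Equiv.Perm.sign σ) with h | h <;> simp [h]
  simp only [h1, Finset.sum_const, Finset.card_univ, Fintype.card_perm, Fintype.card_fin,
    nsmul_eq_mul]

/-- The Gaussian partition function at `β = 4`. -/
lemma gauss_four {k : ℕ} (hk : 1 ≤ k) :
    ZF ((1/2:ℝ) • X ^ 2) k 4 =
      (Nat.factorial k) * ∏ j : Fin k, ((2 * (j:ℝ) + 1) * hn (2 * k) (2 * j)) := by
  have hk' : (0:ℝ) < k := by exact_mod_cast hk
  set N : ℝ := 2 * k with hNdef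
  have hN : (0:ℝ) < N := by positivity
  have hb : (0:ℝ) < N / 2 := by positivity
  let q : Equiv.Perm (Fin (2 * k)) → Fin k → ℝ[X] := fun σ j =>
    hp N (σ (pe k (Sum.inl j))) * derivative (hp N (σ (pe k (Sum.inr j))))
  have e : ∀ x : Fin k → ℝ, Wt 4 (pw k 4 ((1/2:ℝ) • X ^ 2)) x =
      ∑ σ : Equiv.Perm (Fin (2 * k)), (Equiv.Perm.sign σ : ℝ) *
          ∏ j, ((q σ j).eval (x j) * exp (-(N / 2 : ℝ) * x j ^ 2)) := by
    intro x
    rw [Wt, exp_sum_gauss (b := N / 2) (by push_cast; rw [hNdef]; ring), Even.pow_abs (by decide),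
      conf_expand x (hp N) (fun i => (hp_monic _ i).2) (fun i => (hp_monic _ i).1), Finset.mul_sum]
    refine Finset.sum_congr rfl fun σ _ => ?_
    simp only [q, Finset.prod_mul_distrib]
    ring
  have hintg : ∀ σ : Equiv.Perm (Fin (2 * k)), Integrable (fun x : Fin k → ℝ =>
      ∏ j, ((q σ j).eval (x j) * exp (-(N / 2 : ℝ) * x j ^ 2))) := fun σ =>
    Integrable.fintype_prod (f := fun j s => (q σ j).eval s * exp (-(N / 2 : ℝ) * s ^ 2))
      fun a => integrable_gauss hb _
  change ∫ x : Fin k → ℝ, Wt 4 (pw k 4 ((1/2:ℝ) • X ^ 2)) x = _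
  simp only [e]
  rw [integral_finsetSum _ fun σ _ => (hintg σ).const_mul _]
  have h1 : ∀ σ : Equiv.Perm (Fin (2 * k)), (∫ x : Fin k → ℝ, (Equiv.Perm.sign σ : ℝ) *
      ∏ j, ((q σ j).eval (x j) * exp (-(N / 2 : ℝ) * x j ^ 2))) =
      (Equiv.Perm.sign σ : ℝ) * ∏ j, ig (N / 2) (q σ j) := by
    intro σ
    rw [integral_const_mul, integral_fintype_prod_volume_eq_prod
      (fun j s => (q σ j).eval s * exp (-(N / 2 : ℝ) * s ^ 2))]
    rfl
  simp only [h1]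
  have hD : ∀ (a b : ℕ), ig (N / 2) (hp N a * derivative (hp N b)) =
      if b = a + 1 then ((a:ℝ) + 1) * hn N a else 0 := by
    intro a b
    rcases b with _ | b
    · simp [hp, ig]
    · rw [hp_derivative, mul_left_comm, ig_C_mul, ig_hp_mul_hp hN]
      by_cases h : a = b
      · subst h; simp
      · rw [if_neg h, if_neg (by omega), mul_zero]
  change Pf (fun a b : Fin (2 * k) => ig (N / 2) (hp N a * derivative (hp N b))) = _
  rw [Pf_super]
  · congr 1
    refine Finset.prod_congr rfl fun j _ => ?_
    rw [hD]; simp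
  · intro a b h
    rw [hD] at h
    by_contra h'
    exact h (if_neg h')
end Stoj

namespace Stoj
open Polynomial Real

/-! ### The Gaussian partition function at `β = 1` -/

/-- Fubini for products over the pairs of coordinates `(2 j, 2 j + 1)`. -/
lemma pair_integral {k : ℕ} (ψ : Fin k → ℝ × ℝ → ℝ) (hψ : ∀ j, Integrable (ψ j)) :
    Integrable (fun x : Fin (2 * k) → ℝ => ∏ j, ψ j (x (pe k (Sum.inl j)), x (pe k (Sum.inr j)))) ∧
    (∫ x : Fin (2 * k) → ℝ, ∏ j, ψ j (x (pe k (Sum.inl j)), x (pe k (Sum.inr j)))) =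
      ∏ j, ∫ z, ψ j z := by
  let E : (Fin k → ℝ × ℝ) ≃ᵐ (Fin (2 * k) → ℝ) :=
    ((MeasurableEquiv.arrowProdEquivProdArrow ℝ ℝ (Fin k)).trans
      (MeasurableEquiv.sumPiEquivProdPi (fun _ : Fin k ⊕ Fin k => ℝ)).symm).trans
      (MeasurableEquiv.piCongrLeft (fun _ => ℝ) (pe k))
  have hE : MeasurePreserving E volume volume :=
    ((volume_measurePreserving_arrowProdEquivProdArrow ℝ ℝ (Fin k)).trans
      (volume_measurePreserving_sumPiEquivProdPi_symm (fun _ : Fin k ⊕ Fin k => ℝ))).trans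
      (volume_measurePreserving_piCongrLeft (fun _ => ℝ) (pe k))
  have hval : ∀ (y : Fin k → ℝ × ℝ) (j : Fin k),
      (E y (pe k (Sum.inl j)), E y (pe k (Sum.inr j))) = y j := by
    intro y j
    have h : ∀ s, E y (pe k s) = (MeasurableEquiv.sumPiEquivProdPi (fun _ : Fin k ⊕ Fin k => ℝ)).symm
        (MeasurableEquiv.arrowProdEquivProdArrow ℝ ℝ (Fin k) y) s := fun s =>
      MeasurableEquiv.piCongrLeft_apply_apply (β := fun _ => ℝ) (pe k) _ s
    rw [h, h]
    rfl
  constructor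
  · rw [← hE.integrable_comp_emb E.measurableEmbedding]
    simp only [Function.comp_def, hval]
    exact Integrable.fintype_prod hψ
  · rw [← hE.integral_comp']
    simp only [hval]
    exact integral_fintype_prod_volume_eq_prod ψ

/-- Relabelling the coordinates preserves Lebesgue measure. -/
lemma perm_preserving {n : ℕ} (σ : Equiv.Perm (Fin n)) :
    ∃ E : (Fin n → ℝ) ≃ᵐ (Fin n → ℝ), MeasurePreserving E volume volume ∧ ∀ x, E x = x ∘ σ := by
  refine ⟨MeasurableEquiv.piCongrLeft (fun _ => ℝ) σ.symm,
    volume_measurePreserving_piCongrLeft (fun _ => ℝ) σ.symm, fun x => ?_⟩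
  funext a
  have := MeasurableEquiv.piCongrLeft_apply_apply (β := fun _ : Fin n => ℝ) σ.symm x (σ a)
  simpa using this

/-- The ordered pairing `∬_{s < t} u(s) v(t) ds dt`. -/
noncomputable def op (u v : ℝ → ℝ) : ℝ := ∫ z : ℝ × ℝ, if z.1 < z.2 then u z.1 * v z.2 else 0

lemma op_integrable {u v : ℝ → ℝ} (hu : Integrable u) (hv : Integrable v) :
    Integrable fun z : ℝ × ℝ => if z.1 < z.2 then u z.1 * v z.2 else 0 := by
  have h := (hu.mul_prod hv).indicator (measurableSet_lt measurable_fst measurable_snd :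
    MeasurableSet {z : ℝ × ℝ | z.1 < z.2})
  exact h

/-- Functions of the same parity pair symmetrically, by the reflection `(s, t) ↦ (-t, -s)`. -/
lemma op_symm {u v : ℝ → ℝ} (h : ∀ s t, u (-s) * v (-t) = u s * v t) : op u v = op v u := by
  unfold op
  rw [← integral_neg_eq_self]
  have := integral_prod_swap (μ := (volume : Measure ℝ)) (ν := (volume : Measure ℝ))
    (fun z : ℝ × ℝ => if (-z).1 < (-z).2 then u (-z).1 * v (-z).2 else 0)
  refine this.symm.trans ?_
  refine integral_congr_ae (ae_of_all _ fun z => ?_)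
  simp only [Prod.fst_neg, Prod.snd_neg, Prod.fst_swap, Prod.snd_swap, neg_lt_neg_iff, h]
  split_ifs <;> ring

lemma op_deriv {u v g : ℝ → ℝ} (hu : Integrable u) (hv : Integrable v) (hg : Integrable g)
    (hd : ∀ t, HasDerivAt g (-v t) t) :
    op u v = (∫ s, u s * g s) ∧ op v u = -∫ s, u s * g s := by
  have hv' : Integrable fun t => -v t := hv.neg
  have hgc : Continuous g := continuous_iff_continuousAt.mpr fun t => (hd t).continuousAt
  have htop := tendsto_zero_of_hasDerivAt_of_integrableOn_Ioi (a := 0) (fun t _ => hd t)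
    hv'.integrableOn hg.integrableOn
  have hbot := tendsto_zero_of_hasDerivAt_of_integrableOn_Iic (a := 0) (fun t _ => hd t)
    hv'.integrableOn hg.integrableOn
  constructor
  · unfold op
    rw [Measure.volume_eq_prod, integral_prod (μ := (volume : Measure ℝ)) (ν := (volume : Measure ℝ)) _ (op_integrable hu hv)]
    refine integral_congr_ae (ae_of_all _ fun s => ?_)
    have h := integral_Ioi_of_hasDerivAt_of_tendsto (a := s) hgc.continuousWithinAt (fun t _ => hd t)
      hv'.integrableOn htop
    rw [integral_neg] at h
    have e : (fun t => if s < t then u s * v t else 0) = (Set.Ioi s).indicator fun t => u s * v t := by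
      funext t; simp [Set.indicator_apply]
    change (∫ t, if s < t then u s * v t else 0) = _
    rw [e, integral_indicator measurableSet_Ioi, integral_const_mul]
    rw [show (∫ t in Set.Ioi s, v t) = g s by linarith]
  · unfold op
    rw [Measure.volume_eq_prod, integral_prod_symm (μ := (volume : Measure ℝ)) (ν := (volume : Measure ℝ)) _ (op_integrable hv hu),
      ← integral_neg]
    refine integral_congr_ae (ae_of_all _ fun s => ?_)
    have h := integral_Iic_of_hasDerivAt_of_tendsto (a := s) hgc.continuousWithinAt (fun t _ => hd t)
      hv'.integrableOn hbot
    rw [integral_neg] at h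
    have e : (fun t => if t < s then v t * u s else 0) = (Set.Iio s).indicator fun t => v t * u s := by
      funext t; simp [Set.indicator_apply]
    change (∫ t, if t < s then v t * u s else 0) = _
    rw [e, integral_indicator measurableSet_Iio, integral_mul_const]
    rw [← integral_Iic_eq_integral_Iio, show (∫ t in Set.Iic s, v t) = -g s by linarith]
    ring

/-- Skew-orthogonal polynomials for `β = 1`. Those of odd index are chosen so that, with the weight
`e^{-N x² / 4}`, they are multiples of derivatives. -/
noncomputable def sp (N : ℝ) (i : ℕ) : ℝ[X] :=
  if Even i then hp N i else X * hp N (i - 1) - C (2 / N) * derivative (hp N (i - 1))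

lemma sp_monic (N : ℝ) (i : ℕ) : (sp N i).Monic ∧ (sp N i).natDegree = i := by
  unfold sp
  split_ifs with h
  · exact hp_monic N i
  · obtain ⟨j, rfl⟩ : ∃ j, i = j + 1 := ⟨i - 1, by
      rw [Nat.not_even_iff_odd] at h; have := h.pos; omega⟩
    exact monic_X_mul_sub (hp_monic N _).1 (hp_monic N _).2 _

lemma sp_parity (N : ℝ) (i : ℕ) (x : ℝ) : (sp N i).eval (-x) = (-1) ^ i * (sp N i).eval x := by
  unfold sp
  split_ifs with h
  · exact (hp_parity N i x).1
  · rw [Nat.not_even_iff_odd] at h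
    obtain ⟨j, rfl⟩ := h
    simp only [Nat.add_sub_cancel, eval_sub, eval_mul, eval_X, eval_C, (hp_parity N _ x).1,
      (hp_parity N _ x).2]
    simp [pow_succ]
    ring

/-- The weighted skew-orthogonal functions. -/
noncomputable def sf (N : ℝ) (i : ℕ) (x : ℝ) : ℝ := (sp N i).eval x * exp (-(N / 4) * x ^ 2)

lemma sf_integrable {N : ℝ} (hN : 0 < N) (i : ℕ) : Integrable (sf N i) :=
  integrable_gauss (by positivity : 0 < N / 4) _

lemma sf_op_same (N : ℝ) {i j : ℕ} (h : Even (i + j)) : op (sf N i) (sf N j) = op (sf N j) (sf N i) := by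
  refine op_symm fun s t => ?_
  simp only [sf, sp_parity, neg_sq]
  have : (-1:ℝ) ^ i * (-1) ^ j = 1 := by rw [← pow_add, h.neg_one_pow]
  linear_combination (eval s (sp N i) * exp (-(N / 4) * s ^ 2)) *
    (eval t (sp N j) * exp (-(N / 4) * t ^ 2)) * this

lemma sf_op_diff {N : ℝ} (hN : 0 < N) (i j : ℕ) :
    op (sf N (2 * i)) (sf N (2 * j + 1)) = (if i = j then 2 / N * hn N (2 * i) else 0) ∧
    op (sf N (2 * j + 1)) (sf N (2 * i)) = -(if i = j then 2 / N * hn N (2 * i) else 0) := by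
  have hb : 0 < N / 4 := by positivity
  have heven : sp N (2 * i) = hp N (2 * i) := if_pos (by simp)
  have hodd : sp N (2 * j + 1) = X * hp N (2 * j) - C (2 / N) * derivative (hp N (2 * j)) :=
    if_neg (by simp)
  let g : ℝ → ℝ := fun x => 2 / N * ((hp N (2 * j)).eval x * exp (-(N / 4) * x ^ 2))
  have hd : ∀ t, HasDerivAt g (-sf N (2 * j + 1) t) t := by
    intro t
    refine ((hasDerivAt_gauss (N / 4) (hp N (2 * j)) t).const_mul (2 / N)).congr_deriv ?_
    rw [sf, hodd]
    simp only [eval_sub, eval_mul, eval_C, eval_X]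
    field_simp
    ring
  have hval : (∫ s, sf N (2 * i) s * g s) = if i = j then 2 / N * hn N (2 * i) else 0 := by
    have h1 : ∀ s, sf N (2 * i) s * g s =
        2 / N * ((hp N (2 * i) * hp N (2 * j)).eval s * exp (-(N / 2) * s ^ 2)) := by
      intro s
      have : exp (-(N / 2) * s ^ 2) = exp (-(N / 4) * s ^ 2) * exp (-(N / 4) * s ^ 2) := by
        rw [← exp_add]; congr 1; ring
      rw [this, sf, heven, eval_mul]
      ring
    simp only [h1]
    rw [integral_const_mul]
    change 2 / N * ig (N / 2) _ = _
    rw [ig_hp_mul_hp hN]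
    by_cases h : i = j
    · simp [h]
    · rw [if_neg h, if_neg (by omega), mul_zero]
  have := op_deriv (sf_integrable hN (2 * i)) (sf_integrable hN (2 * j + 1))
    ((integrable_gauss hb _).const_mul _) hd
  rwa [hval] at this

/-- The Gaussian partition function at `β = 1`. -/
lemma gauss_one {k : ℕ} (hk : 1 ≤ k) :
    ZF ((1/2:ℝ) • X ^ 2) (2 * k) 1 =
      (Nat.factorial (2 * k)) * ∏ j : Fin k, (4 / (2 * k) * hn (2 * k) (2 * j)) := by
  have hk' : (0:ℝ) < k := by exact_mod_cast hk
  set N : ℝ := 2 * k with hNdef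
  have hN : (0:ℝ) < N := by positivity
  let D : (Fin (2 * k) → ℝ) → ℝ := fun x =>
    (Matrix.vandermonde x).det * ∏ a, exp (-(N / 4) * x a ^ 2)
  let J : (Fin (2 * k) → ℝ) → ℝ := fun x =>
    ∏ j, if x (pe k (Sum.inl j)) < x (pe k (Sum.inr j)) then (1:ℝ) else 0
  -- expansion over the pairs `(2 j, 2 j + 1)`
  have hDJ : ∀ x, D x * J x = ∑ τ : Equiv.Perm (Fin (2 * k)), (Equiv.Perm.sign τ : ℝ) *
      ∏ j, (fun z : ℝ × ℝ => if z.1 < z.2 then sf N (τ (pe k (Sum.inl j))) z.1 *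
        sf N (τ (pe k (Sum.inr j))) z.2 else 0) (x (pe k (Sum.inl j)), x (pe k (Sum.inr j))) := by
    intro x
    simp only [D, J]
    rw [det_expand x (sp N) (fun i => (sp_monic _ i).2) (fun i => (sp_monic _ i).1),
      Finset.sum_mul, Finset.sum_mul]
    refine Finset.sum_congr rfl fun τ _ => ?_
    rw [mul_assoc, mul_assoc]
    congr 1
    rw [← mul_assoc, ← Finset.prod_mul_distrib, ← Equiv.prod_comp (pe k), Fintype.prod_sum_type,
      ← Finset.prod_mul_distrib, ← Finset.prod_mul_distrib]
    refine Finset.prod_congr rfl fun j _ => ?_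
    simp only [sf]
    split_ifs <;> ring
  have hpair := fun τ : Equiv.Perm (Fin (2 * k)) => pair_integral
    (fun (j : Fin k) (z : ℝ × ℝ) => if z.1 < z.2 then sf N (τ (pe k (Sum.inl j))) z.1 *
        sf N (τ (pe k (Sum.inr j))) z.2 else 0)
    (fun j => op_integrable (sf_integrable hN _) (sf_integrable hN _))
  have hintg : Integrable fun x => D x * J x := by
    simp only [hDJ]
    exact integrable_finsetSum _ fun τ _ => (hpair τ).1.const_mul _
  have hval : (∫ x, D x * J x) = Pf (fun a b : Fin (2 * k) => op (sf N a) (sf N b)) := by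
    simp only [hDJ]
    rw [integral_finsetSum _ fun τ _ => (hpair τ).1.const_mul _]
    refine Finset.sum_congr rfl fun τ _ => ?_
    rw [integral_const_mul, (hpair τ).2]
    rfl
  -- each ordering contributes equally, by antisymmetry of the Vandermonde determinant
  have hW : ∀ x : Fin (2 * k) → ℝ, (Nat.factorial k) * Wt 1 (pw (2 * k) 1 ((1/2:ℝ) • X ^ 2)) x =
      ∑ σ : Equiv.Perm (Fin (2 * k)), D (x ∘ σ) * J (x ∘ σ) := by
    intro x
    rw [Wt, exp_sum_gauss (b := N / 4) (by push_cast; rw [hNdef]; ring), pow_one]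
    have h := abs_det_eq_Pf x
    rw [mul_left_comm, h, Pf, Finset.mul_sum, Finset.mul_sum]
    refine Finset.sum_congr rfl fun σ _ => ?_
    have h1 : (Matrix.vandermonde (x ∘ σ)).det = Equiv.Perm.sign σ * (Matrix.vandermonde x).det := by
      have : Matrix.vandermonde (x ∘ σ) = (Matrix.vandermonde x).submatrix σ id := by
        ext i j; simp [Matrix.vandermonde_apply]
      rw [this, Matrix.det_permute]
    have h2 : ∏ a, exp (-(N / 4) * (x ∘ σ) a ^ 2) = ∏ a, exp (-(N / 4) * x a ^ 2) :=
      Equiv.prod_comp σ (fun a => exp (-(N / 4) * x a ^ 2))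
    simp only [D, J]
    rw [h1, h2]
    simp only [Function.comp]
    ring
  have hperm : ∀ σ : Equiv.Perm (Fin (2 * k)), Integrable (fun x => D (x ∘ σ) * J (x ∘ σ)) ∧
      (∫ x, D (x ∘ σ) * J (x ∘ σ)) = ∫ x, D x * J x := by
    intro σ
    obtain ⟨E, hE, hEx⟩ := perm_preserving σ
    constructor
    · have := (hE.integrable_comp_emb E.measurableEmbedding).mpr hintg
      simpa only [Function.comp_def, hEx] using this
    · rw [← hE.integral_comp' (g := fun x => D x * J x)]
      simp only [hEx]
  have hQ : (Nat.factorial k) * ZF ((1/2:ℝ) • X ^ 2) (2 * k) 1 =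
      (Nat.factorial (2 * k)) * Pf (fun a b : Fin (2 * k) => op (sf N a) (sf N b)) := by
    change (Nat.factorial k) * (∫ x : Fin (2 * k) → ℝ, Wt 1 (pw (2 * k) 1 ((1/2:ℝ) • X ^ 2)) x) = _
    rw [← integral_const_mul]
    simp only [hW]
    rw [integral_finsetSum _ fun σ _ => (hperm σ).1]
    simp only [(hperm _).2, hval, Finset.sum_const, Finset.card_univ, Fintype.card_perm,
      Fintype.card_fin, nsmul_eq_mul]
  -- the pairing matrix is a superdiagonal matrix plus a symmetric one
  let S : Fin (2 * k) → Fin (2 * k) → ℝ := fun a b =>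
    if Even (a:ℕ) ∧ (b:ℕ) = a + 1 then 4 / N * hn N a else 0
  have hS : Pf (fun a b : Fin (2 * k) => op (sf N a) (sf N b)) = Pf S := by
    have := Pf_add_symm S (fun a b => op (sf N a) (sf N b) - S a b) ?_
    · rw [← this]; congr 1; funext a b; ring
    have hmix : ∀ a b : Fin (2 * k), Even (a:ℕ) → Odd (b:ℕ) →
        op (sf N a) (sf N b) - S a b = op (sf N b) (sf N a) - S b a := by
      intro a b ha hb
      have hba : S b a = 0 := if_neg fun h => (Nat.not_even_iff_odd.mpr hb) h.1
      obtain ⟨i, hi⟩ := ha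
      obtain ⟨j, hj⟩ := hb
      have hi' : (a:ℕ) = 2 * i := by omega
      rw [hba]
      simp only [S, hi', hj]
      rw [(sf_op_diff hN i j).1, (sf_op_diff hN i j).2]
      by_cases h : i = j
      · subst h; simp; ring
      · rw [if_neg h, if_neg (by omega)]; simp
    intro a b
    rcases Nat.even_or_odd (a:ℕ) with ha | ha <;> rcases Nat.even_or_odd (b:ℕ) with hb | hb
    · rw [sf_op_same N (ha.add hb)]
      have h1 : S a b = 0 := if_neg fun h => by rw [Nat.even_iff] at ha hb; omega
      have h2 : S b a = 0 := if_neg fun h => by rw [Nat.even_iff] at ha hb; omega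
      rw [h1, h2]
    · exact hmix a b ha hb
    · exact (hmix b a hb ha).symm
    · rw [sf_op_same N (ha.add_odd hb)]
      have h1 : S a b = 0 := if_neg fun h => by rw [Nat.odd_iff] at ha hb; omega
      have h2 : S b a = 0 := if_neg fun h => by rw [Nat.odd_iff] at ha hb; omega
      rw [h1, h2]
  have hfin : Pf S = (Nat.factorial k) * ∏ j : Fin k, (4 / N * hn N (2 * j)) := by
    rw [Pf_super]
    · congr 1
      refine Finset.prod_congr rfl fun j _ => ?_
      simp [S]
    · intro a b h
      by_contra h'
      exact h (if_neg fun h'' => h' h''.2)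
  rw [hS, hfin] at hQ
  have hk0 : (Nat.factorial k : ℝ) ≠ 0 := by exact_mod_cast Nat.factorial_ne_zero k
  refine mul_left_cancel₀ hk0 (hQ.trans ?_)
  ring

/-- For the Gaussian potential the three partition functions are related by an exact identity. -/
lemma gauss_identity {k : ℕ} (hk : 1 ≤ k) :
    ZF ((1/2:ℝ) • X ^ 2) (2 * k) 1 * ZF ((1/2:ℝ) • X ^ 2) k 4 =
      ZF ((1/2:ℝ) • X ^ 2) (2 * k) 2 * ((Nat.factorial k) * 4 ^ k) := by
  have hk' : (0:ℝ) < k := by exact_mod_cast hk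
  rw [gauss_one hk, gauss_four hk, gauss_two (by omega : 1 ≤ 2 * k), ← Equiv.prod_comp (pe k),
    Fintype.prod_sum_type]
  have h4 : (4:ℝ) ^ k = ∏ _j : Fin k, (4:ℝ) := by simp
  have e : (∏ j : Fin k, (4 / (2 * (k:ℝ)) * hn (2 * k) (2 * j))) *
      (∏ j : Fin k, ((2 * (j:ℝ) + 1) * hn (2 * k) (2 * j))) =
      (∏ j : Fin k, hn ((2 * k : ℕ) : ℝ) (pe k (Sum.inl j))) *
      (∏ j : Fin k, hn ((2 * k : ℕ) : ℝ) (pe k (Sum.inr j))) * 4 ^ k := by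
    rw [h4]
    simp only [← Finset.prod_mul_distrib]
    refine Finset.prod_congr rfl fun j _ => ?_
    rw [pe_inl, pe_inr, hn_succ (by positivity)]
    push_cast
    field_simp
  linear_combination ((Nat.factorial (2 * k) : ℝ) * Nat.factorial k) * e
end Stoj

namespace Stoj
open Polynomial Real

/-! ### Conclusion -/

lemma ZF_pos {V : ℝ[X]} {m : ℕ} (hm : 0 < m) (hdeg : V.natDegree = 2 * m)
    (hlead : 0 < V.leadingCoeff) {ρ P : ℝ → ℝ} (hC : EquilC12 (fun x => V.eval x) ρ P)
    {n β : ℕ} (hn : 1 ≤ n) (hβ : 1 ≤ β) :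
    0 < ZF V n β ∧ 0 < ZF ((1 / 2 : ℝ) • X ^ 2) n β := by
  obtain ⟨Q, c, p, L, κ, M₀, M, hA⟩ := exists_adm hm hdeg hlead hC
  have h0 := hA 0 le_rfl zero_le_one
  have h1 := hA 1 zero_le_one le_rfl
  rw [show Vt V 0 = (1 / 2 : ℝ) • X ^ 2 by simp [Vt]] at h0
  rw [show Vt V 1 = V by simp [Vt]] at h1
  exact ⟨(h1.ZB_pos n β le_rfl).trans_le (ZB_le_ZF (grow_V hm hdeg hlead) hn hβ 2),
    (h0.ZB_pos n β le_rfl).trans_le (ZB_le_ZF grow_gauss hn hβ 2)⟩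

lemma partitionFn_eq (V : ℝ[X]) (n β : ℕ) : partitionFn β (fun x => V.eval x) n = ZF V n β := by
  change (∫ x : Fin n → ℝ, _) = ∫ x : Fin n → ℝ, _
  refine integral_congr_ae (ae_of_all _ fun x => ?_)
  simp only [betaWeight, Wt]
  congr 1
  · rw [exp_sum]
    refine Finset.prod_congr rfl fun i _ => ?_
    congr 1
    simp only [pw]; ring
  · rw [Matrix.det_vandermonde, Finset.abs_prod, ← Finset.prod_pow]
    refine Finset.prod_congr rfl fun i _ => ?_
    rw [Finset.abs_prod, ← Finset.prod_pow]
    refine Finset.prod_congr rfl fun j _ => ?_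
    rw [rpow_natCast, abs_sub_comm]

/-- A positive sequence that is eventually between two positive constants is between two positive
constants from the start. -/
lemma exists_bounds {r : ℕ → ℝ} {m : ℕ} (hr : ∀ (k : ℕ), m ≤ k → 0 < r k) {a b : ℝ} (ha : 0 < a)
    (h : ∀ᶠ k : ℕ in Filter.atTop, a ≤ r k ∧ r k ≤ b) :
    ∃ c C : ℝ, 0 < c ∧ c ≤ C ∧ ∀ k : ℕ, m ≤ k → c ≤ r k ∧ r k ≤ C := by
  obtain ⟨K, hK⟩ := Filter.eventually_atTop.mp h
  have key : ∀ j : ℕ, ∃ c C : ℝ, 0 < c ∧ c ≤ C ∧ ∀ k : ℕ, m ≤ k → k < j → c ≤ r k ∧ r k ≤ C := by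
    intro j
    induction j with
    | zero => exact ⟨1, 1, one_pos, le_rfl, fun k _ h => absurd h (by omega)⟩
    | succ j ih =>
      obtain ⟨c, C, hc, hcC, hb⟩ := ih
      by_cases hj : m ≤ j
      · refine ⟨min c (r j), max C (r j), lt_min hc (hr j hj),
          (min_le_left _ _).trans (hcC.trans (le_max_left _ _)), fun k hk hkj => ?_⟩
        rcases Nat.lt_succ_iff_lt_or_eq.mp hkj with h1 | rfl
        · exact ⟨(min_le_left _ _).trans (hb k hk h1).1, (hb k hk h1).2.trans (le_max_left _ _)⟩
        · exact ⟨min_le_right _ _, le_max_right _ _⟩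
      · exact ⟨c, C, hc, hcC, fun k hk hkj => hb k hk (by omega)⟩
  obtain ⟨c, C, hc, hcC, hb⟩ := key K
  refine ⟨min c a, max C b, lt_min hc ha,
    (min_le_left _ _).trans (hcC.trans (le_max_left _ _)), fun k hk => ?_⟩
  rcases lt_or_ge k K with h1 | h1
  · exact ⟨(min_le_left _ _).trans (hb k hk h1).1, (hb k hk h1).2.trans (le_max_left _ _)⟩
  · exact ⟨(min_le_right _ _).trans (hK k h1).1, (hK k h1).2.trans (le_max_right _ _)⟩

lemma ratio_bounded {V : ℝ[X]} {m : ℕ} (hm : 0 < m) (hdeg : V.natDegree = 2 * m)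
    (hlead : 0 < V.leadingCoeff) {ρ P : ℝ → ℝ} (hC : EquilC12 (fun x => V.eval x) ρ P) :
    ∃ c C : ℝ, 0 < c ∧ c ≤ C ∧ ∀ k : ℕ, m ≤ k →
      c ≤ ZF V (2 * k) 1 * ZF V k 4 / (ZF V (2 * k) 2 * (Nat.factorial k) * 2 ^ (2 * k)) ∧
      ZF V (2 * k) 1 * ZF V k 4 / (ZF V (2 * k) 2 * (Nat.factorial k) * 2 ^ (2 * k)) ≤ C := by
  have hpos := fun {n β : ℕ} (hn : 1 ≤ n) (hβ : 1 ≤ β) => ZF_pos hm hdeg hlead hC hn hβ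
  have hr : ∀ (k : ℕ), m ≤ k →
      0 < ZF V (2 * k) 1 * ZF V k 4 / (ZF V (2 * k) 2 * (Nat.factorial k) * 2 ^ (2 * k)) := by
    intro k hk
    have h1 := (hpos (n := 2 * k) (β := 1) (by omega) le_rfl).1
    have h2 := (hpos (n := 2 * k) (β := 2) (by omega) (by norm_num)).1
    have h4 := (hpos (n := k) (β := 4) (by omega) (by norm_num)).1
    have : (0:ℝ) < Nat.factorial k := by exact_mod_cast Nat.factorial_pos k
    positivity
  obtain ⟨C, hev⟩ := compare_gauss hm hdeg hlead hC
  refine exists_bounds hr (exp_pos (-C)) (b := exp C) ?_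
  filter_upwards [hev, Filter.eventually_ge_atTop m] with k hk hmk
  have h1 := hpos (n := 2 * k) (β := 1) (by omega) le_rfl
  have h2 := hpos (n := 2 * k) (β := 2) (by omega) (by norm_num)
  have h4 := hpos (n := k) (β := 4) (by omega) (by norm_num)
  have hf : (0:ℝ) < (Nat.factorial k) * 4 ^ k := by
    have : (0:ℝ) < Nat.factorial k := by exact_mod_cast Nat.factorial_pos k
    positivity
  have e : LR (ZF V) k - LR (ZF ((1 / 2 : ℝ) • X ^ 2)) k =
      log (ZF V (2 * k) 1 * ZF V k 4 / (ZF V (2 * k) 2 * (Nat.factorial k) * 2 ^ (2 * k))) := by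
    have hg := congrArg log (gauss_identity (k := k) (by omega))
    rw [log_mul h1.2.ne' h4.2.ne', log_mul h2.2.ne' hf.ne'] at hg
    rw [pow_mul, show (2:ℝ) ^ 2 = 4 by norm_num, mul_assoc, log_div (mul_pos h1.1 h4.1).ne'
      (mul_pos h2.1 hf).ne', log_mul h1.1.ne' h4.1.ne', log_mul h2.1.ne' hf.ne']
    unfold LR
    linarith
  rw [e, abs_le] at hk
  exact ⟨(le_log_iff_exp_le (hr k hmk)).mp hk.1, (log_le_iff_le_exp (hr k hmk)).mp hk.2⟩
end Stoj

/-- the Stojanovic ratio `Q_{n,1}·Q_{n/2,4} / (Q_{n,2}·(n/2)!·2^n)` is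
bounded above and below by positive constants, uniformly over even `n = 2k ≥ 2m`. -/
theorem stojanovic_determinant_bounded
    (m : ℕ) (hm : 0 < m) (Vp : Polynomial ℝ)
    (hdeg : Vp.natDegree = 2 * m) (hlead : 0 < Vp.leadingCoeff)
    (ρ P : ℝ → ℝ) (hC : EquilC12 (fun x => Vp.eval x) ρ P) :
    ∃ c C : ℝ, 0 < c ∧ c ≤ C ∧ ∀ k : ℕ, m ≤ k →
      c ≤ partitionFn 1 (fun x => Vp.eval x) (2 * k) *
            partitionFn 4 (fun x => Vp.eval x) k /
          (partitionFn 2 (fun x => Vp.eval x) (2 * k) *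
            (Nat.factorial k) * 2 ^ (2 * k)) ∧
      partitionFn 1 (fun x => Vp.eval x) (2 * k) *
            partitionFn 4 (fun x => Vp.eval x) k /
          (partitionFn 2 (fun x => Vp.eval x) (2 * k) *
            (Nat.factorial k) * 2 ^ (2 * k)) ≤ C := by
  have h1 := fun n => Stoj.partitionFn_eq Vp n 1
  have h2 := fun n => Stoj.partitionFn_eq Vp n 2
  have h4 := fun n => Stoj.partitionFn_eq Vp n 4
  push_cast at h1 h2 h4
  simp only [h1, h2, h4]
  exact Stoj.ratio_bounded hm hdeg hlead hC
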